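/- Let S be a connected topological 2-manifold without boundary (a Hausdorff, second-countable topological space locally homeomorphic to ℝ²), and let C ⊆ S be a closed connected subset which, in the subspace topology, is a topological 2-manifold with boundary (every point of C has a neighborhood in C homeomorphic to ℝ² or to the closed half-plane {(x,y) ∈ ℝ² : y ≥ 0}). Assume that no connected component of S \ int(C) is homeomorphic to the closed unit disc D². Then C is incompressible in S: every loop c : S¹ → C whose composition with the inclusion C ↪ S is null-homotopic in S is already null-homotopic in C. (Corollary A.4.) -/

import Mathlib

/-!
A circle-valued map has a *logarithm* on `A` if it lifts there to `ℝ` (`LogOn`); this plays the role of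
first cohomology. If `f` does not extend from a closed set to a compact set lying in a surface, a minimal
*membrane* to which it fails to extend is open off the closed set (`exists_membrane`). Membranes yield
invariance of domain (`isOpen_image_ball`) and, with unicoherence (`inter_preconnected`), the theory of
*cells*: compact regions bounded by a simple closed curve on which all circle-valued maps have logarithms.
Crosscuts split a cell into two cells (`Theta.cells`), cells subdivide into small ones (`IsCell.mesh`), and so
any two cells are homeomorphic (`IsCell.homeo`, a form of the Schoenflies theorem).

By invariance of domain the frontier of `C` is a one-manifold (`half_frontier`). A loop of `C` which is null
in `S` extends to a map `H` of the disc (`disc_of_homotopy`). Suppose that `H`, restricted to the preimage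
of each circular frontier component `γ`, has a logarithm as a map to `γ`. Then the parts of the disc that `H`
maps outside `C` can be remapped into the frontier of `C` (`exists_push`, `exists_fill`), giving a disc in `C`.

Otherwise some `γ` bounds a cell `X` inside the image of `H` (`exists_cell`): in the infinite cyclic covering
of `S` dual to `γ`, a lift of `γ` separates, so a membrane must cover a whole region on one side of it
(`exists_region`), and that region has no essential circle-valued maps (`Memb.acyc`). Either `X` is a
component of the complement of the interior of `C`, hence an excluded disc, or `C ⊆ X` (`comp_cell`).
In the latter case either `C = X` is itself a disc, or `C` has a second boundary curve inside `X`.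
Applied to a parametrization of `X`, the same argument gives a cell within `X` that contains `C` and has `γ`
in its interior, which is absurd as `γ` bounds `X` (`exists_disc`).
-/

open Set Filter Topology Metric
open scoped Real
open Real (Angle)
open Function (invFun invFunOn invFunOn_eq invFunOn_mem Injective leftInverse_invFun Periodic Bijective FactorsThrough)

set_option linter.unusedVariables false
set_option linter.style.longLine false
set_option linter.unusedSectionVars false

namespace SD

/-! ### Logarithms of circle-valued maps -/

/-- The circle-valued map `f` has a continuous real logarithm on `A`. -/
def LogOn {X : Type*} [TopologicalSpace X] (f : X → Angle) (A : Set X) : Prop :=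
  ∃ φ : X → ℝ, ContinuousOn φ A ∧ ∀ x ∈ A, (φ x : Angle) = f x

/-- Every circle-valued map on `A` has a logarithm (vanishing of first Čech cohomology). -/
def Acyc {X : Type*} [TopologicalSpace X] (A : Set X) : Prop :=
  ∀ f : X → Angle, ContinuousOn f A → LogOn f A

instance : CompactSpace Angle :=
  haveI : Fact (0 < 2 * π) := ⟨Real.two_pi_pos⟩
  inferInstanceAs (CompactSpace (AddCircle (2 * π)))

section basics
variable {X Y : Type*} [TopologicalSpace X] [TopologicalSpace Y] {f g : X → Angle}
  {A B : Set X}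

theorem continuous_coeA : Continuous ((↑) : ℝ → Angle) := Angle.continuous_coe

theorem LogOn.mono (h : LogOn f A) (hB : B ⊆ A) : LogOn f B :=
  let ⟨φ, h1, h2⟩ := h
  ⟨φ, h1.mono hB, fun x hx => h2 x (hB hx)⟩

theorem LogOn.congr (h : LogOn f A) (hfg : ∀ x ∈ A, f x = g x) : LogOn g A :=
  let ⟨φ, h1, h2⟩ := h
  ⟨φ, h1, fun x hx => (h2 x hx).trans (hfg x hx)⟩

theorem LogOn.continuousOn (h : LogOn f A) : ContinuousOn f A :=
  let ⟨_, h1, h2⟩ := h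
  (continuous_coeA.comp_continuousOn h1).congr fun x hx => (h2 x hx).symm

theorem LogOn.add (h : LogOn f A) (h' : LogOn g A) : LogOn (fun x => f x + g x) A :=
  let ⟨φ, h1, h2⟩ := h
  let ⟨ψ, h3, h4⟩ := h'
  ⟨fun x => φ x + ψ x, h1.add h3, fun x hx => by simp [h2 x hx, h4 x hx]⟩

theorem LogOn.neg (h : LogOn f A) : LogOn (fun x => -f x) A :=
  let ⟨φ, h1, h2⟩ := h
  ⟨fun x => -φ x, h1.neg, fun x hx => by simp [h2 x hx]⟩

theorem LogOn.sub (h : LogOn f A) (h' : LogOn g A) : LogOn (fun x => f x - g x) A :=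
  (h.add h'.neg).congr fun x _ => (sub_eq_add_neg _ _).symm

theorem LogOn.zsmul (h : LogOn f A) (n : ℤ) : LogOn (fun x => n • f x) A :=
  let ⟨φ, h1, h2⟩ := h
  ⟨fun x => n * φ x, h1.const_mul _, fun x hx => by
    simp only []
    rw [← h2 x hx, ← Angle.coe_zsmul, zsmul_eq_mul]⟩

theorem LogOn.comp {h : Y → X} {B : Set Y} (hf : LogOn f A) (hc : ContinuousOn h B)
    (hm : MapsTo h B A) : LogOn (fun y => f (h y)) B :=
  let ⟨φ, h1, h2⟩ := hf
  ⟨fun y => φ (h y), h1.comp hc hm, fun y hy => h2 _ (hm hy)⟩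

theorem logOn_const (a : Angle) : LogOn (fun _ : X => a) A :=
  ⟨fun _ => a.toReal, continuousOn_const, fun _ _ => by simp⟩

theorem logOn_coe {φ : X → ℝ} (h : ContinuousOn φ A) :
    LogOn (fun x => (φ x : Angle)) A := ⟨φ, h, fun _ _ => rfl⟩

theorem logOn_empty : LogOn f ∅ := ⟨0, by simp, by simp⟩

theorem continuousAt_toReal {a : Angle} (h : a ≠ π) : ContinuousAt Angle.toReal a := by
  have h1 : ∀ θ : Angle, θ.toReal = Complex.arg (θ.toCircle : ℂ) := by
    intro θ
    have := Angle.arg_toCircle θ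
    have h2 := congrArg Angle.toReal this
    rw [← h2]
    exact Angle.toReal_coe_eq_self_iff.2 ⟨Complex.neg_pi_lt_arg _, Complex.arg_le_pi _⟩
  have h3 : Continuous (fun θ : Angle => (θ.toCircle : ℂ)) := by
    have : (fun θ : Angle => (θ.toCircle : ℂ)) =
      fun θ => (θ.cos : ℂ) + θ.sin * Complex.I := funext fun θ => Angle.coe_toCircle θ
    rw [this]
    have h1 := Angle.continuous_cos
    have h2 := Angle.continuous_sin
    fun_prop
  have h4 : Angle.toReal = fun θ => Complex.arg (θ.toCircle : ℂ) := funext h1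
  rw [h4]
  refine ContinuousAt.comp (f := fun θ : Angle => (θ.toCircle : ℂ)) (Complex.continuousAt_arg ?_) h3.continuousAt
  rw [Complex.mem_slitPlane_iff_arg]
  refine ⟨?_, Circle.coe_ne_zero _⟩
  rw [← h1]
  exact fun h' => h (Angle.toReal_eq_pi_iff.1 h')

/-- A map into the circle avoiding `π` has a logarithm. -/
theorem logOn_of_ne_pi (hf : ContinuousOn f A) (h : ∀ x ∈ A, f x ≠ π) : LogOn f A :=
  ⟨fun x => (f x).toReal, fun x hx => (continuousAt_toReal (h x hx)).comp_continuousWithinAt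
    (hf x hx), fun x _ => by simp⟩

/-- A map into the circle avoiding some value has a logarithm. -/
theorem logOn_of_ne (hf : ContinuousOn f A) (a : Angle) (h : ∀ x ∈ A, f x ≠ a) :
    LogOn f A := by
  have h1 : LogOn (fun x => f x - (a - π)) A := by
    refine logOn_of_ne_pi (hf.sub continuousOn_const) fun x hx h' => h x hx ?_
    rw [sub_eq_iff_eq_add] at h'
    simpa using h'
  exact (h1.add (logOn_const (a - π))).congr fun x _ => by simp

/-- Two logarithms of the same map on a preconnected set differ by a constant. -/
theorem log_unique {φ ψ : X → ℝ} (hA : IsPreconnected A) (hφ : ContinuousOn φ A)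
    (hψ : ContinuousOn ψ A) (h : ∀ x ∈ A, (φ x : Angle) = ψ x) :
    ∃ n : ℤ, ∀ x ∈ A, φ x = ψ x + 2 * π * n := by
  rcases A.eq_empty_or_nonempty with rfl | ⟨a, ha⟩
  · exact ⟨0, by simp⟩
  have hk : ∀ x ∈ A, ∃ k : ℤ, φ x - ψ x = 2 * π * k := fun x hx =>
    Angle.angle_eq_iff_two_pi_dvd_sub.1 (h x hx)
  have hc : ∀ x ∈ A, φ x - ψ x = φ a - ψ a := by
    intro x hx
    have hp : IsPreconnected ((fun x => (φ x - ψ x) / (2 * π)) '' A) :=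
      hA.image _ ((hφ.sub hψ).div_const _)
    have hs : ((fun x => (φ x - ψ x) / (2 * π)) '' A) ⊆ range ((↑) : ℤ → ℝ) := by
      rintro _ ⟨y, hy, rfl⟩
      obtain ⟨k, hk⟩ := hk y hy
      exact ⟨k, by simp only []; rw [hk]; field_simp⟩
    have hsub : ((fun x => (φ x - ψ x) / (2 * π)) '' A).Subsingleton := by
      have hdisc : IsTotallyDisconnected (range ((↑) : ℤ → ℝ)) :=
        (countable_range _).isTotallyDisconnected
      exact hdisc _ hs hp
    have := hsub ⟨x, hx, rfl⟩ ⟨a, ha, rfl⟩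
    simp only [] at this
    field_simp at this
    exact this
  obtain ⟨k, hk⟩ := hk a ha
  exact ⟨k, fun x hx => by have := hc x hx; linarith⟩

/-- Logarithms glue along a preconnected intersection. -/
theorem LogOn.union (hA : IsClosed A) (hB : IsClosed B) (hAB : IsPreconnected (A ∩ B))
    (h1 : LogOn f A) (h2 : LogOn f B) : LogOn f (A ∪ B) := by
  classical
  obtain ⟨φ, hφ, hφ'⟩ := h1
  obtain ⟨ψ, hψ, hψ'⟩ := h2
  obtain ⟨n, hn⟩ := log_unique hAB (hφ.mono inter_subset_left) (hψ.mono inter_subset_right)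
    fun x hx => (hφ' x hx.1).trans (hψ' x hx.2).symm
  refine ⟨fun x => if x ∈ A then φ x else ψ x + 2 * π * n, ?_, ?_⟩
  · refine ContinuousOn.union_of_isClosed ?_ ?_ hA hB
    · exact hφ.congr fun x hx => by simp [hx]
    · refine (hψ.add continuousOn_const).congr (f := fun x => ψ x + 2 * π * n) fun x hx => ?_
      by_cases hxA : x ∈ A
      · simp [hxA, hn x ⟨hxA, hx⟩]
      · simp [hxA]
  · intro x hx
    by_cases hxA : x ∈ A
    · simp [hxA, hφ' x hxA]
    · have hxB := hx.resolve_left hxA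
      have : ((2 * π * n : ℝ) : Angle) = 0 := by
        rw [Angle.coe_eq_zero_iff]; exact ⟨n, by rw [zsmul_eq_mul]; ring⟩
      simp only [hxA, if_false, Angle.coe_add, this, add_zero]
      exact hψ' x hxB

/-- Continuous maps on `A` and `B`, both closed, glue if they agree on `A ∩ B`. -/
theorem glue_closed {Z : Type*} [TopologicalSpace Z] {f g : X → Z} (hA : IsClosed A)
    (hB : IsClosed B) (hf : ContinuousOn f A) (hg : ContinuousOn g B)
    (h : ∀ x ∈ A, x ∈ B → f x = g x) :
    ∃ F : X → Z, ContinuousOn F (A ∪ B) ∧ EqOn F f A ∧ EqOn F g B := by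
  classical
  have h1 : EqOn (fun x => if x ∈ A then f x else g x) f A := fun x hx => by simp [hx]
  have h2 : EqOn (fun x => if x ∈ A then f x else g x) g B := fun x hx => by
    by_cases hxA : x ∈ A
    · simp [hxA, h x hxA hx]
    · simp [hxA]
  exact ⟨_, (hf.congr h1).union_of_isClosed (hg.congr h2) hA hB, h1, h2⟩

theorem Acyc.of_retract {B : Set Y} {r : Y → X} {i : X → Y} (hB : Acyc B)
    (hr : ContinuousOn r B) (hrm : MapsTo r B A) (hi : ContinuousOn i A) (him : MapsTo i A B)
    (hri : ∀ x ∈ A, r (i x) = x) : Acyc A := by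
  intro f hf
  have := hB (fun y => f (r y)) (hf.comp hr hrm)
  exact (this.comp hi him).congr fun x hx => by rw [hri x hx]

theorem acyc_univ [SimplyConnectedSpace X] [LocallyPathConnectedSpace X] : Acyc (univ : Set X) := by
  intro f hf
  rw [continuousOn_univ] at hf
  obtain ⟨a⟩ : Nonempty X := inferInstance
  have hcov : IsCoveringMap ((↑) : ℝ → Angle) := AddCircle.isCoveringMap_coe (2 * π)
  obtain ⟨F, ⟨_, hF⟩, _⟩ := hcov.existsUnique_continuousMap_lifts ⟨f, hf⟩ a (f a).toReal (by simp)
  exact ⟨F, F.continuous.continuousOn, fun x _ => congrFun hF x⟩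

theorem acyc_complex : Acyc (univ : Set ℂ) := acyc_univ

theorem acyc_Icc (a b : ℝ) : Acyc (Icc a b) := by
  rcases le_or_gt a b with h | h
  · refine (acyc_univ (X := ℝ)).of_retract (r := fun x => (projIcc a b h x : ℝ)) (i := id)
      (continuous_subtype_val.comp continuous_projIcc).continuousOn (fun x _ => Subtype.coe_prop _) continuousOn_id (fun _ _ => mem_univ _) ?_
    intro x hx
    simp [projIcc_of_mem h hx]
  · rw [Icc_eq_empty (not_le.2 h)]
    exact fun f _ => logOn_empty

/-- Radial retraction of `ℂ` onto the closed unit disc. -/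
noncomputable def discRetr (z : ℂ) : ℂ := (max 1 ‖z‖ : ℝ)⁻¹ • z

theorem continuous_discRetr : Continuous discRetr := by
  unfold discRetr
  refine Continuous.smul ((continuous_const.max continuous_norm).inv₀ fun z => ?_) continuous_id
  positivity

theorem discRetr_mem (z : ℂ) : discRetr z ∈ closedBall (0 : ℂ) 1 := by
  rw [mem_closedBall_zero_iff, discRetr, norm_smul, norm_inv, Real.norm_eq_abs,
    abs_of_pos (by positivity)]
  exact inv_mul_le_one_of_le₀ (le_max_right _ _) (by positivity)

theorem discRetr_eq {z : ℂ} (hz : z ∈ closedBall (0 : ℂ) 1) : discRetr z = z := by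
  rw [mem_closedBall_zero_iff] at hz
  simp [discRetr, max_eq_left hz]

theorem acyc_disc : Acyc (closedBall (0 : ℂ) 1) :=
  acyc_complex.of_retract (r := discRetr) (i := id) continuous_discRetr.continuousOn
    (fun z _ => discRetr_mem z) continuousOn_id (fun _ _ => mem_univ _) fun _ h => discRetr_eq h

/-- A circle-valued map on a closed subset of a compact interval has a logarithm. -/
theorem logOn_Icc_closed {f : ℝ → Angle} {a b : ℝ} {K : Set ℝ} (hK : IsClosed K)
    (hKs : K ⊆ Icc a b) (hf : ContinuousOn f K) : LogOn f K := by
  have hKc : IsCompact K := isCompact_Icc.of_isClosed_subset hK hKs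
  have hu := hKc.uniformContinuousOn_of_continuous hf
  obtain ⟨δ, hδ, h⟩ := Metric.uniformContinuousOn_iff.1 hu 1 one_pos
  have key : ∀ n : ℕ, LogOn f (K ∩ Iic (a + n * (δ / 2))) := by
    intro n
    induction n with
    | zero =>
      refine LogOn.mono (A := {a}) ⟨fun _ => (f a).toReal, continuousOn_const, by simp⟩ ?_
      rintro x ⟨hx, hx'⟩
      have := (hKs hx).1
      simp at hx' ⊢
      linarith
    | succ n ih =>
      have h2 : LogOn f (K ∩ Icc (a + n * (δ / 2)) (a + (n + 1) * (δ / 2))) := by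
        rcases (K ∩ Icc (a + n * (δ / 2)) (a + (n + 1) * (δ / 2))).eq_empty_or_nonempty with h0 | ⟨p, hp⟩
        · rw [h0]; exact logOn_empty
        · refine logOn_of_ne (hf.mono inter_subset_left) (f p + π) fun x hx hx' => ?_
          have hd : dist x p < δ := by
            rw [Real.dist_eq, abs_lt]
            have := hx.2.1; have := hx.2.2; have := hp.2.1; have := hp.2.2
            constructor <;> nlinarith
          have h3 := h x hx.1 p hp.1 hd
          rw [hx', dist_eq_norm, add_sub_cancel_left] at h3
          have h4 : ‖((π : ℝ) : Angle)‖ = π := by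
            have := AddCircle.norm_coe_eq_abs_iff (2 * π) (x := π) (by positivity)
            rw [show ‖((π : ℝ) : Angle)‖ = |π| from this.2 (by
              rw [abs_of_pos Real.pi_pos, abs_of_pos (by positivity)]; linarith)]
            exact abs_of_pos Real.pi_pos
          rw [h4] at h3
          linarith [Real.pi_gt_three]
      have h3 := ih.union (hK.inter isClosed_Iic) (hK.inter isClosed_Icc)
        (Subsingleton.isPreconnected (by
          rintro x ⟨⟨_, hx⟩, _, hx', _⟩ y ⟨⟨_, hy⟩, _, hy', _⟩
          simp only [mem_Iic] at hx hy
          linarith)) h2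
      refine h3.mono ?_
      rintro x ⟨hx, hx'⟩
      rcases le_total x (a + n * (δ / 2)) with h4 | h4
      · exact Or.inl ⟨hx, h4⟩
      · exact Or.inr ⟨hx, h4, by simpa using hx'⟩
  obtain ⟨n, hn⟩ := exists_nat_gt ((b - a) / (δ / 2))
  refine (key n).mono fun x hx => ⟨hx, ?_⟩
  rw [div_lt_iff₀ (by positivity)] at hn
  have := (hKs hx).2
  simp only [mem_Iic]; linarith

/-- A circle-valued map on a proper closed subset of the circle has a logarithm. -/
theorem logOn_circle_closed {f : Angle → Angle} {K : Set Angle} (hK : IsClosed K)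
    (hne : K ≠ univ) (hf : ContinuousOn f K) : LogOn f K := by
  obtain ⟨a, ha⟩ := (ne_univ_iff_exists_notMem K).1 hne
  obtain ⟨ψ, hψ, hψ'⟩ := logOn_of_ne (f := id) continuousOn_id a
    (fun x hx (h : x = a) => ha (h ▸ hx))
  have hKc : IsCompact K := hK.isCompact
  have himg : IsCompact (ψ '' K) := hKc.image_of_continuousOn hψ
  obtain ⟨r, hr⟩ := himg.isBounded.subset_closedBall 0
  rw [Real.closedBall_eq_Icc] at hr
  have h1 : LogOn (fun t : ℝ => f t) (ψ '' K) := by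
    refine logOn_Icc_closed himg.isClosed hr (hf.comp continuous_coeA.continuousOn ?_)
    rintro _ ⟨x, hx, rfl⟩
    rw [hψ' x hx]; exact hx
  refine (h1.comp hψ (mapsTo_image _ _)).congr fun x hx => by rw [hψ' x hx]; rfl

end basics

universe u v

section ext
variable {X Y : Type*} [TopologicalSpace X] [TopologicalSpace Y] {A B T : Set X}

theorem tietze {X : Type u} {Y : Type v} [TopologicalSpace X] [TopologicalSpace Y] {A : Set X}
    [NormalSpace X] [TietzeExtension.{u, v} Y] {f : X → Y} (hA : IsClosed A)
    (hf : ContinuousOn f A) : ∃ F : X → Y, Continuous F ∧ EqOn F f A := by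
  obtain ⟨g, hg⟩ := ContinuousMap.exists_restrict_eq hA ⟨A.domRestrict f, hf.domRestrict⟩
  exact ⟨g, g.continuous, fun x hx => congrArg (fun k : C(A, Y) => k ⟨x, hx⟩) hg⟩

theorem LogOn.extend [NormalSpace X] {f : X → Angle} (hA : IsClosed A) (h : LogOn f A) :
    ∃ F : X → Angle, LogOn F univ ∧ EqOn F f A := by
  obtain ⟨φ, h1, h2⟩ := h
  obtain ⟨Φ, h3, h4⟩ := tietze hA h1
  exact ⟨fun x => (Φ x : Angle), logOn_coe h3.continuousOn, fun x hx => by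
    beta_reduce; rw [h4 hx, h2 x hx]⟩

/-- Continuity on a set can be checked on the pieces of a cover by two closed sets. -/
theorem contOn_of_closed_cover {f : X → Y} (hA : IsClosed A) (hB : IsClosed B)
    (hT : T ⊆ A ∪ B) (h1 : ContinuousOn f (T ∩ A)) (h2 : ContinuousOn f (T ∩ B)) :
    ContinuousOn f T := by
  have key : ∀ {C : Set X}, IsClosed C → ContinuousOn f (T ∩ C) → ∀ x ∈ T,
      ContinuousWithinAt f (T ∩ C) x := by
    intro C hC h x hx
    by_cases hxC : x ∈ C
    · exact h x ⟨hx, hxC⟩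
    · apply continuousWithinAt_of_notMem_closure
      exact fun h' => hxC (hC.closure_subset (closure_mono inter_subset_right h'))
  intro x hx
  have := (key hA h1 x hx).union (key hB h2 x hx)
  rwa [← inter_union_distrib_left, inter_eq_left.2 hT] at this

/-- Continuity on a set can be checked on the pieces of a cover by two open sets. -/
theorem contOn_of_open_cover {f : X → Y} (hA : IsOpen A) (hB : IsOpen B)
    (hT : T ⊆ A ∪ B) (h1 : ContinuousOn f (T ∩ A)) (h2 : ContinuousOn f (T ∩ B)) :
    ContinuousOn f T := by
  intro x hx
  rcases hT hx with h | h
  · exact (continuousWithinAt_inter (hA.mem_nhds h)).1 (h1 x ⟨hx, h⟩)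
  · exact (continuousWithinAt_inter (hB.mem_nhds h)).1 (h2 x ⟨hx, h⟩)

end ext

/-- The unit complex number with a given angle. -/
noncomputable def unitA (θ : Angle) : ℂ := θ.toCircle

/-- The argument of a complex number as an angle. -/
noncomputable def argA (z : ℂ) : Angle := (Complex.arg z : Angle)

theorem continuous_unitA : Continuous unitA := by
  have : unitA = fun θ => (θ.cos : ℂ) + θ.sin * Complex.I := funext fun θ => Angle.coe_toCircle θ
  rw [this]
  have h1 := Angle.continuous_cos
  have h2 := Angle.continuous_sin
  fun_prop

@[simp] theorem norm_unitA (θ : Angle) : ‖unitA θ‖ = 1 := Circle.norm_coe _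

theorem unitA_ne (θ : Angle) : unitA θ ≠ 0 := Circle.coe_ne_zero _

@[simp] theorem argA_unitA (θ : Angle) : argA (unitA θ) = θ := Angle.arg_toCircle θ

theorem unitA_coe (t : ℝ) : unitA t = Complex.exp (t * Complex.I) := by
  rw [unitA, Angle.toCircle_coe, Circle.coe_exp]

theorem unitA_argA {z : ℂ} (hz : z ≠ 0) : (‖z‖ : ℂ) * unitA (argA z) = z := by
  rw [argA, unitA_coe]
  exact Complex.norm_mul_exp_arg_mul_I z

theorem argA_mul {z w : ℂ} (hz : z ≠ 0) (hw : w ≠ 0) : argA (z * w) = argA z + argA w :=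
  Complex.arg_mul_coe_angle hz hw

theorem argA_real_mul {r : ℝ} (hr : 0 < r) (z : ℂ) : argA (r * z) = argA z := by
  rw [argA, Complex.arg_real_mul z hr, argA]

theorem continuousOn_argA : ContinuousOn argA {0}ᶜ := fun z hz =>
  (Complex.continuousAt_arg_coe_angle hz).continuousWithinAt

/-- The circle is an absolute neighbourhood extensor. -/
theorem extend_nhd {X : Type*} [TopologicalSpace X] [NormalSpace X] {A : Set X} (hA : IsClosed A)
    {f : X → Angle} (hf : ContinuousOn f A) :
    ∃ U : Set X, IsOpen U ∧ A ⊆ U ∧ ∃ F : X → Angle, ContinuousOn F U ∧ EqOn F f A := by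
  obtain ⟨g, hg, hgA⟩ := tietze (Y := ℂ) (f := fun x => unitA (f x)) hA
    (continuous_unitA.comp_continuousOn hf)
  refine ⟨{x | g x ≠ 0}, isOpen_ne_fun hg continuous_const, fun x hx => ?_,
    fun x => argA (g x), continuousOn_argA.comp hg.continuousOn fun x hx => hx, fun x hx => ?_⟩
  · change g x ≠ 0; rw [hgA hx]; exact unitA_ne _
  · beta_reduce; rw [hgA hx]; simp

/-! ### Degree -/

theorem two_pi_int_coe (n : ℤ) : ((2 * π * n : ℝ) : Angle) = 0 := by
  rw [Angle.coe_eq_zero_iff]; exact ⟨n, by rw [zsmul_eq_mul]; ring⟩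

theorem continuous_lift {Y : Type*} [TopologicalSpace Y] {g : Angle → Y}
    (h : Continuous fun t : ℝ => g t) : Continuous g :=
  (isQuotientMap_quotient_mk' (X := ℝ) (s := QuotientAddGroup.leftRel (AddSubgroup.zmultiples (2 * π)))).continuous_iff.2 h

theorem exists_degree {f : Angle → Angle} (hf : Continuous f) :
    ∃ n : ℤ, LogOn (fun x => f x - n • x) univ := by
  obtain ⟨φ, h1, h2⟩ := acyc_univ (X := ℝ) (fun t => f t)
    (hf.comp continuous_coeA).continuousOn
  rw [continuousOn_univ] at h1
  obtain ⟨n, hn⟩ := log_unique (A := univ) (φ := fun t => φ (t + 2 * π)) (ψ := φ) isPreconnected_univ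
    (by fun_prop) h1.continuousOn (fun t _ => by rw [h2 _ trivial, h2 _ trivial]; simp)
  have hper : Periodic (fun t => φ t - n * t) (2 * π) := by
    intro t
    beta_reduce
    rw [hn t trivial]; ring
  refine ⟨n, fun x => Periodic.lift (c := 2 * π) hper x, ?_, ?_⟩
  · refine (continuous_lift ?_).continuousOn
    have : (fun t : ℝ => Periodic.lift (c := 2 * π) hper (t : Angle)) = fun t => φ t - n * t :=
      funext fun t => Periodic.lift_coe hper t
    rw [this]
    fun_prop
  · intro x _
    induction x using Angle.induction_on with | _ t => ?_
    have : Periodic.lift (c := 2 * π) hper (t : Angle) = φ t - n * t :=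
      Periodic.lift_coe hper t
    beta_reduce
    erw [this]
    rw [Angle.coe_sub, h2 t trivial, ← Angle.coe_zsmul, zsmul_eq_mul]

theorem degree_unique {n : ℤ} (h : LogOn (fun x : Angle => n • x) univ) : n = 0 := by
  obtain ⟨ψ, h1, h2⟩ := h
  rw [continuousOn_univ] at h1
  obtain ⟨k, hk⟩ := log_unique (A := univ) (φ := fun t : ℝ => ψ t) (ψ := fun t : ℝ => n * t) isPreconnected_univ
    (h1.comp continuous_coeA).continuousOn (by fun_prop)
    (fun t _ => by rw [h2 _ trivial]; beta_reduce; rw [← Angle.coe_zsmul, zsmul_eq_mul])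
  have e1 := hk 0 trivial
  have e2 := hk (2 * π) trivial
  rw [Angle.coe_two_pi] at e2
  rw [Angle.coe_zero] at e1
  have : (n : ℝ) * (2 * π) = 0 := by linarith
  have h3 : (n : ℝ) = 0 := by
    rcases mul_eq_zero.1 this with h | h
    · exact h
    · exact absurd h (by positivity)
  exact_mod_cast h3

/-! ### The punctured plane -/

theorem degree_plane {f : ℂ → Angle} (hf : ContinuousOn f {0}ᶜ) :
    ∃ n : ℤ, LogOn (fun z => f z - n • argA z) {0}ᶜ := by
  have hfe : Continuous fun w => f (Complex.exp w) :=
    hf.comp_continuous Complex.continuous_exp fun w => Complex.exp_ne_zero w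
  obtain ⟨φ, h1, h2⟩ := acyc_complex (fun w => f (Complex.exp w)) hfe.continuousOn
  rw [continuousOn_univ] at h1
  obtain ⟨n, hn⟩ := log_unique (A := univ) (φ := fun w => φ (w + 2 * π * Complex.I)) (ψ := φ)
    isPreconnected_univ (by fun_prop) h1.continuousOn
    (fun w _ => by rw [h2 _ trivial, h2 _ trivial]; beta_reduce; rw [Complex.exp_periodic w])
  simp only [mem_univ, forall_const] at hn
  set g : ℂ → ℝ := fun w => φ w - n * w.im with hg
  have hgc : Continuous g := h1.sub (continuous_const.mul Complex.continuous_im)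
  have hper : Periodic g (2 * π * Complex.I) := by
    intro w
    simp only [hg]
    rw [hn w]
    simp
    ring
  have hgk : ∀ w w' : ℂ, Complex.exp w = Complex.exp w' → g w = g w' := by
    intro w w' h
    obtain ⟨k, hk⟩ := Complex.exp_eq_exp_iff_exists_int.1 h
    rw [hk]
    exact (hper.int_mul k) w'
  refine ⟨n, fun z => g (Complex.log z), ?_, ?_⟩
  · intro z₀ hz₀
    have hz₀' : z₀ ≠ 0 := hz₀
    have h3 : ContinuousAt (fun z => g (Complex.log z₀ + Complex.log (z / z₀))) z₀ := by
      refine hgc.continuousAt.comp (continuousAt_const.add ?_)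
      refine ContinuousAt.clog (continuousAt_id.div_const _) ?_
      simp [hz₀']
    refine (h3.congr ?_).continuousWithinAt
    filter_upwards [isOpen_ne.mem_nhds hz₀'] with z hz
    apply hgk
    rw [Complex.exp_add, Complex.exp_log hz₀', Complex.exp_log (div_ne_zero hz hz₀'), Complex.exp_log hz,
      mul_div_cancel₀ _ hz₀']
  · intro z hz
    have hz' : z ≠ 0 := hz
    simp only [hg, Angle.coe_sub]
    rw [h2 _ trivial]
    beta_reduce
    rw [Complex.exp_log hz', Complex.log_im, argA, ← Angle.coe_zsmul, zsmul_eq_mul]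

theorem argA_degree {n : ℤ} {r : ℝ} (hr : 0 < r) {A : Set ℂ} (hA : sphere 0 r ⊆ A)
    (h : LogOn (fun z => n • argA z) A) : n = 0 := by
  apply degree_unique
  refine (h.comp (h := fun θ => (r : ℂ) * unitA θ) (continuous_const.mul continuous_unitA).continuousOn
    (B := univ) ?_).congr ?_
  · intro θ _
    apply hA
    simp [abs_of_pos hr]
  · intro θ _
    rw [argA_real_mul hr, argA_unitA]

theorem degree_ball {f : ℂ → Angle} {r : ℝ} (hr : 0 < r) (hf : ContinuousOn f (ball 0 r \ {0})) :
    ∃ n : ℤ, LogOn (fun z => f z - n • argA z) (ball 0 r \ {0}) := by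
  have hpos : ∀ z : ℂ, 0 < r / (1 + ‖z‖) := fun z => by positivity
  have hbig : ContinuousOn (fun z : ℂ => f ((r / (1 + ‖z‖) : ℝ) * z)) {0}ᶜ := by
    refine hf.comp (Continuous.continuousOn ?_) ?_
    · refine (Complex.continuous_ofReal.comp ?_).mul continuous_id
      exact continuous_const.div (by fun_prop) fun z => by positivity
    · intro z hz
      refine ⟨?_, mul_ne_zero (by exact_mod_cast (hpos z).ne') hz⟩
      rw [mem_ball_zero_iff, norm_mul, Complex.norm_real, Real.norm_eq_abs, abs_of_pos (hpos z),
        div_mul_eq_mul_div, div_lt_iff₀ (by positivity)]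
      nlinarith [norm_nonneg z]
  obtain ⟨n, hn⟩ := degree_plane hbig
  refine ⟨n, (hn.comp (h := fun z : ℂ => ((1 / (r - ‖z‖) : ℝ) : ℂ) * z) (B := ball 0 r \ {0}) ?_ ?_).congr ?_⟩
  · refine (Complex.continuous_ofReal.comp_continuousOn ?_).mul continuousOn_id
    refine continuousOn_const.div (by fun_prop) fun z hz => ?_
    have := mem_ball_zero_iff.1 hz.1
    linarith
  · intro z hz
    have := mem_ball_zero_iff.1 hz.1
    refine mul_ne_zero ?_ hz.2
    exact_mod_cast (one_div_pos.2 (sub_pos.2 this)).ne'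
  · intro z hz
    have h1 := sub_pos.2 (mem_ball_zero_iff.1 hz.1)
    have h2 : 0 < 1 / (r - ‖z‖) := one_div_pos.2 h1
    rw [argA_real_mul h2, ← mul_assoc, ← Complex.ofReal_mul]
    congr 2
    rw [norm_mul, Complex.norm_real, Real.norm_eq_abs, abs_of_pos h2]
    rw [show r / (1 + 1 / (r - ‖z‖) * ‖z‖) * (1 / (r - ‖z‖)) = 1 by field_simp; ring]
    simp

/-! ### Local behaviour at a puncture -/

section punct
variable {X : Type*} [TopologicalSpace X] {f g : X → Angle} {x : X}

/-- `f` has a logarithm on a punctured neighbourhood of `x`. -/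
def NullAt (f : X → Angle) (x : X) : Prop :=
  ∃ O : Set X, IsOpen O ∧ x ∈ O ∧ LogOn f (O \ {x})

/-- `f` is continuous on a punctured neighbourhood of `x`. -/
def PCont (f : X → Angle) (x : X) : Prop :=
  ∃ O : Set X, IsOpen O ∧ x ∈ O ∧ ContinuousOn f (O \ {x})

/-- `f` generates the infinite cyclic group of germs of circle-valued maps on punctured
neighbourhoods of `x`, modulo logarithms. -/
def IsGen (f : X → Angle) (x : X) : Prop :=
  PCont f x ∧ (∀ n : ℤ, NullAt (fun y => n • f y) x → n = 0) ∧
    ∀ f' : X → Angle, PCont f' x → ∃ n : ℤ, NullAt (fun y => f' y - n • f y) x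

theorem NullAt.pcont (h : NullAt f x) : PCont f x :=
  let ⟨O, h1, h2, h3⟩ := h
  ⟨O, h1, h2, h3.continuousOn⟩

theorem NullAt.add (hf : NullAt f x) (hg : NullAt g x) : NullAt (fun y => f y + g y) x :=
  let ⟨O, h1, h2, h3⟩ := hf
  let ⟨O', h1', h2', h3'⟩ := hg
  ⟨O ∩ O', h1.inter h1', ⟨h2, h2'⟩, (h3.mono (fun y hy => ⟨hy.1.1, hy.2⟩)).add
    (h3'.mono (fun y hy => ⟨hy.1.2, hy.2⟩))⟩

theorem NullAt.zsmul (hf : NullAt f x) (n : ℤ) : NullAt (fun y => n • f y) x :=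
  let ⟨O, h1, h2, h3⟩ := hf
  ⟨O, h1, h2, h3.zsmul n⟩

theorem NullAt.sub (hf : NullAt f x) (hg : NullAt g x) : NullAt (fun y => f y - g y) x :=
  let ⟨O, h1, h2, h3⟩ := hf
  let ⟨O', h1', h2', h3'⟩ := hg
  ⟨O ∩ O', h1.inter h1', ⟨h2, h2'⟩, (h3.mono (fun y hy => ⟨hy.1.1, hy.2⟩)).sub
    (h3'.mono (fun y hy => ⟨hy.1.2, hy.2⟩))⟩

theorem NullAt.congr (hf : NullAt f x) {O : Set X} (hO : IsOpen O) (hx : x ∈ O)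
    (h : ∀ y ∈ O, y ≠ x → f y = g y) : NullAt g x :=
  let ⟨O', h1, h2, h3⟩ := hf
  ⟨O ∩ O', hO.inter h1, ⟨hx, h2⟩, (h3.mono (fun y hy => ⟨hy.1.2, hy.2⟩)).congr
    fun y hy => h y hy.1.1 hy.2⟩

theorem NullAt.congr' (hf : NullAt f x) (h : ∀ y, f y = g y) : NullAt g x :=
  hf.congr isOpen_univ trivial fun y _ _ => h y

theorem pcont_of_continuousOn {O : Set X} (hO : IsOpen O) (hx : x ∈ O)
    (h : ContinuousOn f (O \ {x})) : PCont f x := ⟨O, hO, hx, h⟩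

/-- A map continuous near `x`, including `x` itself, has a logarithm near `x`. -/
theorem nullAt_of_continuousOn {O : Set X} (hO : IsOpen O) (hx : x ∈ O)
    (h : ContinuousOn f O) : NullAt f x := by
  have h1 := h.isOpen_inter_preimage hO (t := {f x + π}ᶜ) isOpen_compl_singleton
  refine ⟨_, h1, ⟨hx, ?_⟩, (logOn_of_ne (h.mono inter_subset_left) (f x + π) fun y hy => hy.2).mono sdiff_subset⟩
  simp [Angle.pi_ne_zero]

theorem IsGen.add_null (hf : IsGen f x) (hg : NullAt g x) : IsGen (fun y => f y + g y) x := by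
  refine ⟨?_, fun n hn => hf.2.1 n ?_, fun f' hf' => ?_⟩
  · obtain ⟨O, h1, h2, h3⟩ := hf.1
    obtain ⟨O', h1', h2', h3'⟩ := hg.pcont
    exact ⟨O ∩ O', h1.inter h1', ⟨h2, h2'⟩, (h3.mono (fun y hy => ⟨hy.1.1, hy.2⟩)).add
      (h3'.mono (fun y hy => ⟨hy.1.2, hy.2⟩))⟩
  · refine (hn.sub (hg.zsmul n)).congr' fun y => ?_
    rw [← zsmul_sub, add_sub_cancel_right]
  · obtain ⟨n, hn⟩ := hf.2.2 f' hf'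
    refine ⟨n, (hn.sub (hg.zsmul n)).congr' fun y => ?_⟩
    rw [zsmul_add]; abel

theorem IsGen.congr (hf : IsGen f x) {O : Set X} (hO : IsOpen O) (hx : x ∈ O)
    (h : ∀ y ∈ O, y ≠ x → f y = g y) : IsGen g x := by
  have h0 : NullAt (fun y => g y - f y) x := by
    refine ⟨O, hO, hx, (logOn_const 0).congr fun y hy => ?_⟩
    simp [h y hy.1 hy.2]
  have := hf.add_null h0
  simpa using this

theorem IsGen.neg (hf : IsGen f x) : IsGen (fun y => -f y) x := by
  refine ⟨?_, fun n hn => ?_, fun f' hf' => ?_⟩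
  · obtain ⟨O, h1, h2, h3⟩ := hf.1
    exact ⟨O, h1, h2, h3.neg⟩
  · have := hf.2.1 (-n) (hn.congr' fun y => by simp)
    omega
  · obtain ⟨n, hn⟩ := hf.2.2 f' hf'
    exact ⟨-n, hn.congr' fun y => by simp⟩

theorem IsGen.unit (hf : IsGen f x) {n : ℤ} (hn : n = 1 ∨ n = -1) : IsGen (fun y => n • f y) x := by
  rcases hn with rfl | rfl
  · simpa using hf
  · simpa using hf.neg

/-- Two generators agree up to sign. -/
theorem IsGen.sign (hf : IsGen f x) (hg : IsGen g x) :
    ∃ n : ℤ, (n = 1 ∨ n = -1) ∧ NullAt (fun y => f y - n • g y) x := by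
  obtain ⟨n, hn⟩ := hg.2.2 f hf.1
  obtain ⟨m, hm⟩ := hf.2.2 g hg.1
  refine ⟨n, ?_, hn⟩
  have h1 : NullAt (fun y => (1 - n * m) • f y) x := by
    refine (hn.add (hm.zsmul n)).congr' fun y => ?_
    rw [sub_zsmul, one_zsmul, zsmul_sub, mul_zsmul]; abel
  have h2 := hf.2.1 _ h1
  exact Int.eq_one_or_neg_one_of_mul_eq_one (by linarith)

end punct

/-- Removing an inessential singularity: `f` can be modified near `x` so as to become continuous. -/
theorem NullAt.repair {X : Type*} [MetricSpace X] {f : X → Angle} {x : X} {T W : Set X}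
    (h : NullAt f x) (hf : ContinuousOn f (T \ {x})) (hT : T ∈ 𝓝 x) (hW : W ∈ 𝓝 x) :
    ∃ g : X → Angle, ContinuousOn g T ∧ ∀ y ∉ W, g y = f y := by
  classical
  obtain ⟨O, hO, hxO, φ, h1, h2⟩ := h
  obtain ⟨ε, hε, hsub⟩ := Metric.nhds_basis_closedBall.mem_iff.1
    (inter_mem (inter_mem (hO.mem_nhds hxO) hW) hT)
  obtain ⟨Φ, h3, h4⟩ := tietze (A := sphere x ε) (f := φ) isClosed_sphere (h1.mono fun y hy =>
    ⟨(hsub (sphere_subset_closedBall hy)).1.1, fun h => by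
      rw [mem_singleton_iff] at h; rw [h, mem_sphere, dist_self] at hy; exact hε.ne hy⟩)
  have hb : ∀ y, dist y x = ε → (Φ y : Angle) = f y := by
    intro y hy
    rw [h4 (mem_sphere.2 hy), h2 y]
    refine ⟨(hsub (sphere_subset_closedBall hy)).1.1, fun h => ?_⟩
    rw [mem_singleton_iff] at h; rw [h, dist_self] at hy; exact hε.ne hy
  refine ⟨fun y => if y ∈ closedBall x ε then (Φ y : Angle) else f y, ?_, fun y hy => ?_⟩
  · refine contOn_of_closed_cover (A := closedBall x ε) (B := {y | ε ≤ dist y x}) isClosed_closedBall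
      (isClosed_le continuous_const (by fun_prop)) (fun y _ => le_total (dist y x) ε) ?_ ?_
    · refine ((continuous_coeA.comp h3).continuousOn).congr fun y hy => ?_
      simp only [hy.2, if_true]; rfl
    · refine (hf.mono ?_).congr fun y hy => ?_
      · rintro y ⟨hy, hy'⟩
        refine ⟨hy, fun h => ?_⟩
        rw [mem_singleton_iff] at h; simp [h] at hy'; linarith
      · by_cases hyb : y ∈ closedBall x ε
        · simp only [hyb, if_true]
          exact hb y (le_antisymm hyb hy.2)
        · simp only [hyb, if_false]
  · have : y ∉ closedBall x ε := fun h => hy (hsub h).1.2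
    simp only [this, if_false]

/-! ### Generators in the plane -/

theorem continuousOn_argA_sub (p : ℂ) : ContinuousOn (fun z => argA (z - p)) {p}ᶜ :=
  continuousOn_argA.comp (by fun_prop) fun z hz => sub_ne_zero.2 hz

theorem isGen_argA (p : ℂ) : IsGen (fun z => argA (z - p)) p := by
  refine ⟨⟨univ, isOpen_univ, trivial, (continuousOn_argA_sub p).mono (by simp [sdiff_eq])⟩, ?_, ?_⟩
  · rintro n ⟨O, hO, hp, hl⟩
    obtain ⟨r, hr, hsub⟩ := Metric.isOpen_iff.1 hO p hp
    refine argA_degree (r := r / 2) (by positivity) Subset.rfl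
      ((hl.comp (h := fun z => z + p) (by fun_prop) (B := sphere 0 (r / 2)) ?_).congr fun z _ => by simp)
    intro z hz
    have hz' : ‖z‖ = r / 2 := by simpa using hz
    refine ⟨hsub ?_, fun h => ?_⟩
    · simp [hz']; linarith
    · simp at h; simp [h] at hz'; linarith
  · rintro f ⟨O, hO, hp, hf⟩
    obtain ⟨r, hr, hsub⟩ := Metric.isOpen_iff.1 hO p hp
    have hm : MapsTo (fun z => z + p) (ball 0 r \ {0}) (O \ {p}) := fun z hz =>
      ⟨hsub (by simpa using hz.1), fun h => hz.2 (by simpa using h)⟩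
    obtain ⟨n, hn⟩ := degree_ball (f := fun z => f (z + p)) hr (hf.comp (by fun_prop) hm)
    · refine ⟨n, ball p r, isOpen_ball, mem_ball_self hr, (hn.comp (h := fun z => z - p) (by fun_prop) ?_).congr ?_⟩
      · intro z hz
        exact ⟨by simpa [dist_eq_norm] using hz.1, sub_ne_zero.2 hz.2⟩
      · intro z _; simp

/-- A map on the punctured plane vanishing near infinity is inessential at the puncture. -/
theorem nullAt_of_compact_support {v : ℂ → Angle} {p : ℂ} (hv : ContinuousOn v {p}ᶜ) {R : ℝ}
    (h0 : ∀ z, R ≤ ‖z‖ → v z = 0) : NullAt v p := by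
  obtain ⟨n, hn⟩ := degree_plane (f := fun z => v (z + p)) (hv.comp (by fun_prop) fun z hz h => hz (by simpa using h))
  have hpos : 0 < |R| + ‖p‖ + 1 := by positivity
  have : n = 0 := by
    refine argA_degree hpos (A := sphere 0 (|R| + ‖p‖ + 1)) Subset.rfl ?_
    refine ((hn.mono ?_).neg).congr fun z hz => ?_
    · intro z hz h
      rw [mem_singleton_iff] at h
      rw [h] at hz; simp at hz; linarith
    · have hz' : ‖z‖ = |R| + ‖p‖ + 1 := by simpa using hz
      have h1 := norm_sub_norm_le z (-p)
      rw [sub_neg_eq_add, norm_neg] at h1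
      rw [h0 (z + p) (by linarith [le_abs_self R])]; simp
  subst this
  refine ⟨univ, isOpen_univ, trivial, (hn.comp (h := fun z => z - p) (by fun_prop) ?_).congr fun z _ => by simp⟩
  intro z hz
  exact sub_ne_zero.2 hz.2

theorem log_argA_sub {a : ℂ} (ha : ‖a‖ < 1) :
    LogOn (fun z => argA (z - a) - argA z) {z | 1 ≤ ‖z‖} := by
  have hre : ∀ z : ℂ, 1 ≤ ‖z‖ → 0 < (1 - a / z).re := by
    intro z hz
    have h1 : ‖a / z‖ < 1 := by
      rw [norm_div, div_lt_one (by linarith)]; linarith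
    have := Complex.re_le_norm (a / z)
    simp; linarith
  have hz0 : ∀ z : ℂ, 1 ≤ ‖z‖ → z ≠ 0 := fun z hz h => by simp [h] at hz; linarith
  refine ⟨fun z => Complex.arg (1 - a / z), ?_, ?_⟩
  · intro z hz
    refine ContinuousAt.continuousWithinAt ?_
    refine ContinuousAt.comp (g := Complex.arg) (Complex.continuousAt_arg (Complex.mem_slitPlane_iff.2 (Or.inl (hre z hz)))) ?_
    exact continuousAt_const.sub (continuousAt_const.div continuousAt_id (hz0 z hz))
  · intro z hz
    have h1 : (1 - a / z) ≠ 0 := fun h => by have := hre z hz; rw [h] at this; simp at this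
    have h2 := argA_mul (hz0 z hz) h1
    rw [mul_sub, mul_one, mul_div_cancel₀ _ (hz0 z hz)] at h2
    beta_reduce
    rw [h2, add_sub_cancel_left]; rfl

theorem plane_pair {a b : ℂ} (hab : a ≠ b) (ha : ‖a‖ < 1) (hb : ‖b‖ < 1) :
    ∃ φ : ℂ → Angle, ContinuousOn φ {a, b}ᶜ ∧ IsGen φ a ∧ IsGen φ b ∧
      ∀ z, 1 ≤ ‖z‖ → φ z = 0 := by
  have hl := (log_argA_sub ha).sub (log_argA_sub hb)
  have hcl : IsClosed {z : ℂ | 1 ≤ ‖z‖} := isClosed_le continuous_const continuous_norm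
  obtain ⟨F, hF, hFe⟩ := hl.extend hcl
  have hFc : Continuous F := continuousOn_univ.1 hF.continuousOn
  have hn : ∀ x, NullAt (fun z => -F z) x := fun x => ⟨univ, isOpen_univ, trivial, hF.neg.mono (subset_univ _)⟩
  refine ⟨fun z => argA (z - a) - argA (z - b) - F z, ?_, ?_, ?_, ?_⟩
  · exact (((continuousOn_argA_sub a).mono (by simp)).sub ((continuousOn_argA_sub b).mono (by simp))).sub hFc.continuousOn
  · have h1 : NullAt (fun z => - argA (z - b)) a :=
      nullAt_of_continuousOn (isOpen_compl_singleton (x := b)) hab (continuousOn_argA_sub b).neg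
    have := ((isGen_argA a).add_null h1).add_null (hn a)
    simpa [sub_eq_add_neg] using this
  · have h1 : NullAt (fun z => argA (z - a)) b :=
      nullAt_of_continuousOn (isOpen_compl_singleton (x := a)) hab.symm (continuousOn_argA_sub a)
    have := ((isGen_argA b).neg.add_null h1).add_null (hn b)
    refine this.congr isOpen_univ trivial fun y _ _ => ?_
    abel
  · intro z hz
    beta_reduce
    rw [hFe hz]
    beta_reduce
    generalize argA (z - a) = p
    generalize argA (z - b) = q
    abel

/-! ### Charts -/

/-- Every point of `Ω` is the centre of a plane chart contained in `Ω`. -/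
def LocPlane {S : Type*} [TopologicalSpace S] (Ω : Set S) : Prop :=
  ∀ x ∈ Ω, ∃ e : ℂ → S, IsOpenEmbedding e ∧ e 0 = x ∧ range e ⊆ Ω

section charts
variable {S : Type*} [TopologicalSpace S] {e : ℂ → S}

theorem invFun_chart (he : IsOpenEmbedding e) (z : ℂ) : invFun e (e z) = z :=
  leftInverse_invFun he.injective z

theorem continuousOn_invFun (he : IsOpenEmbedding e) : ContinuousOn (invFun e) (range e) := by
  rintro _ ⟨z, rfl⟩
  refine ContinuousAt.continuousWithinAt ?_
  rw [← he.continuousAt_iff]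
  have : invFun e ∘ e = id := funext (invFun_chart he)
  rw [this]
  exact continuousAt_id

theorem LocPlane.exists_chart {Ω : Set S} (h : LocPlane Ω) {x : S} (hx : x ∈ Ω) {V : Set S} (hV : IsOpen V)
    (hxV : x ∈ V) : ∃ e : ℂ → S, IsOpenEmbedding e ∧ e 0 = x ∧ range e ⊆ Ω ∩ V := by
  obtain ⟨e, he, h0, hr⟩ := h x hx
  have h1 : IsOpen (e ⁻¹' V) := hV.preimage he.continuous
  obtain ⟨r, hr0, hrs⟩ := Metric.isOpen_iff.1 h1 0 (by simpa [h0] using hxV)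
  have h2 : (OpenPartialHomeomorph.univBall (0 : ℂ) r).source = univ := by simp
  have h3 := (OpenPartialHomeomorph.univBall (0 : ℂ) r).isOpenEmbedding h2
  refine ⟨e ∘ OpenPartialHomeomorph.univBall (0 : ℂ) r, he.comp h3, by simp [h0], ?_⟩
  rintro _ ⟨z, rfl⟩
  refine ⟨hr ⟨_, rfl⟩, hrs ?_⟩
  have := (OpenPartialHomeomorph.univBall (0 : ℂ) r).map_source (x := z) (by simp)
  rwa [OpenPartialHomeomorph.univBall_target _ hr0] at this

theorem LocPlane.inter {Ω : Set S} (h : LocPlane Ω) {V : Set S} (hV : IsOpen V) : LocPlane (Ω ∩ V) :=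
  fun _ hx => h.exists_chart hx.1 hV hx.2

theorem LocPlane.of_univ (h : LocPlane (univ : Set S)) {V : Set S} (hV : IsOpen V) : LocPlane V := by
  simpa using h.inter hV

theorem nullAt_chart (he : IsOpenEmbedding e) {f : S → Angle} {z : ℂ} :
    NullAt f (e z) ↔ NullAt (fun w => f (e w)) z := by
  constructor
  · rintro ⟨O, hO, hz, hl⟩
    refine ⟨e ⁻¹' O, hO.preimage he.continuous, hz, hl.comp he.continuous.continuousOn ?_⟩
    exact fun w hw => ⟨hw.1, fun h => hw.2 (he.injective h)⟩
  · rintro ⟨O, hO, hz, hl⟩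
    refine ⟨e '' O, he.isOpenMap _ hO, mem_image_of_mem _ hz, ?_⟩
    refine (hl.comp (h := invFun e) (B := e '' O \ {e z}) ((continuousOn_invFun he).mono ?_) ?_).congr ?_
    · rintro _ ⟨⟨w, _, rfl⟩, _⟩; exact ⟨w, rfl⟩
    · rintro _ ⟨⟨w, hw, rfl⟩, h⟩
      rw [invFun_chart he]
      exact ⟨hw, fun h' => h (by rw [h'] ; rfl)⟩
    · rintro _ ⟨⟨w, hw, rfl⟩, h⟩
      rw [invFun_chart he]

theorem pcont_chart (he : IsOpenEmbedding e) {f : S → Angle} {z : ℂ} :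
    PCont f (e z) ↔ PCont (fun w => f (e w)) z := by
  constructor
  · rintro ⟨O, hO, hz, hl⟩
    refine ⟨e ⁻¹' O, hO.preimage he.continuous, hz, hl.comp he.continuous.continuousOn ?_⟩
    exact fun w hw => ⟨hw.1, fun h => hw.2 (he.injective h)⟩
  · rintro ⟨O, hO, hz, hl⟩
    refine ⟨e '' O, he.isOpenMap _ hO, mem_image_of_mem _ hz, ?_⟩
    refine (hl.comp (f := invFun e) (s := e '' O \ {e z}) ((continuousOn_invFun he).mono ?_) ?_).congr ?_
    · rintro _ ⟨⟨w, _, rfl⟩, _⟩; exact ⟨w, rfl⟩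
    · rintro _ ⟨⟨w, hw, rfl⟩, h⟩
      rw [invFun_chart he]
      exact ⟨hw, fun h' => h (by rw [h'] ; rfl)⟩
    · rintro _ ⟨⟨w, hw, rfl⟩, h⟩
      simp [invFun_chart he]

theorem isGen_chart (he : IsOpenEmbedding e) {f : S → Angle} {z : ℂ} :
    IsGen f (e z) ↔ IsGen (fun w => f (e w)) z := by
  constructor
  · rintro ⟨h1, h2, h3⟩
    refine ⟨(pcont_chart he).1 h1, fun n hn => h2 n ((nullAt_chart he).2 hn), fun f' hf' => ?_⟩
    obtain ⟨n, hn⟩ := h3 (fun y => f' (invFun e y)) ((pcont_chart he).2 (by simpa [invFun_chart he] using hf'))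
    exact ⟨n, by simpa [invFun_chart he] using (nullAt_chart he).1 hn⟩
  · rintro ⟨h1, h2, h3⟩
    refine ⟨(pcont_chart he).2 h1, fun n hn => h2 n ((nullAt_chart he).1 hn), fun f' hf' => ?_⟩
    obtain ⟨n, hn⟩ := h3 _ ((pcont_chart he).1 hf')
    exact ⟨n, (nullAt_chart he).2 hn⟩

/-- `φ` is a circle-valued map with generating singularities exactly at `x` and `y`, and
vanishing outside `Ω`. -/
structure Pair (φ : S → Angle) (x y : S) (Ω : Set S) : Prop where
  cont : ContinuousOn φ {x, y}ᶜ
  genl : IsGen φ x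
  genr : IsGen φ y
  zero : ∀ z ∉ Ω, φ z = 0

theorem Pair.symm {φ : S → Angle} {x y : S} {Ω : Set S} (h : Pair φ x y Ω) : Pair φ y x Ω :=
  ⟨by rw [pair_comm]; exact h.cont, h.genr, h.genl, h.zero⟩

theorem Pair.mono {φ : S → Angle} {x y : S} {Ω Ω' : Set S} (h : Pair φ x y Ω) (hs : Ω ⊆ Ω') :
    Pair φ x y Ω' :=
  ⟨h.cont, h.genl, h.genr, fun z hz => h.zero z fun h' => hz (hs h')⟩

theorem chart_pair [T2Space S] (he : IsOpenEmbedding e) {a b : ℂ} (hab : a ≠ b) (ha : ‖a‖ < 1) (hb : ‖b‖ < 1) :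
    ∃ φ : S → Angle, Pair φ (e a) (e b) (e '' ball 0 1) := by
  classical
  obtain ⟨φ, h1, h2, h3, h4⟩ := plane_pair hab ha hb
  set ψ : S → Angle := fun y => if y ∈ range e then φ (invFun e y) else 0 with hψ
  have hψe : ∀ z, ψ (e z) = φ z := fun z => by simp [hψ, invFun_chart he]
  have hzero : ∀ z ∉ e '' ball 0 1, ψ z = 0 := by
    intro z hz
    by_cases hz' : z ∈ range e
    · obtain ⟨w, rfl⟩ := hz'
      rw [hψe]
      refine h4 w (le_of_not_gt fun h => hz ⟨w, by simpa using h, rfl⟩)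
    · simp only [hψ, hz', if_false]
  refine ⟨ψ, ?_, (isGen_chart he).2 (by simpa only [hψe] using h2), (isGen_chart he).2 (by simpa only [hψe] using h3), hzero⟩
  have hK : IsClosed (e '' closedBall 0 1) := ((isCompact_closedBall 0 1).image he.continuous).isClosed
  refine contOn_of_open_cover (A := range e) (B := (e '' closedBall 0 1)ᶜ) he.isOpen_range hK.isOpen_compl ?_ ?_ ?_
  · intro y _
    by_cases h : y ∈ range e
    · exact Or.inl h
    · exact Or.inr fun h' => h (image_subset_range _ _ h')
  · refine (h1.comp (f := invFun e) (s := {e a, e b}ᶜ ∩ range e) ((continuousOn_invFun he).mono inter_subset_right) ?_).congr ?_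
    · rintro _ ⟨hy, w, rfl⟩
      rw [invFun_chart he]
      rintro (h | h)
      · exact hy (Or.inl (by rw [h]))
      · exact hy (Or.inr (by rw [mem_singleton_iff.1 h]; rfl))
    · rintro _ ⟨hy, w, rfl⟩
      simp [hψe, invFun_chart he]
  · refine (continuousOn_const (c := (0 : Angle))).congr fun y hy => hzero y fun h => hy.2 (image_mono ball_subset_closedBall h)

end charts

section chain
variable {S : Type*} [MetricSpace S]

theorem Pair.trans {φ ψ : S → Angle} {x y z : S} {Ω : Set S} (h1 : Pair φ x y Ω)
    (h2 : Pair ψ y z Ω) (hxy : x ≠ y) (hyz : y ≠ z) (hxz : x ≠ z) (hΩ : Ω ∈ 𝓝 y) :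
    ∃ χ, Pair χ x z Ω := by
  obtain ⟨n, hn, hnull⟩ := h1.genr.sign h2.genl
  set ε := min (dist x y) (dist z y) / 2 with hε
  have hε0 : 0 < ε := by
    have := dist_pos.2 hxy; have := dist_pos.2 hyz.symm; positivity
  have e1 : 2 * ε ≤ dist x y := by rw [hε]; linarith [min_le_left (dist x y) (dist z y)]
  have e2 : 2 * ε ≤ dist z y := by rw [hε]; linarith [min_le_right (dist x y) (dist z y)]
  have hc : ContinuousOn (fun w => φ w - n • ψ w) ({x, z}ᶜ \ {y}) := by
    refine (h1.cont.mono ?_).sub ((h2.cont.mono ?_).const_smul n)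
    · rintro w ⟨hw, hw'⟩ (rfl | rfl)
      · exact hw (by simp)
      · exact hw' rfl
    · rintro w ⟨hw, hw'⟩ (rfl | rfl)
      · exact hw' rfl
      · exact hw (by simp)
  have hT : ({x, z} : Set S)ᶜ ∈ 𝓝 y := by
    apply ((toFinite {x, z}).isClosed).isOpen_compl.mem_nhds
    rintro (h | h)
    · exact hxy h.symm
    · exact hyz h
  obtain ⟨g, hg, hgeq⟩ := hnull.repair hc hT (inter_mem hΩ (ball_mem_nhds y hε0))
  have hnear : ∀ w p, 2 * ε ≤ dist p y → w ∈ ball p ε → g w = φ w - n • ψ w := by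
    intro w p hp hw
    refine hgeq w fun h => ?_
    have h1 := mem_ball.1 h.2
    have h2 := mem_ball.1 hw
    have := dist_triangle_left p y w
    linarith
  refine ⟨g, hg, ?_, ?_, fun w hw => ?_⟩
  · have hm : NullAt (fun w => -(n • ψ w)) x := by
      refine nullAt_of_continuousOn (O := {y, z}ᶜ) ((toFinite {y, z}).isClosed).isOpen_compl ?_ (h2.cont.const_smul n).neg
      rintro (h | h)
      · exact hxy h
      · exact hxz h
    refine (h1.genl.add_null hm).congr isOpen_ball (mem_ball_self hε0) fun w hw _ => ?_
    rw [hnear w x e1 hw]; abel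
  · have hm : NullAt φ z := by
      refine nullAt_of_continuousOn (O := {x, y}ᶜ) ((toFinite {x, y}).isClosed).isOpen_compl ?_ h1.cont
      rintro (h | h)
      · exact hxz h.symm
      · exact hyz h.symm
    have h3 := (h2.genr.unit (n := n) hn).neg
    refine (h3.add_null hm).congr isOpen_ball (mem_ball_self hε0) fun w hw _ => ?_
    rw [hnear w z e2 hw]; abel
  · rw [hgeq w fun h => hw h.1, h1.zero w hw, h2.zero w hw]; simp

/-- In a connected open surface any two points are the singularities of a circle-valued map
supported in that surface. -/
theorem exists_pair {Ω : Set S} (hΩ : IsOpen Ω) (hc : IsPreconnected Ω) (hl : LocPlane Ω) {x y : S}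
    (hx : x ∈ Ω) (hy : y ∈ Ω) (hxy : x ≠ y) : ∃ φ, Pair φ x y Ω := by
  have key : x = y ∨ ∃ φ, Pair φ x y Ω := by
    refine hc.induction₂' (fun x y => x = y ∨ ∃ φ, Pair φ x y Ω) ?_ ?_ hx hy
    · intro p hp
      obtain ⟨e, he, h0, hr⟩ := hl p hp
      have hV : e '' ball 0 1 ∈ 𝓝 p := (he.isOpenMap _ isOpen_ball).mem_nhds ⟨0, by simp, h0⟩
      filter_upwards [nhdsWithin_le_nhds hV]
      rintro _ ⟨w, hw, rfl⟩
      by_cases hw0 : (0 : ℂ) = w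
      · subst hw0; exact ⟨Or.inl h0.symm, Or.inl h0⟩
      · obtain ⟨φ, hφ⟩ := chart_pair he hw0 (by simp) (by simpa using hw)
        rw [h0] at hφ
        have := hφ.mono ((image_subset_range _ _).trans hr)
        exact ⟨Or.inr ⟨φ, this⟩, Or.inr ⟨φ, this.symm⟩⟩
    · rintro a b c ha hb hc (rfl | ⟨φ, hφ⟩) (rfl | ⟨ψ, hψ⟩)
      · exact Or.inl rfl
      · exact Or.inr ⟨ψ, hψ⟩
      · exact Or.inr ⟨φ, hφ⟩
      · by_cases hac : a = c
        · exact Or.inl hac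
        by_cases hab : a = b
        · subst hab; exact Or.inr ⟨ψ, hψ⟩
        by_cases hbc : b = c
        · subst hbc; exact Or.inr ⟨φ, hφ⟩
        exact Or.inr (hφ.trans hψ hab hbc hac (hΩ.mem_nhds hb))
  exact key.resolve_left hxy

end chain

/-! ### Membranes -/

theorem continuousOn_invFunOn {X Y : Type*} [Nonempty X] [TopologicalSpace X] [TopologicalSpace Y]
    [T2Space Y] {k : X → Y} {D : Set X} (hD : IsCompact D) (hk : ContinuousOn k D) (hinj : InjOn k D) :
    ContinuousOn (invFunOn k D) (k '' D) := by
  rw [continuousOn_iff_isClosed]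
  intro C hC
  refine ⟨k '' (D ∩ C), ((hD.inter_right hC).image_of_continuousOn (hk.mono inter_subset_left)).isClosed, ?_⟩
  ext y
  constructor
  · rintro ⟨h, x, hx, rfl⟩
    have h' : invFunOn k D (k x) ∈ C := h
    rw [hinj.leftInvOn_invFunOn hx] at h'
    exact ⟨⟨x, ⟨hx, h'⟩, rfl⟩, x, hx, rfl⟩
  · rintro ⟨⟨x, ⟨hx, hxC⟩, rfl⟩, _⟩
    refine ⟨?_, x, hx, rfl⟩
    rw [mem_preimage, hinj.leftInvOn_invFunOn hx]
    exact hxC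

/-- `f`, given on `A`, extends to a continuous circle-valued map on `T`. -/
def ExtTo {S : Type*} [TopologicalSpace S] (f : S → Angle) (A T : Set S) : Prop :=
  ∃ F : S → Angle, ContinuousOn F T ∧ EqOn F f A

/-- A map of the plane punctured at `w` to the circle restricting to the argument outside the
open unit disc: it plays the role of the radial projection from `w`. -/
theorem exists_radial {w : ℂ} (hw : ‖w‖ < 1) :
    ∃ R : ℂ → Angle, ContinuousOn R {w}ᶜ ∧ ∀ z, 1 ≤ ‖z‖ → R z = argA z := by
  have hcl : IsClosed {z : ℂ | 1 ≤ ‖z‖} := isClosed_le continuous_const continuous_norm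
  obtain ⟨F, hF, hFe⟩ := (log_argA_sub hw).extend hcl
  refine ⟨fun z => argA (z - w) - F z, (continuousOn_argA_sub w).sub (hF.continuousOn.mono (subset_univ _)), ?_⟩
  intro z hz
  beta_reduce
  rw [hFe hz]; simp

theorem extend_circle {f : Angle → Angle} {K : Set Angle} (hK : IsClosed K)
    (hf : ContinuousOn f K) : ∃ g : Angle → Angle, Continuous g ∧ EqOn g f K := by
  by_cases h : K = univ
  · subst h; exact ⟨f, continuousOn_univ.1 hf, fun _ _ => rfl⟩
  · obtain ⟨F, h1, h2⟩ := (logOn_circle_closed hK h hf).extend hK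
    exact ⟨F, continuousOn_univ.1 h1.continuousOn, h2⟩

section membrane
variable {S : Type*} [MetricSpace S]

theorem extend_over_disc {e : ℂ → S} (he : IsOpenEmbedding e) {T : Set S} {F : S → Angle}
    (hF : ContinuousOn F (T \ e '' ball 0 1)) (hK : IsClosed (e ⁻¹' T ∩ sphere 0 1)) {w : ℂ}
    (hw : ‖w‖ < 1) (hwT : e w ∉ T) :
    ∃ G : S → Angle, ContinuousOn G T ∧ EqOn G F (T \ e '' ball 0 1) := by
  classical
  obtain ⟨R, hR, hRe⟩ := exists_radial hw
  set K : Set Angle := unitA ⁻¹' (e ⁻¹' T ∩ sphere 0 1)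
  have hnb : ∀ z : ℂ, ‖z‖ = 1 → e z ∉ e '' ball 0 1 := by
    rintro z hz ⟨z', hz', h⟩
    rw [he.injective h] at hz'; simp [hz] at hz'
  obtain ⟨g, hg, hge⟩ := extend_circle (f := fun θ => F (e (unitA θ))) (K := K) (hK.preimage continuous_unitA)
    (hF.comp (he.continuous.comp continuous_unitA).continuousOn fun θ hθ => ⟨hθ.1, hnb _ (by simp)⟩)
  set G : S → Angle := fun y => if y ∈ e '' ball 0 1 then g (R (invFun e y)) else F y with hG
  have hGe : ∀ z, ‖z‖ ≤ 1 → e z ∈ T → G (e z) = g (R z) := by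
    intro z hz hzT
    rcases hz.lt_or_eq with h | h
    · have : e z ∈ e '' ball 0 1 := ⟨z, by simpa using h, rfl⟩
      simp only [hG, this, if_true, invFun_chart he]
    · simp only [hG, hnb z h, if_false]
      have hz0 : z ≠ 0 := fun h' => by simp [h'] at h
      have h1 := unitA_argA hz0
      rw [h] at h1
      simp only [Complex.ofReal_one, one_mul] at h1
      rw [hRe z h.ge, hge]
      · beta_reduce; rw [h1]
      · refine ⟨?_, by simp⟩
        rw [mem_preimage, h1]; exact hzT
  refine ⟨G, ?_, fun y hy => by simp only [hG, hy.2, if_false]⟩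
  have hD : IsClosed (e '' closedBall 0 1) := ((isCompact_closedBall 0 1).image he.continuous).isClosed
  refine contOn_of_closed_cover (A := (e '' ball 0 1)ᶜ) (B := e '' closedBall 0 1)
    (he.isOpenMap _ isOpen_ball).isClosed_compl hD ?_ ?_ ?_
  · intro y _
    by_cases h : y ∈ e '' ball 0 1
    · exact Or.inr (image_mono ball_subset_closedBall h)
    · exact Or.inl h
  · exact hF.congr fun y hy => by simp only [hG]; exact if_neg hy.2
  · refine ((hg.comp_continuousOn hR).comp (f := invFun e) (s := T ∩ e '' closedBall 0 1)
      ((continuousOn_invFun he).mono ?_) ?_).congr ?_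
    · rintro _ ⟨_, z, _, rfl⟩; exact ⟨z, rfl⟩
    · rintro _ ⟨h, z, _, rfl⟩
      rw [invFun_chart he]
      rintro (rfl : z = w)
      exact hwT h
    · rintro _ ⟨h, z, hz, rfl⟩
      rw [hGe z (by simpa using hz) h]
      simp [invFun_chart he]

/-- Minimal membranes: if `f` does not extend from `A` to the compact set `X`, then there is a
minimal closed `T` to which it does not extend, and `T \ A` is a nonempty open set. -/
theorem exists_membrane {X A Ω : Set S} {f : S → Angle} (hX : IsCompact X) (hA : IsClosed A)
    (hAX : A ⊆ X) (hf : ContinuousOn f A) (hΩ : LocPlane Ω) (hXΩ : X \ A ⊆ Ω) (hne : ¬ ExtTo f A X) :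
    ∃ T, IsClosed T ∧ A ⊆ T ∧ T ⊆ X ∧ ¬ ExtTo f A T ∧
      (∀ T', IsClosed T' → A ⊆ T' → T' ⊆ T → T' ≠ T → ExtTo f A T') ∧
      IsOpen (T \ A) ∧ (T \ A).Nonempty := by
  obtain ⟨T, hT⟩ := zorn_superset {T : Set S | IsClosed T ∧ A ⊆ T ∧ T ⊆ X ∧ ¬ ExtTo f A T} (by
    intro c hc hch
    rcases c.eq_empty_or_nonempty with rfl | hcn
    · exact ⟨X, ⟨hX.isClosed, hAX, Subset.rfl, hne⟩, by simp⟩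
    have hcl : IsClosed (⋂₀ c) := isClosed_sInter fun t ht => (hc ht).1
    refine ⟨⋂₀ c, ⟨hcl, subset_sInter fun t ht => (hc ht).2.1, ?_, ?_⟩, fun t ht => sInter_subset_of_mem ht⟩
    · obtain ⟨t, ht⟩ := hcn
      exact (sInter_subset_of_mem ht).trans (hc ht).2.2.1
    · rintro ⟨F, hF, hFe⟩
      obtain ⟨U, hU, hUs, G, hG, hGe⟩ := extend_nhd hcl hF
      haveI : Nonempty c := hcn.to_subtype
      obtain ⟨t, ht⟩ := exists_subset_nhds_of_isCompact' (V := fun t : c => (t : Set S)) (U := U)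
        (by
          intro a b
          rcases hch.total a.2 b.2 with h | h
          · exact ⟨a, Subset.rfl, h⟩
          · exact ⟨b, h, Subset.rfl⟩)
        (fun t => hX.of_isClosed_subset (hc t.2).1 (hc t.2).2.2.1) (fun t => (hc t.2).1)
        (fun x hx => hU.mem_nhds (hUs (by simpa [sInter_eq_iInter] using hx)))
      refine (hc t.2).2.2.2 ⟨G, hG.mono ht, fun x hx => ?_⟩
      rw [hGe (mem_sInter.2 fun t ht => (hc ht).2.1 hx), hFe hx])
  obtain ⟨hTc, hAT, hTX, hTn⟩ := hT.prop
  have hmin : ∀ T', IsClosed T' → A ⊆ T' → T' ⊆ T → T' ≠ T → ExtTo f A T' := by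
    intro T' h1 h2 h3 h4
    by_contra h5
    exact h4 (h3.antisymm (hT.le_of_le ⟨h1, h2, h3.trans hTX, h5⟩ h3))
  refine ⟨T, hTc, hAT, hTX, hTn, hmin, ?_, ?_⟩
  · have : T \ A = interior T ∩ Aᶜ := by
      refine Subset.antisymm (fun t ht => ⟨?_, ht.2⟩) fun t ht => ⟨interior_subset ht.1, ht.2⟩
      by_contra hti
      obtain ⟨e, he, h0, hr⟩ := hΩ.exists_chart (hXΩ ⟨hTX ht.1, ht.2⟩) hA.isOpen_compl ht.2
      have hO : IsOpen (e '' ball 0 1) := he.isOpenMap _ isOpen_ball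
      have htb : t ∈ e '' ball 0 1 := ⟨0, by simp, h0⟩
      have hAb : Disjoint A (e '' ball 0 1) := by
        rw [disjoint_right]
        exact fun y hy => (hr (image_subset_range _ _ hy)).2
      obtain ⟨F, hF, hFe⟩ := hmin (T \ e '' ball 0 1) (hTc.sdiff hO) (subset_sdiff.2 ⟨hAT, hAb⟩) sdiff_subset
        fun h => by
          have := ht.1
          rw [← h] at this
          exact this.2 htb
      have : ¬ e '' ball 0 1 ⊆ T := fun h => hti (mem_interior.2 ⟨_, h, hO, htb⟩)
      obtain ⟨_, ⟨w, hw, rfl⟩, hwT⟩ := not_subset.1 this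
      obtain ⟨G, hG, hGe⟩ := extend_over_disc he hF ((hTc.preimage he.continuous).inter isClosed_sphere)
        (by simpa using hw) hwT
      exact hTn ⟨G, hG, fun y hy => (hGe ⟨hAT hy, disjoint_left.1 hAb hy⟩).trans (hFe hy)⟩
    rw [this]
    exact isOpen_interior.inter hA.isOpen_compl
  · by_contra h
    rw [not_nonempty_iff_eq_empty, sdiff_eq_empty] at h
    exact hTn ⟨f, hf.mono h, fun _ _ => rfl⟩

/-- A map which does not extend over a connected open surface extends over any puncturing of it. -/
theorem extend_punctured {X A : Set S} {f : S → Angle} (hX : IsCompact X) (hA : IsClosed A)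
    (hAX : A ⊆ X) (hf : ContinuousOn f A) (hΩ : LocPlane (X \ A)) (hO : IsOpen (X \ A))
    (hc : IsPreconnected (X \ A)) (hne : ¬ ExtTo f A X) {x : S} (hx : x ∈ X \ A) :
    ExtTo f A (X \ {x}) := by
  obtain ⟨T, hTc, hAT, hTX, hTn, hmin, hTo, hTne⟩ := exists_membrane hX hA hAX hf hΩ Subset.rfl hne
  have hTX' : X \ A ⊆ T \ A := by
    refine hc.subset_of_closure_inter_subset hTo ?_ ?_
    · obtain ⟨t, ht⟩ := hTne
      exact ⟨t, ⟨hTX ht.1, ht.2⟩, ht⟩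
    · rintro t ⟨ht, ht'⟩
      exact ⟨closure_minimal sdiff_subset hTc ht, ht'.2⟩
  have hTeq : T = X := hTX.antisymm fun t ht => by
    by_cases h : t ∈ A
    · exact hAT h
    · exact (hTX' ⟨ht, h⟩).1
  subst hTeq
  obtain ⟨e, he, h0, hr⟩ := hΩ.exists_chart hx hA.isOpen_compl hx.2
  have hO : IsOpen (e '' ball 0 1) := he.isOpenMap _ isOpen_ball
  have hxb : x ∈ e '' ball 0 1 := ⟨0, by simp, h0⟩
  have hAb : Disjoint A (e '' ball 0 1) := by
    rw [disjoint_right]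
    exact fun y hy => (hr (image_subset_range _ _ hy)).2
  obtain ⟨F, hF, hFe⟩ := hmin (T \ e '' ball 0 1) (hTc.sdiff hO) (subset_sdiff.2 ⟨hAT, hAb⟩) sdiff_subset
    fun h => by
      have := hx.1
      rw [← h] at this
      exact this.2 hxb
  have hcl : IsClosed (e ⁻¹' (T \ {x}) ∩ sphere 0 1) := by
    have : e ⁻¹' (T \ {x}) ∩ sphere 0 1 = e ⁻¹' T ∩ sphere 0 1 := by
      ext z
      refine ⟨fun h => ⟨h.1.1, h.2⟩, fun h => ⟨⟨h.1, ?_⟩, h.2⟩⟩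
      rintro (h' : e z = x)
      rw [← h0] at h'
      have h2 := h.2
      rw [he.injective h'] at h2
      simp at h2
    rw [this]
    exact (hTc.preimage he.continuous).inter isClosed_sphere
  have hsub : (T \ {x}) \ e '' ball 0 1 ⊆ T \ e '' ball 0 1 := fun y hy => ⟨hy.1.1, hy.2⟩
  obtain ⟨G, hG, hGe⟩ := extend_over_disc he (T := T \ {x}) (hF.mono hsub) hcl (w := 0) (by simp)
    (fun h => h.2 h0)
  exact ⟨G, hG, fun y hy => (hGe ⟨⟨hAT hy, fun h => hx.2 (h ▸ hy)⟩, disjoint_left.1 hAb hy⟩).trans (hFe hy)⟩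

end membrane

/-! ### Unicoherence and invariance of domain -/

theorem locPlane_complex : LocPlane (univ : Set ℂ) := fun x _ =>
  ⟨fun z => z + x, (Homeomorph.addRight x).isOpenEmbedding, by simp, subset_univ _⟩

/-- Unicoherence. -/
theorem inter_preconnected {X : Type*} [MetricSpace X] {A B : Set X} (hA : IsClosed A) (hB : IsClosed B)
    (hAc : IsPreconnected A) (hBc : IsPreconnected B) (hac : Acyc (A ∪ B)) : IsPreconnected (A ∩ B) := by
  rw [isPreconnected_closed_iff]
  intro K L hK hL hKL ⟨k, hkAB, hk⟩ ⟨l, hlAB, hl⟩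
  by_contra hne
  rw [not_nonempty_iff_eq_empty] at hne
  have hdis : Disjoint (A ∩ B ∩ K) (A ∩ B ∩ L) := by
    rw [disjoint_left]
    intro x hx hx'
    have : x ∈ A ∩ B ∩ (K ∩ L) := ⟨hx.1, hx.2, hx'.2⟩
    rw [hne] at this; exact this
  obtain ⟨u, hu0, hu1, _⟩ := exists_continuous_zero_one_of_isClosed ((hA.inter hB).inter hK)
    ((hA.inter hB).inter hL) hdis
  have hpi : ((-π : ℝ) : Angle) = (π : ℝ) := by simp [Angle.coe_neg]
  obtain ⟨F, hF, hFA, hFB⟩ := glue_closed (f := fun x => ((π * u x : ℝ) : Angle))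
    (g := fun x => ((-(π * u x) : ℝ) : Angle)) hA hB
    (continuous_coeA.comp (by fun_prop)).continuousOn (continuous_coeA.comp (by fun_prop)).continuousOn (by
      intro x hx hx'
      rcases hKL ⟨hx, hx'⟩ with h | h
      · have : u x = 0 := hu0 ⟨⟨hx, hx'⟩, h⟩
        simp [this]
      · have : u x = 1 := hu1 ⟨⟨hx, hx'⟩, h⟩
        rw [this, mul_one, hpi])
  obtain ⟨ψ, hψ, hψe⟩ := hac F hF
  obtain ⟨n, hn⟩ := log_unique hAc (hψ.mono subset_union_left) (ψ := fun x => π * u x) (by fun_prop)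
    fun x hx => by rw [hψe x (Or.inl hx), hFA hx]
  obtain ⟨m, hm⟩ := log_unique hBc (hψ.mono subset_union_right) (ψ := fun x => -(π * u x)) (by fun_prop)
    fun x hx => by rw [hψe x (Or.inr hx), hFB hx]
  have e1 := hn k hkAB.1
  have e2 := hm k hkAB.2
  have e3 := hn l hlAB.1
  have e4 := hm l hlAB.2
  have u1 : u k = 0 := hu0 ⟨hkAB, hk⟩
  have u2 : u l = 1 := hu1 ⟨hlAB, hl⟩
  rw [u1] at e1 e2
  rw [u2] at e3 e4
  have hpos := Real.pi_pos
  have h1 : (n : ℝ) = m := by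
    have : 2 * π * n = 2 * π * m := by linarith
    exact mul_left_cancel₀ (by positivity) this
  rw [h1] at e3
  linarith

/-- Invariance of domain for discs in surfaces. -/
theorem isOpen_image_ball {S : Type*} [MetricSpace S] (hS : LocPlane (univ : Set S)) {k : ℂ → S}
    (hk : ContinuousOn k (closedBall 0 1)) (hinj : InjOn k (closedBall 0 1)) : IsOpen (k '' ball 0 1) := by
  set D : Set ℂ := closedBall 0 1 with hD
  have hDc : IsCompact D := isCompact_closedBall 0 1
  have hsD : sphere (0 : ℂ) 1 ⊆ D := sphere_subset_closedBall
  have hinv := continuousOn_invFunOn hDc hk hinj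
  have hli : ∀ z ∈ D, invFunOn k D (k z) = z := fun z hz => hinj.leftInvOn_invFunOn hz
  set f : S → Angle := fun y => argA (invFunOn k D y) with hf
  have hX : IsCompact (k '' D) := hDc.image_of_continuousOn hk
  have hA : IsCompact (k '' sphere 0 1) := (isCompact_sphere 0 1).image_of_continuousOn (hk.mono hsD)
  have hAX : k '' sphere 0 1 ⊆ k '' D := image_mono hsD
  have hfA : ContinuousOn f (k '' sphere 0 1) := by
    refine continuousOn_argA.comp (hinv.mono hAX) ?_
    rintro _ ⟨z, hz, rfl⟩
    rw [hli z (hsD hz)]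
    rintro (rfl : z = 0)
    simp at hz
  have hne : ¬ ExtTo f (k '' sphere 0 1) (k '' D) := by
    rintro ⟨F, hF, hFe⟩
    have h1 := acyc_disc (fun z => F (k z)) (hF.comp hk (mapsTo_image _ _))
    have h2 : (1 : ℤ) = 0 := by
      refine argA_degree one_pos Subset.rfl ((h1.mono hsD).congr fun z hz => ?_)
      rw [hFe ⟨z, hz, rfl⟩, hf]
      beta_reduce
      rw [hli z (hsD hz), one_zsmul]
    exact one_ne_zero h2
  obtain ⟨T, hTc, hAT, hTX, hTn, hmin, hTo, hTne⟩ := exists_membrane hX hA.isClosed hAX hfA hS (subset_univ _) hne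
  have hT : T = k '' D := by
    refine hTX.antisymm ?_
    rintro _ ⟨w, hw, rfl⟩
    by_contra hwT
    have hw1 : ‖w‖ < 1 := by
      refine lt_of_le_of_ne (by simpa [hD] using hw) fun h => hwT (hAT ⟨w, by simpa using h, rfl⟩)
    obtain ⟨R, hR, hRe⟩ := exists_radial hw1
    refine hTn ⟨fun y => R (invFunOn k D y), hR.comp (hinv.mono hTX) ?_, ?_⟩
    · intro y hy
      obtain ⟨z, hz, rfl⟩ := hTX hy
      rw [hli z hz]
      rintro (rfl : z = w)
      exact hwT hy
    · rintro _ ⟨z, hz, rfl⟩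
      beta_reduce
      rw [hRe _ (by rw [hli z (hsD hz)]; simp at hz; simp [hz])]
  have : k '' ball 0 1 = T \ k '' sphere 0 1 := by
    rw [hT]
    refine Subset.antisymm ?_ ?_
    · rintro _ ⟨z, hz, rfl⟩
      refine ⟨⟨z, ball_subset_closedBall hz, rfl⟩, ?_⟩
      rintro ⟨z', hz', h⟩
      rw [hinj (hsD hz') (ball_subset_closedBall hz) h] at hz'
      simp at hz hz'; linarith
    · rintro _ ⟨⟨z, hz, rfl⟩, h2⟩
      refine ⟨z, ?_, rfl⟩
      rw [mem_ball_zero_iff]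
      exact lt_of_le_of_ne (by simpa [hD] using hz) fun h => h2 ⟨z, by simpa using h, rfl⟩
  rw [this]; exact hTo

/-! ### Arcs and simple closed curves -/

section arcs
variable {S : Type*} [MetricSpace S] {s : Set S} {a b : S}

/-- `s` is an arc with end points `a` and `b`. -/
def IsArc {S : Type*} [TopologicalSpace S] (s : Set S) (a b : S) : Prop :=
  ∃ γ : ℝ → S, ContinuousOn γ (Icc 0 1) ∧ InjOn γ (Icc 0 1) ∧ γ '' Icc 0 1 = s ∧ γ 0 = a ∧ γ 1 = b

/-- `J` is a simple closed curve. -/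
def IsJordan {S : Type*} [TopologicalSpace S] (J : Set S) : Prop :=
  ∃ j : Angle → S, Continuous j ∧ Injective j ∧ range j = J

theorem IsArc.of_Icc {γ : ℝ → S} {u v : ℝ} (huv : u < v) (hγ : ContinuousOn γ (Icc u v)) (hi : InjOn γ (Icc u v)) :
    IsArc (γ '' Icc u v) (γ u) (γ v) := by
  have hm : MapsTo (fun t => u + (v - u) * t) (Icc (0:ℝ) 1) (Icc u v) := by
    rintro t ⟨h0, h1⟩
    constructor <;> nlinarith
  have hinj : InjOn (fun t => u + (v - u) * t) (Icc (0:ℝ) 1) := by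
    intro t _ t' _ h
    have : (v - u) * (t - t') = 0 := by simp only at h; linarith
    rcases mul_eq_zero.1 this with h | h <;> linarith
  refine ⟨fun t => γ (u + (v - u) * t), hγ.comp (by fun_prop) hm, hi.comp hinj hm, ?_, by simp, by simp⟩
  refine Subset.antisymm ?_ ?_
  · rintro _ ⟨t, ht, rfl⟩; exact ⟨_, hm ht, rfl⟩
  · rintro _ ⟨t, ht, rfl⟩
    have h0 : 0 < v - u := by linarith
    refine ⟨(t - u) / (v - u), ⟨div_nonneg (by linarith [ht.1]) h0.le, (div_le_one h0).2 (by linarith [ht.2])⟩, ?_⟩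
    beta_reduce
    rw [mul_div_cancel₀ _ h0.ne']; simp

theorem IsArc.symm (h : IsArc s a b) : IsArc s b a := by
  obtain ⟨γ, hc, hi, rfl, rfl, rfl⟩ := h
  have hm : MapsTo (fun t => 1 - t) (Icc (0:ℝ) 1) (Icc 0 1) := by
    rintro t ⟨h0, h1⟩
    constructor <;> linarith
  refine ⟨fun t => γ (1 - t), hc.comp (by fun_prop) hm, hi.comp (fun t _ t' _ h => by simpa using h) hm, ?_, by simp, by simp⟩
  refine Subset.antisymm ?_ ?_
  · rintro _ ⟨t, ht, rfl⟩; exact ⟨_, hm ht, rfl⟩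
  · rintro _ ⟨t, ht, rfl⟩; exact ⟨_, hm ht, by simp⟩

theorem IsArc.isCompact (h : IsArc s a b) : IsCompact s := by
  obtain ⟨γ, hc, hi, rfl, rfl, rfl⟩ := h
  exact isCompact_Icc.image_of_continuousOn hc

theorem IsArc.isClosed (h : IsArc s a b) : IsClosed s := h.isCompact.isClosed

theorem IsArc.left_mem (h : IsArc s a b) : a ∈ s := by
  obtain ⟨γ, hc, hi, rfl, rfl, rfl⟩ := h
  exact ⟨0, by simp, rfl⟩

theorem IsArc.right_mem (h : IsArc s a b) : b ∈ s := h.symm.left_mem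

theorem IsArc.ne (h : IsArc s a b) : a ≠ b := by
  obtain ⟨γ, hc, hi, rfl, rfl, rfl⟩ := h
  intro h
  exact zero_ne_one (hi (by simp) (by simp) h)

theorem IsArc.isPreconnected (h : IsArc s a b) : IsPreconnected s := by
  obtain ⟨γ, hc, hi, rfl, rfl, rfl⟩ := h
  exact isPreconnected_Icc.image _ hc

theorem IsArc.diff_eq {γ : ℝ → S} (hi : InjOn γ (Icc 0 1)) : γ '' Icc 0 1 \ {γ 0, γ 1} = γ '' Ioo 0 1 := by
  refine Subset.antisymm ?_ ?_
  · rintro _ ⟨⟨t, ht, rfl⟩, h⟩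
    refine ⟨t, ⟨lt_of_le_of_ne ht.1 ?_, lt_of_le_of_ne ht.2 ?_⟩, rfl⟩
    · rintro rfl; simp at h
    · rintro rfl; simp at h
  · rintro _ ⟨t, ht, rfl⟩
    refine ⟨⟨t, Ioo_subset_Icc_self ht, rfl⟩, ?_⟩
    rintro (h | h)
    · have := hi (Ioo_subset_Icc_self ht) (by simp) h
      linarith [ht.1]
    · have := hi (Ioo_subset_Icc_self ht) (by simp) h
      linarith [ht.2]

theorem IsArc.interior_preconnected (h : IsArc s a b) : IsPreconnected (s \ {a, b}) := by
  obtain ⟨γ, hc, hi, rfl, rfl, rfl⟩ := h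
  rw [IsArc.diff_eq hi]
  exact isPreconnected_Ioo.image _ (hc.mono Ioo_subset_Icc_self)

theorem IsArc.interior_nonempty (h : IsArc s a b) : (s \ {a, b}).Nonempty := by
  obtain ⟨γ, hc, hi, rfl, rfl, rfl⟩ := h
  rw [IsArc.diff_eq hi]
  exact ⟨γ (1/2), 1/2, by norm_num, rfl⟩

theorem IsArc.subset_closure (h : IsArc s a b) : s ⊆ closure (s \ {a, b}) := by
  obtain ⟨γ, hc, hi, rfl, rfl, rfl⟩ := h
  rw [IsArc.diff_eq hi]
  rintro _ ⟨t, ht, rfl⟩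
  have h1 : t ∈ closure (Ioo (0:ℝ) 1) := by rw [closure_Ioo zero_ne_one]; exact ht
  exact ((hc t ht).mono Ioo_subset_Icc_self).mem_closure_image h1

theorem IsArc.acyc (h : IsArc s a b) : Acyc s := by
  obtain ⟨γ, hc, hi, rfl, rfl, rfl⟩ := h
  refine (acyc_Icc 0 1).of_retract hc (mapsTo_image _ _) (continuousOn_invFunOn isCompact_Icc hc hi) ?_ ?_
  · rintro _ ⟨t, ht, rfl⟩
    rw [hi.leftInvOn_invFunOn ht]; exact ht
  · rintro _ ⟨t, ht, rfl⟩
    rw [hi.leftInvOn_invFunOn ht]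

theorem IsArc.image {T : Type*} [MetricSpace T] (h : IsArc s a b) {g : S → T} (hg : ContinuousOn g s) (hi : InjOn g s) :
    IsArc (g '' s) (g a) (g b) := by
  obtain ⟨γ, hc, hi', rfl, rfl, rfl⟩ := h
  exact ⟨g ∘ γ, hg.comp hc (mapsTo_image _ _), hi.comp hi' (mapsTo_image _ _), image_comp _ _ _, rfl, rfl⟩

/-- Two arcs are homeomorphic by maps matching the end points. -/
theorem IsArc.homeo {T : Type*} [MetricSpace T] {s' : Set T} {a' b' : T} (h : IsArc s a b) (h' : IsArc s' a' b') :
    ∃ (g : S → T) (g' : T → S), ContinuousOn g s ∧ ContinuousOn g' s' ∧ MapsTo g s s' ∧ MapsTo g' s' s ∧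
      (∀ x ∈ s, g' (g x) = x) ∧ (∀ y ∈ s', g (g' y) = y) ∧ g a = a' ∧ g b = b' := by
  obtain ⟨γ, hc, hi, rfl, rfl, rfl⟩ := h
  obtain ⟨δ, hc', hi', rfl, rfl, rfl⟩ := h'
  have k1 : ∀ t ∈ Icc (0:ℝ) 1, invFunOn γ (Icc 0 1) (γ t) = t := fun t ht => hi.leftInvOn_invFunOn ht
  have k2 : ∀ t ∈ Icc (0:ℝ) 1, invFunOn δ (Icc 0 1) (δ t) = t := fun t ht => hi'.leftInvOn_invFunOn ht
  have m1 : MapsTo (invFunOn γ (Icc 0 1)) (γ '' Icc 0 1) (Icc 0 1) := by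
    rintro _ ⟨t, ht, rfl⟩; rw [k1 t ht]; exact ht
  have m2 : MapsTo (invFunOn δ (Icc 0 1)) (δ '' Icc 0 1) (Icc 0 1) := by
    rintro _ ⟨t, ht, rfl⟩; rw [k2 t ht]; exact ht
  refine ⟨fun x => δ (invFunOn γ (Icc 0 1) x), fun y => γ (invFunOn δ (Icc 0 1) y),
    hc'.comp (continuousOn_invFunOn isCompact_Icc hc hi) m1, hc.comp (continuousOn_invFunOn isCompact_Icc hc' hi') m2,
    fun x hx => ⟨_, m1 hx, rfl⟩, fun x hx => ⟨_, m2 hx, rfl⟩, ?_, ?_, ?_, ?_⟩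
  · rintro _ ⟨t, ht, rfl⟩
    beta_reduce
    rw [k1 t ht, k2 t ht]
  · rintro _ ⟨t, ht, rfl⟩
    beta_reduce
    rw [k2 t ht, k1 t ht]
  · beta_reduce
    rw [k1 0 (by simp)]
  · beta_reduce
    rw [k1 1 (by simp)]

end arcs

section jordan
variable {S : Type*} [MetricSpace S] {J s J1 J2 : Set S} {a b : S}

theorem isJordan_of_map (hJ : IsCompact J) (hne : J.Nonempty) {h : S → Angle} (hc : ContinuousOn h J) (hi : InjOn h J)
    (hs : h '' J = univ) : IsJordan J := by
  have : Nonempty S := hne.nonempty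
  have h1 := continuousOn_invFunOn hJ hc hi
  rw [hs, continuousOn_univ] at h1
  have h2 : ∀ θ, ∃ x ∈ J, h x = θ := fun θ => by
    have : θ ∈ h '' J := by rw [hs]; trivial
    exact this
  refine ⟨_, h1, ?_, ?_⟩
  · intro θ θ' hθ
    rw [← invFunOn_eq (h2 θ), ← invFunOn_eq (h2 θ'), hθ]
  · refine Subset.antisymm ?_ ?_
    · rintro _ ⟨θ, rfl⟩
      exact invFunOn_mem (h2 θ)
    · intro x hx
      exact ⟨h x, hi.leftInvOn_invFunOn hx⟩

theorem IsJordan.exists_map (h : IsJordan J) : ∃ g : S → Angle, ContinuousOn g J ∧ InjOn g J ∧ g '' J = univ := by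
  obtain ⟨j, hc, hi, rfl⟩ := h
  have h1 := continuousOn_invFunOn isCompact_univ hc.continuousOn hi.injOn
  rw [image_univ] at h1
  have h2 : ∀ θ, invFunOn j univ (j θ) = θ := fun θ => hi.injOn.leftInvOn_invFunOn (mem_univ θ)
  refine ⟨_, h1, ?_, ?_⟩
  · rintro _ ⟨θ, rfl⟩ _ ⟨θ', rfl⟩ h
    rw [h2, h2] at h; rw [h]
  · rw [eq_univ_iff_forall]
    exact fun θ => ⟨j θ, ⟨θ, rfl⟩, h2 θ⟩

theorem IsJordan.isCompact (h : IsJordan J) : IsCompact J := by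
  obtain ⟨j, hc, hi, rfl⟩ := h
  exact isCompact_range hc

theorem IsJordan.isClosed (h : IsJordan J) : IsClosed J := h.isCompact.isClosed

theorem IsJordan.nonempty (h : IsJordan J) : J.Nonempty := by
  obtain ⟨j, hc, hi, rfl⟩ := h
  exact ⟨j 0, 0, rfl⟩

theorem preconnectedSpace_angle : IsPreconnected (univ : Set Angle) := by
  have : range ((↑) : ℝ → Angle) = univ := by
    rw [eq_univ_iff_forall]
    exact fun θ => ⟨θ.toReal, by simp⟩
  rw [← this, ← image_univ]
  exact isPreconnected_univ.image _ continuous_coeA.continuousOn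

theorem IsJordan.isPreconnected (h : IsJordan J) : IsPreconnected J := by
  obtain ⟨j, hc, hi, rfl⟩ := h
  rw [← image_univ]
  exact preconnectedSpace_angle.image _ hc.continuousOn

/-- A simple closed curve carries a map no nonzero multiple of which has a logarithm. -/
theorem IsJordan.exists_gen (h : IsJordan J) : ∃ g : S → Angle, ContinuousOn g J ∧
    ∀ n : ℤ, LogOn (fun x => n • g x) J → n = 0 := by
  obtain ⟨j, hc, hi, rfl⟩ := h
  have h1 := continuousOn_invFunOn isCompact_univ hc.continuousOn hi.injOn
  rw [image_univ] at h1
  have h2 : ∀ θ, invFunOn j univ (j θ) = θ := fun θ => hi.injOn.leftInvOn_invFunOn (mem_univ θ)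
  refine ⟨_, h1, fun n hn => degree_unique ?_⟩
  refine (hn.comp (h := j) (B := univ) hc.continuousOn fun θ _ => ⟨θ, rfl⟩).congr fun θ _ => ?_
  rw [h2]

theorem IsJordan.logOn_proper (h : IsJordan J) {K : Set S} (hK : IsClosed K) (hKJ : K ⊆ J) (hne : K ≠ J)
    {f : S → Angle} (hf : ContinuousOn f K) : LogOn f K := by
  obtain ⟨j, hc, hi, rfl⟩ := h
  have h1 := continuousOn_invFunOn isCompact_univ hc.continuousOn hi.injOn
  rw [image_univ] at h1
  have h2 : ∀ θ, invFunOn j univ (j θ) = θ := fun θ => hi.injOn.leftInvOn_invFunOn (mem_univ θ)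
  have h3 := logOn_circle_closed (f := fun θ => f (j θ)) (hK.preimage hc) (fun h => by
    refine hne (hKJ.antisymm ?_)
    rintro _ ⟨θ, rfl⟩
    have : θ ∈ j ⁻¹' K := h ▸ mem_univ θ
    exact this) (hf.comp hc.continuousOn fun θ hθ => hθ)
  have hm : MapsTo (invFunOn j univ) K (j ⁻¹' K) := by
    intro x hx
    obtain ⟨θ, rfl⟩ := hKJ hx
    rw [h2]; exact hx
  refine (h3.comp (h1.mono hKJ) hm).congr ?_
  intro x hx
  obtain ⟨θ, rfl⟩ := hKJ hx
  rw [h2]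

theorem angle_inj {t t' : ℝ} (h : (t : Angle) = t') (h1 : |t - t'| < 2 * π) : t = t' := by
  rw [Angle.angle_eq_iff_two_pi_dvd_sub] at h
  obtain ⟨k, hk⟩ := h
  rw [hk, abs_mul, abs_of_pos Real.two_pi_pos] at h1
  have h2 : |(k : ℝ)| < 1 := by
    have := Real.two_pi_pos
    nlinarith
  have h3 : k = 0 := by
    have : |k| < 1 := by exact_mod_cast h2
    exact Int.abs_lt_one_iff.1 this
  rw [h3] at hk; simp at hk; linarith

/-- The two arcs of a simple closed curve cut out by an angle interval of length `t`. -/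
theorem split_aux {j : Angle → S} (hc : Continuous j) (hi : Injective j) (α : Angle) {t : ℝ}
    (ht : 0 < t) (ht' : t < 2 * π) :
    ∃ J1 J2, IsArc J1 (j α) (j (α + t)) ∧ IsArc J2 (j α) (j (α + t)) ∧ J1 ∪ J2 = range j ∧
      J1 ∩ J2 = {j α, j (α + t)} ∧ J1 = (fun u : ℝ => j (α + u)) '' Icc 0 t := by
  set k : ℝ → S := fun u : ℝ => j (α + u) with hk
  have hkc : Continuous k := hc.comp (continuous_const.add continuous_coeA)
  have hki : ∀ u v : ℝ, |u - v| < 2 * π → k u = k v → u = v := by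
    intro u v h h'
    exact angle_inj (add_left_cancel (hi h')) h
  have k0 : k 0 = j α := by simp [hk]
  have k2 : k (2 * π) = j α := by simp [hk]
  have hinj1 : InjOn k (Icc 0 t) := fun u hu v hv h => hki u v (by
    rw [abs_lt]; constructor <;> linarith [hu.1, hu.2, hv.1, hv.2]) h
  have hinj2 : InjOn k (Icc t (2 * π)) := fun u hu v hv h => hki u v (by
    rw [abs_lt]; constructor <;> linarith [hu.1, hu.2, hv.1, hv.2]) h
  have a1 := IsArc.of_Icc ht hkc.continuousOn hinj1
  have a2 := IsArc.of_Icc ht' hkc.continuousOn hinj2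
  rw [k0] at a1
  rw [k2] at a2
  refine ⟨_, _, a1, a2.symm, ?_, ?_, rfl⟩
  · rw [← image_union, Icc_union_Icc_eq_Icc ht.le ht'.le]
    refine Subset.antisymm ?_ ?_
    · rintro _ ⟨u, _, rfl⟩; exact ⟨_, rfl⟩
    · rintro _ ⟨θ, rfl⟩
      have h1 := (θ - α).neg_pi_lt_toReal
      have h2 := (θ - α).toReal_le_pi
      by_cases h3 : 0 ≤ (θ - α).toReal
      · exact ⟨_, ⟨h3, by linarith [Real.pi_pos]⟩, by simp [hk]⟩
      · exact ⟨(θ - α).toReal + 2 * π, ⟨by linarith, by linarith⟩, by simp [hk]⟩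
  · refine Subset.antisymm ?_ ?_
    · rintro _ ⟨⟨u, hu, rfl⟩, ⟨v, hv, h⟩⟩
      by_cases huv : u = 0 ∧ v = 2 * π
      · rw [huv.1, k0]; simp
      · have h1 : v = u := by
          refine hki v u ?_ h
          rw [abs_lt]
          refine ⟨by linarith [hu.1, hu.2, hv.1, hv.2], lt_of_le_of_ne (by linarith [hu.1, hv.2]) fun h' => huv ?_⟩
          constructor <;> linarith [hu.1, hv.2]
        have : u = t := le_antisymm hu.2 (h1 ▸ hv.1)
        rw [this]; right; rfl
    · rintro x (rfl | rfl)
      · exact ⟨a1.left_mem, a2.right_mem⟩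
      · exact ⟨a1.right_mem, a2.left_mem⟩

theorem IsJordan.split (h : IsJordan J) (ha : a ∈ J) (hb : b ∈ J) (hab : a ≠ b) :
    ∃ J1 J2, IsArc J1 a b ∧ IsArc J2 a b ∧ J1 ∪ J2 = J ∧ J1 ∩ J2 = {a, b} := by
  obtain ⟨j, hc, hi, rfl⟩ := h
  obtain ⟨α, rfl⟩ := ha
  obtain ⟨β, rfl⟩ := hb
  have h1 := (β - α).neg_pi_lt_toReal
  have h2 := (β - α).toReal_le_pi
  have h0 : (β - α).toReal ≠ 0 := by
    rw [Ne, Angle.toReal_eq_zero_iff, sub_eq_zero]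
    rintro rfl; exact hab rfl
  rcases lt_or_gt_of_ne h0 with h3 | h3
  · obtain ⟨J1, J2, h4, h5, h6, h7, _⟩ := split_aux hc hi α (t := (β - α).toReal + 2 * π) (by linarith) (by linarith)
    simp only [Angle.coe_add, Angle.coe_toReal, Angle.coe_two_pi, add_zero, add_sub_cancel] at h4 h5 h7
    exact ⟨J1, J2, h4, h5, h6, h7⟩
  · obtain ⟨J1, J2, h4, h5, h6, h7, _⟩ := split_aux hc hi α (t := (β - α).toReal) (by linarith) (by linarith)
    simp only [Angle.coe_toReal, add_sub_cancel] at h4 h5 h7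
    exact ⟨J1, J2, h4, h5, h6, h7⟩

/-- Nearby points of a simple closed curve bound a small subarc. -/
theorem IsJordan.small_split (h : IsJordan J) {ε : ℝ} (hε : 0 < ε) : ∃ δ > 0, ∀ a ∈ J, ∀ b ∈ J, a ≠ b → dist a b < δ →
    ∃ J1 J2, IsArc J1 a b ∧ IsArc J2 a b ∧ J1 ∪ J2 = J ∧ J1 ∩ J2 = {a, b} ∧ J1 ⊆ ball a ε := by
  obtain ⟨j, hc, hi, rfl⟩ := h
  obtain ⟨η, hη, hη'⟩ := Metric.uniformContinuous_iff.1 (CompactSpace.uniformContinuous_of_continuous hc) (ε / 2) (by positivity)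
  have h1 := continuousOn_invFunOn isCompact_univ hc.continuousOn hi.injOn
  rw [image_univ] at h1
  have h2 : ∀ θ, invFunOn j univ (j θ) = θ := fun θ => hi.injOn.leftInvOn_invFunOn (mem_univ θ)
  obtain ⟨δ, hδ, hδ'⟩ := Metric.uniformContinuousOn_iff.1
    ((isCompact_range hc).uniformContinuousOn_of_continuous h1) η hη
  have hdist : ∀ (α : Angle) (t u : ℝ), 0 ≤ u → u ≤ t → t ≤ π → dist α (α + u) ≤ dist α (α + t) := by
    intro α t u h0 h1 h2
    have e1 : ∀ t : ℝ, 0 ≤ t → t ≤ π → dist α (α + t) = t := by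
      intro t h0 h2
      rw [dist_comm, dist_eq_norm, add_sub_cancel_left]

      refine ((AddCircle.norm_coe_eq_abs_iff (x := t) (2 * π) Real.two_pi_pos.ne').2 ?_).trans (abs_of_nonneg h0)
      rw [abs_of_nonneg h0, abs_of_pos Real.two_pi_pos]; linarith
    rw [e1 t (h0.trans h1) h2, e1 u h0 (h1.trans h2)]; exact h1
  -- the case in which `b` follows `a` in the positive direction
  have key : ∀ (α : Angle) (t : ℝ), 0 < t → t ≤ π → dist (j α) (j (α + t)) < δ →
      ∃ J1 J2, IsArc J1 (j α) (j (α + t)) ∧ IsArc J2 (j α) (j (α + t)) ∧ J1 ∪ J2 = range j ∧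
        J1 ∩ J2 = {j α, j (α + t)} ∧ J1 ⊆ ball (j α) (ε / 2) := by
    intro α t h0 hπ hd
    obtain ⟨J1, J2, h4, h5, h6, h7, h8⟩ := split_aux hc hi α h0 (by linarith [Real.pi_pos])
    refine ⟨J1, J2, h4, h5, h6, h7, ?_⟩
    rw [h8]
    rintro _ ⟨u, hu, rfl⟩
    have h9 := hδ' (j α) ⟨_, rfl⟩ (j (α + t)) ⟨_, rfl⟩ hd
    rw [h2, h2] at h9
    rw [mem_ball, dist_comm]
    exact hη' ((hdist α t u hu.1 hu.2 hπ).trans_lt h9)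
  refine ⟨min δ (ε / 2), by positivity, ?_⟩
  rintro _ ⟨α, rfl⟩ _ ⟨β, rfl⟩ hab hd
  have h3 := (β - α).neg_pi_lt_toReal
  have h4 := (β - α).toReal_le_pi
  have h0 : (β - α).toReal ≠ 0 := by
    rw [Ne, Angle.toReal_eq_zero_iff, sub_eq_zero]
    rintro rfl; exact hab rfl
  rcases lt_or_gt_of_ne h0 with h5 | h5
  · have e : β + ((-(β - α).toReal : ℝ) : Angle) = α := by simp
    have := key β (-(β - α).toReal) (by linarith) (by linarith)
    rw [e, dist_comm] at this
    obtain ⟨J1, J2, h4, h5, h6, h7, h8⟩ := this (hd.trans_le (min_le_left _ _))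
    refine ⟨J1, J2, h4.symm, h5.symm, h6, h7.trans (pair_comm _ _), h8.trans fun x hx => ?_⟩
    rw [mem_ball] at hx ⊢
    have := dist_triangle x (j β) (j α)
    rw [dist_comm (j β) (j α)] at this
    have := hd.trans_le (min_le_right _ _)
    linarith
  · have e : α + (((β - α).toReal : ℝ) : Angle) = β := by simp
    have := key α ((β - α).toReal) (by linarith) (by linarith)
    rw [e] at this
    obtain ⟨J1, J2, h4, h5, h6, h7, h8⟩ := this (hd.trans_le (min_le_left _ _))
    exact ⟨J1, J2, h4, h5, h6, h7, h8.trans (ball_subset_ball (by linarith))⟩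

theorem isJordan_glue (h1 : IsArc J1 a b) (h2 : IsArc J2 a b) (h : J1 ∩ J2 = {a, b}) : IsJordan (J1 ∪ J2) := by
  have hA := h1.isClosed
  have hB := h2.isClosed
  have hcpt := h1.isCompact.union h2.isCompact
  have hne : (J1 ∪ J2).Nonempty := ⟨a, Or.inl h1.left_mem⟩
  obtain ⟨γ, hc, hi, rfl, rfl, rfl⟩ := h1
  obtain ⟨δ, hc', hi', rfl, h3, h4⟩ := h2
  have k1 : ∀ t ∈ Icc (0:ℝ) 1, invFunOn γ (Icc 0 1) (γ t) = t := fun t ht => hi.leftInvOn_invFunOn ht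
  have k2 : ∀ t ∈ Icc (0:ℝ) 1, invFunOn δ (Icc 0 1) (δ t) = t := fun t ht => hi'.leftInvOn_invFunOn ht
  have hpi : ((-π : ℝ) : Angle) = (π : ℝ) := by simp [Angle.coe_neg]
  have hends : ∀ t ∈ Icc (0:ℝ) 1, ∀ u ∈ Icc (0:ℝ) 1, γ t = δ u → (t = 0 ∧ u = 0) ∨ (t = 1 ∧ u = 1) := by
    intro t ht u hu htu
    have : γ t ∈ γ '' Icc 0 1 ∩ δ '' Icc 0 1 := ⟨⟨t, ht, rfl⟩, u, hu, htu.symm⟩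
    rw [h] at this
    rcases this with h5 | h5
    · left
      refine ⟨hi ht (by simp) h5, hi' hu (by simp) ?_⟩
      rw [← htu, h5, h3]
    · right
      refine ⟨hi ht (by simp) h5, hi' hu (by simp) ?_⟩
      rw [← htu, h5, h4]
  obtain ⟨F, hF, hFA, hFB⟩ := glue_closed (f := fun x => ((π * invFunOn γ (Icc 0 1) x : ℝ) : Angle))
    (g := fun x => ((-(π * invFunOn δ (Icc 0 1) x) : ℝ) : Angle)) hA hB
    (continuous_coeA.comp_continuousOn (continuousOn_const.mul (continuousOn_invFunOn isCompact_Icc hc hi)))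
    (continuous_coeA.comp_continuousOn (continuousOn_const.mul (continuousOn_invFunOn isCompact_Icc hc' hi')).neg) (by
      rintro _ ⟨t, ht, rfl⟩ ⟨u, hu, hut⟩
      rw [k1 t ht, ← hut, k2 u hu]
      rcases hends t ht u hu hut.symm with ⟨rfl, rfl⟩ | ⟨rfl, rfl⟩
      · simp
      · rw [mul_one, hpi])
  have f1 : ∀ t ∈ Icc (0:ℝ) 1, F (γ t) = ((π * t : ℝ) : Angle) := fun t ht => by
    rw [hFA ⟨t, ht, rfl⟩]; beta_reduce; rw [k1 t ht]
  have f2 : ∀ t ∈ Icc (0:ℝ) 1, F (δ t) = ((-(π * t) : ℝ) : Angle) := fun t ht => by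
    rw [hFB ⟨t, ht, rfl⟩]; beta_reduce; rw [k2 t ht]
  have hpos := Real.pi_pos
  have hmix : ∀ t ∈ Icc (0:ℝ) 1, ∀ u ∈ Icc (0:ℝ) 1, F (γ t) = F (δ u) → γ t = δ u := by
    intro t ht u hu htu
    rw [f1 t ht, f2 u hu] at htu
    by_cases h5 : t = 1 ∧ u = 1
    · rw [h5.1, h5.2, h4]
    · have h7 : t + u < 2 := by
        by_contra h6
        exact h5 ⟨by linarith [ht.2, hu.2], by linarith [ht.2, hu.2]⟩
      have h6 := angle_inj htu (by
        rw [abs_lt]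
        constructor <;> nlinarith [ht.1, hu.1, ht.2, hu.2])
      have h8 : π * (t + u) = 0 := by linarith
      have h9 : t + u = 0 := by
        rcases mul_eq_zero.1 h8 with h | h
        · linarith
        · exact h
      have e1 : t = 0 := by linarith [ht.1, hu.1]
      have e2 : u = 0 := by linarith [ht.1, hu.1]
      rw [e1, e2, h3]
  refine isJordan_of_map hcpt hne hF ?_ ?_
  · rintro _ (⟨t, ht, rfl⟩ | ⟨t, ht, rfl⟩) _ (⟨u, hu, rfl⟩ | ⟨u, hu, rfl⟩) htu
    · rw [f1 t ht, f1 u hu] at htu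
      have := angle_inj htu (by rw [abs_lt]; constructor <;> nlinarith [ht.1, hu.1, ht.2, hu.2])
      rw [mul_left_cancel₀ hpos.ne' this]
    · exact hmix t ht u hu htu
    · exact (hmix u hu t ht htu.symm).symm
    · rw [f2 t ht, f2 u hu] at htu
      have := angle_inj htu (by rw [abs_lt]; constructor <;> nlinarith [ht.1, hu.1, ht.2, hu.2])
      rw [mul_left_cancel₀ hpos.ne' (neg_injective this)]
  · rw [eq_univ_iff_forall]
    intro θ
    have h5 := θ.neg_pi_lt_toReal
    have h6 := θ.toReal_le_pi
    rcases le_total 0 θ.toReal with h7 | h7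
    · have h8 : θ.toReal / π ∈ Icc (0:ℝ) 1 := ⟨by positivity, (div_le_one hpos).2 h6⟩
      refine ⟨γ (θ.toReal / π), Or.inl ⟨_, h8, rfl⟩, ?_⟩
      rw [f1 _ h8, mul_div_cancel₀ _ hpos.ne']; simp
    · have h8 : -θ.toReal / π ∈ Icc (0:ℝ) 1 := ⟨div_nonneg (by linarith) hpos.le, (div_le_one hpos).2 (by linarith)⟩
      refine ⟨δ (-θ.toReal / π), Or.inr ⟨_, h8, rfl⟩, ?_⟩
      rw [f2 _ h8, mul_div_cancel₀ _ hpos.ne']; simp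

end jordan

section wrap
variable {S : Type*} [MetricSpace S] {s A' : Set S} {a b : S}

/-- The map `f` winds once around the circle along the arc `s` and vanishes elsewhere. -/
def IsWrap {S : Type*} [TopologicalSpace S] (f : S → Angle) (s : Set S) (a b : S) : Prop :=
  (∀ x ∉ s, f x = 0) ∧ ∃ φ : S → ℝ, ContinuousOn φ s ∧ φ a = 0 ∧ φ b = 2 * π ∧ ∀ x ∈ s, f x = φ x

theorem IsArc.exists_wrap (h : IsArc s a b) : ∃ f, IsWrap f s a b := by
  classical
  obtain ⟨γ, hc, hi, rfl, rfl, rfl⟩ := h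
  have k1 : ∀ t ∈ Icc (0:ℝ) 1, invFunOn γ (Icc 0 1) (γ t) = t := fun t ht => hi.leftInvOn_invFunOn ht
  refine ⟨fun x => if x ∈ γ '' Icc 0 1 then ((2 * π * invFunOn γ (Icc 0 1) x : ℝ) : Angle) else 0,
    fun x hx => if_neg hx, fun x => 2 * π * invFunOn γ (Icc 0 1) x,
    continuousOn_const.mul (continuousOn_invFunOn isCompact_Icc hc hi), ?_, ?_, fun x hx => if_pos hx⟩
  · beta_reduce
    rw [k1 0 (by simp)]; simp
  · beta_reduce
    rw [k1 1 (by simp)]; simp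

variable {f : S → Angle}

theorem IsWrap.left (h : IsWrap f s a b) (hs : IsArc s a b) : f a = 0 := by
  obtain ⟨_, φ, _, h2, h3, h4⟩ := h
  rw [h4 a hs.left_mem, h2]; simp

theorem IsWrap.right (h : IsWrap f s a b) (hs : IsArc s a b) : f b = 0 := by
  obtain ⟨_, φ, _, h2, h3, h4⟩ := h
  rw [h4 b hs.right_mem, h3]; simp

theorem IsWrap.zero (h : IsWrap f s a b) (hs : IsArc s a b) (hA : A' ∩ s ⊆ {a, b}) : ∀ x ∈ A', f x = 0 := by
  intro x hx
  by_cases hxs : x ∈ s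
  · rcases hA ⟨hx, hxs⟩ with rfl | rfl
    · exact h.left hs
    · exact h.right hs
  · exact h.1 x hxs

theorem IsWrap.continuousOn (h : IsWrap f s a b) (hs : IsArc s a b) (hA : A' ∩ s ⊆ {a, b}) (hAc : IsClosed A') :
    ContinuousOn f (s ∪ A') := by
  refine ContinuousOn.union_of_isClosed ?_ ?_ hs.isClosed hAc
  · obtain ⟨_, φ, h1, h2, h3, h4⟩ := h
    exact (continuous_coeA.comp_continuousOn h1).congr h4
  · exact continuousOn_const.congr (h.zero hs hA)

theorem IsWrap.no_log (h : IsWrap f s a b) (hs : IsArc s a b) (hA : A' ∩ s ⊆ {a, b}) (hAc : IsPreconnected A')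
    (ha : a ∈ A') (hb : b ∈ A') {n : ℤ} (hl : LogOn (fun x => n • f x) (s ∪ A')) : n = 0 := by
  have hz := h.zero hs hA
  obtain ⟨_, φ, h1, h2, h3, h4⟩ := h
  obtain ⟨ψ, hψ, hψe⟩ := hl
  obtain ⟨k, hk⟩ := log_unique hAc (hψ.mono subset_union_right) (ψ := fun _ => 0) continuousOn_const fun x hx => by
    rw [hψe x (Or.inr hx)]; beta_reduce; rw [hz x hx]; simp
  obtain ⟨m, hm⟩ := log_unique hs.isPreconnected (hψ.mono subset_union_left) (ψ := fun x => n * φ x)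
    (continuousOn_const.mul h1) fun x hx => by
      rw [hψe x (Or.inl hx)]; beta_reduce; rw [h4 x hx, ← Angle.coe_zsmul, zsmul_eq_mul]
  have e1 := hk a ha
  have e2 := hk b hb
  have e3 := hm a hs.left_mem
  have e4 := hm b hs.right_mem
  rw [h2] at e3
  rw [h3] at e4
  have : (n : ℝ) * (2 * π) = 0 := by linarith
  rcases mul_eq_zero.1 this with h | h
  · exact_mod_cast h
  · exact absurd h Real.two_pi_pos.ne'

/-- Any map which vanishes off an arc is a multiple of its wrapping map up to a logarithm. -/
theorem IsWrap.exists_mul (h : IsWrap f s a b) (hs : IsArc s a b) {g : S → Angle} (hg : ContinuousOn g s)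
    (ha : g a = 0) (hb : g b = 0) : ∃ m : ℤ, ∀ A' : Set S, IsClosed A' → A' ∩ s ⊆ {a, b} → (∀ x ∈ A', g x = 0) →
      LogOn (fun x => g x - m • f x) (s ∪ A') := by
  have hz := fun A' => h.zero hs (A' := A')
  obtain ⟨_, φ, h1, h2, h3, h4⟩ := h
  obtain ⟨χ, hχ, hχe⟩ := hs.acyc g hg
  have e1 := hχe a hs.left_mem
  have e2 := hχe b hs.right_mem
  rw [ha, Angle.coe_eq_zero_iff] at e1
  rw [hb, Angle.coe_eq_zero_iff] at e2
  obtain ⟨p, hp⟩ := e1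
  obtain ⟨q, hq⟩ := e2
  simp only [zsmul_eq_mul] at hp hq
  refine ⟨q - p, fun A' hA'c hA' hg0 => ?_⟩
  obtain ⟨F, hF, hFA, hFB⟩ := glue_closed (f := fun x => χ x - 2 * π * p - (q - p : ℤ) * φ x) (g := fun _ => (0 : ℝ))
    hs.isClosed hA'c ((hχ.sub continuousOn_const).sub (continuousOn_const.mul h1)) continuousOn_const (by
      intro x hx hx'
      rcases hA' ⟨hx', hx⟩ with rfl | rfl
      · rw [h2]; linarith
      · rw [h3, ← hq]; push_cast; ring)
  refine ⟨F, hF, ?_⟩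
  rintro x (hx | hx)
  · rw [hFA hx]
    beta_reduce
    rw [h4 x hx, ← Angle.coe_zsmul, ← hχe x hx, ← Angle.coe_sub, zsmul_eq_mul]
    have e3 : χ x - 2 * π * p - (q - p : ℤ) * φ x = (χ x - (q - p : ℤ) * φ x) - 2 * π * p := by ring
    rw [e3, Angle.coe_sub, two_pi_int_coe, sub_zero]
  · rw [hFB hx]
    beta_reduce
    rw [hg0 x hx, hz A' hA' x hx]; simp

end wrap

/-! ### Cells and crosscuts -/

theorem locallyConnectedSpace_of_locPlane {S : Type*} [TopologicalSpace S] (hS : LocPlane (univ : Set S)) :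
    LocallyConnectedSpace S := by
  rw [locallyConnectedSpace_iff_subsets_isOpen_isConnected]
  intro x U hU
  obtain ⟨V, hV, hVo, hxV⟩ := mem_nhds_iff.1 hU
  obtain ⟨e, he, h0, hr⟩ := hS.exists_chart (mem_univ x) hVo hxV
  exact ⟨range e, hr.trans (inter_subset_right.trans hV), he.isOpen_range, ⟨0, h0⟩, isConnected_range he.continuous⟩

theorem frontier_component {S : Type*} [TopologicalSpace S] [LocallyConnectedSpace S] {W : Set S} (hW : IsOpen W) (x : S) :
    frontier (connectedComponentIn W x) ⊆ Wᶜ := by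
  intro y hy hyW
  have h1 : IsOpen (connectedComponentIn W y) := hW.connectedComponentIn
  have h2 : IsOpen (connectedComponentIn W x) := hW.connectedComponentIn
  obtain ⟨z, hz, hz'⟩ := mem_closure_iff.1 (frontier_subset_closure hy) _ h1 (mem_connectedComponentIn hyW)
  have e1 := connectedComponentIn_eq hz
  have e2 := connectedComponentIn_eq hz'
  rw [h2.frontier_eq] at hy
  apply hy.2
  rw [e2, ← e1]
  exact mem_connectedComponentIn hyW

theorem exists_gen_at {S : Type*} [TopologicalSpace S] (hS : LocPlane (univ : Set S)) [T2Space S] (x : S) :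
    ∃ h : S → Angle, IsGen h x := by
  obtain ⟨e, he, h0, hr⟩ := hS x trivial
  obtain ⟨φ, hφ⟩ := chart_pair he (a := 0) (b := 1/2) (by norm_num) (by norm_num) (by norm_num)
  exact ⟨φ, h0 ▸ hφ.genl⟩

theorem exists_relation {S : Type*} [TopologicalSpace S] (hS : LocPlane (univ : Set S)) [T2Space S] {x : S} {v f : S → Angle}
    (hv : PCont v x) (hf : PCont f x) : ∃ d e : ℤ, NullAt (fun y => d • v y - e • f y) x ∧ (e = 0 → NullAt v x) ∧
      (d = 0 → NullAt f x) := by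
  obtain ⟨h, hh⟩ := exists_gen_at hS x
  obtain ⟨e, he⟩ := hh.2.2 v hv
  obtain ⟨d, hd⟩ := hh.2.2 f hf
  refine ⟨d, e, ((he.zsmul d).sub (hd.zsmul e)).congr' fun y => ?_, ?_, ?_⟩
  · simp only [smul_sub, smul_smul, mul_comm]; abel
  · rintro rfl; exact he.congr' fun y => by simp
  · rintro rfl; exact hd.congr' fun y => by simp

/-- `X` is a compact region bounded by the simple closed curve `J`, without essential
circle-valued maps. -/
structure IsCell {S : Type*} [TopologicalSpace S] (X J : Set S) : Prop where
  compact : IsCompact X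
  jordan : IsJordan J
  sub : J ⊆ X
  isOpen : IsOpen (X \ J)
  conn : IsPreconnected (X \ J)
  ne : (X \ J).Nonempty
  bdy : J ⊆ closure (X \ J)
  out : J ⊆ closure Xᶜ
  acyc : Acyc X

section cell
variable {S : Type*} [MetricSpace S] {X J : Set S}

theorem IsCell.closure_eq (hX : IsCell X J) : closure (X \ J) = X := by
  refine Subset.antisymm (closure_minimal sdiff_subset hX.compact.isClosed) fun x hx => ?_
  by_cases h : x ∈ J
  · exact hX.bdy h
  · exact subset_closure ⟨hx, h⟩

theorem IsCell.frontier_eq (hX : IsCell X J) : frontier (X \ J) = J := by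
  rw [hX.isOpen.frontier_eq, hX.closure_eq, sdiff_sdiff_cancel_left hX.sub]

variable (hS : LocPlane (univ : Set S))
include hS

/-- Orientability of cells: a map with a single singularity which vanishes on the boundary has
an inessential singularity. -/
theorem IsCell.orient (hX : IsCell X J) {x : S} (hx : x ∈ X \ J) {v : S → Angle} (hv : ContinuousOn v (X \ {x}))
    (hvJ : ∀ y ∈ J, v y = 0) : NullAt v x := by
  obtain ⟨g, hg, hgn⟩ := hX.jordan.exists_gen
  have hne : ¬ ExtTo g J X := by
    rintro ⟨F, hF, hFe⟩
    refine one_ne_zero (hgn 1 (((hX.acyc F hF).mono hX.sub).congr fun y hy => ?_))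
    rw [hFe hy]; simp
  obtain ⟨f, hf, hfe⟩ := extend_punctured hX.compact hX.jordan.isClosed hX.sub hg (hS.of_univ hX.isOpen) hX.isOpen
    hX.conn hne hx
  have hsub : (X \ J) \ {x} ⊆ X \ {x} := fun y hy => ⟨hy.1.1, hy.2⟩
  obtain ⟨d, e, hn, he, _⟩ := exists_relation hS (pcont_of_continuousOn hX.isOpen hx (hv.mono hsub))
    (pcont_of_continuousOn hX.isOpen hx (hf.mono hsub))
  apply he
  obtain ⟨w, hw, hwe⟩ := hn.repair (T := X) (W := X \ J) ((hv.zsmul d).sub (hf.zsmul e))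
    (mem_of_superset (hX.isOpen.mem_nhds hx) sdiff_subset) (hX.isOpen.mem_nhds hx)
  apply hgn
  refine ((hX.acyc w hw).neg.mono hX.sub).congr fun y hy => ?_
  rw [hwe y fun h => h.2 hy, hvJ y hy, hfe hy]
  simp

theorem IsCell.null_of_log (hX : IsCell X J) {U : Set S} (hU : IsOpen U) (hUX : U ⊆ X \ J) {x : S} (hx : x ∈ U)
    {u : S → Angle} (hu : ContinuousOn u (closure U \ {x})) (hl : LogOn u (frontier U)) : NullAt u x := by
  classical
  obtain ⟨F, hF, hFe⟩ := hl.extend isClosed_frontier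
  have hFc := continuousOn_univ.1 hF.continuousOn
  set v : S → Angle := fun y => if y ∈ U then u y - F y else 0 with hvdef
  have hv : ContinuousOn v (X \ {x}) := by
    refine contOn_of_closed_cover (A := closure U) (B := Uᶜ) isClosed_closure hU.isClosed_compl ?_ ?_ ?_
    · intro y _
      by_cases h : y ∈ U
      · exact Or.inl (subset_closure h)
      · exact Or.inr h
    · refine ((hu.mono fun y hy => ⟨hy.2, hy.1.2⟩).sub hFc.continuousOn).congr fun y hy => ?_
      by_cases h : y ∈ U
      · simp only [hvdef, h, if_true, Pi.sub_apply]
      · have h2 : y ∈ frontier U := by rw [hU.frontier_eq]; exact ⟨hy.2, h⟩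
        simp only [hvdef, h, if_false, Pi.sub_apply, hFe h2, sub_self]
    · exact continuousOn_const.congr fun y hy => if_neg hy.2
  have hn := hX.orient hS (hUX hx) hv fun y hy => if_neg fun h => (hUX h).2 hy
  refine (hn.add (nullAt_of_continuousOn hU hx hFc.continuousOn)).congr hU hx fun y hy _ => ?_
  simp only [hvdef, hy, if_true, sub_add_cancel]

variable [ConnectedSpace S]

theorem IsCell.not_log (hX : IsCell X J) {x y : S} (hx : x ∈ X \ J) (hy : y ∉ X) {φ : S → Angle} {Ω : Set S}
    (hφ : Pair φ x y Ω) : ¬ LogOn φ J := by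
  intro h
  have h1 := hX.null_of_log hS hX.isOpen Subset.rfl hx (u := φ) (hφ.cont.mono ?_) (by rwa [hX.frontier_eq])
  · exact one_ne_zero (hφ.genl.2.1 1 (h1.congr' fun y => by simp))
  · rintro z hz (h' | h')
    · exact hz.2 h'
    · rw [hX.closure_eq] at hz
      exact hy (h' ▸ hz.1)

variable {s J1 J2 : Set S} {a b : S}

/-- The data of a crosscut `s` of the cell `X`, together with the two arcs of the boundary. -/
structure Theta {S : Type*} [TopologicalSpace S] (X J s J1 J2 : Set S) (a b : S) : Prop where
  cell : IsCell X J
  arc : IsArc s a b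
  arc1 : IsArc J1 a b
  arc2 : IsArc J2 a b
  union : J1 ∪ J2 = J
  inter : J1 ∩ J2 = {a, b}
  cross : s \ {a, b} ⊆ X \ J

omit [ConnectedSpace S] hS in
theorem Theta.swap (h : Theta X J s J1 J2 a b) : Theta X J s J2 J1 a b :=
  ⟨h.cell, h.arc, h.arc2, h.arc1, by rw [union_comm]; exact h.union, by rw [inter_comm]; exact h.inter, h.cross⟩

omit [ConnectedSpace S] hS in
theorem Theta.inter1 (h : Theta X J s J1 J2 a b) : s ∩ J1 = {a, b} := by
  refine Subset.antisymm ?_ ?_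
  · rintro x ⟨h1, h2⟩
    by_contra h3
    exact (h.cross ⟨h1, h3⟩).2 (h.union ▸ Or.inl h2)
  · rintro x (rfl | rfl)
    · exact ⟨h.arc.left_mem, h.arc1.left_mem⟩
    · exact ⟨h.arc.right_mem, h.arc1.right_mem⟩

omit [ConnectedSpace S] hS in
theorem Theta.isOpen (h : Theta X J s J1 J2 a b) : IsOpen ((X \ J) \ s) := h.cell.isOpen.sdiff h.arc.isClosed

omit [ConnectedSpace S] hS in
theorem Theta.frontier_sub [LocallyConnectedSpace S] (h : Theta X J s J1 J2 a b) (x : S) :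
    frontier (connectedComponentIn ((X \ J) \ s) x) ⊆ s ∪ J := by
  intro y hy
  have h1 := frontier_component h.isOpen x hy
  have h2 : y ∈ X := closure_minimal ((connectedComponentIn_subset _ _).trans fun z hz => hz.1.1)
    h.cell.compact.isClosed (frontier_subset_closure hy)
  by_contra h3
  exact h1 ⟨⟨h2, fun h => h3 (Or.inr h)⟩, fun h => h3 (Or.inl h)⟩

theorem Theta.local_side (h : Theta X J s J1 J2 a b) {z : S} (hz : z ∈ J1) (hzab : z ∉ ({a, b} : Set S)) :
    ∃ B, IsOpen B ∧ z ∈ B ∧ Disjoint B s ∧ ∀ x ∈ B ∩ (X \ J), ∀ x' ∈ B ∩ (X \ J),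
      connectedComponentIn ((X \ J) \ s) x = connectedComponentIn ((X \ J) \ s) x' := by
  have hlc := locallyConnectedSpace_of_locPlane hS
  have hcl : IsClosed (J2 ∪ s) := h.arc2.isClosed.union h.arc.isClosed
  have hzn : z ∉ J2 ∪ s := by
    rintro (h1 | h1)
    · exact hzab (h.inter ▸ ⟨hz, h1⟩)
    · exact hzab (h.inter1 ▸ ⟨h1, hz⟩)
  obtain ⟨e, he, h0, hr⟩ := hS.exists_chart (mem_univ z) hcl.isOpen_compl hzn
  have hBo : IsOpen (range e) := he.isOpen_range
  have hBc : IsPreconnected (range e) := isPreconnected_range he.continuous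
  refine ⟨range e, hBo, ⟨0, h0⟩, ?_, ?_⟩
  · rw [disjoint_left]
    exact fun x hx hxs => (hr hx).2 (Or.inr hxs)
  rintro x ⟨hxB, hxΩ⟩ x' ⟨hx'B, hx'Ω⟩
  by_contra hcomp
  obtain ⟨y, hyB, hyX⟩ := mem_closure_iff.1 (h.cell.out (h.union ▸ Or.inl hz)) _ hBo ⟨0, h0⟩
  have hBs : ∀ w ∈ range e, w ∉ s := fun w hw hws => (hr hw).2 (Or.inr hws)
  have hxW : x ∈ (X \ J) \ s := ⟨hxΩ, hBs x hxB⟩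
  have hx'W : x' ∈ (X \ J) \ s := ⟨hx'Ω, hBs x' hx'B⟩
  obtain ⟨f, hf⟩ := h.arc1.exists_wrap
  have hA : (J2 ∪ s) ∩ J1 ⊆ {a, b} := by
    rintro w ⟨h1 | h1, h2⟩
    · exact h.inter ▸ ⟨h2, h1⟩
    · exact h.inter1 ▸ ⟨h1, h2⟩
  have hJ1 : J1 ⊆ J := h.union ▸ subset_union_left
  -- the class of a map with singularities at an inner and an outer point near `z`
  have key : ∀ p ∈ range e, p ∈ X \ J → ∃ φ, Pair φ p y (range e) ∧ ∃ m : ℤ, m ≠ 0 ∧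
      LogOn (fun w => φ w - m • f w) (J1 ∪ (J2 ∪ s)) := by
    intro p hp hpΩ
    obtain ⟨φ, hφ⟩ := exists_pair hBo hBc (hS.of_univ hBo) hp hyB fun h => hyX (h ▸ hpΩ.1)
    have hz0 : ∀ w ∈ J2 ∪ s, φ w = 0 := fun w hw => hφ.zero w fun h => (hr h).2 hw
    obtain ⟨m, hm⟩ := hf.exists_mul h.arc1 (g := φ) (hφ.cont.mono (by
      rintro w hw (rfl | rfl)
      · exact hpΩ.2 (hJ1 hw)
      · exact hyX (h.cell.sub (hJ1 hw)))) (hz0 _ (Or.inl h.arc2.left_mem)) (hz0 _ (Or.inl h.arc2.right_mem))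
    refine ⟨φ, hφ, m, ?_, hm _ hcl hA hz0⟩
    rintro rfl
    refine h.cell.not_log hS hpΩ hyX hφ (((hm _ hcl hA hz0).mono ?_).congr fun w _ => by simp)
    rw [← h.union]
    exact union_subset_union_right _ subset_union_left
  obtain ⟨φ, hφ, m, hm, hml⟩ := key x hxB hxΩ
  obtain ⟨φ', hφ', m', hm', hml'⟩ := key x' hx'B hx'Ω
  set U := connectedComponentIn ((X \ J) \ s) x
  have hUo : IsOpen U := h.isOpen.connectedComponentIn
  have hUX : U ⊆ X \ J := (connectedComponentIn_subset _ _).trans sdiff_subset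
  have hclX : closure U ⊆ X := closure_minimal (hUX.trans sdiff_subset) h.cell.compact.isClosed
  have hx'U : x' ∉ closure U := by
    intro h1
    have h2 : IsOpen (connectedComponentIn ((X \ J) \ s) x') := h.isOpen.connectedComponentIn
    obtain ⟨w, hw, hw'⟩ := mem_closure_iff.1 h1 _ h2 (mem_connectedComponentIn hx'W)
    exact hcomp ((connectedComponentIn_eq hw').trans (connectedComponentIn_eq hw).symm)
  have hyU : y ∉ closure U := fun h => hyX (hclX h)
  have hc1 : ContinuousOn φ (closure U \ {x}) := hφ.cont.mono (by
    rintro w hw (h' | h')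
    · exact hw.2 h'
    · exact hyU (h' ▸ hw.1))
  have hc2 : ContinuousOn φ' (closure U) := hφ'.cont.mono (by
    rintro w hw (h' | h')
    · exact hx'U (h' ▸ hw)
    · exact hyU (h' ▸ hw))
  have hxU : x ∈ U := mem_connectedComponentIn hxW
  have hn := h.cell.null_of_log hS hUo hUX hxU (u := fun w => m' • φ w - m • φ' w)
    ((hc1.zsmul m').sub ((hc2.mono sdiff_subset).zsmul m)) (by
      refine (((hml.zsmul m').sub (hml'.zsmul m)).mono (B := frontier U) ?_).congr fun w _ => ?_
      · refine (h.frontier_sub x).trans ?_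
        rw [← h.union]
        intro w hw
        rcases hw with h1 | h1 | h1
        · exact Or.inr (Or.inr h1)
        · exact Or.inl h1
        · exact Or.inr (Or.inl h1)
      · simp only [smul_sub, smul_smul, mul_comm m' m]; abel)
  have hn2 : NullAt φ' x := nullAt_of_continuousOn hUo hxU (hc2.mono subset_closure)
  exact hm' (hφ.genl.2.1 m' ((hn.add (hn2.zsmul m)).congr' fun w => by simp))

theorem Theta.exists_side (h : Theta X J s J1 J2 a b) : ∃ x ∈ (X \ J) \ s, ∀ z ∈ J1 \ {a, b},
    ∃ B, IsOpen B ∧ z ∈ B ∧ B ∩ (X \ J) ⊆ connectedComponentIn ((X \ J) \ s) x := by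
  set W := (X \ J) \ s
  have hJ1 : J1 ⊆ J := h.union ▸ subset_union_left
  set side : S → S → Prop := fun z x => x ∈ W ∧ ∃ B, IsOpen B ∧ z ∈ B ∧ B ∩ (X \ J) ⊆ connectedComponentIn W x
  have hmeet : ∀ z ∈ J1, ∀ B, IsOpen B → z ∈ B → (B ∩ (X \ J)).Nonempty := fun z hz B hB hzB =>
    mem_closure_iff.1 (h.cell.bdy (hJ1 hz)) B hB hzB
  have huniq : ∀ z ∈ J1, ∀ x x', side z x → side z x' → connectedComponentIn W x = connectedComponentIn W x' := by
    rintro z hz x x' ⟨_, B, hB, hzB, hBU⟩ ⟨_, B', hB', hzB', hBU'⟩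
    obtain ⟨w, hw, hwΩ⟩ := hmeet z hz _ (hB.inter hB') ⟨hzB, hzB'⟩
    rw [connectedComponentIn_eq (hBU ⟨hw.1, hwΩ⟩), connectedComponentIn_eq (hBU' ⟨hw.2, hwΩ⟩)]
  have hex : ∀ z ∈ J1 \ {a, b}, ∃ B, IsOpen B ∧ z ∈ B ∧ ∃ x, x ∈ W ∧ B ∩ (X \ J) ⊆ connectedComponentIn W x := by
    intro z hz
    obtain ⟨B, hB, hzB, hBs, hBc⟩ := h.local_side hS hz.1 hz.2
    obtain ⟨x, hx⟩ := hmeet z hz.1 B hB hzB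
    have hBW : B ∩ (X \ J) ⊆ W := fun w hw => ⟨hw.2, disjoint_left.1 hBs hw.1⟩
    refine ⟨B, hB, hzB, x, hBW hx, fun w hw => ?_⟩
    rw [hBc x hx w hw]
    exact mem_connectedComponentIn (hBW hw)
  obtain ⟨z0, hz0⟩ := h.arc1.interior_nonempty
  obtain ⟨B0, hB0, hzB0, x0, hx0, hBx0⟩ := hex z0 hz0
  refine ⟨x0, hx0, fun z hz => ?_⟩
  have hP := h.arc1.interior_preconnected.induction₂ (fun z z' => ∃ x, side z x ∧ side z' x) (by
      intro z hz
      obtain ⟨B, hB, hzB, x, hx, hBx⟩ := hex z hz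
      filter_upwards [mem_nhdsWithin_of_mem_nhds (hB.mem_nhds hzB)] with z' hz'
      exact ⟨x, ⟨hx, B, hB, hzB, hBx⟩, hx, B, hB, hz', hBx⟩)
    (by
      rintro z z' z'' hz hz' hz'' ⟨x, h1, h2⟩ ⟨x', h3, h4⟩
      refine ⟨x, h1, ?_⟩
      have := huniq z' hz'.1 x x' h2 h3
      obtain ⟨_, B, hB, hzB, hBx⟩ := h4
      exact ⟨h1.1, B, hB, hzB, this ▸ hBx⟩)
    (by rintro z z' _ _ ⟨x, h1, h2⟩; exact ⟨x, h2, h1⟩) hz0 hz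
  obtain ⟨x, h1, h2⟩ := hP
  have := huniq z0 hz0.1 x x0 h1 ⟨hx0, B0, hB0, hzB0, hBx0⟩
  obtain ⟨_, B, hB, hzB, hBx⟩ := h2
  exact ⟨B, hB, hzB, this ▸ hBx⟩

omit [ConnectedSpace S] in
/-- A crosscut separates: its complement is not connected. -/
theorem Theta.not_preconnected (h : Theta X J s J1 J2 a b) {x : S} (hx : x ∈ (X \ J) \ s) :
    ¬ IsPreconnected ((X \ J) \ s) := by
  intro hc
  have hJ1 : J1 ⊆ J := h.union ▸ subset_union_left
  have hJ2 : J2 ⊆ J := h.union ▸ subset_union_right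
  obtain ⟨f1, hf1⟩ := h.arc1.exists_wrap
  obtain ⟨f2, hf2⟩ := h.arc2.exists_wrap
  set θ := J ∪ s with hθ
  have hW : (X \ J) \ s = X \ θ := sdiff_sdiff
  have hθX : θ ⊆ X := by
    refine union_subset h.cell.sub fun y hy => ?_
    by_cases hyab : y ∈ ({a, b} : Set S)
    · rcases hyab with rfl | rfl
      · exact h.cell.sub (hJ1 h.arc1.left_mem)
      · exact h.cell.sub (hJ1 h.arc1.right_mem)
    · exact (h.cross ⟨hy, hyab⟩).1
  have hθc : IsClosed θ := h.cell.jordan.isClosed.union h.arc.isClosed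
  have hA1 : (J2 ∪ s) ∩ J1 ⊆ {a, b} := by
    rintro w ⟨h1 | h1, h2⟩
    · exact h.inter ▸ ⟨h2, h1⟩
    · exact h.inter1 ▸ ⟨h1, h2⟩
  have hA2 : (J1 ∪ s) ∩ J2 ⊆ {a, b} := by
    rintro w ⟨h1 | h1, h2⟩
    · exact h.inter ▸ ⟨h1, h2⟩
    · exact h.swap.inter1 ▸ ⟨h1, h2⟩
  have e1 : J1 ∪ (J2 ∪ s) = θ := by rw [hθ, ← h.union, union_assoc]
  have e2 : J2 ∪ (J1 ∪ s) = θ := by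
    rw [← e1]; ext y; simp only [mem_union]; tauto
  have c1 : ContinuousOn f1 θ := e1 ▸ hf1.continuousOn h.arc1 hA1 (h.arc2.isClosed.union h.arc.isClosed)
  have c2 : ContinuousOn f2 θ := e2 ▸ hf2.continuousOn h.arc2 hA2 (h.arc1.isClosed.union h.arc.isClosed)
  have hs1 : s ∩ J1 ⊆ {a, b} := h.inter1.subset
  have hs2 : s ∩ J2 ⊆ {a, b} := h.swap.inter1.subset
  have sub1 : J1 ∪ s ⊆ θ := union_subset_union_left _ hJ1
  have sub2 : J2 ∪ s ⊆ θ := union_subset_union_left _ hJ2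
  have n1 : ∀ n : ℤ, LogOn (fun y => n • f1 y) (J1 ∪ s) → n = 0 := fun n =>
    hf1.no_log h.arc1 hs1 h.arc.isPreconnected h.arc.left_mem h.arc.right_mem
  have n2 : ∀ n : ℤ, LogOn (fun y => n • f2 y) (J2 ∪ s) → n = 0 := fun n =>
    hf2.no_log h.arc2 hs2 h.arc.isPreconnected h.arc.left_mem h.arc.right_mem
  have ne1 : ¬ ExtTo f1 θ X := by
    rintro ⟨F, hF, hFe⟩
    refine one_ne_zero (n1 1 (((h.cell.acyc F hF).mono (sub1.trans hθX)).congr fun y hy => ?_))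
    rw [hFe (sub1 hy)]; simp
  have ne2 : ¬ ExtTo f2 θ X := by
    rintro ⟨F, hF, hFe⟩
    refine one_ne_zero (n2 1 (((h.cell.acyc F hF).mono (sub2.trans hθX)).congr fun y hy => ?_))
    rw [hFe (sub2 hy)]; simp
  have hO : IsOpen (X \ θ) := hW ▸ h.isOpen
  rw [hW] at hc hx
  obtain ⟨F1, hF1, hFe1⟩ := extend_punctured h.cell.compact hθc hθX c1 (hS.of_univ hO) hO hc ne1 hx
  obtain ⟨F2, hF2, hFe2⟩ := extend_punctured h.cell.compact hθc hθX c2 (hS.of_univ hO) hO hc ne2 hx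
  have hsub : (X \ θ) \ {x} ⊆ X \ {x} := fun y hy => ⟨hy.1.1, hy.2⟩
  obtain ⟨d, e, hn, he, hd⟩ := exists_relation hS (pcont_of_continuousOn hO hx (hF1.mono hsub))
    (pcont_of_continuousOn hO hx (hF2.mono hsub))
  have hXx : X ∈ 𝓝 x := mem_of_superset (hO.mem_nhds hx) sdiff_subset
  obtain ⟨w, hw, hwe⟩ := hn.repair (T := X) (W := X \ θ) ((hF1.zsmul d).sub (hF2.zsmul e)) hXx (hO.mem_nhds hx)
  have hwl := (h.cell.acyc w hw).mono hθX
  have hwθ : ∀ y ∈ θ, w y = d • f1 y - e • f2 y := fun y hy => by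
    rw [hwe y fun h => h.2 hy, hFe1 hy, hFe2 hy]
  have hd0 : d = 0 := by
    refine n1 d ((hwl.mono sub1).congr fun y hy => ?_)
    rw [hwθ y (sub1 hy), hf2.zero h.arc2 hA2 y hy]; simp
  obtain ⟨w, hw, hwe⟩ := (hd hd0).repair (T := X) (W := X \ θ) hF2 hXx (hO.mem_nhds hx)
  exact ne2 ⟨w, hw, fun y hy => (hwe y fun h => h.2 hy).trans (hFe2 hy)⟩

omit hS [ConnectedSpace S] in
theorem IsCell.exists_out (hX : IsCell X J) : ∃ y, y ∉ X := by
  obtain ⟨z, hz⟩ := hX.jordan.nonempty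
  obtain ⟨y, _, hy⟩ := mem_closure_iff.1 (hX.out hz) univ isOpen_univ trivial
  exact ⟨y, hy⟩

/-- A piece cut from a cell cannot have a boundary without essential circle-valued maps. -/
theorem IsCell.not_acyc_frontier (hX : IsCell X J) {U : Set S} (hU : IsOpen U) (hUX : U ⊆ X \ J) {x : S} (hx : x ∈ U)
    (hl : ∀ f : S → Angle, ContinuousOn f (frontier U) → LogOn f (frontier U)) : False := by
  obtain ⟨y, hy⟩ := hX.exists_out
  have hxX : x ∈ X := (hUX hx).1
  obtain ⟨φ, hφ⟩ := exists_pair isOpen_univ isPreconnected_univ hS (mem_univ x) (mem_univ y) fun h => hy (h ▸ hxX)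
  have hclX : closure U ⊆ X := closure_minimal (hUX.trans sdiff_subset) hX.compact.isClosed
  have h1 : ContinuousOn φ (closure U \ {x}) := hφ.cont.mono (by
    rintro z hz (h' | h')
    · exact hz.2 h'
    · exact hy (hclX (h' ▸ hz.1)))
  have hn := hX.null_of_log hS hU hUX hx h1 (hl φ (h1.mono fun z hz => ?_))
  · exact one_ne_zero (hφ.genl.2.1 1 (hn.congr' fun y => by simp))
  · rw [hU.frontier_eq] at hz
    exact ⟨hz.1, fun h => hz.2 (h ▸ hx)⟩

theorem Theta.comp_eq (h : Theta X J s J1 J2 a b) {x1 x2 x : S}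
    (h1 : ∀ z ∈ J1 \ {a, b}, ∃ B, IsOpen B ∧ z ∈ B ∧ B ∩ (X \ J) ⊆ connectedComponentIn ((X \ J) \ s) x1)
    (h2 : ∀ z ∈ J2 \ {a, b}, ∃ B, IsOpen B ∧ z ∈ B ∧ B ∩ (X \ J) ⊆ connectedComponentIn ((X \ J) \ s) x2)
    (hx : x ∈ (X \ J) \ s) (hne1 : connectedComponentIn ((X \ J) \ s) x ≠ connectedComponentIn ((X \ J) \ s) x1)
    (hne2 : connectedComponentIn ((X \ J) \ s) x ≠ connectedComponentIn ((X \ J) \ s) x2) : False := by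
  have hlc := locallyConnectedSpace_of_locPlane hS
  set U := connectedComponentIn ((X \ J) \ s) x
  have hUo : IsOpen U := h.isOpen.connectedComponentIn
  have hUX : U ⊆ X \ J := (connectedComponentIn_subset _ _).trans sdiff_subset
  have hfr : frontier U ⊆ s := by
    intro z hz
    have aux : ∀ x', U ≠ connectedComponentIn ((X \ J) \ s) x' →
        ∀ B, IsOpen B → z ∈ B → ¬ B ∩ (X \ J) ⊆ connectedComponentIn ((X \ J) \ s) x' := by
      intro x' hne B hB hzB hBs
      obtain ⟨w, hwB, hwU⟩ := mem_closure_iff.1 (frontier_subset_closure hz) B hB hzB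
      exact hne ((connectedComponentIn_eq hwU).trans (connectedComponentIn_eq (hBs ⟨hwB, hUX hwU⟩)).symm)
    by_contra hzs
    have hzab : z ∉ ({a, b} : Set S) := by
      rintro (rfl | rfl)
      · exact hzs h.arc.left_mem
      · exact hzs h.arc.right_mem
    rcases h.frontier_sub x hz with h3 | h3
    · exact hzs h3
    · rw [← h.union] at h3
      rcases h3 with h3 | h3
      · obtain ⟨B, hB, hzB, hBs⟩ := h1 z ⟨h3, hzab⟩
        exact aux x1 hne1 B hB hzB hBs
      · obtain ⟨B, hB, hzB, hBs⟩ := h2 z ⟨h3, hzab⟩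
        exact aux x2 hne2 B hB hzB hBs
  refine h.cell.not_acyc_frontier hS hUo hUX (mem_connectedComponentIn hx) fun f hf => ?_
  refine LogOn.mono ?_ (Subset.rfl)
  -- a closed subset of an arc
  obtain ⟨γ, hc, hi, hγ, ha, hb⟩ := h.arc
  have hinv := continuousOn_invFunOn isCompact_Icc hc hi
  have hK : IsCompact (Icc 0 1 ∩ γ ⁻¹' frontier U) := by
    have := hc.preimage_isClosed_of_isClosed isClosed_Icc (isClosed_frontier (s := U))
    exact isCompact_Icc.of_isClosed_subset this inter_subset_left
  have hl := logOn_Icc_closed (f := fun t => f (γ t)) hK.isClosed inter_subset_left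
    (hf.comp (hc.mono inter_subset_left) fun t ht => ht.2)
  refine (hl.comp (h := invFunOn γ (Icc 0 1)) (B := frontier U) (hinv.mono (hγ ▸ hfr)) ?_).congr ?_
  · intro z hz
    have := hfr hz
    rw [← hγ] at this
    obtain ⟨t, ht, rfl⟩ := this
    rw [hi.leftInvOn_invFunOn ht]; exact ⟨ht, hz⟩
  · intro z hz
    have := hfr hz
    rw [← hγ] at this
    obtain ⟨t, ht, rfl⟩ := this
    rw [hi.leftInvOn_invFunOn ht]

end cell

section cell
variable {S : Type*} [MetricSpace S] [ConnectedSpace S] {X J s J1 J2 : Set S} {a b : S} (hS : LocPlane (univ : Set S))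
include hS

theorem Theta.frontier_side (h : Theta X J s J1 J2 a b) {x1 x2 : S} (hx1 : x1 ∈ (X \ J) \ s)
    (h1 : ∀ z ∈ J1 \ {a, b}, ∃ B, IsOpen B ∧ z ∈ B ∧ B ∩ (X \ J) ⊆ connectedComponentIn ((X \ J) \ s) x1)
    (h2 : ∀ z ∈ J2 \ {a, b}, ∃ B, IsOpen B ∧ z ∈ B ∧ B ∩ (X \ J) ⊆ connectedComponentIn ((X \ J) \ s) x2)
    (hd : Disjoint (connectedComponentIn ((X \ J) \ s) x1) (connectedComponentIn ((X \ J) \ s) x2)) :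
    frontier (connectedComponentIn ((X \ J) \ s) x1) = J1 ∪ s := by
  have hlc := locallyConnectedSpace_of_locPlane hS
  set U1 := connectedComponentIn ((X \ J) \ s) x1
  have hUo : IsOpen U1 := h.isOpen.connectedComponentIn
  have hUs : U1 ⊆ (X \ J) \ s := connectedComponentIn_subset _ _
  have hsub : frontier U1 ⊆ J1 ∪ s := by
    intro y hy
    rcases h.frontier_sub x1 hy with hys | hyJ
    · exact Or.inr hys
    · rw [← h.union] at hyJ
      rcases hyJ with h3 | h3
      · exact Or.inl h3
      by_cases hab : y ∈ ({a, b} : Set S)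
      · exact Or.inr ((h.inter1.symm ▸ hab : y ∈ s ∩ J1).1)
      obtain ⟨B, hB, hyB, hBs⟩ := h2 y ⟨h3, hab⟩
      obtain ⟨w, hw1, hw2⟩ := mem_closure_iff.1 (frontier_subset_closure hy) B hB hyB
      exact (disjoint_left.1 hd hw2 (hBs ⟨hw1, (hUs hw2).1⟩)).elim
  have hne : ¬ (frontier U1 ≠ J1 ∪ s) := by
    intro hne
    have hJ : IsJordan (J1 ∪ s) := isJordan_glue h.arc1 h.arc (by rw [inter_comm]; exact h.inter1)
    exact h.cell.not_acyc_frontier hS hUo (hUs.trans sdiff_subset) (mem_connectedComponentIn hx1)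
      fun f hf => hJ.logOn_proper isClosed_frontier hsub hne hf
  exact not_not.1 hne

theorem Theta.side_cell (h : Theta X J s J1 J2 a b) {U1 U2 : Set S} (o1 : IsOpen U1) (o2 : IsOpen U2) (c1 : IsPreconnected U1)
    (n1 : U1.Nonempty) (hW : U1 ∪ U2 = (X \ J) \ s) (hd : Disjoint U1 U2) (f1 : frontier U1 = J1 ∪ s) (f2 : frontier U2 = J2 ∪ s) :
    IsCell (closure U1) (J1 ∪ s) ∧ closure U1 ∩ closure U2 = s ∧ closure U1 ∪ closure U2 = X := by
  have hJ1 : J1 ⊆ J := h.union ▸ subset_union_left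
  have hJ2 : J2 ⊆ J := h.union ▸ subset_union_right
  have u1 : U1 ⊆ (X \ J) \ s := hW ▸ subset_union_left
  have u2 : U2 ⊆ (X \ J) \ s := hW ▸ subset_union_right
  have e1 : closure U1 = U1 ∪ (J1 ∪ s) := by rw [closure_eq_self_union_frontier, f1]
  have e2 : closure U2 = U2 ∪ (J2 ∪ s) := by rw [closure_eq_self_union_frontier, f2]
  have hXc := h.cell.compact.isClosed
  have k1 : closure U1 ⊆ X := closure_minimal (u1.trans fun z hz => hz.1.1) hXc
  have k2 : closure U2 ⊆ X := closure_minimal (u2.trans fun z hz => hz.1.1) hXc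
  have hi : closure U1 ∩ closure U2 = s := by
    refine Subset.antisymm ?_ fun x hx => ⟨e1 ▸ Or.inr (Or.inr hx), e2 ▸ Or.inr (Or.inr hx)⟩
    rw [e1, e2]
    rintro x ⟨p1 | p1 | p1, p2 | p2 | p2⟩
    · exact (disjoint_left.1 hd p1 p2).elim
    · exact ((u1 p1).1.2 (hJ2 p2)).elim
    · exact p2
    · exact ((u2 p2).1.2 (hJ1 p1)).elim
    · exact ((h.inter1.symm ▸ (h.inter ▸ ⟨p1, p2⟩ : x ∈ ({a, b} : Set S)) : x ∈ s ∩ J1)).1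
    · exact p2
    · exact p1
    · exact p1
    · exact p1
  have hu : closure U1 ∪ closure U2 = X := by
    refine Subset.antisymm (union_subset k1 k2) fun x hx => ?_
    rw [e1, e2]
    by_cases hJ : x ∈ J
    · rw [← h.union] at hJ
      rcases hJ with q | q
      · exact Or.inl (Or.inr (Or.inl q))
      · exact Or.inr (Or.inr (Or.inl q))
    by_cases hs : x ∈ s
    · exact Or.inl (Or.inr (Or.inr hs))
    have : x ∈ U1 ∪ U2 := hW ▸ ⟨⟨hx, hJ⟩, hs⟩
    exact this.imp Or.inl Or.inl
  have e3 : closure U1 \ (J1 ∪ s) = U1 := by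
    rw [e1, union_sdiff_right, sdiff_eq_left]
    exact disjoint_left.2 fun z hz h' => h'.elim (fun q => (u1 hz).1.2 (hJ1 q)) (u1 hz).2
  refine ⟨⟨h.cell.compact.of_isClosed_subset isClosed_closure k1,
    isJordan_glue h.arc1 h.arc (by rw [inter_comm]; exact h.inter1), e1 ▸ subset_union_right, e3.symm ▸ o1, e3.symm ▸ c1, e3.symm ▸ n1,
    ?_, ?_, ?_⟩, hi, hu⟩
  · rw [e3, e1]; exact subset_union_right
  · apply union_subset
    · exact (hJ1.trans h.cell.out).trans (closure_mono (compl_subset_compl.2 k1))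
    · have hs2 : s ⊆ closure U2 := e2 ▸ fun x hx => Or.inr (Or.inr hx)
      refine hs2.trans (closure_mono fun z hz hz1 => ?_)
      exact disjoint_left.1 (hd.closure_left o2) hz1 hz
  · intro f hf
    classical
    have hsX : s ⊆ closure U1 := hi ▸ inter_subset_left
    obtain ⟨F, hF, hFe⟩ := (h.arc.acyc f (hf.mono hsX)).extend h.arc.isClosed
    set g : S → Angle := fun y => if y ∈ closure U1 then f y - F y else 0 with hg
    have hgc : ContinuousOn g X := by
      refine contOn_of_closed_cover (A := closure U1) (B := closure U2) isClosed_closure isClosed_closure hu.ge ?_ ?_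
      · refine ((hf.sub (hF.continuousOn.mono (subset_univ _))).mono inter_subset_right).congr fun y hy => ?_
        simp only [hg, hy.2, if_true, Pi.sub_apply]
      · refine (continuousOn_const (c := (0 : Angle))).congr fun y hy => ?_
        beta_reduce
        by_cases h1 : y ∈ closure U1
        · have : y ∈ s := hi ▸ ⟨h1, hy.2⟩
          simp only [hg, h1, if_true, hFe this, sub_self]
        · simp only [hg, h1, if_false]
    refine (((h.cell.acyc g hgc).mono k1).add (hF.mono (subset_univ _))).congr fun y hy => ?_
    simp only [hg, hy, if_true, sub_add_cancel]

/-- A crosscut divides a cell into two cells meeting along the crosscut. -/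
theorem Theta.cells (h : Theta X J s J1 J2 a b) :
    ∃ X1 X2, IsCell X1 (J1 ∪ s) ∧ IsCell X2 (J2 ∪ s) ∧ X1 ∪ X2 = X ∧ X1 ∩ X2 = s := by
  have hlc := locallyConnectedSpace_of_locPlane hS
  obtain ⟨x1, hx1, h1⟩ := h.exists_side hS
  obtain ⟨x2, hx2, h2⟩ := h.swap.exists_side hS
  set U1 := connectedComponentIn ((X \ J) \ s) x1 with hU1
  set U2 := connectedComponentIn ((X \ J) \ s) x2 with hU2
  have hall : ∀ x ∈ (X \ J) \ s, x ∈ U1 ∪ U2 := by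
    intro x hx
    by_contra hc
    refine h.comp_eq hS h1 h2 hx (fun he => hc (Or.inl ?_)) (fun he => hc (Or.inr ?_))
    · rw [hU1, ← he]; exact mem_connectedComponentIn hx
    · rw [hU2, ← he]; exact mem_connectedComponentIn hx
  have hW : U1 ∪ U2 = (X \ J) \ s := Subset.antisymm
    (union_subset (connectedComponentIn_subset _ _) (connectedComponentIn_subset _ _)) hall
  have hd : Disjoint U1 U2 := by
    rw [disjoint_left]
    intro z hz1 hz2
    have : U1 = U2 := (connectedComponentIn_eq hz1).trans (connectedComponentIn_eq hz2).symm
    rw [← this, union_self] at hW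
    exact h.not_preconnected hS hx1 (hW ▸ isPreconnected_connectedComponentIn)
  have f1 := h.frontier_side hS hx1 h1 h2 hd
  have f2 := h.swap.frontier_side hS hx2 h2 h1 hd.symm
  have o1 : IsOpen U1 := h.isOpen.connectedComponentIn
  have o2 : IsOpen U2 := h.isOpen.connectedComponentIn
  obtain ⟨c1, i1, v1⟩ := h.side_cell hS o1 o2 isPreconnected_connectedComponentIn ⟨x1, mem_connectedComponentIn hx1⟩ hW hd f1 f2
  obtain ⟨c2, _, _⟩ := h.swap.side_cell hS o2 o1 isPreconnected_connectedComponentIn ⟨x2, mem_connectedComponentIn hx2⟩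
    (by rw [union_comm]; exact hW) hd.symm f2 f1
  exact ⟨_, _, c1, c2, v1, i1⟩

end cell

/-! ### Arcs in paths -/

section path
variable {S : Type*} [MetricSpace S]

/-- Closed parameter sets such that the path takes equal values at the ends of each gap. -/
structure Gapped {S : Type*} [TopologicalSpace S] (f : ℝ → S) (A : Set ℝ) : Prop where
  closed : IsClosed A
  sub : A ⊆ Icc 0 1
  zero : (0 : ℝ) ∈ A
  one : (1 : ℝ) ∈ A
  gap : ∀ u ∈ A, ∀ v ∈ A, u < v → Disjoint (Ioo u v) A → f u = f v

theorem gapped_chain {f : ℝ → S} (hf : Continuous f) {c : Set (Set ℝ)} (hc : ∀ A ∈ c, Gapped f A) (hch : IsChain (· ⊆ ·) c)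
    (hne : c.Nonempty) : Gapped f (⋂₀ c) := by
  obtain ⟨A0, hA0⟩ := hne
  refine ⟨isClosed_sInter fun A hA => (hc A hA).closed, (sInter_subset_of_mem hA0).trans (hc A0 hA0).sub,
    fun A hA => (hc A hA).zero, fun A hA => (hc A hA).one, ?_⟩
  intro u hu v hv huv hd
  by_contra hne
  have hpos : 0 < dist (f u) (f v) := dist_pos.2 hne
  obtain ⟨δ1, hδ1, k1⟩ := Metric.continuous_iff.1 hf u (dist (f u) (f v) / 2) (by positivity)
  obtain ⟨δ2, hδ2, k2⟩ := Metric.continuous_iff.1 hf v (dist (f u) (f v) / 2) (by positivity)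
  set ε := min (min δ1 δ2) ((v - u) / 2) with hε
  have hεp : 0 < ε := by simp only [hε, lt_min_iff]; exact ⟨⟨hδ1, hδ2⟩, by linarith⟩
  have e1 : ε ≤ δ1 := (min_le_left _ _).trans (min_le_left _ _)
  have e2 : ε ≤ δ2 := (min_le_left _ _).trans (min_le_right _ _)
  have e3 : ε ≤ (v - u) / 2 := min_le_right _ _
  -- some member of the chain avoids the middle part of the gap
  obtain ⟨A, hA, hAd⟩ : ∃ A ∈ c, Disjoint (Icc (u + ε / 2) (v - ε / 2)) A := by
    by_contra hcon
    push Not at hcon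
    have : (⋂ A : c, (Icc (u + ε / 2) (v - ε / 2) ∩ (A : Set ℝ))).Nonempty := by
      have : Nonempty c := ⟨⟨A0, hA0⟩⟩
      refine IsCompact.nonempty_iInter_of_directed_nonempty_isCompact_isClosed _ ?_ ?_ ?_ ?_
      · rintro ⟨A, hA⟩ ⟨B, hB⟩
        rcases hch.total hA hB with h | h
        · exact ⟨⟨A, hA⟩, Subset.rfl, inter_subset_inter_right _ h⟩
        · exact ⟨⟨B, hB⟩, inter_subset_inter_right _ h, Subset.rfl⟩
      · rintro ⟨A, hA⟩
        exact not_disjoint_iff_nonempty_inter.1 (hcon A hA)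
      · rintro ⟨A, hA⟩
        exact isCompact_Icc.inter_right (hc A hA).closed
      · rintro ⟨A, hA⟩
        exact isClosed_Icc.inter (hc A hA).closed
    obtain ⟨w, hw⟩ := this
    rw [mem_iInter] at hw
    have hw0 := (hw ⟨A0, hA0⟩).1
    refine disjoint_left.1 hd ⟨?_, ?_⟩ (mem_sInter.2 fun A hA => (hw ⟨A, hA⟩).2)
    · linarith [hw0.1]
    · linarith [hw0.2]
  have hAG := hc A hA
  have hcp : IsCompact (A ∩ Icc u (u + ε / 2)) := isCompact_Icc.inter_left hAG.closed
  have hcq : IsCompact (A ∩ Icc (v - ε / 2) v) := isCompact_Icc.inter_left hAG.closed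
  obtain ⟨p, hp, hpm⟩ := hcp.exists_isGreatest ⟨u, hu A hA, by constructor <;> linarith⟩
  obtain ⟨q, hq, hqm⟩ := hcq.exists_isLeast ⟨v, hv A hA, by constructor <;> linarith⟩
  have hpq : f p = f q := by
    refine hAG.gap p hp.1 q hq.1 (by linarith [hp.2.2, hq.2.1]) (disjoint_left.2 fun w hw hwA => ?_)
    by_cases h1 : w ≤ u + ε / 2
    · have := hpm ⟨hwA, by linarith [hp.2.1, hw.1], h1⟩
      linarith [hw.1]
    by_cases h2 : v - ε / 2 ≤ w
    · have := hqm ⟨hwA, h2, by linarith [hq.2.2, hw.2]⟩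
      linarith [hw.2]
    exact disjoint_left.1 hAd ⟨(not_le.1 h1).le, (not_le.1 h2).le⟩ hwA
  have d1 := k1 p (by rw [Real.dist_eq, abs_lt]; constructor <;> linarith [hp.2.1, hp.2.2])
  have d2 := k2 q (by rw [Real.dist_eq, abs_lt]; constructor <;> linarith [hq.2.1, hq.2.2])
  have := dist_triangle (f u) (f p) (f v)
  rw [dist_comm (f u) (f p), hpq] at this
  rw [hpq] at d1
  linarith

theorem exists_gapped {f : ℝ → S} (hf : Continuous f) : ∃ A, Gapped f A ∧
    ∀ s ∈ A, ∀ t ∈ A, s < t → f s = f t → Disjoint (Ioo s t) A := by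
  have h0 : Gapped f (Icc 0 1) := by
    refine ⟨isClosed_Icc, Subset.rfl, by simp, by simp, fun u hu v hv huv hd => ?_⟩
    exact (disjoint_left.1 hd (show (u + v) / 2 ∈ Ioo u v by constructor <;> linarith)
      ⟨by linarith [hu.1, hv.1], by linarith [hu.2, hv.2]⟩).elim
  obtain ⟨A, hA⟩ := zorn_superset {A | Gapped f A} (by
    intro c hc hch
    rcases c.eq_empty_or_nonempty with rfl | hne
    · exact ⟨_, h0, by simp⟩
    · exact ⟨_, gapped_chain hf (fun A hA => hc hA) hch hne, fun A hA => sInter_subset_of_mem hA⟩)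
  have hG : Gapped f A := hA.1
  refine ⟨A, hG, fun s hs t ht hst hft => ?_⟩
  have h1 : Gapped f (A \ Ioo s t) := by
    refine ⟨hG.closed.sdiff isOpen_Ioo, sdiff_subset.trans hG.sub, ⟨hG.zero, fun h => ?_⟩, ⟨hG.one, fun h => ?_⟩, ?_⟩
    · exact absurd (hG.sub hs).1 (not_le.2 h.1)
    · exact absurd (hG.sub ht).2 (not_le.2 h.2)
    · rintro u ⟨hu, hu'⟩ v ⟨hv, hv'⟩ huv hd
      by_cases hd' : Disjoint (Ioo u v) A
      · exact hG.gap u hu v hv huv hd'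
      obtain ⟨w, hw, hwA⟩ := not_disjoint_iff.1 hd'
      have hws : w ∈ Ioo s t := by
        by_contra hc
        exact disjoint_left.1 hd hw ⟨hwA, hc⟩
      have hs' : ¬ (u < s ∧ s < v) := fun h => disjoint_left.1 hd h ⟨hs, fun h => lt_irrefl _ h.1⟩
      have ht' : ¬ (u < t ∧ t < v) := fun h => disjoint_left.1 hd h ⟨ht, fun h => lt_irrefl _ h.2⟩
      have e1 : u = s := by
        refine le_antisymm (not_lt.1 fun h => hu' ⟨h, hw.1.trans hws.2⟩) (not_lt.1 fun h => hs' ⟨h, hws.1.trans hw.2⟩)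
      have e2 : v = t := by
        refine le_antisymm (not_lt.1 fun h => ht' ⟨hw.1.trans hws.2, h⟩) (not_lt.1 fun h => hv' ⟨hws.1.trans hw.2, h⟩)
      rw [e1, e2, hft]
  exact disjoint_left.2 fun w hw hwA => (hA.2 h1 sdiff_subset hwA).2 hw

/-- A path can be altered so that each of its fibres is an interval. -/
theorem exists_monotone_path {f : ℝ → S} (hf : Continuous f) : ∃ g : ℝ → S, Continuous g ∧ (∀ t, g t ∈ f '' Icc 0 1) ∧
    g 0 = f 0 ∧ g 1 = f 1 ∧ ∀ t t', t ≤ t' → g t = g t' → ∀ w ∈ Icc t t', g w = g t := by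
  obtain ⟨A, hA, hmin⟩ := exists_gapped hf
  have hlast : ∀ t : ℝ, ∃ p ∈ A, (0 ≤ t → p ≤ t ∧ ∀ q ∈ A, q ≤ t → q ≤ p) ∧ (t ≤ 0 → p = 0) := by
    intro t
    rcases le_or_gt 0 t with h | h
    · have hcp : IsCompact (A ∩ Icc 0 t) := isCompact_Icc.inter_left hA.closed
      obtain ⟨p, hp, hpm⟩ := hcp.exists_isGreatest ⟨0, hA.zero, by simp [h]⟩
      refine ⟨p, hp.1, fun _ => ⟨hp.2.2, fun q hq hqt => hpm ⟨hq, (hA.sub hq).1, hqt⟩⟩, fun h' => ?_⟩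
      exact le_antisymm (hp.2.2.trans h') hp.2.1
    · exact ⟨0, hA.zero, fun h' => absurd h (not_lt.2 h'), fun _ => rfl⟩
  choose r hrA hr1 hr0 using hlast
  have hrid : ∀ t ∈ A, r t = t := fun t ht => le_antisymm (hr1 t (hA.sub ht).1).1 ((hr1 t (hA.sub ht).1).2 t ht le_rfl)
  have hmono : Monotone r := by
    intro t t' h
    rcases le_total t 0 with h1 | h1
    · rw [hr0 t h1]; exact (hA.sub (hrA t')).1
    · exact (hr1 t' (h1.trans h)).2 _ (hrA t) (((hr1 t h1).1).trans h)
  -- values of the new path are values of `f` at points of `A` near the parameter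
  have hnear : ∀ t ∈ A, ∀ t', ∃ p, |p - t| ≤ |t' - t| ∧ f (r t') = f p := by
    intro t ht t'
    have ht0 := (hA.sub ht).1
    rcases le_total t t' with h | h
    · refine ⟨r t', ?_, rfl⟩
      have h1 := (hr1 t' (ht0.trans h)).1
      have h2 := (hr1 t' (ht0.trans h)).2 t ht h
      rw [abs_of_nonneg (by linarith), abs_of_nonneg (by linarith)]; linarith
    · rcases le_or_gt t' 0 with h0 | h0
      · refine ⟨0, ?_, by rw [hr0 t' h0]⟩
        rw [abs_of_nonpos (by linarith), abs_of_nonpos (by linarith)]; linarith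
      have hcq : IsCompact (A ∩ Icc t' t) := isCompact_Icc.inter_left hA.closed
      obtain ⟨q, hq, hqm⟩ := hcq.exists_isLeast ⟨t, ht, h, le_rfl⟩
      have h1 := (hr1 t' h0.le).1
      refine ⟨q, ?_, ?_⟩
      · rw [abs_of_nonpos (by linarith [hq.2.2]), abs_of_nonpos (by linarith)]; linarith [hq.2.1]
      · rcases (h1.trans hq.2.1).eq_or_lt with e | hlt
        · rw [e]
        refine hA.gap _ (hrA t') _ hq.1 hlt (disjoint_left.2 fun w hw hwA => ?_)
        rcases le_total w t' with hwt | hwt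
        · exact absurd ((hr1 t' h0.le).2 w hwA hwt) (not_le.2 hw.1)
        · exact absurd (hqm ⟨hwA, hwt, hw.2.le.trans hq.2.2⟩) (not_le.2 hw.2)
  refine ⟨f ∘ r, ?_, fun t => ⟨r t, hA.sub (hrA t), rfl⟩, ?_, ?_, ?_⟩
  · rw [Metric.continuous_iff]
    intro t ε hε
    by_cases ht : t ∈ A
    · obtain ⟨δ, hδ, h⟩ := Metric.continuous_iff.1 hf t ε hε
      refine ⟨δ, hδ, fun t' ht' => ?_⟩
      obtain ⟨p, hp, he⟩ := hnear t ht t'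
      simp only [Function.comp_apply, he, hrid t ht]
      exact h p (lt_of_le_of_lt hp ht')
    · obtain ⟨δ, hδ, h⟩ := Metric.isOpen_iff.1 hA.closed.isOpen_compl t ht
      refine ⟨δ, hδ, fun t' ht' => ?_⟩
      suffices r t' = r t by simp [this, hε]
      have hin : ∀ w ∈ uIcc t t', w ∉ A := by
        intro w hw
        apply h
        rw [mem_ball, Real.dist_eq]
        refine lt_of_le_of_lt ?_ ht'
        rw [Real.dist_eq]
        exact abs_sub_left_of_mem_uIcc hw
      have key : ∀ a b, a ≤ b → (∀ w ∈ Icc a b, w ∉ A) → r a = r b := by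
        intro a b hab hw
        refine le_antisymm (hmono hab) ?_
        rcases le_total b 0 with hb | hb
        · rw [hr0 b hb]; exact (hA.sub (hrA a)).1
        have h2 := (hr1 b hb).1
        have h3 : r b < a := not_le.1 fun h => hw _ ⟨h, h2⟩ (hrA b)
        exact (hr1 a ((hA.sub (hrA b)).1.trans h3.le)).2 _ (hrA b) h3.le
      rcases le_total t t' with hle | hle
      · exact (key t t' hle fun w hw => hin w (by rwa [uIcc_of_le hle])).symm
      · exact key t' t hle fun w hw => hin w (by rwa [uIcc_of_ge hle])
  · simp [hrid 0 hA.zero]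
  · simp [hrid 1 hA.one]
  · intro t t' htt he w hw
    simp only [Function.comp_apply] at he ⊢
    have m1 := hmono hw.1
    have m2 := hmono hw.2
    rcases m1.eq_or_lt with e | h1
    · rw [e]
    rcases m2.eq_or_lt with e | h2
    · rw [e, he]
    exact (disjoint_left.1 (hmin _ (hrA t) _ (hrA t') (h1.trans h2) he) ⟨h1, h2⟩ (hrA w)).elim

/-- A continuous monotone function having the same fibres as a monotone path. -/
theorem exists_parameter {g : ℝ → S} (hg : Continuous g) (hm : ∀ t t', t ≤ t' → g t = g t' → ∀ w ∈ Icc t t', g w = g t) :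
    ∃ F : ℝ → ℝ, Continuous F ∧ ∀ t ∈ Icc (0:ℝ) 1, ∀ t' ∈ Icc (0:ℝ) 1, t ≤ t' → F t ≤ F t' ∧ (F t = F t' ↔ g t = g t') := by
  set q : ℕ → ℝ := TopologicalSpace.denseSeq ℝ
  have hqd : DenseRange q := TopologicalSpace.denseRange_denseSeq ℝ
  set h : ℕ → ℝ → ℝ → ℝ := fun k t s => min 1 (dist (g (max (q k) (min s t))) (g (q k))) with hh
  set m : ℕ → ℝ → ℝ := fun k t => sSup (h k t '' Icc 0 1) with hmdef
  have hcont : ∀ k, Continuous (fun p : ℝ × ℝ => h k p.1 p.2) := by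
    intro k
    simp only [hh]
    fun_prop
  have hmc : ∀ k, Continuous (m k) := fun k => IsCompact.continuous_sSup isCompact_Icc (hcont k)
  have hbd : ∀ k t, BddAbove (h k t '' Icc 0 1) := fun k t => ⟨1, by rintro _ ⟨s, _, rfl⟩; exact min_le_left _ _⟩
  have hh0 : ∀ k t s, 0 ≤ h k t s := fun k t s => le_min zero_le_one dist_nonneg
  have hle : ∀ k t s, s ∈ Icc (0:ℝ) 1 → h k t s ≤ m k t := fun k t s hs => le_csSup (hbd k t) ⟨s, hs, rfl⟩
  have hm0 : ∀ k t, 0 ≤ m k t := fun k t => (hh0 k t 0).trans (hle k t 0 (by simp))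
  have hm1 : ∀ k t, m k t ≤ 1 := fun k t => csSup_le ⟨_, 0, by simp, rfl⟩ (by rintro _ ⟨s, _, rfl⟩; exact min_le_left _ _)
  have hmle : ∀ k t c, (∀ s ∈ Icc (0:ℝ) 1, h k t s ≤ c) → m k t ≤ c := fun k t c hc =>
    csSup_le ⟨_, 0, by simp, rfl⟩ (by rintro _ ⟨s, hs, rfl⟩; exact hc s hs)
  have hmm : ∀ k, ∀ t ∈ Icc (0:ℝ) 1, ∀ t', t ≤ t' → m k t ≤ m k t' := by
    intro k t ht t' htt
    refine hmle k t _ fun s hs => ?_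
    refine le_trans (le_of_eq ?_) (hle k t' (min s t) ⟨le_min hs.1 ht.1, (min_le_left _ _).trans hs.2⟩)
    simp only [hh]
    rw [min_assoc, min_eq_left htt]
  have hsum : ∀ t, Summable fun k => (1/2 : ℝ) ^ k * m k t := fun t =>
    Summable.of_nonneg_of_le (fun k => mul_nonneg (by positivity) (hm0 k t))
      (fun k => mul_le_of_le_one_right (by positivity) (hm1 k t)) summable_geometric_two
  refine ⟨fun t => ∑' k, (1/2 : ℝ) ^ k * m k t, ?_, ?_⟩
  · refine continuous_tsum (u := fun k => (1/2 : ℝ) ^ k) (fun k => continuous_const.mul (hmc k)) summable_geometric_two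
      fun k t => ?_
    rw [Real.norm_eq_abs, abs_of_nonneg (mul_nonneg (by positivity) (hm0 k t))]
    exact mul_le_of_le_one_right (by positivity) (hm1 k t)
  · intro t ht t' ht' htt
    have hle' : ∀ k, (1/2 : ℝ) ^ k * m k t ≤ (1/2 : ℝ) ^ k * m k t' := fun k =>
      mul_le_mul_of_nonneg_left (hmm k t ht t' htt) (by positivity)
    refine ⟨Summable.tsum_le_tsum hle' (hsum t) (hsum t'), ?_, ?_⟩
    · intro hE
      by_contra hne
      have hpos : 0 < dist (g t) (g t') := dist_pos.2 hne
      set η := min 1 (dist (g t) (g t')) / 4 with hη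
      have hηp : 0 < η := by rw [hη]; have : 0 < min 1 (dist (g t) (g t')) := lt_min one_pos hpos; linarith
      obtain ⟨δ, hδ, hc⟩ := Metric.continuous_iff.1 hg t η hηp
      obtain ⟨k, hk⟩ := hqd.exists_mem_open isOpen_Ioo (show (Ioo (t - δ) t).Nonempty from ⟨t - δ / 2, by constructor <;> linarith⟩)
      have hqt := hc (q k) (by rw [Real.dist_eq, abs_lt]; constructor <;> linarith [hk.1, hk.2])
      have a1 : m k t ≤ 2 * η := by
        refine hmle k t _ fun s hs => (min_le_right _ _).trans ?_
        have := hc (max (q k) (min s t)) (by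
          rw [Real.dist_eq, abs_lt]
          have b1 : q k ≤ max (q k) (min s t) := le_max_left _ _
          have b2 : max (q k) (min s t) ≤ t := max_le hk.2.le (min_le_right _ _)
          constructor <;> linarith [hk.1])
        linarith [dist_triangle_right (g (max (q k) (min s t))) (g (q k)) (g t)]
      have a2 : 3 * η ≤ m k t' := by
        refine le_trans ?_ (hle k t' t' ht')
        simp only [hh, min_self]
        rw [max_eq_right (hk.2.le.trans htt)]
        have h1 : min 1 (dist (g t) (g t')) = 4 * η := by rw [hη]; ring
        have h2 : 4 * η ≤ 1 := h1 ▸ min_le_left _ _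
        have h3 : 4 * η ≤ dist (g t) (g t') := h1 ▸ min_le_right _ _
        refine le_min (by linarith) ?_
        linarith [dist_triangle (g t) (g (q k)) (g t'), dist_comm (g t) (g (q k)), dist_comm (g t') (g (q k))]
      have := Summable.tsum_lt_tsum (i := k) hle' (mul_lt_mul_of_pos_left (show m k t < m k t' by linarith) (by positivity))
        (hsum t) (hsum t')
      exact absurd hE this.ne
    · intro hE
      have hw := hm t t' htt hE
      have : ∀ k s, h k t s = h k t' s := by
        intro k s
        suffices g (max (q k) (min s t)) = g (max (q k) (min s t')) by simp only [hh, this]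
        rcases le_total s t with h1 | h1
        · rw [min_eq_left h1, min_eq_left (h1.trans htt)]
        · rw [min_eq_right h1]
          have h2 : min s t' ∈ Icc t t' := ⟨le_min h1 htt, min_le_right _ _⟩
          rcases le_total (q k) t' with h3 | h3
          · rw [hw (max (q k) t) ⟨le_max_right _ _, max_le h3 htt⟩,
              hw (max (q k) (min s t')) ⟨h2.1.trans (le_max_right _ _), max_le h3 h2.2⟩]
          · rw [max_eq_left (htt.trans h3), max_eq_left (h2.2.trans h3)]
      have h2 : ∀ k, m k t = m k t' := fun k => by simp only [hmdef]; congr 1; exact image_congr fun s _ => this k s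
      simp only [h2]

/-- The image of a path between distinct points contains an arc between them. -/
theorem exists_arc {f : ℝ → S} (hf : ContinuousOn f (Icc 0 1)) (hne : f 0 ≠ f 1) : ∃ s ⊆ f '' Icc 0 1, IsArc s (f 0) (f 1) := by
  have hf' : Continuous (fun t : ℝ => f (projIcc (0:ℝ) 1 zero_le_one t)) :=
    (continuousOn_iff_continuous_domRestrict.1 hf).comp continuous_projIcc
  obtain ⟨g, hg, hgs, g0, g1, hm⟩ := exists_monotone_path hf'
  have p0 : (projIcc (0:ℝ) 1 zero_le_one 0 : ℝ) = 0 := by simp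
  have p1 : (projIcc (0:ℝ) 1 zero_le_one 1 : ℝ) = 1 := by simp
  rw [p0] at g0
  rw [p1] at g1
  obtain ⟨F, hF, hFm⟩ := exists_parameter hg hm
  have z0 : (0:ℝ) ∈ Icc (0:ℝ) 1 := by simp
  have z1 : (1:ℝ) ∈ Icc (0:ℝ) 1 := by simp
  have h01 : F 0 < F 1 := lt_of_le_of_ne (hFm 0 z0 1 z1 zero_le_one).1 fun h =>
    hne (by rw [← g0, ← g1]; exact (hFm 0 z0 1 z1 zero_le_one).2.1 h)
  have hiff : ∀ t ∈ Icc (0:ℝ) 1, ∀ t' ∈ Icc (0:ℝ) 1, (F t = F t' ↔ g t = g t') := by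
    intro t ht t' ht'
    rcases le_total t t' with h | h
    · exact (hFm t ht t' ht' h).2
    · rw [eq_comm, (hFm t' ht' t ht h).2, eq_comm]
  have himg : F '' Icc 0 1 = Icc (F 0) (F 1) := by
    refine Subset.antisymm ?_ (intermediate_value_Icc zero_le_one hF.continuousOn)
    rintro _ ⟨t, ht, rfl⟩
    exact ⟨(hFm 0 z0 t ht ht.1).1, (hFm t ht 1 z1 ht.2).1⟩
  have hsec : ∀ w ∈ Icc (F 0) (F 1), ∃ t ∈ Icc (0:ℝ) 1, F t = w := fun w hw => by rw [← himg] at hw; exact hw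
  choose! σ hσ hσF using hsec
  have hγ : ∀ t ∈ Icc (0:ℝ) 1, g (σ (F t)) = g t := by
    intro t ht
    have hFt : F t ∈ Icc (F 0) (F 1) := himg ▸ ⟨t, ht, rfl⟩
    exact (hiff _ (hσ _ hFt) t ht).1 (hσF _ hFt)
  have hγc : ContinuousOn (fun w => g (σ w)) (Icc (F 0) (F 1)) := by
    rw [continuousOn_iff_isClosed]
    intro K hK
    refine ⟨F '' (Icc 0 1 ∩ g ⁻¹' K), ((isCompact_Icc.inter_right (hK.preimage hg)).image hF).isClosed, ?_⟩
    ext w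
    constructor
    · rintro ⟨h1, h2⟩
      exact ⟨⟨σ w, ⟨hσ w h2, h1⟩, hσF w h2⟩, h2⟩
    · rintro ⟨⟨t, ⟨ht, htK⟩, rfl⟩, h2⟩
      refine ⟨?_, h2⟩
      rw [mem_preimage, hγ t ht]; exact htK
  have hγi : InjOn (fun w => g (σ w)) (Icc (F 0) (F 1)) := by
    intro w hw w' hw' h
    rw [← hσF w hw, ← hσF w' hw']
    exact (hiff _ (hσ w hw) _ (hσ w' hw')).2 h
  have := IsArc.of_Icc h01 hγc hγi
  beta_reduce at this
  rw [hγ 0 z0, hγ 1 z1, g0, g1] at this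
  refine ⟨_, ?_, this⟩
  rintro _ ⟨w, hw, rfl⟩
  obtain ⟨t, ht, he⟩ := hgs (σ w)
  exact ⟨_, (projIcc (0:ℝ) 1 zero_le_one t).2, he⟩

theorem exists_arc_of_joinedIn {F : Set S} {x y : S} (h : JoinedIn F x y) (hne : x ≠ y) : ∃ s ⊆ F, IsArc s x y := by
  obtain ⟨γ, hγ⟩ := h
  obtain ⟨s, hs, ha⟩ := exists_arc (f := γ.extend) γ.continuous_extend.continuousOn (by simpa using hne)
  refine ⟨s, hs.trans ?_, by simpa using ha⟩
  rintro _ ⟨t, ht, rfl⟩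
  rw [γ.extend_apply ht]
  exact hγ _

end path

section sep
variable {S : Type*} [MetricSpace S] {X J s : Set S} {a b : S} (hS : LocPlane (univ : Set S))

include hS in
/-- A pair of singularities supported in the cell is killed, along a crosscut not separating them,
by a logarithm vanishing at both ends. -/
theorem IsCell.log_of_same_side (hX : IsCell X J) {p q : S} (hpq : p ≠ q) {φ : S → Angle} (hφ : Pair φ p q (X \ J)) {s U : Set S}
    (hsX : s ⊆ X) (hUo : IsOpen U) (hUc : IsPreconnected U) (hU : U ⊆ X \ J) (hUs : Disjoint U s) (hp : p ∈ U) (hq : q ∈ U) :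
    ∃ L : S → ℝ, ContinuousOn L s ∧ (∀ x ∈ s, (L x : Angle) = φ x) ∧ ∀ x ∈ s ∩ J, L x = 0 := by
  obtain ⟨ψ, hψ⟩ := exists_pair hUo hUc (hS.of_univ hUo) hp hq hpq
  obtain ⟨n, hn, hnull⟩ := hφ.genl.sign hψ.genl
  set d : S → Angle := fun y => φ y - n • ψ y with hd
  have hdc : ContinuousOn d {p, q}ᶜ := hφ.cont.sub (hψ.cont.const_smul n)
  have hJU : ∀ y ∈ J, y ∉ U := fun y hy h => (hU h).2 hy
  have hXp : X ∈ 𝓝 p := mem_of_superset (hX.isOpen.mem_nhds (hU hp)) sdiff_subset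
  have hXq : X ∈ 𝓝 q := mem_of_superset (hX.isOpen.mem_nhds (hU hq)) sdiff_subset
  obtain ⟨g, hg, hge⟩ := hnull.repair (T := X \ {q}) (W := U) (hdc.mono fun y hy h' => by
      rcases h' with h' | h'
      · exact hy.2 h'
      · exact hy.1.2 h') (inter_mem hXp (isOpen_compl_singleton.mem_nhds hpq)) (hUo.mem_nhds hp)
  have hg0 : ∀ y ∉ U, g y = φ y := fun y hy => by rw [hge y hy, hd]; simp [hψ.zero y hy]
  have hgn := hX.orient hS (hU hq) hg fun y hy => by rw [hg0 y (hJU y hy), hφ.zero y fun h => h.2 hy]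
  obtain ⟨g', hg', hge'⟩ := hgn.repair (T := X) (W := U) hg hXq (hUo.mem_nhds hq)
  have hg0' : ∀ y ∉ U, g' y = φ y := fun y hy => by rw [hge' y hy, hg0 y hy]
  obtain ⟨ℓ, hℓ, hℓe⟩ := hX.acyc g' hg'
  obtain ⟨m, hm⟩ := log_unique hX.jordan.isPreconnected (hℓ.mono hX.sub) (continuousOn_const (c := (0:ℝ))) fun x hx => by
    rw [hℓe x (hX.sub hx), hg0' x (hJU x hx), hφ.zero x fun h => h.2 hx]; simp
  refine ⟨fun x => ℓ x - 2 * π * m, (hℓ.mono hsX).sub continuousOn_const, fun x hx => ?_, fun x hx => ?_⟩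
  · rw [Angle.coe_sub, hℓe x (hsX hx), hg0' x (fun h => disjoint_left.1 hUs h hx)]
    rw [two_pi_int_coe, sub_zero]
  · beta_reduce
    rw [hm x hx.2]; ring

include hS in
/-- Two points are not separated by a closed set on which the pair has a logarithm. -/
theorem IsCell.same_component (hX : IsCell X J) {p q : S} {φ : S → Angle} (hφ : Pair φ p q (X \ J)) {K : Set S} (hK : IsClosed K)
    (hp : p ∈ (X \ J) \ K) (hq : q ∈ (X \ J) \ K) (hl : LogOn φ ((K ∩ X) ∪ J)) : q ∈ connectedComponentIn ((X \ J) \ K) p := by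
  have hlc := locallyConnectedSpace_of_locPlane hS
  by_contra hc
  set U := connectedComponentIn ((X \ J) \ K) p
  have hWo : IsOpen ((X \ J) \ K) := hX.isOpen.sdiff hK
  have hU : IsOpen U := hWo.connectedComponentIn
  have hUW : U ⊆ (X \ J) \ K := connectedComponentIn_subset _ _
  have hclX : closure U ⊆ X := closure_minimal (hUW.trans fun z hz => hz.1.1) hX.compact.isClosed
  have hfr : frontier U ⊆ (K ∩ X) ∪ J := by
    intro y hy
    have h1 := frontier_component hWo p hy
    have h2 := hclX (frontier_subset_closure hy)
    by_contra h3
    refine h1 ⟨⟨h2, fun h => h3 (Or.inr h)⟩, fun h => h3 (Or.inl ⟨h, h2⟩)⟩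
  have hqU : q ∉ closure U := by
    rw [closure_eq_self_union_frontier]
    rintro (h | h)
    · exact hc h
    · exact frontier_component hWo p h hq
  have := hX.null_of_log hS hU (hUW.trans sdiff_subset) (mem_connectedComponentIn hp) (u := φ) (hφ.cont.mono fun y hy h => by
    rcases h with h | h
    · exact hy.2 h
    · exact hqU (h ▸ hy.1)) (hl.mono hfr)
  exact one_ne_zero (hφ.genl.2.1 1 (this.congr' fun y => by simp))

end sep

section comps
variable {Z : Type*} [MetricSpace Z] [CompactSpace Z] [LocallyConnectedSpace Z]

omit [CompactSpace Z] in
theorem finite_components {O K : Set Z} (hO : IsOpen O) (hK : IsCompact K) (hKO : K ⊆ O) :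
    {β | ∃ x ∈ K, β = connectedComponentIn O x}.Finite := by
  obtain ⟨t, ht⟩ := hK.elim_nhds_subcover' (fun x hx => connectedComponentIn O x)
    fun x hx => hO.connectedComponentIn.mem_nhds (mem_connectedComponentIn (hKO hx))
  refine (t.finite_toSet.image (fun x : K => connectedComponentIn O x)).subset ?_
  rintro β ⟨x, hx, rfl⟩
  obtain ⟨y, hy, hxy⟩ := mem_iUnion₂.1 (ht hx)
  exact ⟨y, hy, connectedComponentIn_eq hxy⟩

/-- Logarithms on the components of an open set `O` vanishing at their boundaries fit together,
for a map vanishing off `O`. -/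
theorem log_of_components {O : Set Z} (hO : IsOpen O) {u : Z → Angle} (hu : Continuous u) (hu0 : ∀ x ∉ O, u x = 0)
    (hβ : ∀ x ∈ O, ∃ L : Z → ℝ, ContinuousOn L (closure (connectedComponentIn O x)) ∧
      (∀ y ∈ closure (connectedComponentIn O x), (L y : Angle) = u y) ∧ ∀ y ∈ closure (connectedComponentIn O x) \ O, L y = 0) :
    ∃ L : Z → ℝ, Continuous L ∧ (∀ y, (L y : Angle) = u y) ∧ ∀ y ∉ O, L y = 0 := by
  classical
  set K : Set Z := {x | dist (u x) π ≤ dist 0 (π : Angle) / 2} with hK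
  have hne : ∀ x ∉ K, u x ≠ π := by
    intro x hx h
    apply hx
    rw [hK, mem_ofPred_eq, h, dist_self]
    positivity
  have hKc : IsClosed K := isClosed_le (hu.dist continuous_const) continuous_const
  have hKO : K ⊆ O := by
    intro x hx
    by_contra h
    rw [hK, mem_ofPred_eq, hu0 x h] at hx
    have := dist_pos.2 Angle.pi_ne_zero.symm
    linarith
  have hfin := finite_components hO hKc.isCompact hKO
  set 𝓑 := {β | ∃ x ∈ K, β = connectedComponentIn O x}
  set P : Set Z → Prop := fun A => ∃ L : Z → ℝ, ContinuousOn L A ∧ (∀ y ∈ A, (L y : Angle) = u y) ∧ ∀ y ∈ A \ O, L y = 0 with hP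
  have hglue : ∀ A B, IsClosed A → IsClosed B → A ∩ B ⊆ Oᶜ → P A → P B → P (A ∪ B) := by
    rintro A B hA hB hAB ⟨L, l1, l2, l3⟩ ⟨M, m1, m2, m3⟩
    obtain ⟨F, hF, e1, e2⟩ := glue_closed hA hB l1 m1 fun x h1 h2 => by
      have := hAB ⟨h1, h2⟩
      rw [l3 x ⟨h1, this⟩, m3 x ⟨h2, this⟩]
    refine ⟨F, hF, ?_, ?_⟩
    · rintro y (h | h)
      · rw [e1 h, l2 y h]
      · rw [e2 h, m2 y h]
    · rintro y ⟨h | h, h'⟩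
      · rw [e1 h, l3 y ⟨h, h'⟩]
      · rw [e2 h, m3 y ⟨h, h'⟩]
  have hopen : ∀ β ∈ 𝓑, IsOpen β := by
    rintro β ⟨x, hx, rfl⟩
    exact hO.connectedComponentIn
  have hA0 : IsClosed (⋃ β ∈ 𝓑, β)ᶜ := (isOpen_biUnion hopen).isClosed_compl
  have hfrO : ∀ β ∈ 𝓑, closure β \ β ⊆ Oᶜ := by
    rintro β ⟨x, hx, rfl⟩
    have := frontier_component hO x
    rwa [hO.connectedComponentIn.frontier_eq] at this
  have main : ∀ T : Set (Set Z), T.Finite → T ⊆ 𝓑 → P ((⋃ β ∈ 𝓑, β)ᶜ ∪ ⋃ β ∈ T, closure β) := by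
    intro T hT
    induction T, hT using Set.Finite.induction_on with
    | empty =>
      intro _
      refine ⟨fun x => (u x).toReal, ?_, fun y _ => by simp, fun y hy => by simp [hu0 y hy.2]⟩
      intro x hx
      simp only [mem_empty_iff_false, iUnion_of_empty, iUnion_empty, union_empty] at hx
      have hxK : x ∉ K := fun h => hx (mem_biUnion (x := connectedComponentIn O x) ⟨x, h, rfl⟩ (mem_connectedComponentIn (hKO h)))
      exact ((continuousAt_toReal (hne x hxK)).comp hu.continuousAt).continuousWithinAt
    | @insert β T hβT hT ih =>
      intro hsub
      have hβB : β ∈ 𝓑 := hsub (mem_insert _ _)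
      have hTB : T ⊆ 𝓑 := (subset_insert _ _).trans hsub
      rw [biUnion_insert, union_comm (closure β), ← union_assoc]
      refine hglue _ _ (hA0.union ?_) isClosed_closure ?_ (ih hTB) ?_
      · exact hT.isClosed_biUnion fun _ _ => isClosed_closure
      · rintro y ⟨hy, hyβ⟩
        by_cases hyb : y ∈ β
        · exfalso
          rcases hy with hy | hy
          · exact hy (mem_biUnion hβB hyb)
          · obtain ⟨β', hβ', hy'⟩ := mem_iUnion₂.1 hy
            obtain ⟨z, hz, hz'⟩ := mem_closure_iff.1 hy' β (hopen β hβB) hyb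
            obtain ⟨x1, _, e1⟩ := hβB
            obtain ⟨x2, _, e2⟩ := hTB hβ'
            rw [e1] at hz
            rw [e2] at hz'
            apply hβT
            rw [e1, connectedComponentIn_eq hz, ← connectedComponentIn_eq hz', ← e2]
            exact hβ'
        · exact hfrO β hβB ⟨hyβ, hyb⟩
      · obtain ⟨x, hx, rfl⟩ := hβB
        exact hβ x (hKO hx)
  obtain ⟨L, h1, h2, h3⟩ := main 𝓑 hfin Subset.rfl
  have hun : (⋃ β ∈ 𝓑, β)ᶜ ∪ ⋃ β ∈ 𝓑, closure β = univ := by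
    rw [eq_univ_iff_forall]
    intro y
    by_cases h : y ∈ ⋃ β ∈ 𝓑, β
    · obtain ⟨β, hβ', hy⟩ := mem_iUnion₂.1 h
      exact Or.inr (mem_biUnion hβ' (subset_closure hy))
    · exact Or.inl h
  rw [hun] at h1 h2 h3
  exact ⟨L, continuousOn_univ.1 h1, fun y => h2 y trivial, fun y hy => h3 y ⟨trivial, hy⟩⟩

end comps

section circ

/-- Components of an open subset of the circle missing two points are open arcs. -/
theorem circle_component {O : Set Angle} (hO : IsOpen O) {θ θ₁ θ₂ : Angle} (hθ : θ ∈ O) (h1 : θ₁ ∉ O) (h2 : θ₂ ∉ O)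
    (h12 : θ₁ ≠ θ₂) : ∃ t0 t1 : ℝ, t0 < t1 ∧ t1 < t0 + 2 * π ∧ (t0 : Angle) ∉ O ∧ (t1 : Angle) ∉ O ∧
      connectedComponentIn O θ = (fun t : ℝ => (t : Angle)) '' Ioo t0 t1 ∧
      closure (connectedComponentIn O θ) = (fun t : ℝ => (t : Angle)) '' Icc t0 t1 := by
  obtain ⟨t, rfl⟩ : ∃ t : ℝ, (t : Angle) = θ := ⟨θ.toReal, by simp⟩
  have hlift : ∀ α : Angle, ∀ x : ℝ, ∃ y ∈ Ico x (x + 2 * π), (y : Angle) = α := by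
    intro α x
    refine ⟨toIcoMod Real.two_pi_pos x α.toReal, toIcoMod_mem_Ico _ _ _, ?_⟩
    rw [Angle.coe_toIcoMod]; simp
  have hcl : IsClosed {y : ℝ | (y : Angle) ∉ O} := hO.isClosed_compl.preimage Angle.continuous_coe
  have hper : ∀ y : ℝ, ((y + 2 * π : ℝ) : Angle) = y := fun y => by simp
  obtain ⟨y0, hy0, e0⟩ := hlift θ₁ (t - 2 * π)
  obtain ⟨y1, hy1, e1⟩ := hlift θ₁ t
  have c0 : IsCompact ({y : ℝ | (y : Angle) ∉ O} ∩ Icc (t - 2 * π) t) := isCompact_Icc.inter_left hcl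
  have c1 : IsCompact ({y : ℝ | (y : Angle) ∉ O} ∩ Icc t (t + 2 * π)) := isCompact_Icc.inter_left hcl
  obtain ⟨t0, ht0, m0⟩ := c0.exists_isGreatest ⟨y0, by rw [mem_ofPred_eq, e0]; exact h1, hy0.1, by linarith [hy0.2]⟩
  obtain ⟨t1, ht1, m1⟩ := c1.exists_isLeast ⟨y1, by rw [mem_ofPred_eq, e1]; exact h1, hy1.1, by linarith [hy1.2]⟩
  have l0 : t0 < t := lt_of_le_of_ne ht0.2.2 fun h => ht0.1 (h ▸ hθ)
  have l1 : t < t1 := lt_of_le_of_ne ht1.2.1 fun h => ht1.1 (h ▸ hθ)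
  have l2 : t < t0 + 2 * π := lt_of_le_of_ne (by linarith [ht0.2.1]) fun h => ht0.1 (by rw [← hper, ← h]; exact hθ)
  have hle : t1 ≤ t0 + 2 * π := m1 ⟨by rw [mem_ofPred_eq, hper]; exact ht0.1, l2.le, by linarith [ht0.2.2]⟩
  have hIoo : ∀ y ∈ Ioo t0 t1, (y : Angle) ∈ O := by
    intro y hy
    by_contra hc
    rcases le_total y t with h | h
    · exact absurd (m0 ⟨hc, by linarith [ht0.2.1, hy.1], h⟩) (not_le.2 hy.1)
    · exact absurd (m1 ⟨hc, h, by linarith [ht1.2.2, hy.2]⟩) (not_le.2 hy.2)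
  have hlt : t1 < t0 + 2 * π := by
    refine lt_of_le_of_ne hle fun h => h12 ?_
    have : ∀ α, α ∉ O → α = (t0 : Angle) := by
      intro α hα
      obtain ⟨y, hy, e⟩ := hlift α t0
      rcases hy.1.eq_or_lt with h' | h'
      · rw [← e, h']
      · exact (hα (e ▸ hIoo y ⟨h', by rw [h]; exact hy.2⟩)).elim
    rw [this _ h1, this _ h2]
  set V := (fun t : ℝ => (t : Angle)) '' Ioo t0 t1 with hV
  have hVo : IsOpen V := QuotientAddGroup.isOpenMap_coe _ isOpen_Ioo
  have hVc : closure V = (fun t : ℝ => (t : Angle)) '' Icc t0 t1 := by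
    refine Subset.antisymm (closure_minimal (image_mono Ioo_subset_Icc_self) (isCompact_Icc.image Angle.continuous_coe).isClosed) ?_
    rw [← closure_Ioo (l0.trans l1).ne]
    exact image_closure_subset_closure_image Angle.continuous_coe
  have hVO : V ⊆ O := by rintro _ ⟨y, hy, rfl⟩; exact hIoo y hy
  have hVp : IsPreconnected V := isPreconnected_Ioo.image _ Angle.continuous_coe.continuousOn
  have htV : (t : Angle) ∈ V := ⟨t, ⟨l0, l1⟩, rfl⟩
  have hcomp : connectedComponentIn O t = V := by
    refine Subset.antisymm ?_ (hVp.subset_connectedComponentIn htV hVO)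
    refine isPreconnected_connectedComponentIn.subset_of_closure_inter_subset hVo ⟨t, mem_connectedComponentIn hθ, htV⟩ ?_
    rw [hVc]
    rintro _ ⟨⟨y, hy, rfl⟩, hyO⟩
    have hyO := connectedComponentIn_subset _ _ hyO
    refine ⟨y, ⟨lt_of_le_of_ne hy.1 ?_, lt_of_le_of_ne hy.2 ?_⟩, rfl⟩
    · rintro rfl; exact ht0.1 hyO
    · rintro rfl; exact ht1.1 hyO
  exact ⟨t0, t1, l0.trans l1, hlt, ht0.1, ht1.1, hcomp, by rw [hcomp, hVc]⟩

end circ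

/-! ### Subdivision of cells -/

/-- A crosscut together with the two cells it bounds. -/
structure Cut {S : Type*} [TopologicalSpace S] (X J s J1 J2 : Set S) (a b : S) (X1 X2 : Set S) : Prop where
  theta : Theta X J s J1 J2 a b
  cell1 : IsCell X1 (J1 ∪ s)
  cell2 : IsCell X2 (J2 ∪ s)
  union : X1 ∪ X2 = X
  inter : X1 ∩ X2 = s

/-- The cell `X` with boundary `J` can be divided by successive crosscuts into cells satisfying `Q`. -/
inductive Decomp {S : Type*} [TopologicalSpace S] (Q : Set S → Set S → Prop) : Set S → Set S → Prop
  | leaf {X J : Set S} : IsCell X J → Q X J → Decomp Q X J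
  | node {X J s J1 J2 X1 X2 : Set S} {a b : S} : Cut X J s J1 J2 a b X1 X2 → Decomp Q X1 (J1 ∪ s) → Decomp Q X2 (J2 ∪ s) →
      Decomp Q X J

section cut
variable {S : Type*} [MetricSpace S] {X J s J1 J2 X1 X2 : Set S} {a b : S}

theorem Cut.swap (h : Cut X J s J1 J2 a b X1 X2) : Cut X J s J2 J1 a b X2 X1 :=
  ⟨h.theta.swap, h.cell2, h.cell1, by rw [union_comm]; exact h.union, by rw [inter_comm]; exact h.inter⟩

theorem Cut.sub (h : Cut X J s J1 J2 a b X1 X2) : X1 \ (J1 ∪ s) ⊆ X \ J := by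
  intro x hx
  refine ⟨h.union ▸ Or.inl hx.1, fun hJ => ?_⟩
  rw [← h.theta.union] at hJ
  rcases hJ with hJ | hJ
  · exact hx.2 (Or.inl hJ)
  · exact hx.2 (Or.inr (h.inter ▸ ⟨hx.1, h.cell2.sub (Or.inl hJ)⟩))

theorem Cut.cover (h : Cut X J s J1 J2 a b X1 X2) : (X \ J) \ s ⊆ (X1 \ (J1 ∪ s)) ∪ (X2 \ (J2 ∪ s)) := by
  intro x hx
  have h1 := hx.1.1
  have h2 := hx.1.2
  rw [← h.theta.union] at h2
  rw [← h.union] at h1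
  rcases h1 with h1 | h1
  · exact Or.inl ⟨h1, fun h' => h'.elim (fun h' => h2 (Or.inl h')) hx.2⟩
  · exact Or.inr ⟨h1, fun h' => h'.elim (fun h' => h2 (Or.inr h')) hx.2⟩

theorem Cut.disj (h : Cut X J s J1 J2 a b X1 X2) : Disjoint (X1 \ (J1 ∪ s)) (X2 \ (J2 ∪ s)) := by
  rw [disjoint_left]
  intro x hx hx'
  exact hx.2 (Or.inr (h.inter ▸ ⟨hx.1, hx'.1⟩))

/-- A connected set in the interior missing the crosscut is in one of the pieces. -/
theorem Cut.side (h : Cut X J s J1 J2 a b X1 X2) {A : Set S} (hA : IsPreconnected A) (hAX : A ⊆ X \ J) (hAs : Disjoint A s) :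
    A ⊆ X1 \ (J1 ∪ s) ∨ Disjoint A (X1 \ (J1 ∪ s)) := by
  have hsub : A ⊆ (X1 \ (J1 ∪ s)) ∪ (X2 \ (J2 ∪ s)) := fun x hx => h.cover ⟨hAX hx, fun h' => disjoint_left.1 hAs hx h'⟩
  rcases hA.subset_or_subset h.cell1.isOpen h.cell2.isOpen h.disj hsub with h1 | h1
  · exact Or.inl h1
  · exact Or.inr (h.disj.symm.mono_left h1)

theorem IsCell.exists_cut [ConnectedSpace S] (hS : LocPlane (univ : Set S)) (hX : IsCell X J) (hs : IsArc s a b) (ha : a ∈ J) (hb : b ∈ J)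
    (hc : s \ {a, b} ⊆ X \ J) (h1 : IsArc J1 a b) (h2 : IsArc J2 a b) (hu : J1 ∪ J2 = J) (hi : J1 ∩ J2 = {a, b}) :
    ∃ X1 X2, Cut X J s J1 J2 a b X1 X2 := by
  have ht : Theta X J s J1 J2 a b := ⟨hX, hs, h1, h2, hu, hi, hc⟩
  obtain ⟨X1, X2, c1, c2, h3, h4⟩ := ht.cells hS
  exact ⟨X1, X2, ht, c1, c2, h3, h4⟩

variable {Q Q' : Set S → Set S → Prop}

theorem Decomp.bind (h : Decomp Q X J) (hQ : ∀ X J, IsCell X J → Q X J → Decomp Q' X J) : Decomp Q' X J := by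
  induction h with
  | leaf h1 h2 => exact hQ _ _ h1 h2
  | node hc _ _ ih1 ih2 => exact .node hc ih1 ih2

theorem Decomp.mono (h : Decomp Q X J) (hQ : ∀ X J, IsCell X J → Q X J → Q' X J) : Decomp Q' X J :=
  h.bind fun X J h1 h2 => .leaf h1 (hQ X J h1 h2)

theorem IsCell.subset_of {X' J' : Set S} (h' : IsCell X' J') (h : IsCell X J) (hs : X' \ J' ⊆ X \ J) : X' ⊆ X := by
  rw [← h'.closure_eq, ← h.closure_eq]
  exact closure_mono hs

/-- Cutting along finitely many crosscuts. -/
theorem decomp_family [ConnectedSpace S] (hS : LocPlane (univ : Set S)) {F : Set (Set S)} (hF : F.Finite) (hX : IsCell X J)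
    (h : ∀ s ∈ F, ∃ a b, IsArc s a b ∧ a ∉ X \ J ∧ b ∉ X \ J ∧ (s \ {a, b} ⊆ X \ J ∨ Disjoint s (X \ J)))
    (hd : ∀ s ∈ F, ∀ s' ∈ F, s ≠ s' → Disjoint (s ∩ s') (X \ J)) :
    Decomp (fun X' J' => X' \ J' ⊆ X \ J ∧ ∀ s ∈ F, Disjoint s (X' \ J')) X J := by
  induction F, hF using Set.Finite.induction_on generalizing X J with
  | empty => exact .leaf hX ⟨Subset.rfl, by simp⟩
  | @insert s F hsF hF ih =>
    obtain ⟨a, b, hs, ha, hb, hsX⟩ := h s (mem_insert _ _)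
    have hcase : ∀ X' J', IsCell X' J' → X' \ J' ⊆ X \ J → Disjoint s (X' \ J') →
        (∀ s ∈ F, ∃ a b, IsArc s a b ∧ a ∉ X' \ J' ∧ b ∉ X' \ J' ∧ (s \ {a, b} ⊆ X' \ J' ∨ Disjoint s (X' \ J'))) →
        Decomp (fun X' J' => X' \ J' ⊆ X \ J ∧ ∀ t ∈ insert s F, Disjoint t (X' \ J')) X' J' := by
      intro X' J' hX' hsub hdis hX2
      refine (ih hX' hX2 fun t ht t' ht' hne => (hd t (mem_insert_of_mem _ ht) t' (mem_insert_of_mem _ ht') hne).mono_right hsub).mono ?_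
      rintro Y L hY ⟨h1, h2⟩
      refine ⟨h1.trans hsub, ?_⟩
      rintro t (rfl | ht)
      · exact hdis.mono_right h1
      · exact h2 t ht
    rcases hsX with hsX | hsX
    · have hend : ∀ x ∈ s, x ∉ X \ J → x ∈ J := by
        intro x hx hx'
        have h1 : x ∈ X := by
          rw [← hX.closure_eq]
          exact closure_mono hsX (hs.subset_closure hx)
        by_contra h2
        exact hx' ⟨h1, h2⟩
      have haJ := hend a hs.left_mem ha
      have hbJ := hend b hs.right_mem hb
      obtain ⟨J1, J2, k1, k2, k3, k4⟩ := hX.jordan.split haJ hbJ hs.ne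
      obtain ⟨X1, X2, hc⟩ := hX.exists_cut hS hs haJ hbJ hsX k1 k2 k3 k4
      have gen : ∀ J1 J2 X1 X2, Cut X J s J1 J2 a b X1 X2 →
          Decomp (fun X' J' => X' \ J' ⊆ X \ J ∧ ∀ t ∈ insert s F, Disjoint t (X' \ J')) X1 (J1 ∪ s) := by
        intro J1 J2 X1 X2 hc
        refine hcase X1 _ hc.cell1 hc.sub (disjoint_left.2 fun x hx h' => h'.2 (Or.inr hx)) fun t ht => ?_
        obtain ⟨a', b', g1, g2, g3, g4⟩ := h t (mem_insert_of_mem _ ht)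
        refine ⟨a', b', g1, fun h => g2 (hc.sub h), fun h => g3 (hc.sub h), ?_⟩
        rcases g4 with g4 | g4
        · have hts : Disjoint (t \ {a', b'}) s := by
            rw [disjoint_left]
            intro x hx hxs
            refine disjoint_left.1 (hd s (mem_insert _ _) t (mem_insert_of_mem _ ht) ?_) ⟨hxs, hx.1⟩ (g4 hx)
            rintro rfl; exact hsF ht
          refine (hc.side g1.interior_preconnected g4 hts).imp_right fun g5 => ?_
          rw [disjoint_left] at g5 ⊢
          intro x hx hx'
          refine g5 ⟨hx, ?_⟩ hx'
          rintro (rfl | rfl)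
          · exact g2 (hc.sub hx')
          · exact g3 (hc.sub hx')
        · exact Or.inr (g4.mono_right hc.sub)
      exact .node hc (gen _ _ _ _ hc) (gen _ _ _ _ hc.swap)
    · exact hcase X J hX Subset.rfl hsX fun t ht => h t (mem_insert_of_mem _ ht)

theorem isPreconnected_compl_closedBall (c : ℂ) {ρ : ℝ} (hρ : 0 < ρ) : IsPreconnected (closedBall c ρ)ᶜ := by
  have h1 : IsPreconnected ((Ioi ρ) ×ˢ (univ : Set Angle)) := isPreconnected_Ioi.prod preconnectedSpace_angle
  have h2 := h1.image (fun p : ℝ × Angle => c + p.1 * unitA p.2) (Continuous.continuousOn (by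
    have := continuous_unitA
    fun_prop))
  convert h2 using 1
  ext z
  simp only [mem_compl_iff, mem_closedBall, not_le, dist_eq_norm, mem_image, mem_prod, mem_Ioi, mem_univ, and_true]
  constructor
  · intro h
    refine ⟨(‖z - c‖, argA (z - c)), h, ?_⟩
    have : z - c ≠ 0 := norm_pos_iff.1 (hρ.trans h)
    simp only [unitA_argA this]; ring
  · rintro ⟨⟨r, θ⟩, h, rfl⟩
    simp only at h ⊢
    rw [add_sub_cancel_left, norm_mul, norm_unitA, mul_one, Complex.norm_real, Real.norm_of_nonneg (hρ.trans h).le]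
    exact h

/-- A cell whose boundary lies in a disc of a chart lies in that disc, if some point is outside. -/
theorem IsCell.subset_disc [ConnectedSpace S] (hX : IsCell X J) {e : ℂ → S} (he : IsOpenEmbedding e) {c : ℂ} {ρ : ℝ} (hρ : 0 < ρ)
    {w : S} (hwe : w ∉ range e) (hwX : w ∉ X) (hJ : J ⊆ e '' closedBall c ρ) : X ⊆ e '' closedBall c ρ := by
  set D := e '' closedBall c ρ with hD
  have hDc : IsClosed D := ((isCompact_closedBall c ρ).image he.continuous).isClosed
  set A := e '' (closedBall c ρ)ᶜ with hA
  have hAD : Disjoint A D := (disjoint_image_iff he.injective).2 disjoint_compl_left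
  have hAc : IsPreconnected A := (isPreconnected_compl_closedBall c hρ).image e he.continuous.continuousOn
  have hrange : range e = D ∪ A := by rw [hD, hA, ← image_union, union_compl_self, image_univ]
  have hV : X \ D = (X \ J) \ D := by
    ext x
    exact ⟨fun h => ⟨⟨h.1, fun h' => h.2 (hJ h')⟩, h.2⟩, fun h => ⟨h.1.1, h.2⟩⟩
  have hVo : IsOpen (X \ D) := by rw [hV]; exact hX.isOpen.sdiff hDc
  have hclV : closure (X \ D) ⊆ X := closure_minimal sdiff_subset hX.compact.isClosed
  by_cases hAV : (A ∩ (X \ D)).Nonempty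
  · exfalso
    have hsub : A ⊆ X \ D := hAc.subset_of_closure_inter_subset hVo hAV fun x hx => ⟨hclV hx.1, fun h => disjoint_left.1 hAD hx.2 h⟩
    have heq : X ∪ D = (X \ J) ∪ range e := by
      rw [hrange]
      ext x
      constructor
      · rintro (h | h)
        · by_cases hxJ : x ∈ J
          · exact Or.inr (Or.inl (hJ hxJ))
          · exact Or.inl ⟨h, hxJ⟩
        · exact Or.inr (Or.inl h)
      · rintro (h | h | h)
        · exact Or.inl h.1
        · exact Or.inr h
        · exact Or.inl (hsub h).1
    have hcl : IsClopen (X ∪ D) := ⟨hX.compact.isClosed.union hDc, by rw [heq]; exact hX.isOpen.union he.isOpen_range⟩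
    have := hcl.eq_univ (hX.ne.mono fun x hx => Or.inl hx.1)
    have hw : w ∈ X ∪ D := this ▸ trivial
    rcases hw with h | h
    · exact hwX h
    · exact hwe (image_subset_range _ _ h)
  · have hcl : IsClosed (X \ D) := by
      refine isClosed_of_closure_subset fun x hx => ⟨hclV hx, fun hxD => ?_⟩
      obtain ⟨y, hy, hy'⟩ := mem_closure_iff.1 hx (range e) he.isOpen_range (image_subset_range _ _ hxD)
      rw [hrange] at hy
      rcases hy with h | h
      · exact hy'.2 h
      · exact hAV ⟨y, h, hy'⟩
    rcases isClopen_iff.1 (⟨hcl, hVo⟩ : IsClopen (X \ D)) with h | h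
    · exact sdiff_eq_empty.1 h
    · exact (hwX (h ▸ mem_univ w : w ∈ X \ D).1).elim

end cut

theorem finite_torsion_angle {N : ℕ} (hN : 0 < N) : {θ : Angle | N • θ = 0}.Finite := by
  have : Fact (0 < 2 * π) := ⟨Real.two_pi_pos⟩
  exact AddCircle.finite_torsion (p := 2 * π) hN

theorem locallyConnected_angle : LocallyConnectedSpace Angle := by
  exact (isQuotientMap_quotient_mk' (X := ℝ) (s := QuotientAddGroup.leftRel (AddSubgroup.zmultiples (2 * π)))).isCoinducing.locallyConnectedSpace

/-- An interval longer than `2π/N` contains an angle of order dividing `N`. -/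
theorem exists_torsion {N : ℕ} (hN : 0 < N) {t0 t1 : ℝ} (h : 2 * π / N < t1 - t0) : ∃ t ∈ Ioo t0 t1, N • (t : Angle) = 0 := by
  have hN' : (0:ℝ) < N := by exact_mod_cast hN
  have hp := Real.two_pi_pos
  set j : ℤ := ⌊t0 * N / (2 * π)⌋ + 1 with hj
  refine ⟨2 * π * j / N, ⟨?_, ?_⟩, ?_⟩
  · have := Int.lt_floor_add_one (t0 * N / (2 * π))
    rw [div_lt_iff₀ hp] at this
    rw [lt_div_iff₀ hN', hj]; push_cast; linarith
  · have := Int.floor_le (t0 * N / (2 * π))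
    rw [le_div_iff₀ hp] at this
    rw [div_lt_iff₀ hN'] at h ⊢
    rw [hj]; push_cast; nlinarith
  · rw [← Angle.coe_nsmul, nsmul_eq_mul, mul_div_cancel₀ _ hN'.ne', two_pi_int_coe]

section mesh
variable {S : Type*} [MetricSpace S] [ConnectedSpace S] (hS : LocPlane (univ : Set S))

include hS in
/-- A cell can be divided into cells each of which avoids the disc of radius `1` of a chart
or is contained in the disc of radius `2`. -/
theorem mesh_step {X J : Set S} (hX : IsCell X J) {e : ℂ → S} (he : IsOpenEmbedding e) {w : S} (hwe : w ∉ range e) (hwX : w ∉ X)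
    (hin : (J ∩ e '' ball 0 1).Nonempty) (hout : ¬ J ⊆ e '' closedBall 0 2) :
    Decomp (fun X' J' => X' \ J' ⊆ X \ J ∧ (X' ⊆ e '' closedBall 0 2 ∨ Disjoint X' (e '' ball 0 1))) X J := by
  have hcD : ∀ r : ℝ, IsClosed (e '' closedBall 0 r) := fun r => ((isCompact_closedBall 0 r).image he.continuous).isClosed
  have hmem : ∀ {z : ℂ} {A : Set ℂ}, e z ∈ e '' A ↔ z ∈ A := fun {z A} => he.injective.mem_set_image
  -- crossing the circle of radius 3/2
  have hcross : ∀ A : Set S, IsPreconnected A → (A ∩ e '' ball 0 1).Nonempty → ¬ A ⊆ e '' closedBall 0 2 → (A ∩ e '' sphere 0 (3/2)).Nonempty := by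
    intro A hA ⟨x, hxA, hx⟩ h2
    by_contra hne
    refine h2 ((hA.subset_of_closure_inter_subset (he.isOpenMap _ (isOpen_ball (x := (0:ℂ)) (ε := 3/2)))
      ⟨x, hxA, image_mono (ball_subset_ball (by norm_num)) hx⟩ ?_).trans (image_mono (ball_subset_closedBall.trans (closedBall_subset_closedBall (by norm_num)))))
    rintro y ⟨hy, hyA⟩
    have := closure_minimal (image_mono ball_subset_closedBall) (hcD (3/2)) hy
    obtain ⟨z, hz, rfl⟩ := this
    rcases (mem_closedBall.1 hz).lt_or_eq with h | h
    · exact ⟨z, h, rfl⟩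
    · exact (hne ⟨e z, hyA, z, h, rfl⟩).elim
  have hlcA := locallyConnected_angle
  set k : Angle → S := fun θ => e ((3/2 : ℝ) * unitA θ) with hk
  have hkc : Continuous k := he.continuous.comp (continuous_const.mul continuous_unitA)
  have hki : Injective k := by
    intro θ θ' h
    have h1 := mul_left_cancel₀ (by norm_num) (he.injective h)
    rw [← argA_unitA θ, h1, argA_unitA]
  have hkn : ∀ θ, ‖((3/2 : ℝ) * unitA θ : ℂ)‖ = 3/2 := fun θ => by
    rw [norm_mul, norm_unitA, mul_one, Complex.norm_real, Real.norm_of_nonneg (by norm_num)]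
  have hkr : range k = e '' sphere 0 (3/2) := by
    ext x
    constructor
    · rintro ⟨θ, rfl⟩
      exact ⟨_, by rw [mem_sphere_zero_iff_norm]; exact hkn θ, rfl⟩
    · rintro ⟨z, hz, rfl⟩
      rw [mem_sphere_zero_iff_norm] at hz
      refine ⟨argA z, ?_⟩
      have hz0 : z ≠ 0 := by rintro rfl; norm_num at hz
      have := unitA_argA hz0
      rw [hz] at this
      simp only [hk, this]
  set O := k ⁻¹' (X \ J)
  have hOo : IsOpen O := hX.isOpen.preimage hkc
  obtain ⟨θ₁, θ₂, h1, h2, h12⟩ : ∃ θ₁ θ₂, θ₁ ∉ O ∧ θ₂ ∉ O ∧ θ₁ ≠ θ₂ := by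
    obtain ⟨p, hpJ, hp⟩ := hin
    obtain ⟨q, hqJ, hq⟩ := not_subset.1 hout
    have hpq : p ≠ q := by
      rintro rfl
      exact hq (image_mono (ball_subset_closedBall.trans (closedBall_subset_closedBall (by norm_num))) hp)
    obtain ⟨J1, J2, k1, k2, k3, k4⟩ := hX.jordan.split hpJ hqJ hpq
    obtain ⟨z1, m1, n1⟩ := hcross J1 k1.isPreconnected ⟨p, k1.left_mem, hp⟩ fun h => hq (h k1.right_mem)
    obtain ⟨z2, m2, n2⟩ := hcross J2 k2.isPreconnected ⟨p, k2.left_mem, hp⟩ fun h => hq (h k2.right_mem)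
    obtain ⟨θ₁, rfl⟩ := hkr ▸ n1
    obtain ⟨θ₂, rfl⟩ := hkr ▸ n2
    refine ⟨θ₁, θ₂, fun h => h.2 (k3 ▸ Or.inl m1), fun h => h.2 (k3 ▸ Or.inr m2), ?_⟩
    rintro rfl
    have : k θ₁ ∈ ({p, q} : Set S) := k4 ▸ ⟨m1, m2⟩
    rcases this with h | h
    · rw [← h] at hp
      have := hmem.1 hp
      rw [mem_ball_zero_iff, hkn] at this
      norm_num at this
    · have h' : k θ₁ = q := h
      apply hq
      rw [← h']
      exact ⟨_, by rw [mem_closedBall_zero_iff, hkn]; norm_num, rfl⟩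
  have hOJ : ∀ θ ∈ closure O, θ ∉ O → k θ ∈ J := by
    intro θ hθ hθO
    have : k θ ∈ X := by
      rw [← hX.closure_eq]
      exact map_mem_closure hkc hθ fun x hx => hx
    by_contra h
    exact hθO ⟨this, h⟩
  -- the crosscuts
  have harc : ∀ θ ∈ O, ∃ t0 t1 : ℝ, t0 < t1 ∧ connectedComponentIn O θ = (fun t : ℝ => (t : Angle)) '' Ioo t0 t1 ∧
      k '' closure (connectedComponentIn O θ) = (fun t : ℝ => k t) '' Icc t0 t1 ∧ k t0 ∈ J ∧ k t1 ∈ J ∧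
      IsArc (k '' closure (connectedComponentIn O θ)) (k t0) (k t1) ∧ k '' closure (connectedComponentIn O θ) \ {k t0, k t1} ⊆ X \ J := by
    intro θ hθ
    obtain ⟨t0, t1, h01, hlt, n0, n1, hcomp, hcl⟩ := circle_component hOo hθ h1 h2 h12
    have hsub : closure (connectedComponentIn O θ) ⊆ closure O := closure_mono (connectedComponentIn_subset _ _)
    have e1 : k '' closure (connectedComponentIn O θ) = (fun t : ℝ => k t) '' Icc t0 t1 := by rw [hcl, image_image]
    refine ⟨t0, t1, h01, hcomp, e1, hOJ _ (hsub ?_) n0, hOJ _ (hsub ?_) n1, ?_, ?_⟩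
    · rw [hcl]; exact ⟨t0, by simp [h01.le], rfl⟩
    · rw [hcl]; exact ⟨t1, by simp [h01.le], rfl⟩
    · rw [e1]
      refine IsArc.of_Icc (γ := fun t : ℝ => k t) h01 (hkc.comp Angle.continuous_coe).continuousOn fun t ht t' ht' h => ?_
      exact angle_inj (hki h) (by rw [abs_lt]; constructor <;> linarith [ht.1, ht.2, ht'.1, ht'.2])
    · rw [e1]
      rintro _ ⟨⟨t, ht, rfl⟩, hne⟩
      have : (t : Angle) ∈ connectedComponentIn O θ := by
        rw [hcomp]
        refine ⟨t, ⟨lt_of_le_of_ne ht.1 ?_, lt_of_le_of_ne ht.2 ?_⟩, rfl⟩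
        · rintro rfl; exact hne (Or.inl rfl)
        · rintro rfl; exact hne (Or.inr rfl)
      exact connectedComponentIn_subset O θ this
  -- small arcs
  obtain ⟨ε, hε, hεb⟩ := lebesgue_number_lemma_of_metric (isCompact_univ.image hkc) (c := fun θ : Angle => e '' ball ((3/2 : ℝ) * unitA θ) (1/4))
    (fun θ => he.isOpenMap _ isOpen_ball) (by
      rintro _ ⟨θ, _, rfl⟩
      exact mem_iUnion.2 ⟨θ, mem_image_of_mem _ (mem_ball_self (by norm_num))⟩)
  obtain ⟨δ, hδ, hδs⟩ := hX.jordan.small_split hε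
  obtain ⟨η, hη, hηu⟩ := Metric.uniformContinuous_iff.1 (CompactSpace.uniformContinuous_of_continuous hkc) (min δ ε) (lt_min hδ hε)
  obtain ⟨N, hN⟩ := exists_nat_gt (2 * π / η)
  have hN0 : (0:ℝ) < N := lt_of_le_of_lt (by positivity) hN
  have hN1 : 0 < N := by exact_mod_cast hN0
  have hNη : 2 * π / N < η := by rw [div_lt_iff₀ hN0]; rw [div_lt_iff₀ hη] at hN; linarith
  set G : Set Angle := {θ | N • θ = 0}
  set F : Set (Set S) := (fun θ => k '' closure (connectedComponentIn O θ)) '' (G ∩ O)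
  have hFf : F.Finite := ((finite_torsion_angle hN1).subset inter_subset_left).image _
  refine (decomp_family hS hFf hX ?_ ?_).mono ?_
  · rintro _ ⟨θ, hθ, rfl⟩
    obtain ⟨t0, t1, -, -, -, j0, j1, ha, hs⟩ := harc θ hθ.2
    exact ⟨_, _, ha, fun h => h.2 j0, fun h => h.2 j1, Or.inl hs⟩
  · rintro _ ⟨θ, hθ, rfl⟩ _ ⟨θ', hθ', rfl⟩ hne
    rw [disjoint_left]
    rintro _ ⟨⟨α, hα, rfl⟩, ⟨α', hα', he'⟩⟩ hαO
    obtain rfl := hki he'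
    have hmemc : ∀ θ ∈ O, α' ∈ closure (connectedComponentIn O θ) → α' ∈ connectedComponentIn O θ := by
      intro θ hθ h
      by_contra hn
      have hlc := hOo.connectedComponentIn (x := θ)
      exact frontier_component hOo θ (by rw [hlc.frontier_eq]; exact ⟨h, hn⟩) hαO
    apply hne
    beta_reduce
    rw [connectedComponentIn_eq (hmemc θ hθ.2 hα), connectedComponentIn_eq (hmemc θ' hθ'.2 hα')]
  rintro X' J' hX' ⟨hsub, hFd⟩
  refine ⟨hsub, ?_⟩
  by_contra hcon
  push Not at hcon
  obtain ⟨hc1, hc2⟩ := hcon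
  obtain ⟨q, hq, hqe⟩ : ∃ q ∈ X' \ J', q ∉ e '' closedBall 0 2 := by
    by_contra h
    push Not at h
    exact hc1 (by rw [← hX'.closure_eq]; exact closure_minimal h (hcD 2))
  obtain ⟨p, hp, hpe⟩ : ∃ p ∈ X' \ J', p ∈ e '' ball 0 1 := by
    obtain ⟨x, hx, hx'⟩ := not_disjoint_iff.1 hc2
    rw [← hX'.closure_eq] at hx
    obtain ⟨y, hy, hy'⟩ := mem_closure_iff.1 hx _ (he.isOpenMap _ isOpen_ball) hx'
    exact ⟨y, hy', hy⟩
  have hpq : p ≠ q := by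
    rintro rfl
    exact hqe (image_mono (ball_subset_closedBall.trans (closedBall_subset_closedBall (by norm_num))) hpe)
  obtain ⟨φ, hφ'⟩ := exists_pair hX'.isOpen hX'.conn (hS.of_univ hX'.isOpen) hp hq hpq
  have hφ : Pair φ p q (X \ J) := hφ'.mono hsub
  have hkp : ∀ θ, k θ ≠ p := by
    rintro θ rfl
    have := hmem.1 hpe
    rw [mem_ball_zero_iff, hkn] at this
    norm_num at this
  have hkq : ∀ θ, k θ ≠ q := by
    rintro θ rfl
    exact hqe ⟨_, by rw [mem_closedBall_zero_iff, hkn]; norm_num, rfl⟩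
  have hkpq : ∀ θ, k θ ∈ ({p, q} : Set S)ᶜ := by
    rintro θ (h | h)
    · exact hkp θ h
    · exact hkq θ h
  obtain ⟨L, hLc, hLe, hL0⟩ := log_of_components hOo (u := fun θ => φ (k θ)) (hφ.cont.comp_continuous hkc hkpq) (fun θ hθ => hφ.zero _ hθ) (by
    intro θ hθ
    obtain ⟨t0, t1, h01, hcomp, himg, j0, j1, ha, hs⟩ := harc θ hθ
    set s := k '' closure (connectedComponentIn O θ) with hsdef
    have hsX : s ⊆ X := by
      intro x hx
      by_cases hx' : x ∈ ({k t0, k t1} : Set S)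
      · rcases hx' with rfl | rfl
        · exact hX.sub j0
        · exact hX.sub j1
      · exact (hs ⟨hx, hx'⟩).1
    have key : ∃ L : S → ℝ, ContinuousOn L s ∧ (∀ x ∈ s, (L x : Angle) = φ x) ∧ ∀ x ∈ s ∩ J, L x = 0 := by
      by_cases hlong : (connectedComponentIn O θ ∩ G).Nonempty
      · obtain ⟨θ', h', hG'⟩ := hlong
        have hsF : s ∈ F := ⟨θ', ⟨hG', connectedComponentIn_subset _ _ h'⟩, by rw [hsdef, connectedComponentIn_eq h']⟩
        exact hX.log_of_same_side hS hpq hφ hsX hX'.isOpen hX'.conn hsub (hFd s hsF).symm hp hq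
      · have hlen : t1 - t0 ≤ 2 * π / N := by
          by_contra h
          push Not at h
          obtain ⟨t, ht, ht'⟩ := exists_torsion hN1 h
          exact hlong ⟨t, by rw [hcomp]; exact ⟨t, ht, rfl⟩, ht'⟩
        have hclose : ∀ t ∈ Icc t0 t1, dist (k t) (k t0) < min δ ε := by
          intro t ht
          refine hηu ?_
          have h3 : dist (t : Angle) (t0 : Angle) ≤ |t - t0| := by
            rw [dist_eq_norm, ← Angle.coe_sub]
            exact (QuotientAddGroup.norm_mk_le_norm : _ ≤ ‖t - t0‖)
          refine h3.trans_lt ?_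
          rw [abs_of_nonneg (by linarith [ht.1])]
          linarith [ht.2]
        have hab := hclose t1 ⟨h01.le, le_rfl⟩
        obtain ⟨J1, J2, k1, k2, k3, k4, k5⟩ := hδs _ j0 _ j1 ha.ne (by rw [dist_comm]; exact hab.trans_le (min_le_left _ _))
        obtain ⟨X1, X2, hc⟩ := hX.exists_cut hS ha j0 j1 hs k1 k2 k3 k4
        obtain ⟨α, hα⟩ := hεb (k t0) ⟨_, trivial, rfl⟩
        have hJ1 : J1 ∪ s ⊆ e '' closedBall ((3/2 : ℝ) * unitA α) (1/4) := by
          refine (Subset.trans ?_ hα).trans (image_mono ball_subset_closedBall)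
          refine union_subset k5 ?_
          rw [himg]
          rintro _ ⟨t, ht, rfl⟩
          exact (hclose t ht).trans_le (min_le_right _ _)
        have hX1 := hc.cell1.subset_disc he (by norm_num) hwe (fun h => hwX (hc.union ▸ Or.inl h)) hJ1
        have hpX1 : p ∉ X1 := by
          intro h
          obtain ⟨z, hz, rfl⟩ := hpe
          have h4 := hmem.1 (hX1 h)
          rw [mem_closedBall, dist_comm, dist_eq_norm] at h4
          rw [mem_ball_zero_iff] at hz
          have := norm_sub_norm_le ((3/2 : ℝ) * unitA α : ℂ) z
          rw [hkn] at this
          linarith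
        have hqX1 : q ∉ X1 := by
          intro h
          obtain ⟨z, hz, rfl⟩ := hX1 h
          apply hqe
          refine ⟨z, ?_, rfl⟩
          rw [mem_closedBall, dist_eq_norm] at hz
          rw [mem_closedBall_zero_iff]
          have := norm_sub_norm_le z ((3/2 : ℝ) * unitA α : ℂ)
          rw [hkn] at this
          linarith
        have hsX1 : s ⊆ X1 := fun x hx => hc.cell1.sub (Or.inr hx)
        have h2 : ∀ x ∈ X' \ J', x ∉ X1 → x ∈ X2 \ (J2 ∪ s) := fun x hx hx1 =>
          (hc.cover ⟨hsub hx, fun h => hx1 (hsX1 h)⟩).resolve_left fun h => hx1 h.1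
        exact hX.log_of_same_side hS hpq hφ hsX hc.cell2.isOpen hc.cell2.conn hc.swap.sub
          (disjoint_left.2 fun x hx h => hx.2 (Or.inr h)) (h2 p hp hpX1) (h2 q hq hqX1)
    obtain ⟨L, l1, l2, l3⟩ := key
    refine ⟨fun α => L (k α), l1.comp hkc.continuousOn (mapsTo_image _ _), fun y hy => l2 _ ⟨y, hy, rfl⟩, fun y hy => l3 _ ⟨⟨y, hy.1, rfl⟩, ?_⟩⟩
    exact hOJ y (closure_mono (connectedComponentIn_subset _ _) hy.1) hy.2)
  set K := e '' sphere 0 (3/2)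
  have hKcl : IsClosed K := ((isCompact_sphere 0 _).image he.continuous).isClosed
  have hlog : LogOn φ ((K ∩ X) ∪ J) := by
    have hinv := continuousOn_invFunOn isCompact_univ hkc.continuousOn hki.injOn
    have hinve : ∀ θ, invFunOn k univ (k θ) = θ := fun θ => hki.injOn.leftInvOn_invFunOn (mem_univ θ)
    rw [image_univ, hkr] at hinv
    obtain ⟨M, hM, hM1, hM2⟩ := glue_closed (hKcl.inter hX.compact.isClosed) hX.jordan.isClosed
      ((hLc.comp_continuousOn hinv).mono inter_subset_left) (continuousOn_const (c := (0:ℝ))) (by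
        rintro x ⟨hxK, hxX⟩ hxJ
        obtain ⟨θ, rfl⟩ := hkr ▸ hxK
        simp only [Function.comp, hinve]
        exact hL0 θ fun h => h.2 hxJ)
    refine ⟨M, hM, ?_⟩
    rintro x (hx | hx)
    · obtain ⟨θ, rfl⟩ := hkr ▸ hx.1
      rw [hM1 hx]
      simp only [Function.comp, hinve, hLe]
    · rw [hM2 hx, hφ.zero x fun h => h.2 hx]; simp
  have hnotK : ∀ x, (∀ θ, k θ ≠ x) → x ∉ K := by
    rintro x hx h
    obtain ⟨θ, rfl⟩ := hkr ▸ h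
    exact hx θ rfl
  have hsame := hX.same_component hS hφ hKcl ⟨hsub hp, hnotK p hkp⟩ ⟨hsub hq, hnotK q hkq⟩ hlog
  obtain ⟨x, hx, hxK⟩ := hcross (connectedComponentIn ((X \ J) \ K) p) isPreconnected_connectedComponentIn ⟨p, mem_connectedComponentIn ⟨hsub hp, hnotK p hkp⟩, hpe⟩ fun h => hqe (h hsame)
  exact (connectedComponentIn_subset _ _ hx).2 hxK

include hS in
theorem mesh_charts {ι : Type*} {e : ι → ℂ → S} (he : ∀ i, IsOpenEmbedding (e i)) {w : S} (hwe : ∀ i, w ∉ range (e i)) (I : Finset ι) :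
    ∀ X J, IsCell X J → w ∉ X → X ⊆ ⋃ i ∈ I, e i '' ball 0 1 →
    Decomp (fun X' J' => X' \ J' ⊆ X \ J ∧ ∃ i, X' ⊆ range (e i)) X J := by
  classical
  induction I using Finset.strongInduction with
  | H I ih =>
    intro X J hX hwX hcov
    obtain ⟨x, hx⟩ := hX.jordan.nonempty
    obtain ⟨i, hi, hxi⟩ := mem_iUnion₂.1 (hcov (hX.sub hx))
    by_cases hJ : J ⊆ e i '' closedBall 0 2
    · exact .leaf hX ⟨Subset.rfl, i, (hX.subset_disc (he i) (by norm_num) (hwe i) hwX hJ).trans (image_subset_range _ _)⟩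
    · refine (mesh_step hS hX (he i) (hwe i) hwX ⟨x, hx, hxi⟩ hJ).bind ?_
      rintro X' J' hX' ⟨hsub, h | h⟩
      · exact .leaf hX' ⟨hsub, i, h.trans (image_subset_range _ _)⟩
      · have hXX := hX'.subset_of hX hsub
        refine (ih (I.erase i) (Finset.erase_ssubset hi) X' J' hX' (fun h => hwX (hXX h)) ?_).mono fun Y L hY (hQ : _ ∧ _) => ⟨hQ.1.trans hsub, hQ.2⟩
        intro y hy
        obtain ⟨j, hj, hyj⟩ := mem_iUnion₂.1 (hcov (hXX hy))
        refine mem_iUnion₂.2 ⟨j, Finset.mem_erase.2 ⟨?_, hj⟩, hyj⟩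
        rintro rfl
        exact disjoint_left.1 h hy hyj

include hS in
/-- Cells can be divided into arbitrarily small cells. -/
theorem IsCell.mesh {X J : Set S} (hX : IsCell X J) {ε : ℝ} (hε : 0 < ε) :
    Decomp (fun X' J' => X' \ J' ⊆ X \ J ∧ ∀ x ∈ X', ∀ y ∈ X', dist x y < ε) X J := by
  obtain ⟨w, hw⟩ := hX.exists_out
  have hch : ∀ x : X, ∃ e : ℂ → S, IsOpenEmbedding e ∧ e 0 = x ∧ range e ⊆ univ ∩ (ball (x : S) (ε / 2) ∩ {w}ᶜ) := fun x =>
    hS.exists_chart (mem_univ _) (isOpen_ball.inter isOpen_compl_singleton) ⟨mem_ball_self (by positivity), fun h => hw (h ▸ x.2)⟩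
  choose e he he0 her using hch
  obtain ⟨I, hI⟩ := hX.compact.elim_nhds_subcover' (fun x hx => e ⟨x, hx⟩ '' ball 0 1) fun x hx =>
    ((he ⟨x, hx⟩).isOpenMap _ isOpen_ball).mem_nhds ⟨0, by simp, he0 ⟨x, hx⟩⟩
  refine (mesh_charts hS he (w := w) (fun i h => (her i h).2.2 rfl) I X J hX hw hI).mono ?_
  rintro X' J' hX' ⟨h1, i, h2⟩
  refine ⟨h1, fun x hx y hy => ?_⟩
  have hx' := (her i (h2 hx)).2.1
  have hy' := (her i (h2 hy)).2.1
  rw [mem_ball] at hx' hy'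
  rw [dist_comm] at hy'
  linarith [dist_triangle x (i : S) y]

end mesh

/-! ### Accessibility -/

theorem locallyPathConnectedSpace_of_locPlane {S : Type*} [TopologicalSpace S] (hS : LocPlane (univ : Set S)) :
    LocallyPathConnectedSpace S := by
  rw [locallyPathConnectedSpace_iff_pathComponentIn_mem_nhds]
  intro x U hUo hxU
  obtain ⟨e, he, h0, hr⟩ := hS.exists_chart (mem_univ x) hUo hxU
  exact mem_of_superset (he.isOpen_range.mem_nhds ⟨0, h0⟩)
    ((isPathConnected_range he.continuous).subset_pathComponentIn ⟨0, h0⟩ (hr.trans inter_subset_right))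

section access
variable {S : Type*} [MetricSpace S]

/-- Infinite concatenation of paths converging to a point. -/
theorem joinedIn_of_sequence {a : S} {Ω : Set S} {x : ℕ → S} {A : ℕ → Set S} (hA : ∀ n, JoinedIn (A n) (x n) (x (n + 1)))
    (hAΩ : ∀ n, A n ⊆ Ω) (hlim : ∀ n : ℕ, ∀ m ≥ n, ∀ y ∈ A m, dist y a < 1 / (n + 1)) : JoinedIn (insert a Ω) (x 0) a := by
  set γ : ℕ → ℝ → S := fun n => (hA n).somePath.extend with hγ
  have hγc : ∀ n, Continuous (γ n) := fun n => (hA n).somePath.continuous_extend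
  have hγ0 : ∀ n, γ n 0 = x n := fun n => by simp [hγ]
  have hγ1 : ∀ n, γ n 1 = x (n + 1) := fun n => by simp [hγ]
  have hγA : ∀ n t, γ n t ∈ A n := by
    intro n t
    have : γ n t ∈ range (γ n) := ⟨t, rfl⟩
    rw [hγ] at this
    simp only [Path.extend_range] at this
    obtain ⟨u, hu⟩ := this
    change (hA n).somePath.extend t ∈ A n
    rw [← hu]
    exact (hA n).somePath_mem u
  set f : ℝ → S := fun t => γ ⌊t⌋₊ (t - ⌊t⌋₊) with hf
  have hfeq : ∀ n : ℕ, ∀ t ∈ Icc (n : ℝ) (n + 1), f t = γ n (t - n) := by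
    intro n t ht
    rcases ht.2.eq_or_lt with h | h
    · have : ⌊t⌋₊ = n + 1 := by rw [h]; exact_mod_cast Nat.floor_natCast (n + 1)
      rw [hf]; simp only [this]
      rw [h]; push_cast
      rw [sub_self, hγ0, add_sub_cancel_left, hγ1]
    · have : ⌊t⌋₊ = n := (Nat.floor_eq_iff (by linarith [ht.1, (Nat.cast_nonneg n : (0:ℝ) ≤ n)])).2 ⟨ht.1, h⟩
      rw [hf]; simp only [this]
  have hfc : ∀ n : ℕ, ContinuousOn f (Icc 0 n) := by
    intro n
    induction n with
    | zero => simp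
    | succ n ih =>
      refine contOn_of_closed_cover (A := Iic (n : ℝ)) (B := Ici (n : ℝ)) isClosed_Iic isClosed_Ici (fun t _ => le_total t n) (ih.mono fun t ht => ⟨ht.1.1, ht.2⟩) ?_
      refine ContinuousOn.congr (f := fun t => γ n (t - n)) ((hγc n).comp (continuous_id.sub continuous_const)).continuousOn fun t ht => hfeq n t ⟨ht.2, ?_⟩
      have := ht.1.2; push_cast at this; exact this
  have hfA : ∀ t, f t ∈ A ⌊t⌋₊ := fun t => hγA _ _
  set g : ℝ → S := fun s => if s < 1 then f (1 / (1 - s) - 1) else a with hg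
  refine JoinedIn.ofLine (f := g) ?_ ?_ ?_ ?_
  · intro s hs
    rcases hs.2.eq_or_lt with rfl | hs1
    · rw [Metric.continuousWithinAt_iff]
      intro ε hε
      obtain ⟨n, hn⟩ := exists_nat_one_div_lt hε
      refine ⟨1 / (n + 1), by positivity, fun {s} hs hd => ?_⟩
      have hg1 : g 1 = a := by simp [hg]
      rw [hg1]
      by_cases h : s < 1
      · rw [hg]; simp only [h, if_true]
        refine (hlim n _ ?_ _ (hfA _)).trans hn
        apply Nat.le_floor
        rw [Real.dist_eq, abs_sub_comm, abs_of_pos (by linarith)] at hd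
        have h1 : (0:ℝ) < n + 1 := by positivity
        have h2 : (0:ℝ) < 1 - s := by linarith
        rw [lt_div_iff₀ h1] at hd
        rw [le_sub_iff_add_le, le_div_iff₀ h2]
        linarith
      · have : g s = a := by simp [hg, h]
        rw [this, dist_self]; exact hε
    · have h1 : ∀ᶠ s' in 𝓝[Icc 0 1] s, g s' = f (1 / (1 - s') - 1) := by
        filter_upwards [mem_nhdsWithin_of_mem_nhds (Iio_mem_nhds hs1)] with s' h'
        simp only [hg, mem_Iio.1 h', if_true]
      refine ContinuousWithinAt.congr_of_eventuallyEq ?_ h1 (by simp only [hg, hs1, if_true])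
      obtain ⟨n, hn⟩ := exists_nat_gt (1 / (1 - s) - 1)
      have hn1 : ∀ᶠ s' : ℝ in 𝓝 s, 1 / (1 - s') - 1 < (n : ℝ) := by
        have : ContinuousAt (fun s' : ℝ => 1 / (1 - s') - 1) s :=
          ((continuousAt_const.div (continuousAt_const.sub continuousAt_id) (by simp; linarith)).sub continuousAt_const)
        exact this.eventually (Iio_mem_nhds hn)
      have hc : ContinuousWithinAt (fun s' : ℝ => 1 / (1 - s') - 1) (Icc 0 1 ∩ {s' | s' < 1 ∧ 1 / (1 - s') - 1 < n}) s :=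
        (((continuousAt_const.div (continuousAt_const.sub continuousAt_id) (by simp; linarith)).sub continuousAt_const)).continuousWithinAt
      have hpos : ∀ s' : ℝ, 0 ≤ s' → s' < 1 → 0 ≤ 1 / (1 - s') - 1 := by
        intro s' h0 h1
        have : 1 ≤ 1 / (1 - s') := by rw [le_div_iff₀ (by linarith)]; linarith
        linarith
      refine (ContinuousWithinAt.comp (t := Icc 0 (n:ℝ)) (g := f) (f := fun s' : ℝ => 1 / (1 - s') - 1) (hfc n _ ⟨hpos s hs.1 hs1, hn.le⟩) hc fun s' hs' => ⟨hpos s' hs'.1.1 hs'.2.1, hs'.2.2.le⟩).mono_of_mem_nhdsWithin ?_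
      exact inter_mem self_mem_nhdsWithin (mem_nhdsWithin_of_mem_nhds (inter_mem (Iio_mem_nhds hs1) hn1))
  · simp only [hg, zero_lt_one, if_true, sub_zero, div_one, sub_self]
    rw [hfeq 0 0 (by simp)]; simp [hγ0]
  · simp [hg]
  · rintro _ ⟨s, hs, rfl⟩
    by_cases h : s < 1
    · simp only [hg, h, if_true]
      exact Or.inr (hAΩ _ (hfA _))
    · simp only [hg, h, if_false]
      exact Or.inl rfl

theorem Decomp.exists_leaf {Q : Set S → Set S → Prop} {X J : Set S} (h : Decomp Q X J) {x : S} (hx : x ∈ X) :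
    ∃ X' J', IsCell X' J' ∧ Q X' J' ∧ x ∈ X' := by
  induction h with
  | leaf h1 h2 => exact ⟨_, _, h1, h2, hx⟩
  | node hc _ _ ih1 ih2 =>
    rw [← hc.union] at hx
    exact hx.elim ih1 ih2

variable [ConnectedSpace S] (hS : LocPlane (univ : Set S)) {X J : Set S}

include hS in
/-- Boundary points of a cell are accessible from the interior. -/
theorem IsCell.accessible (hX : IsCell X J) {a x : S} (ha : a ∈ J) (hx : x ∈ X \ J) : JoinedIn (insert a (X \ J)) x a := by
  have hlp := locallyPathConnectedSpace_of_locPlane hS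
  have step : ∀ n : ℕ, ∀ p : {p : Set S × Set S // IsCell p.1 p.2 ∧ a ∈ p.2}, ∃ q : {p : Set S × Set S // IsCell p.1 p.2 ∧ a ∈ p.2},
      q.1.1 \ q.1.2 ⊆ p.1.1 \ p.1.2 ∧ ∀ x ∈ q.1.1, ∀ y ∈ q.1.1, dist x y < 1 / ((n : ℝ) + 1) := by
    rintro n ⟨⟨X, J⟩, hX, ha⟩
    obtain ⟨X', J', hc, ⟨h1, h2⟩, h3⟩ := (hX.mesh hS (ε := 1 / ((n : ℝ) + 1)) (by positivity)).exists_leaf (hX.sub ha)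
    refine ⟨⟨(X', J'), hc, ?_⟩, h1, h2⟩
    by_contra h
    exact (h1 ⟨h3, h⟩).2 ha
  choose nxt hn1 hn2 using step
  set P : ℕ → {p : Set S × Set S // IsCell p.1 p.2 ∧ a ∈ p.2} := fun n => Nat.rec (nxt 0 ⟨(X, J), hX, ha⟩) (fun k p => nxt (k + 1) p) n with hP
  have hPs : ∀ n, P (n + 1) = nxt (n + 1) (P n) := fun n => rfl
  set A : ℕ → Set S := fun n => (P n).1.1 \ (P n).1.2 with hA
  have hsmall : ∀ n, ∀ x ∈ (P n).1.1, ∀ y ∈ (P n).1.1, dist x y < 1 / ((n : ℝ) + 1) := by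
    intro n
    cases n with
    | zero => exact hn2 0 _
    | succ n => rw [hPs]; exact hn2 (n + 1) _
  have hAs : ∀ n, A (n + 1) ⊆ A n := fun n => by simp only [hA, hPs]; exact hn1 _ _
  have hA0 : A 0 ⊆ X \ J := hn1 0 ⟨(X, J), hX, ha⟩
  have hAX : ∀ n, A n ⊆ X \ J := by
    intro n
    induction n with
    | zero => exact hA0
    | succ n ih => exact (hAs n).trans ih
  have hne : ∀ n, (A n).Nonempty := fun n => (P n).2.1.ne
  choose y hy using hne
  have hpc : ∀ n, IsPathConnected (A n) := fun n => (P n).2.1.isOpen.isConnected_iff_isPathConnected.1 ⟨(P n).2.1.ne, (P n).2.1.conn⟩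
  have hXpc : IsPathConnected (X \ J) := hX.isOpen.isConnected_iff_isPathConnected.1 ⟨hX.ne, hX.conn⟩
  have h1 : JoinedIn (X \ J) x (y 0) := hXpc.joinedIn _ hx _ (hAX 0 (hy 0))
  refine (h1.mono (subset_insert _ _)).trans (joinedIn_of_sequence (A := A) (fun n => (hpc n).joinedIn _ (hy n) _ (hAs n (hy (n + 1)))) hAX ?_)
  intro n m hm z hz
  refine (hsmall m z hz.1 a ((P m).2.1.sub (P m).2.2)).trans_le ?_
  exact one_div_le_one_div_of_le (by positivity) (by gcongr)

include hS in
theorem IsCell.exists_crosscut (hX : IsCell X J) {a b : S} (ha : a ∈ J) (hb : b ∈ J) (hab : a ≠ b) :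
    ∃ s, IsArc s a b ∧ s \ {a, b} ⊆ X \ J := by
  obtain ⟨x, hx⟩ := hX.ne
  have h1 := (hX.accessible hS ha hx).mono (V := (X \ J) ∪ {a, b}) (by
    rintro y (rfl | h); exacts [Or.inr (Or.inl rfl), Or.inl h])
  have h2 := (hX.accessible hS hb hx).mono (V := (X \ J) ∪ {a, b}) (by
    rintro y (rfl | h); exacts [Or.inr (Or.inr rfl), Or.inl h])
  obtain ⟨s, hs, ha⟩ := exists_arc_of_joinedIn (h1.symm.trans h2) hab
  exact ⟨s, ha, fun y hy => (hs hy.1).resolve_right hy.2⟩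

end access

/-! ### Homeomorphisms between cells -/

/-- `g` and `g'` are mutually inverse homeomorphisms between `J` and `L`. -/
structure Match {S T : Type*} [TopologicalSpace S] [TopologicalSpace T] (g : S → T) (g' : T → S) (J : Set S) (L : Set T) : Prop where
  cont : ContinuousOn g J
  cont' : ContinuousOn g' L
  maps : MapsTo g J L
  maps' : MapsTo g' L J
  left : ∀ x ∈ J, g' (g x) = x
  right : ∀ y ∈ L, g (g' y) = y

/-- A pair of cells with their boundary curves, one cell in each of two surfaces. -/
abbrev Tile (S T : Type*) := (Set S × Set S) × (Set T × Set T)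

/-- Distinct tiles of a tiling meet along boundaries only. -/
def TileRel {S T : Type*} (t t' : Tile S T) : Prop :=
  t.1.1 ∩ t'.1.1 ⊆ t.1.2 ∩ t'.1.2 ∧ t.2.1 ∩ t'.2.1 ⊆ t.2.2 ∩ t'.2.2

/-- Matched tilings of `A` and `B`: two subdivisions into cells, together with a homeomorphism between the
`1`-skeletons respecting the boundaries of the tiles. -/
structure Good {S T : Type*} [TopologicalSpace S] [TopologicalSpace T] (A : Set S) (B : Set T) (g : S → T) (g' : T → S)
    (l : List (Tile S T)) : Prop where
  cellX : ∀ t ∈ l, IsCell t.1.1 t.1.2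
  cellY : ∀ t ∈ l, IsCell t.2.1 t.2.2
  mat : ∀ t ∈ l, Match g g' t.1.2 t.2.2
  pair : l.Pairwise TileRel
  covA : ∀ x, x ∈ A ↔ ∃ t ∈ l, x ∈ t.1.1
  covB : ∀ y, y ∈ B ↔ ∃ t ∈ l, y ∈ t.2.1

section tiling
variable {S T : Type*} [MetricSpace S] [MetricSpace T] {A : Set S} {B : Set T} {g : S → T} {g' : T → S} {l : List (Tile S T)}

theorem Match.swap {J : Set S} {L : Set T} (h : Match g g' J L) : Match g' g L J := ⟨h.cont', h.cont, h.maps', h.maps, h.right, h.left⟩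

theorem Match.congr {J : Set S} {L : Set T} (h : Match g g' J L) {g1 : S → T} {g1' : T → S} (h1 : EqOn g1 g J) (h2 : EqOn g1' g' L) :
    Match g1 g1' J L := by
  refine ⟨h.cont.congr h1, h.cont'.congr h2, h.maps.congr h1.symm, h.maps'.congr h2.symm, fun x hx => ?_, fun y hy => ?_⟩
  · rw [h1 hx, h2 (h.maps hx), h.left x hx]
  · rw [h2 hy, h1 (h.maps' hy), h.right y hy]

theorem Match.union {J K : Set S} {L M : Set T} (h : Match g g' J L) (h' : Match g g' K M) (c1 : IsClosed J) (c2 : IsClosed K)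
    (c3 : IsClosed L) (c4 : IsClosed M) : Match g g' (J ∪ K) (L ∪ M) := by
  refine ⟨h.cont.union_of_isClosed h'.cont c1 c2, h.cont'.union_of_isClosed h'.cont' c3 c4, ?_, ?_, ?_, ?_⟩
  · exact h.maps.union_union h'.maps
  · exact h.maps'.union_union h'.maps'
  · rintro x (hx | hx); exacts [h.left x hx, h'.left x hx]
  · rintro x (hx | hx); exacts [h.right x hx, h'.right x hx]

theorem Match.restrict {J K : Set S} {L : Set T} (h : Match g g' J L) (hK : K ⊆ J) : Match g g' K (g '' K) := by
  have h1 : g '' K ⊆ L := by rintro _ ⟨x, hx, rfl⟩; exact h.maps (hK hx)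
  refine ⟨h.cont.mono hK, h.cont'.mono h1, mapsTo_image _ _, ?_, fun x hx => h.left x (hK hx), fun y hy => h.right y (h1 hy)⟩
  rintro _ ⟨x, hx, rfl⟩
  rw [h.left x (hK hx)]; exact hx

theorem Match.injOn {J : Set S} {L : Set T} (h : Match g g' J L) : InjOn g J := fun x hx y hy hxy => by
  rw [← h.left x hx, hxy, h.left y hy]

theorem Match.image {J : Set S} {L : Set T} (h : Match g g' J L) : g '' J = L := by
  refine Subset.antisymm h.maps.image_subset fun y hy => ⟨g' y, h.maps' hy, h.right y hy⟩

theorem TileRel.symm {t t' : Tile S T} (h : TileRel t t') : TileRel t' t :=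
  ⟨by rw [inter_comm, inter_comm t'.1.2]; exact h.1, by rw [inter_comm, inter_comm t'.2.2]; exact h.2⟩

instance : Std.Symm (TileRel (S := S) (T := T)) := ⟨fun _ _ h => h.symm⟩

theorem Good.perm (h : Good A B g g' l) {m : List (Tile S T)} (hm : m.Perm l) : Good A B g g' m := by
  refine ⟨fun t ht => h.cellX t (hm.subset ht), fun t ht => h.cellY t (hm.subset ht), fun t ht => h.mat t (hm.subset ht), ?_, ?_, ?_⟩
  · exact (List.Perm.pairwise_iff (fun h => h.symm) hm).2 h.pair
  · intro x; rw [h.covA]; simp only [hm.mem_iff]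
  · intro x; rw [h.covB]; simp only [hm.mem_iff]

theorem Good.swap (h : Good A B g g' l) : Good B A g' g (l.map Prod.swap) := by
  have hm : ∀ t ∈ l.map Prod.swap, t.swap ∈ l := by
    intro t ht
    obtain ⟨t', h1, rfl⟩ := List.mem_map.1 ht
    simpa using h1
  refine ⟨fun t ht => h.cellY _ (hm t ht), fun t ht => h.cellX _ (hm t ht), fun t ht => (h.mat _ (hm t ht)).swap, ?_, ?_, ?_⟩
  · rw [List.pairwise_map]
    exact h.pair.imp fun h => ⟨h.2, h.1⟩
  · intro x; rw [h.covB]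
    simp only [List.mem_map, exists_exists_and_eq_and, Prod.fst_swap]
  · intro x; rw [h.covA]
    simp only [List.mem_map, exists_exists_and_eq_and, Prod.snd_swap]

theorem cut_aux {X J s J1 J2 X1 X2 X' J' : Set S} {a b : S} (h : Cut X J s J1 J2 a b X1 X2) (h' : X ∩ X' ⊆ J ∩ J') :
    X1 ∩ X' ⊆ (J1 ∪ s) ∩ J' := by
  rintro x ⟨h1, h2⟩
  have h3 := h' ⟨h.union ▸ Or.inl h1, h2⟩
  refine ⟨?_, h3.2⟩
  have h4 := h3.1
  rw [← h.theta.union] at h4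
  rcases h4 with h4 | h4
  · exact Or.inl h4
  · exact Or.inr (h.inter ▸ ⟨h1, h.cell2.sub (Or.inl h4)⟩)

variable [ConnectedSpace T] (hT : LocPlane (univ : Set T))

include hT in
theorem Good.split {X J s J1 J2 X1 X2 : Set S} {a b : S} {Y L : Set T} (h : Good A B g g' (((X, J), (Y, L)) :: l))
    (hc : Cut X J s J1 J2 a b X1 X2) : ∃ g1 g1' Y1 L1 Y2 L2,
      Good A B g1 g1' (((X1, J1 ∪ s), (Y1, L1)) :: ((X2, J2 ∪ s), (Y2, L2)) :: l) ∧ Y1 ⊆ Y ∧ Y2 ⊆ Y := by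
  classical
  have hY : IsCell Y L := h.cellY _ (List.mem_cons_self)
  have hm : Match g g' J L := h.mat _ (List.mem_cons_self)
  have hth := hc.theta
  have hJ1 : J1 ⊆ J := hth.union ▸ subset_union_left
  have hJ2 : J2 ⊆ J := hth.union ▸ subset_union_right
  have ha : a ∈ J := hJ1 hth.arc1.left_mem
  have hb : b ∈ J := hJ1 hth.arc1.right_mem
  have hab : g a ≠ g b := fun hh => hth.arc.ne (hm.injOn ha hb hh)
  obtain ⟨s', hs', hsc⟩ := hY.exists_crosscut hT (hm.maps ha) (hm.maps hb) hab
  have hL1 := hth.arc1.image (hm.cont.mono hJ1) (hm.injOn.mono hJ1)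
  have hL2 := hth.arc2.image (hm.cont.mono hJ2) (hm.injOn.mono hJ2)
  obtain ⟨Y1, Y2, hc'⟩ := hY.exists_cut hT hs' (hm.maps ha) (hm.maps hb) hsc hL1 hL2
    (by rw [← image_union, hth.union, hm.image])
    (by rw [← hm.injOn.image_inter hJ1 hJ2, hth.inter, image_pair])
  obtain ⟨k, k', k1, k2, k3, k4, k5, k6, k7, k8⟩ := hth.arc.homeo hs'
  have k7' : k' (g a) = a := by rw [← k7, k5 a hth.arc.left_mem]
  have k8' : k' (g b) = b := by rw [← k8, k5 b hth.arc.right_mem]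
  set g1 : S → T := fun x => if x ∈ s then k x else g x with hg1
  set g1' : T → S := fun y => if y ∈ s' then k' y else g' y with hg1'
  have e1 : ∀ x, (x ∈ X → x ∈ J) → g1 x = g x := by
    intro x hx
    by_cases hxs : x ∈ s
    · have hxX : x ∈ X := hc.union ▸ Or.inl (hc.cell1.sub (Or.inr hxs))
      have : x ∈ ({a, b} : Set S) := by
        by_contra hh; exact (hth.cross ⟨hxs, hh⟩).2 (hx hxX)
      simp only [hg1, if_pos hxs]
      rcases this with rfl | rfl
      exacts [k7, k8]
    · simp only [hg1, if_neg hxs]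
  have e2 : ∀ x, (x ∈ Y → x ∈ L) → g1' x = g' x := by
    intro x hx
    by_cases hxs : x ∈ s'
    · have hxX : x ∈ Y := hc'.union ▸ Or.inl (hc'.cell1.sub (Or.inr hxs))
      have : x ∈ ({g a, g b} : Set T) := by
        by_contra hh; exact (hsc ⟨hxs, hh⟩).2 (hx hxX)
      simp only [hg1', if_pos hxs]
      rcases this with rfl | rfl
      · rw [k7', hm.left a ha]
      · rw [k8', hm.left b hb]
    · simp only [hg1', if_neg hxs]
  have ms : Match g1 g1' s s' := by
    refine Match.congr (g := k) (g' := k') ⟨k1, k2, k3, k4, k5, k6⟩ ?_ ?_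
    · intro x hx; simp only [hg1, if_pos hx]
    · intro x hx; simp only [hg1', if_pos hx]
  have mJ : Match g1 g1' J L := hm.congr (fun x hx => e1 x fun _ => hx) (fun x hx => e2 x fun _ => hx)
  have i1 : g1 '' J1 = g '' J1 := image_congr fun x hx => e1 x fun _ => hJ1 hx
  have i2 : g1 '' J2 = g '' J2 := image_congr fun x hx => e1 x fun _ => hJ2 hx
  have m1 : Match g1 g1' (J1 ∪ s) (g '' J1 ∪ s') := by
    have := mJ.restrict hJ1
    rw [i1] at this
    exact this.union ms hth.arc1.isClosed hth.arc.isClosed hL1.isClosed hs'.isClosed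
  have m2 : Match g1 g1' (J2 ∪ s) (g '' J2 ∪ s') := by
    have := mJ.restrict hJ2
    rw [i2] at this
    exact this.union ms hth.arc2.isClosed hth.arc.isClosed hL2.isClosed hs'.isClosed
  have hp := List.pairwise_cons.1 h.pair
  refine ⟨g1, g1', Y1, g '' J1 ∪ s', Y2, g '' J2 ∪ s', ⟨?_, ?_, ?_, ?_, ?_, ?_⟩, hc'.union ▸ subset_union_left, hc'.union ▸ subset_union_right⟩
  · simp only [List.forall_mem_cons]
    exact ⟨hc.cell1, hc.cell2, fun t ht => h.cellX t (List.mem_cons_of_mem _ ht)⟩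
  · simp only [List.forall_mem_cons]
    exact ⟨hc'.cell1, hc'.cell2, fun t ht => h.cellY t (List.mem_cons_of_mem _ ht)⟩
  · simp only [List.forall_mem_cons]
    refine ⟨m1, m2, fun t ht => (h.mat t (List.mem_cons_of_mem _ ht)).congr ?_ ?_⟩
    · intro x hx
      exact e1 x fun hxX => ((hp.1 t ht).1 ⟨hxX, (h.cellX t (List.mem_cons_of_mem _ ht)).sub hx⟩).1
    · intro x hx
      exact e2 x fun hxX => ((hp.1 t ht).2 ⟨hxX, (h.cellY t (List.mem_cons_of_mem _ ht)).sub hx⟩).1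
  · simp only [List.pairwise_cons, List.forall_mem_cons]
    refine ⟨⟨⟨?_, ?_⟩, fun t ht => ⟨cut_aux hc (hp.1 t ht).1, cut_aux hc' (hp.1 t ht).2⟩⟩,
      fun t ht => ⟨cut_aux hc.swap (hp.1 t ht).1, cut_aux hc'.swap (hp.1 t ht).2⟩, hp.2⟩
    · intro x hx
      have : x ∈ s := hc.inter ▸ hx
      exact ⟨Or.inr this, Or.inr this⟩
    · intro x hx
      have : x ∈ s' := hc'.inter ▸ hx
      exact ⟨Or.inr this, Or.inr this⟩
  · intro x
    rw [h.covA]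
    simp only [List.exists_mem_cons_iff, ← hc.union, mem_union, or_assoc]
  · intro x
    rw [h.covB]
    simp only [List.exists_mem_cons_iff, ← hc'.union, mem_union, or_assoc]

include hT in
theorem Good.refine1 {Q : Set S → Set S → Prop} {X J : Set S} (hd : Decomp Q X J) : ∀ {g : S → T} {g' : T → S} {l : List (Tile S T)}
    {Y L : Set T}, Good A B g g' (((X, J), (Y, L)) :: l) → ∃ g1 g1' m, Good A B g1 g1' (m ++ l) ∧
      ∀ t ∈ m, Q t.1.1 t.1.2 ∧ t.1.1 ⊆ X ∧ t.2.1 ⊆ Y := by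
  induction hd with
  | @leaf X J h1 h2 =>
    intro g g' l Y L h
    refine ⟨g, g', [((X, J), (Y, L))], h, ?_⟩
    simp [h2]
  | node hc _ _ ih1 ih2 =>
    intro g g' l Y L h
    obtain ⟨g1, g1', Y1, L1, Y2, L2, h1, h2, h3⟩ := h.split hT hc
    obtain ⟨g2, g2', m1, h4, h5⟩ := ih1 h1
    obtain ⟨g3, g3', m2, h6, h7⟩ := ih2 (h4.perm (m := _ :: (m1 ++ l)) (List.perm_middle.symm))
    refine ⟨g3, g3', m2 ++ m1, by rw [List.append_assoc]; exact h6, fun t ht => ?_⟩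
    rcases List.mem_append.1 ht with ht | ht
    · have := h7 t ht
      exact ⟨this.1, this.2.1.trans (hc.union ▸ subset_union_right), this.2.2.trans h3⟩
    · have := h5 t ht
      exact ⟨this.1, this.2.1.trans (hc.union ▸ subset_union_left), this.2.2.trans h2⟩

variable [ConnectedSpace S] (hS : LocPlane (univ : Set S))

include hT hS in
theorem Good.refineX {ε : ℝ} (hε : 0 < ε) : ∀ (l : List (Tile S T)) {g : S → T} {g' : T → S} {d : List (Tile S T)}, Good A B g g' (l ++ d) →
    ∃ g1 g1' m, Good A B g1 g1' (m ++ d) ∧ ∀ t ∈ m, (∀ x ∈ t.1.1, ∀ y ∈ t.1.1, dist x y < ε) ∧ ∃ t' ∈ l, t.1.1 ⊆ t'.1.1 ∧ t.2.1 ⊆ t'.2.1 := by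
  intro l
  induction l with
  | nil => intro g g' d h; exact ⟨g, g', [], h, by simp⟩
  | cons t l ih =>
    intro g g' d h
    have hX := h.cellX t (by simp)
    obtain ⟨⟨X, J⟩, ⟨Y, L⟩⟩ := t
    obtain ⟨g1, g1', m, h1, h2⟩ := Good.refine1 hT (l := l ++ d) (hX.mesh hS hε) h
    obtain ⟨g2, g2', m', h3, h4⟩ := ih (h1.perm (m := l ++ (m ++ d)) (by
      rw [← List.append_assoc, ← List.append_assoc]; exact List.perm_append_comm.append_right _))
    refine ⟨g2, g2', m' ++ m, by rw [List.append_assoc]; exact h3, fun t ht => ?_⟩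
    rcases List.mem_append.1 ht with ht | ht
    · obtain ⟨h5, t', h6, h7⟩ := h4 t ht
      exact ⟨h5, t', List.mem_cons_of_mem _ h6, h7⟩
    · exact ⟨(h2 t ht).1.2, _, List.mem_cons_self, (h2 t ht).2⟩

/-- `m` refines `l` and its tiles have both components of diameter less than `ε`. -/
def Finer (m l : List (Tile S T)) (ε : ℝ) : Prop := ∀ t ∈ m, (∀ x ∈ t.1.1, ∀ y ∈ t.1.1, dist x y < ε) ∧
  (∀ x ∈ t.2.1, ∀ y ∈ t.2.1, dist x y < ε) ∧ ∃ t' ∈ l, t.1.1 ⊆ t'.1.1 ∧ t.2.1 ⊆ t'.2.1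

include hT hS in
theorem Good.refine_both {ε : ℝ} (hε : 0 < ε) (h : Good A B g g' l) : ∃ g1 g1' m, Good A B g1 g1' m ∧ Finer m l ε := by
  obtain ⟨g1, g1', m, h1, h2⟩ := Good.refineX hT hS hε l (d := []) (by simpa using h)
  rw [List.append_nil] at h1
  obtain ⟨g2, g2', n, h3, h4⟩ := Good.refineX hS hT hε (m.map Prod.swap) (d := []) (by simpa using h1.swap)
  rw [List.append_nil] at h3
  refine ⟨g2', g2, n.map Prod.swap, h3.swap, fun t ht => ?_⟩
  obtain ⟨u, hu, rfl⟩ := List.mem_map.1 ht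
  obtain ⟨h5, v, hv, h6, h7⟩ := h4 u hu
  obtain ⟨w, hw, rfl⟩ := List.mem_map.1 hv
  obtain ⟨h8, z, hz, h9, h10⟩ := h2 w hw
  exact ⟨fun x hx y hy => h8 x (h7 hx) y (h7 hy), h5, z, hz, h7.trans h9, h6.trans h10⟩

/-- The relation carried by a matched tiling. -/
def tileSet (l : List (Tile S T)) : Set (S × T) := {p | ∃ t ∈ l, p.1 ∈ t.1.1 ∧ p.2 ∈ t.2.1}

theorem Good.compact (h : Good A B g g' l) : IsCompact (tileSet l) := by
  have : tileSet l = ⋃ t ∈ {t | t ∈ l}, t.1.1 ×ˢ t.2.1 := by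
    ext p; simp only [tileSet, mem_ofPred_eq, mem_iUnion, mem_prod, exists_prop]
  rw [this]
  exact (List.finite_toSet l).isCompact_biUnion fun t ht => (h.cellX t ht).compact.prod (h.cellY t ht).compact

theorem Good.fibre (h : Good A B g g' l) {ε : ℝ} (hl : ∀ t ∈ l, ∀ x ∈ t.2.1, ∀ y ∈ t.2.1, dist x y < ε) {x : S} {y y' : T}
    (h1 : (x, y) ∈ tileSet l) (h2 : (x, y') ∈ tileSet l) : dist y y' < ε + ε := by
  obtain ⟨t, ht, hx, hy⟩ := h1
  obtain ⟨t', ht', hx', hy'⟩ := h2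
  have key : ∃ z ∈ t.2.1, z ∈ t'.2.1 := by
    by_cases he : t = t'
    · exact ⟨y, hy, he ▸ hy⟩
    · have := (h.pair.forall ht ht' he).1 ⟨hx, hx'⟩
      exact ⟨g x, (h.cellY t ht).sub ((h.mat t ht).maps this.1), (h.cellY t' ht').sub ((h.mat t' ht').maps this.2)⟩
  obtain ⟨z, hz, hz'⟩ := key
  exact (dist_triangle y z y').trans_lt (add_lt_add (hl t ht y hy z hz) (hl t' ht' z hz' y' hy'))

/-- A nested sequence of compact relations whose fibres over `A` are nonempty and shrink to points converges to the graph of a map. -/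
theorem homeo_of_nested {R : ℕ → Set (S × T)} (hR : ∀ n, R (n + 1) ⊆ R n) (hc : ∀ n, IsCompact (R n)) (hA : ∀ n x, x ∈ A ↔ ∃ y, (x, y) ∈ R n)
    (hs : ∀ n x y y', (x, y) ∈ R n → (x, y') ∈ R n → dist y y' < 1 / (n + 1)) : Nonempty ((⋂ n, R n : Set (S × T)) ≃ₜ A) := by
  have hcR : IsCompact (⋂ n, R n) := (hc 0).of_isClosed_subset (isClosed_iInter fun n => (hc n).isClosed) (iInter_subset _ 0)
  have : CompactSpace (⋂ n, R n : Set (S × T)) := isCompact_iff_compactSpace.1 hcR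
  let f : (⋂ n, R n : Set (S × T)) → A := fun p => ⟨p.1.1, (hA 0 _).2 ⟨p.1.2, mem_iInter.1 p.2 0⟩⟩
  have hf : Continuous f := by fun_prop
  have hb : Bijective f := by
    constructor
    · rintro ⟨⟨x, y⟩, hp⟩ ⟨⟨x', y'⟩, hp'⟩ he
      obtain rfl : x = x' := congrArg Subtype.val he
      have : dist y y' ≤ 0 := by
        refine ge_of_tendsto' (tendsto_one_div_add_atTop_nhds_zero_nat (𝕜 := ℝ)) fun n => ?_
        exact (hs n x y y' (mem_iInter.1 hp n) (mem_iInter.1 hp' n)).le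
      simp [dist_le_zero.1 this]
    · rintro ⟨x, hx⟩
      have := IsCompact.nonempty_iInter_of_sequence_nonempty_isCompact_isClosed (fun n => R n ∩ Prod.fst ⁻¹' {x})
        (fun n => inter_subset_inter_left _ (hR n)) (fun n => by
          obtain ⟨y, hy⟩ := (hA n x).1 hx
          exact ⟨(x, y), hy, rfl⟩)
        ((hc 0).inter_right (isClosed_singleton.preimage continuous_fst))
        (fun n => (hc n).isClosed.inter (isClosed_singleton.preimage continuous_fst))
      obtain ⟨p, hp⟩ := this
      rw [mem_iInter] at hp
      refine ⟨⟨p, mem_iInter.2 fun n => (hp n).1⟩, Subtype.ext ?_⟩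
      exact (hp 0).2
  exact ⟨Continuous.homeoOfEquivCompactToT2 (f := Equiv.ofBijective f hb) hf⟩

include hS hT in
theorem Good.homeo (h : Good A B g g' l) : Nonempty (A ≃ₜ B) := by
  let St := {p : (S → T) × (T → S) × List (Tile S T) // Good A B p.1 p.2.1 p.2.2}
  have step : ∀ (p : St) (n : ℕ), ∃ q : St, Finer q.1.2.2 p.1.2.2 (1 / (2 * ((n : ℝ) + 1))) := fun p n => by
    obtain ⟨g1, g1', m, h1, h2⟩ := p.2.refine_both hT hS (ε := 1 / (2 * ((n : ℝ) + 1))) (by positivity)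
    exact ⟨⟨(g1, g1', m), h1⟩, h2⟩
  choose F hF using step
  let P : ℕ → St := fun n => Nat.rec (F ⟨(g, g', l), h⟩ 0) (fun n p => F p (n + 1)) n
  have hsm : ∀ n : ℕ, ∀ t ∈ (P n).1.2.2, (∀ x ∈ t.1.1, ∀ y ∈ t.1.1, dist x y < 1 / (2 * ((n : ℝ) + 1))) ∧
      (∀ x ∈ t.2.1, ∀ y ∈ t.2.1, dist x y < 1 / (2 * ((n : ℝ) + 1))) := by
    intro n t ht
    cases n with
    | zero => exact ⟨(hF _ 0 t ht).1, (hF _ 0 t ht).2.1⟩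
    | succ n => exact ⟨(hF _ (n + 1) t ht).1, (hF _ (n + 1) t ht).2.1⟩
  have hhalf : ∀ n : ℕ, 1 / (2 * ((n : ℝ) + 1)) + 1 / (2 * ((n : ℝ) + 1)) = 1 / ((n : ℝ) + 1) := fun n => by field_simp; norm_num
  have hnest : ∀ n, tileSet (P (n + 1)).1.2.2 ⊆ tileSet (P n).1.2.2 := by
    rintro n p ⟨t, ht, h1, h2⟩
    obtain ⟨_, _, t', ht', h3, h4⟩ := hF (P n) (n + 1) t ht
    exact ⟨t', ht', h3 h1, h4 h2⟩
  obtain ⟨e1⟩ := homeo_of_nested (A := A) (R := fun n => tileSet (P n).1.2.2) hnest (fun n => (P n).2.compact) (by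
    intro n x
    rw [(P n).2.covA]
    constructor
    · rintro ⟨t, ht, hx⟩
      obtain ⟨y, hy⟩ := ((P n).2.cellY t ht).ne
      exact ⟨y, t, ht, hx, hy.1⟩
    · rintro ⟨y, t, ht, hx, _⟩
      exact ⟨t, ht, hx⟩) (by
    intro n x y y' h1 h2
    rw [← hhalf]
    exact (P n).2.fibre (fun t ht => (hsm n t ht).2) h1 h2)
  have hsw : ∀ n, tileSet ((P n).1.2.2.map Prod.swap) = Prod.swap ⁻¹' tileSet (P n).1.2.2 := by
    intro n; ext p
    simp only [tileSet, mem_preimage, mem_ofPred_eq, List.mem_map, exists_exists_and_eq_and, Prod.fst_swap, Prod.snd_swap]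
    exact exists_congr fun t => and_congr_right fun _ => and_comm
  obtain ⟨e2⟩ := homeo_of_nested (A := B) (R := fun n => tileSet ((P n).1.2.2.map Prod.swap)) (fun n => by
    rw [hsw n, hsw (n + 1)]; exact preimage_mono (hnest n)) (fun n => (P n).2.swap.compact) (by
    intro n x
    rw [(P n).2.covB]
    simp only [hsw]
    constructor
    · rintro ⟨t, ht, hx⟩
      obtain ⟨y, hy⟩ := ((P n).2.cellX t ht).ne
      exact ⟨y, t, ht, hy.1, hx⟩
    · rintro ⟨y, t, ht, _, hx⟩
      exact ⟨t, ht, hx⟩) (by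
    intro n x y y' h1 h2
    rw [← hhalf]
    exact (P n).2.swap.fibre (fun t ht => by
      obtain ⟨u, hu, rfl⟩ := List.mem_map.1 ht
      exact (hsm n u hu).1) h1 h2)
  have e3 : (⋂ n, tileSet (P n).1.2.2 : Set (S × T)) ≃ₜ (⋂ n, tileSet ((P n).1.2.2.map Prod.swap) : Set (T × S)) :=
    (Homeomorph.prodComm S T).subtype (by intro p; simp [hsw])
  exact ⟨e1.symm.trans (e3.trans e2)⟩

include hS hT in
/-- Any two cells in surfaces are homeomorphic. -/
theorem IsCell.homeo {X J : Set S} {Y L : Set T} (hX : IsCell X J) (hY : IsCell Y L) : Nonempty (X ≃ₜ Y) := by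
  obtain ⟨j, j1, j2, rfl⟩ := hX.jordan
  obtain ⟨k, k1, k2, rfl⟩ := hY.jordan
  have hj := continuousOn_invFunOn isCompact_univ j1.continuousOn j2.injOn
  have hk := continuousOn_invFunOn isCompact_univ k1.continuousOn k2.injOn
  rw [image_univ] at hj hk
  have hj' : ∀ θ, invFunOn j univ (j θ) = θ := fun θ => j2.injOn.leftInvOn_invFunOn (mem_univ θ)
  have hk' : ∀ θ, invFunOn k univ (k θ) = θ := fun θ => k2.injOn.leftInvOn_invFunOn (mem_univ θ)
  refine Good.homeo hT hS (g := fun x => k (invFunOn j univ x)) (g' := fun x => j (invFunOn k univ x))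
    (l := [((X, range j), (Y, range k))]) ⟨by simpa using hX, by simpa using hY, ?_, by simp, by simp, by simp⟩
  simp only [List.mem_singleton, forall_eq]
  refine ⟨k1.comp_continuousOn hj, j1.comp_continuousOn hk, fun x _ => mem_range_self _, fun x _ => mem_range_self _, ?_, ?_⟩
  · rintro _ ⟨θ, rfl⟩
    simp only [hj', hk']
  · rintro _ ⟨θ, rfl⟩
    simp only [hj', hk']

end tiling

/-! ### Linking with a simple closed curve -/

theorem isCell_disc : IsCell (closedBall (0 : ℂ) 1) (sphere (0 : ℂ) 1) := by
  have e : closedBall (0 : ℂ) 1 \ sphere 0 1 = ball 0 1 := by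
    ext z; simp only [Set.mem_sdiff, mem_closedBall, mem_sphere, mem_ball, dist_zero_right]
    exact ⟨fun h => lt_of_le_of_ne h.1 h.2, fun h => ⟨h.le, h.ne⟩⟩
  refine ⟨isCompact_closedBall _ _, ⟨unitA, continuous_unitA, fun a b h => ?_, ?_⟩, sphere_subset_closedBall, ?_, ?_, ?_, ?_, ?_, acyc_disc⟩
  · rw [← argA_unitA a, h, argA_unitA]
  · ext z
    constructor
    · rintro ⟨θ, rfl⟩; simp
    · intro hz
      have h1 : ‖z‖ = 1 := by simpa using hz
      have h2 := unitA_argA (z := z) (by rw [← norm_pos_iff, h1]; exact one_pos)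
      rw [h1] at h2
      exact ⟨argA z, by simpa using h2⟩
  · rw [e]; exact isOpen_ball
  · rw [e]; exact (convex_ball _ _).isPreconnected
  · rw [e]; exact ⟨0, by simp⟩
  · rw [e, closure_ball _ one_ne_zero]; exact sphere_subset_closedBall
  · rw [closure_compl, interior_closedBall _ one_ne_zero]
    intro z hz; simp only [mem_sphere, dist_zero_right] at hz; simp [hz]

theorem logOn_of_torsion {X : Type*} [TopologicalSpace X] {f : X → Angle} {A : Set X} {m : ℤ} (hm : m ≠ 0)
    (hf : ContinuousOn f A) (h : ∀ x ∈ A, m • f x = 0) : LogOn f A := by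
  have hfin := finite_torsion_angle (N := m.natAbs) (Int.natAbs_pos.2 hm)
  have hmem : ∀ x ∈ A, f x ∈ {θ : Angle | m.natAbs • θ = 0} := by
    intro x hx
    have h1 := h x hx
    show m.natAbs • f x = 0
    rcases Int.natAbs_eq m with h2 | h2
    · rw [h2, natCast_zsmul] at h1; exact h1
    · rw [h2, neg_smul, natCast_zsmul, neg_eq_zero] at h1; exact h1
  refine ⟨fun x => (f x).toReal, fun x hx => ?_, fun x hx => Angle.coe_toReal _⟩
  have h1 : ({θ : Angle | m.natAbs • θ = 0} \ {f x})ᶜ ∈ 𝓝 (f x) :=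
    (hfin.subset sdiff_subset).isClosed.isOpen_compl.mem_nhds (by simp)
  have h2 : ∀ᶠ y in 𝓝[A] x, (f y).toReal = (f x).toReal := by
    filter_upwards [(hf x hx) h1, self_mem_nhdsWithin] with y hy hyA
    by_contra hne
    exact hy ⟨hmem y hyA, fun h => hne (by rw [show f y = f x from h])⟩
  exact continuousWithinAt_const.congr_of_eventuallyEq h2 rfl

theorem LogOn.of_zsmul' {X : Type*} [TopologicalSpace X] {f : X → Angle} {A : Set X} {m : ℤ} (hm : m ≠ 0)
    (hf : ContinuousOn f A) (h : LogOn (fun x => m • f x) A) : LogOn f A := by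
  obtain ⟨φ, h1, h2⟩ := h
  have h3 : LogOn (fun x => ((φ x / m : ℝ) : Angle)) A := logOn_coe (h1.div_const _)
  have h4 : LogOn (fun x => f x - ((φ x / m : ℝ) : Angle)) A := by
    refine logOn_of_torsion hm (hf.sub h3.continuousOn) fun x hx => ?_
    have h5 : m • f x = (φ x : Angle) := (h2 x hx).symm
    rw [smul_sub, h5, ← Angle.coe_zsmul, zsmul_eq_mul, mul_div_cancel₀ _ (by exact_mod_cast hm), sub_self]
  exact (h3.add h4).congr fun x hx => by simp

/-- A map on `A` extending over a once-punctured planar membrane extends over the membrane if a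
nonzero multiple does. -/
theorem extTo_of_zsmul {A T : Set ℂ} {f : ℂ → Angle} {v : ℂ} {m : ℤ} (hA : IsClosed A) (hT : IsCompact T)
    (hAT : A ⊆ T) (hV : IsOpen (T \ A)) (hv : v ∈ T \ A) (hm : m ≠ 0) (h1 : ExtTo f A (T \ {v}))
    (h2 : ExtTo (fun z => m • f z) A T) : ExtTo f A T := by
  classical
  obtain ⟨F, hF, hFf⟩ := h1
  obtain ⟨G, hG, hGf⟩ := h2
  have hD : ContinuousOn (fun z => if z ∈ T \ A then G z - m • F z else 0) {v}ᶜ := by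
    refine contOn_of_closed_cover hT.isClosed hV.isClosed_compl (fun z _ => ?_) ?_ ?_
    · by_cases h : z ∈ T
      · exact Or.inl h
      · exact Or.inr fun h' => h h'.1
    · have hs : {v}ᶜ ∩ T ⊆ T \ {v} := fun z hz => ⟨hz.2, hz.1⟩
      refine ((hG.mono (hs.trans sdiff_subset)).sub ((hF.mono hs).const_smul m)).congr fun z hz => ?_
      by_cases h : z ∈ A
      · simp [h, hGf h, hFf h]
      · simp [h, hz.2]
    · refine (continuousOn_const (c := (0:Angle))).congr fun z hz => ?_
      exact if_neg hz.2
  obtain ⟨R, hR⟩ := hT.isBounded.exists_norm_le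
  have hN := nullAt_of_compact_support (R := R + 1) hD fun z hz => by
    rw [if_neg]; rintro ⟨h, -⟩
    have := hR z h; linarith
  have hN2 := (nullAt_of_continuousOn hV hv (hG.mono sdiff_subset)).sub hN
  obtain ⟨O, hO, hvO, hl⟩ := hN2
  have hFn : NullAt F v := by
    refine ⟨O ∩ (T \ A), hO.inter hV, ⟨hvO, hv⟩, LogOn.of_zsmul' hm (hF.mono fun z hz => ⟨hz.1.2.1, hz.2⟩) ?_⟩
    refine (hl.mono fun z hz => ⟨hz.1.1, hz.2⟩).congr fun z hz => ?_
    rw [if_pos hz.1.2, sub_sub_cancel]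
  obtain ⟨g, hg, hgF⟩ := hFn.repair hF (mem_of_superset (hV.mem_nhds hv) sdiff_subset) (hV.mem_nhds hv)
  exact ⟨g, hg, fun z hz => (hgF z fun h => h.2 hz).trans (hFf hz)⟩

/-- The degree argument: a membrane whose boundary map has nonzero linking number with the
point `x0` of the region `Ω` covers `Ω`. -/
theorem membrane_covers {Y : Type*} [MetricSpace Y] (hY : LocPlane (univ : Set Y)) {Ω : Set Y} (hΩ : IsOpen Ω)
    (hΩc : IsPreconnected Ω) {A T : Set ℂ} {f : ℂ → Angle} {F : ℂ → Y} {v : ℂ} {m : ℤ} {x0 y : Y} {u0 : Y → Angle}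
    (hA : IsClosed A) (hT : IsCompact T) (hAT : A ⊆ T) (hV : IsOpen (T \ A)) (hv : v ∈ T \ A) (hm : m ≠ 0)
    (h1 : ExtTo f A (T \ {v})) (h2 : ¬ ExtTo f A T) (hF : ContinuousOn F T) (hFV : MapsTo F (T \ A) Ω)
    (hFA : ∀ z ∈ A, F z ∉ Ω) (hu : ContinuousOn u0 {x0, y}ᶜ) (hg : IsGen u0 x0) (hx0 : x0 ∈ Ω) (hy : y ∉ Ω)
    (hyA : ∀ z ∈ A, F z ≠ y) (hl : LogOn (fun z => u0 (F z) - m • f z) A) : Ω ⊆ F '' (T \ A) := by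
  intro x hx
  by_contra hxF
  have key : ∃ u : Y → Angle, ContinuousOn u {x, y}ᶜ ∧ ∀ z ∉ Ω, u z = u0 z := by
    rcases eq_or_ne x x0 with rfl | hne
    · exact ⟨u0, hu, fun _ _ => rfl⟩
    obtain ⟨φ, hφ⟩ := exists_pair hΩ hΩc (LocPlane.of_univ hY hΩ) hx0 hx hne.symm
    obtain ⟨n, -, hn⟩ := hg.sign hφ.genl
    obtain ⟨u, hu1, hu2⟩ := hn.repair (T := {x, y}ᶜ) (W := Ω)
      ((hu.mono fun z hz => by
          simp only [Set.mem_sdiff, mem_compl_iff, mem_insert_iff, mem_singleton_iff] at hz ⊢; tauto).sub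
        ((hφ.cont.mono fun z hz => by
          simp only [Set.mem_sdiff, mem_compl_iff, mem_insert_iff, mem_singleton_iff] at hz ⊢; tauto).const_smul n))
      ((isClosed_singleton.union isClosed_singleton).isOpen_compl.mem_nhds (by
        simp only [mem_compl_iff, mem_union, mem_singleton_iff]; push Not
        exact ⟨hne.symm, fun h => hy (h ▸ hx0)⟩)) (hΩ.mem_nhds hx0)
    exact ⟨u, hu1, fun z hz => by rw [hu2 z hz, hφ.zero z hz]; simp⟩
  obtain ⟨u, hu1, hu2⟩ := key
  refine h2 (extTo_of_zsmul hA hT hAT hV hv hm h1 ?_)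
  obtain ⟨Λ, hΛ, hΛe⟩ := hl.extend hA
  refine ⟨fun z => u (F z) - Λ z, (hu1.comp hF fun z hz => ?_).sub (hΛ.continuousOn.mono (subset_univ _)), fun z hz => ?_⟩
  · simp only [mem_compl_iff, mem_insert_iff, mem_singleton_iff]; push Not
    by_cases hzA : z ∈ A
    · exact ⟨fun h => hFA z hzA (h ▸ hx), hyA z hzA⟩
    · exact ⟨fun h => hxF ⟨z, ⟨hz, hzA⟩, h⟩, fun h => hy (h ▸ hFV ⟨hz, hzA⟩)⟩
  · beta_reduce; rw [hΛe hz, hu2 _ (hFA z hz), sub_sub_cancel]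

/-- A circle-valued map without logarithm on a compact part of the disc spans a connected membrane. -/
theorem exists_connected_membrane {A : Set ℂ} {f : ℂ → Angle} (hA : IsClosed A) (hAD : A ⊆ closedBall 0 1)
    (hf : ContinuousOn f A) (hn : ¬ LogOn f A) : ∃ T, IsCompact T ∧ A ⊆ T ∧ T ⊆ closedBall 0 1 ∧ IsOpen (T \ A) ∧
      IsPreconnected (T \ A) ∧ (T \ A).Nonempty ∧ ¬ ExtTo f A T := by
  obtain ⟨T, hT, hAT, hTD, hTn, hmin, hTo, v, hv⟩ := exists_membrane (isCompact_closedBall (0:ℂ) 1) hA hAD hf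
    locPlane_complex (subset_univ _) (fun ⟨F, hF, hFe⟩ => hn (((acyc_disc F hF).mono hAD).congr hFe))
  have hTc := (isCompact_closedBall (0:ℂ) 1).of_isClosed_subset hT hTD
  refine ⟨T, hTc, hAT, hTD, hTo, ?_, ⟨v, hv⟩, hTn⟩
  set V := connectedComponentIn (T \ A) v
  have hVs : V ⊆ T \ A := connectedComponentIn_subset _ _
  have hVo : IsOpen V := hTo.connectedComponentIn
  have hvV : v ∈ V := mem_connectedComponentIn hv
  have hfr : frontier V ⊆ (T \ A)ᶜ := frontier_component hTo v
  have hclV : closure V ⊆ A ∪ V := by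
    intro z hz
    by_cases hzV : z ∈ V
    · exact Or.inr hzV
    · have hzT : z ∈ T := closure_minimal (hVs.trans sdiff_subset) hT hz
      have := hfr ⟨hz, fun h => hzV (interior_subset h)⟩
      exact Or.inl (by_contra fun h => this ⟨hzT, h⟩)
  have hcl1 : IsClosed (A ∪ V) := by
    refine isClosed_of_closure_subset ?_
    rw [closure_union, hA.closure_eq]
    exact union_subset subset_union_left hclV
  have hcl2 : IsClosed (T \ V) := hT.sdiff hVo
  obtain ⟨G, hG, hGe⟩ := hmin (T \ V) hcl2 (fun z hz => ⟨hAT hz, fun h => (hVs h).2 hz⟩) sdiff_subset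
    (fun h => by have h' := hv.1; rw [← h] at h'; exact h'.2 hvV)
  have heq : A ∪ V = T := by
    by_contra hne
    obtain ⟨F, hF, hFe⟩ := hmin (A ∪ V) hcl1 subset_union_left (union_subset hAT (hVs.trans sdiff_subset)) hne
    obtain ⟨K, hK, hKF, hKG⟩ := glue_closed hcl1 hcl2 hF hG (fun z hz hz' => by
      have hzA : z ∈ A := hz.resolve_right hz'.2
      rw [hFe hzA, hGe hzA])
    exact hTn ⟨K, hK.mono fun z hz => by
      by_cases h : z ∈ V
      · exact Or.inl (Or.inr h)
      · exact Or.inr ⟨hz, h⟩, fun z hz => (hKF (Or.inl hz)).trans (hFe hz)⟩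
  have : T \ A = V := by
    rw [← heq, union_sdiff_left, sdiff_eq_left]
    exact disjoint_left.2 fun z hz => (hVs hz).2
  rw [this]
  exact isPreconnected_connectedComponentIn

theorem IsJordan.small_nhd {Y : Type*} [MetricSpace Y] {γ N : Set Y} {q : Y} (hγ : IsJordan γ) (hq : q ∈ γ) (hN : N ∈ 𝓝 q) :
    ∃ J1 J2, J1 ⊆ N ∧ IsClosed J2 ∧ IsPreconnected J2 ∧ q ∉ J2 ∧ J1 ∪ J2 = γ := by
  obtain ⟨j, hc, hi, rfl⟩ := hγ
  obtain ⟨θ, rfl⟩ := hq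
  have hk : Continuous fun t : ℝ => j (θ + t) := hc.comp (continuous_const.add continuous_coeA)
  have h1 : (fun t : ℝ => j (θ + t)) ⁻¹' N ∈ 𝓝 (0:ℝ) := hk.continuousAt (by simpa using hN)
  obtain ⟨ε, hε, hεN⟩ := Metric.mem_nhds_iff.1 h1
  set δ := min (ε / 2) (π / 2)
  have hδ0 : 0 < δ := by positivity
  have hδ1 : δ < ε := (min_le_left _ _).trans_lt (by linarith)
  have hδ2 : δ ≤ π / 2 := min_le_right _ _
  refine ⟨(fun t : ℝ => j (θ + t)) '' Icc (-δ) δ, (fun t : ℝ => j (θ + t)) '' Icc δ (2 * π - δ), ?_,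
    (isCompact_Icc.image hk).isClosed, isPreconnected_Icc.image _ hk.continuousOn, ?_, ?_⟩
  · rintro _ ⟨t, ht, rfl⟩
    exact hεN (by rw [mem_ball, dist_zero_right, Real.norm_eq_abs, abs_lt]; constructor <;> linarith [ht.1, ht.2])
  · rintro ⟨t, ht, h⟩
    have h2 : ((t : ℝ) : Angle) = (0 : ℝ) := by simpa using hi h
    have := angle_inj h2 (by rw [abs_lt]; constructor <;> linarith [ht.1, ht.2])
    linarith [ht.1]
  · refine Subset.antisymm ?_ ?_
    · rintro _ (⟨t, -, rfl⟩ | ⟨t, -, rfl⟩) <;> exact mem_range_self _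
    · rintro _ ⟨α, rfl⟩
      have e : ((α - θ).toReal : Angle) = α - θ := Angle.coe_toReal _
      have b1 := (α - θ).neg_pi_lt_toReal
      have b2 := (α - θ).toReal_le_pi
      by_cases ha : (α - θ).toReal ≤ δ
      · by_cases hb : -δ ≤ (α - θ).toReal
        · exact Or.inl ⟨_, ⟨hb, ha⟩, by simp only [e]; congr 1; abel⟩
        · push Not at hb
          refine Or.inr ⟨(α - θ).toReal + 2 * π, ⟨by linarith, by linarith⟩, ?_⟩
          simp only [Angle.coe_add, e, Angle.coe_two_pi]; congr 1; abel
      · push Not at ha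
        exact Or.inr ⟨_, ⟨ha.le, by linarith⟩, by simp only [e]; congr 1; abel⟩

/-- A singularity on one side of a closed planar set is inessential if the map has a compactly
supported logarithm on that set. -/
theorem planar_null {G P : Set ℂ} {φ : ℂ → Angle} {lam : ℂ → ℝ} {p : ℂ} (hG : IsClosed G) (hl : ContinuousOn lam G)
    (hle : ∀ z ∈ G, (lam z : Angle) = φ z) (hl0 : ∀ z ∈ G, 1 ≤ ‖z‖ → lam z = 0) (h0 : ∀ z, 1 ≤ ‖z‖ → φ z = 0)
    (hP : IsOpen P) (hPG : Disjoint P G) (hPc : closure P ⊆ P ∪ G) (hp : p ∈ P) (hφ : ContinuousOn φ ((P ∪ G) \ {p})) :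
    NullAt φ p := by
  classical
  have hE : IsClosed {z : ℂ | 1 ≤ ‖z‖} := isClosed_le continuous_const continuous_norm
  obtain ⟨L0, hL0, hLl, hLE⟩ := glue_closed hG hE hl (continuousOn_const (c := (0:ℝ))) (fun z hz hz' => hl0 z hz hz')
  obtain ⟨L, hL, hLe⟩ := tietze (hG.union hE) hL0
  have hPGc : IsClosed (P ∪ G) := isClosed_of_closure_subset (by
    rw [closure_union, hG.closure_eq]; exact union_subset hPc subset_union_right)
  have hψ : ContinuousOn (fun z => if z ∈ P then φ z else (L z : Angle)) {p}ᶜ := by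
    refine contOn_of_closed_cover hPGc hP.isClosed_compl (fun z _ => ?_) ?_ ?_
    · by_cases h : z ∈ P
      · exact Or.inl (Or.inl h)
      · exact Or.inr h
    · refine (hφ.mono fun z hz => ⟨hz.2, hz.1⟩).congr fun z hz => ?_
      by_cases h : z ∈ P
      · simp [h]
      · have hzG := hz.2.resolve_left h
        simp only [h, if_false]
        rw [hLe (Or.inl hzG), hLl hzG, hle z hzG]
    · exact (continuous_coeA.comp hL).continuousOn.congr fun z hz => if_neg hz.2
  have hn := nullAt_of_compact_support (R := 1) hψ fun z hz => by
    split_ifs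
    · exact h0 z hz
    · rw [hLe (Or.inr hz), hLE hz]; simp
  exact hn.congr hP hp fun z hz _ => if_pos hz

/-- `O` is a window for the simple closed curve `γ`: maps supported in `O` with a logarithm on `γ`
have no essential isolated singularity on either side of `γ`. -/
structure Window {Y : Type*} [TopologicalSpace Y] (γ O W : Set Y) : Prop where
  isOpen : IsOpen O
  conn : IsPreconnected O
  sub : O ⊆ W
  null : ∀ φ : Y → Angle, (∀ z ∉ O, φ z = 0) → LogOn φ γ → ∀ P : Set Y, IsOpen P → Disjoint P γ →
    W ∩ closure P ⊆ P ∪ γ → ∀ p ∈ P ∩ O, ContinuousOn φ (((P ∪ γ) ∩ W) \ {p}) → NullAt φ p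

section window
variable {Y : Type*} [MetricSpace Y] {γ O W : Set Y} {q : Y}

theorem exists_window (hY : LocPlane (univ : Set Y)) (hγ : IsJordan γ) (hq : q ∈ γ) (hW : IsOpen W) (hqW : q ∈ W) :
    ∃ O, q ∈ O ∧ Window γ O W := by
  obtain ⟨e, he, h0, hr⟩ := hY.exists_chart (mem_univ q) hW hqW
  rw [univ_inter] at hr
  have hN : e '' ball 0 1 ∈ 𝓝 q := (he.isOpenMap _ isOpen_ball).mem_nhds ⟨0, by simp, h0⟩
  obtain ⟨J1, J2, hJ1, hJ2, hJ2c, hqJ2, hJ⟩ := hγ.small_nhd hq hN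
  have h1 : e ⁻¹' J2ᶜ ∩ ball 0 1 ∈ 𝓝 (0:ℂ) :=
    ((hJ2.isOpen_compl.preimage he.continuous).inter isOpen_ball).mem_nhds ⟨by rw [mem_preimage, h0]; exact hqJ2, by simp⟩
  obtain ⟨ρ, hρ, hρs⟩ := Metric.mem_nhds_iff.1 h1
  refine ⟨e '' ball 0 ρ, ⟨0, by simpa using hρ, h0⟩, he.isOpenMap _ isOpen_ball,
    (convex_ball _ _).isPreconnected.image _ he.continuous.continuousOn, (image_subset_range _ _).trans hr, ?_⟩
  intro φ hφ0 ⟨lam, hlc, hl⟩ P hP hPγ hPc p ⟨hpP, z0, hz0, hz0p⟩ hφ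
  subst hz0p
  -- on the long part of the curve the logarithm is a constant period
  have hperiod : ∃ n : ℤ, ∀ y ∈ J2, lam y = 2 * π * n := by
    obtain ⟨n, hn⟩ := log_unique hJ2c (hlc.mono (hJ ▸ subset_union_right)) (continuousOn_const (c := (0:ℝ)))
      (fun y hy => by
        rw [hl y (hJ ▸ Or.inr hy), hφ0 y]
        · simp
        · rintro ⟨w, hw, rfl⟩; exact (hρs hw).1 hy)
    exact ⟨n, fun y hy => by rw [hn y hy]; ring⟩
  obtain ⟨n, hn⟩ := hperiod
  rw [nullAt_chart he]
  have hγc := hγ.isClosed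
  refine planar_null (G := e ⁻¹' γ) (P := e ⁻¹' P) (lam := fun z => lam (e z) - 2 * π * n) (hγc.preimage he.continuous)
    ((hlc.comp he.continuous.continuousOn fun z hz => hz).sub continuousOn_const) ?_ ?_ ?_ (hP.preimage he.continuous)
    (hPγ.preimage e) ?_ hpP ?_
  · intro z hz
    rw [Angle.coe_sub, hl _ hz, two_pi_int_coe, sub_zero]
  · intro z hz hz1
    have : e z ∈ J2 := by
      have hz' : e z ∈ J1 ∪ J2 := by rw [hJ]; exact hz
      refine hz'.resolve_left fun h => ?_
      obtain ⟨w, hw, hwz⟩ := hJ1 h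
      rw [he.injective hwz] at hw
      rw [mem_ball_zero_iff] at hw; linarith
    rw [hn _ this, sub_self]
  · intro z hz
    refine hφ0 _ ?_
    rintro ⟨w, hw, hwz⟩
    rw [he.injective hwz] at hw
    have := (hρs hw).2
    rw [mem_ball_zero_iff] at this; linarith
  · intro z hz
    exact hPc ⟨hr (mem_range_self z), he.continuous.closure_preimage_subset _ hz⟩
  · refine hφ.comp he.continuous.continuousOn ?_
    rintro z ⟨hz, hzn⟩
    exact ⟨⟨hz, hr (mem_range_self z)⟩, fun h => hzn (he.injective h)⟩

/-- The degree of a circle-valued map on a simple closed curve. -/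
theorem exists_deg {g u : Y → Angle} (hγ : IsCompact γ) (hg : ContinuousOn g γ) (hgi : InjOn g γ) (hgs : g '' γ = univ)
    (hu : ContinuousOn u γ) : ∃ n : ℤ, LogOn (fun y => u y - n • g y) γ := by
  have hne : Nonempty Y := by
    have : (0 : Angle) ∈ g '' γ := hgs ▸ mem_univ _
    exact ⟨this.choose⟩
  have h1 := continuousOn_invFunOn hγ hg hgi
  rw [hgs] at h1
  have hm : ∀ θ, invFunOn g γ θ ∈ γ := fun θ => invFunOn_mem (by
    have : θ ∈ g '' γ := hgs ▸ mem_univ _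
    exact this)
  obtain ⟨n, hn⟩ := exists_degree (f := fun θ => u (invFunOn g γ θ)) (continuousOn_univ.1 (hu.comp h1 fun θ _ => hm θ))
  refine ⟨n, (hn.comp hg (mapsTo_univ _ _)).congr fun y hy => ?_⟩
  rw [hgi.leftInvOn_invFunOn hy]

variable {g : Y → Angle}

theorem Window.linking (hO : Window γ O W) (hY : LocPlane (univ : Set Y)) (hγ : IsCompact γ) (hg : ContinuousOn g γ) (hgi : InjOn g γ)
    (hgs : g '' γ = univ) {P Q : Set Y} (hP : IsOpen P) (hQ : IsOpen Q) (hPQ : Disjoint P Q) (hPγ : Disjoint P γ) (hQγ : Disjoint Q γ)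
    (hc : W ⊆ P ∪ Q ∪ γ) {x y : Y} (hx : x ∈ P ∩ O) (hy : y ∈ Q ∩ O) :
    ∃ (u : Y → Angle) (m : ℤ), m ≠ 0 ∧ Pair u x y O ∧ LogOn (fun z => u z - m • g z) γ := by
  have hxy : x ≠ y := fun h => disjoint_left.1 hPQ hx.1 (h ▸ hy.1)
  obtain ⟨u, hu⟩ := exists_pair hO.isOpen hO.conn (hY.of_univ hO.isOpen) hx.2 hy.2 hxy
  have huγ : ContinuousOn u γ := hu.cont.mono fun z hz h => by
    rcases h with rfl | rfl
    · exact disjoint_left.1 hPγ hx.1 hz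
    · exact disjoint_left.1 hQγ hy.1 hz
  obtain ⟨m, hm⟩ := exists_deg hγ hg hgi hgs huγ
  refine ⟨u, m, ?_, hu, hm⟩
  rintro rfl
  have h1 : LogOn u γ := hm.congr fun z _ => by simp
  have h2 := hO.null u hu.zero h1 P hP hPγ (fun z hz => by
    rcases hc hz.1 with (h | h) | h
    · exact Or.inl h
    · exact absurd hz.2 (disjoint_left.1 (hPQ.symm.closure_right hQ) h)
    · exact Or.inr h) x hx (hu.cont.mono fun z hz h => by
      rcases h with rfl | rfl
      · exact hz.2 rfl
      · rcases hz.1.1 with h | h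
        · exact disjoint_left.1 hPQ h hy.1
        · exact disjoint_left.1 hQγ hy.1 h)
  exact one_ne_zero (hu.genl.2.1 1 (h2.congr' fun z => (one_smul _ _).symm))

/-- A simple closed curve has at most two sides at each of its points. -/
theorem Window.not_three (hO : Window γ O W) (hY : LocPlane (univ : Set Y)) (hγ : IsJordan γ) {P : Fin 3 → Set Y}
    (hP : ∀ i, IsOpen (P i)) (hd : ∀ i j, i ≠ j → Disjoint (P i) (P j)) (hPγ : ∀ i, Disjoint (P i) γ)
    (hc : ∀ z ∈ W, z ∉ γ → ∃ i, z ∈ P i) (x : Fin 3 → Y) (hx : ∀ i, x i ∈ P i ∩ O) : False := by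
  obtain ⟨g, hg, hgi, hgs⟩ := hγ.exists_map
  have hne : ∀ i j, i ≠ j → x i ≠ x j := fun i j h h' => disjoint_left.1 (hd i j h) (hx i).1 (h' ▸ (hx j).1)
  have hcl : ∀ i, W ∩ closure (P i) ⊆ P i ∪ γ := fun i z hz => by
    by_cases h : z ∈ γ
    · exact Or.inr h
    · obtain ⟨j, hj⟩ := hc z hz.1 h
      by_cases hij : j = i
      · exact Or.inl (hij ▸ hj)
      · exact absurd hz.2 (disjoint_left.1 ((hd j i hij).closure_right (hP j)) hj)
  have hxm : ∀ i j, i ≠ j → ∀ z ∈ (P i ∪ γ), z ≠ x j := by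
    rintro i j h z hz rfl
    rcases hz with hz | hz
    · exact disjoint_left.1 (hd i j h) hz (hx j).1
    · exact disjoint_left.1 (hPγ j) (hx j).1 hz
  obtain ⟨u, hu⟩ := exists_pair hO.isOpen hO.conn (hY.of_univ hO.isOpen) (hx 0).2 (hx 1).2 (hne 0 1 (by decide))
  obtain ⟨v, hv⟩ := exists_pair hO.isOpen hO.conn (hY.of_univ hO.isOpen) (hx 0).2 (hx 2).2 (hne 0 2 (by decide))
  have cu : ∀ B : Set Y, (∀ z ∈ B, z ≠ x 0) → (∀ z ∈ B, z ≠ x 1) → ContinuousOn u B := fun B h1 h2 =>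
    hu.cont.mono fun z hz h => by
      rcases h with h | h
      · exact h1 z hz h
      · exact h2 z hz h
  have cv : ∀ B : Set Y, (∀ z ∈ B, z ≠ x 0) → (∀ z ∈ B, z ≠ x 2) → ContinuousOn v B := fun B h1 h2 =>
    hv.cont.mono fun z hz h => by
      rcases h with h | h
      · exact h1 z hz h
      · exact h2 z hz h
  have hγx : ∀ i, ∀ z ∈ γ, z ≠ x i := fun i z hz h => disjoint_left.1 (hPγ i) (hx i).1 (h ▸ hz)
  obtain ⟨m, hm⟩ := exists_deg hγ.isCompact hg hgi hgs (cu γ (hγx 0) (hγx 1))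
  obtain ⟨n, hn⟩ := exists_deg hγ.isCompact hg hgi hgs (cv γ (hγx 0) (hγx 2))
  have hlog : LogOn (fun z => n • u z - m • v z) γ := ((hm.zsmul n).sub (hn.zsmul m)).congr fun z _ => by
    rw [smul_sub, smul_sub, smul_smul, smul_smul, mul_comm m n]; abel
  have hn1 := hO.null _ (fun z hz => by rw [hu.zero z hz, hv.zero z hz]; simp) hlog (P 1) (hP 1) (hPγ 1) (hcl 1) _ (hx 1)
    (((cu _ (fun z hz => hxm 1 0 (by decide) z hz.1.1) fun z hz => hz.2).const_smul n).sub
      ((cv _ (fun z hz => hxm 1 0 (by decide) z hz.1.1) fun z hz => hxm 1 2 (by decide) z hz.1.1).const_smul m))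
  have hn2 : NullAt (fun z => m • v z) (x 1) := nullAt_of_continuousOn (hP 1) (hx 1).1
    ((cv _ (fun z hz => hxm 1 0 (by decide) z (Or.inl hz)) fun z hz => hxm 1 2 (by decide) z (Or.inl hz)).const_smul m)
  have hn0 := hu.genr.2.1 n ((hn1.add hn2).congr' fun z => by simp)
  subst hn0
  have hn3 := hO.null v hv.zero (hn.congr fun z _ => by simp) (P 2) (hP 2) (hPγ 2) (hcl 2) _ (hx 2)
    (cv _ (fun z hz => hxm 2 0 (by decide) z hz.1.1) fun z hz => hz.2)
  exact one_ne_zero (hv.genr.2.1 1 (hn3.congr' fun z => (one_smul _ _).symm))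

/-- Local connectedness of one side of a simple closed curve, the other side being nonempty. -/
theorem Window.side (hO : Window γ O W) (hY : LocPlane (univ : Set Y)) (hγ : IsJordan γ) (hW : IsOpen W) {P Q : Set Y}
    (hP : IsOpen P) (hQ : IsOpen Q) (hPQ : Disjoint P Q) (hPγ : Disjoint P γ) (hQγ : Disjoint Q γ)
    (hc : W ⊆ P ∪ Q ∪ γ) {x x' y : Y} (hx : x ∈ P ∩ O) (hx' : x' ∈ P ∩ O) (hy : y ∈ Q ∩ O) :
    x' ∈ connectedComponentIn (P ∩ W) x := by
  by_contra hn
  have := locallyConnectedSpace_of_locPlane hY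
  have hPW : IsOpen (P ∩ W) := hP.inter hW
  set K := connectedComponentIn (P ∩ W) x
  have hKs : K ⊆ P ∩ W := connectedComponentIn_subset _ _
  have hKo : IsOpen K := hPW.connectedComponentIn
  have hfr := frontier_component hPW x
  have hK2 : IsOpen ((P ∩ W) \ K) := by
    have : (P ∩ W) \ K = (P ∩ W) \ closure K := by
      refine Subset.antisymm (fun z hz => ⟨hz.1, fun h => hfr ⟨h, fun h' => hz.2 (interior_subset h')⟩ hz.1⟩)
        (sdiff_subset_sdiff_right subset_closure)
    rw [this]; exact hPW.sdiff isClosed_closure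
  refine hO.not_three hY hγ (P := ![K, (P ∩ W) \ K, Q]) ?_ ?_ ?_ ?_ ![x, x', y] ?_
  · intro i; fin_cases i
    exacts [hKo, hK2, hQ]
  · have d1 : Disjoint K ((P ∩ W) \ K) := disjoint_sdiff_right
    have d2 : Disjoint K Q := hPQ.mono_left (hKs.trans inter_subset_left)
    have d3 : Disjoint ((P ∩ W) \ K) Q := hPQ.mono_left (sdiff_subset.trans inter_subset_left)
    intro i j hij
    fin_cases i <;> fin_cases j <;> first | exact absurd rfl hij | skip
    exacts [d1, d2, d1.symm, d3, d2.symm, d3.symm]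
  · intro i; fin_cases i
    exacts [hPγ.mono_left (hKs.trans inter_subset_left), hPγ.mono_left (sdiff_subset.trans inter_subset_left), hQγ]
  · intro z hz hzγ
    rcases hc hz with (h | h) | h
    · by_cases hzK : z ∈ K
      · exact ⟨0, hzK⟩
      · exact ⟨1, ⟨h, hz⟩, hzK⟩
    · exact ⟨2, h⟩
    · exact absurd h hzγ
  · intro i; fin_cases i
    exacts [⟨mem_connectedComponentIn ⟨hx.1, hO.sub hx.2⟩, hx.2⟩, ⟨⟨⟨hx'.1, hO.sub hx'.2⟩, hn⟩, hx'.2⟩, hy]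

end window

/-! ### Infinite cyclic coverings -/

/-- The infinite cyclic covering pulled back from `ℝ → ℝ/2πℤ` along `p`. -/
abbrev Cov {S : Type*} (p : S → Angle) : Type _ := {q : S × ℝ // p q.1 = (q.2 : Angle)}

namespace Cov
variable {S : Type*} [MetricSpace S] {p : S → Angle}

/-- The covering projection. -/
def pr (q : Cov p) : S := q.1.1

/-- The height function of the covering. -/
def ht (q : Cov p) : ℝ := q.1.2

theorem continuous_pr : Continuous (pr : Cov p → S) := continuous_fst.comp continuous_subtype_val
theorem continuous_ht : Continuous (ht : Cov p → ℝ) := continuous_snd.comp continuous_subtype_val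
theorem coe_ht (q : Cov p) : (ht q : Angle) = p (pr q) := q.2.symm

theorem ext' {q q' : Cov p} (h1 : pr q = pr q') (h2 : ht q = ht q') : q = q' := Subtype.ext (Prod.ext h1 h2)

theorem eq_of_close {q q' : Cov p} (h1 : pr q = pr q') (h2 : |ht q - ht q'| < 2 * π) : q = q' :=
  ext' h1 (angle_inj (by rw [coe_ht, coe_ht, h1]) h2)

/-- The deck transformations. -/
noncomputable def shift (k : ℤ) (q : Cov p) : Cov p := ⟨(q.1.1, q.1.2 + 2 * π * k), by
  rw [Angle.coe_add, two_pi_int_coe, add_zero]; exact q.2⟩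

@[simp] theorem ht_shift (k : ℤ) (q : Cov p) : ht (shift k q) = ht q + 2 * π * k := rfl

theorem continuous_shift (k : ℤ) : Continuous (shift k : Cov p → Cov p) :=
  Continuous.subtype_mk (continuous_pr.prodMk (continuous_ht.add continuous_const)) _

theorem exists_shift {q q' : Cov p} (h : pr q = pr q') : ∃ k : ℤ, q' = shift k q := by
  have h1 : (ht q' : Angle) = ht q := by rw [coe_ht, coe_ht, h]
  obtain ⟨k, hk⟩ := Angle.angle_eq_iff_two_pi_dvd_sub.1 h1
  exact ⟨k, ext' h.symm (by rw [ht_shift]; linarith)⟩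

/-- The section of the covering given by a logarithm. -/
def lift {X : Type*} (F : X → S) (lam : X → ℝ) (h : ∀ x, (lam x : Angle) = p (F x)) (x : X) : Cov p := ⟨(F x, lam x), (h x).symm⟩

theorem continuous_lift' {X : Type*} [TopologicalSpace X] {F : X → S} {lam : X → ℝ} (h : ∀ x, (lam x : Angle) = p (F x))
    (hF : Continuous F) (hl : Continuous lam) : Continuous (lift F lam h) :=
  Continuous.subtype_mk (hF.prodMk hl) _

theorem exists_lift_chart (hp : Continuous p) {e : ℂ → S} (he : IsOpenEmbedding e) {q : Cov p} (h0 : e 0 = pr q) :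
    ∃ E : ℂ → Cov p, IsOpenEmbedding E ∧ E 0 = q ∧ ∀ z, pr (E z) = e z := by
  obtain ⟨φ0, hφ0, hφe0⟩ := acyc_complex (fun z => p (e z)) (hp.comp he.continuous).continuousOn
  obtain ⟨k, hk⟩ := Angle.angle_eq_iff_two_pi_dvd_sub.1 (show ((ht q : ℝ) : Angle) = φ0 0 by
    rw [coe_ht, ← h0, hφe0 0 trivial])
  rw [continuousOn_univ] at hφ0
  have hφe : ∀ z, ((φ0 z + 2 * π * k : ℝ) : Angle) = p (e z) := fun z => by
    rw [Angle.coe_add, two_pi_int_coe, add_zero, hφe0 z trivial]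
  have hφ : Continuous fun z => φ0 z + 2 * π * k := hφ0.add continuous_const
  generalize hψ : (fun z => φ0 z + 2 * π * k) = φ at hφ
  have hφe' : ∀ z, (φ z : Angle) = p (e z) := fun z => by rw [← hψ]; exact hφe z
  refine ⟨lift e φ hφe', ?_, ext' h0 ?_, fun z => rfl⟩
  · refine IsOpenEmbedding.of_continuous_injective_isOpenMap (continuous_lift' hφe' he.continuous hφ)
      (fun z z' h => he.injective (congrArg pr h)) fun O hO => ?_
    have h1 : lift e φ hφe' '' O = pr ⁻¹' (e '' O) ∩ {q : Cov p | |ht q - φ (invFun e (pr q))| < π} := by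
      ext q'
      constructor
      · rintro ⟨z, hz, rfl⟩
        refine ⟨⟨z, hz, rfl⟩, ?_⟩
        show |φ z - φ (invFun e (e z))| < π
        rw [leftInverse_invFun he.injective z, sub_self, abs_zero]; exact Real.pi_pos
      · rintro ⟨⟨z, hz, hzq⟩, hq⟩
        refine ⟨z, hz, eq_of_close hzq ?_⟩
        show |φ z - ht q'| < _
        have hq' : |ht q' - φ (invFun e (pr q'))| < π := hq
        rw [← hzq, leftInverse_invFun he.injective z, abs_sub_comm] at hq'
        linarith [Real.pi_pos]
    have h2 : IsOpen (pr ⁻¹' (e '' O) : Set (Cov p)) := (he.isOpenMap _ hO).preimage continuous_pr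
    have h3 : ContinuousOn (fun q : Cov p => |ht q - φ (invFun e (pr q))|) (pr ⁻¹' (e '' O)) := by
      refine ContinuousOn.abs (continuous_ht.continuousOn.sub (hφ.comp_continuousOn ?_))
      exact (continuousOn_invFun he).comp continuous_pr.continuousOn fun q hq => image_subset_range _ _ hq
    rw [h1]
    exact h3.isOpen_inter_preimage h2 isOpen_Iio
  · show φ 0 = ht q
    rw [← hψ]; beta_reduce; linarith

theorem locPlane (hS : LocPlane (univ : Set S)) (hp : Continuous p) : LocPlane (univ : Set (Cov p)) := by
  intro q _
  obtain ⟨e, he, h0, -⟩ := hS (pr q) trivial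
  obtain ⟨E, hE, hE0, -⟩ := exists_lift_chart hp he h0
  exact ⟨E, hE, hE0, subset_univ _⟩

theorem isOpenMap_pr (hS : LocPlane (univ : Set S)) (hp : Continuous p) : IsOpenMap (pr : Cov p → S) := by
  intro O hO
  rw [isOpen_iff_mem_nhds]
  rintro _ ⟨q, hq, rfl⟩
  obtain ⟨e, he, h0, -⟩ := hS (pr q) trivial
  obtain ⟨E, hE, hE0, hEe⟩ := exists_lift_chart hp he h0
  have h1 : IsOpen (e '' (E ⁻¹' O)) := he.isOpenMap _ (hO.preimage hE.continuous)
  refine mem_of_superset (h1.mem_nhds ⟨0, by rw [mem_preimage, hE0]; exact hq, h0⟩) ?_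
  rintro _ ⟨z, hz, rfl⟩
  exact ⟨E z, hz, hEe z⟩

theorem no_shift {Ω : Set (Cov p)} {R : ℝ} (hb : ∀ q ∈ Ω, |ht q| ≤ R) {k : ℤ} (hk : k ≠ 0) (hs : ∀ q ∈ Ω, shift k q ∈ Ω)
    {q : Cov p} (hq : q ∈ Ω) : False := by
  have h1 : ∀ n : ℕ, ∃ q' ∈ Ω, ht q' = ht q + 2 * π * k * n := by
    intro n
    induction n with
    | zero => exact ⟨q, hq, by simp⟩
    | succ n ih =>
      obtain ⟨q', hq', h⟩ := ih
      exact ⟨_, hs q' hq', by rw [ht_shift, h]; push_cast; ring⟩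
  obtain ⟨n, hn⟩ := exists_nat_gt (2 * R)
  obtain ⟨q', hq', h⟩ := h1 n
  have h2 := hb q' hq'
  have h3 := hb q hq
  have h4 : |2 * π * (k:ℝ) * n| ≤ 2 * R := by
    have : 2 * π * (k:ℝ) * n = ht q' - ht q := by rw [h]; ring
    rw [this]; exact (abs_sub _ _).trans (by linarith)
  rw [abs_mul, abs_mul, abs_of_pos Real.two_pi_pos, Nat.abs_cast] at h4
  have h5 : (1:ℝ) ≤ |(k:ℝ)| := by exact_mod_cast Int.one_le_abs hk
  have h6 : 1 ≤ 2 * π * |(k:ℝ)| := by nlinarith [Real.pi_gt_three]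
  nlinarith [Nat.cast_nonneg (α := ℝ) n]

/-- A connected part of the covering is moved into `Ω`, a component of `Z`, by any deck transformation
mapping it into `Z` and one of its points into `Ω`. -/
theorem shift_mem {Z : Set (Cov p)} {v q : Cov p} {k : ℤ} (hZ : ∀ q ∈ connectedComponentIn Z v, shift k q ∈ Z)
    (hq : q ∈ connectedComponentIn Z v) (hq' : shift k q ∈ connectedComponentIn Z v) :
    ∀ x ∈ connectedComponentIn Z v, shift k x ∈ connectedComponentIn Z v := by
  intro x hx
  have h1 : IsPreconnected (shift k '' connectedComponentIn Z v) :=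
    isPreconnected_connectedComponentIn.image _ (continuous_shift k).continuousOn
  have h2 := h1.subset_connectedComponentIn (F := Z) (mem_image_of_mem _ hq) (image_subset_iff.2 hZ)
  rw [connectedComponentIn_eq hq']
  exact h2 (mem_image_of_mem _ hx)

end Cov

section dual
variable {S : Type*} [MetricSpace S] {C γ : Set S} {r : ℝ}

open Classical in
/-- A circle-valued map dual to the boundary curve `γ` of `C`: it winds once around the circle
when `γ` is crossed from outside `C` to the inside. -/
noncomputable def dualMap (C γ : Set S) (r : ℝ) (x : S) : Angle :=
  if x ∈ C then ((2 * π * min 1 (infDist x γ / r) : ℝ) : Angle) else 0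

theorem continuous_dualMap (hC : IsClosed C) (hr : 0 < r) (hM : ∀ x ∈ frontier C \ γ, r ≤ infDist x γ) :
    Continuous (dualMap C γ r) := by
  rw [← continuousOn_univ]
  refine contOn_of_closed_cover hC (isOpen_interior (s := C)).isClosed_compl (fun x _ => ?_) ?_ ?_
  · by_cases h : x ∈ C
    · exact Or.inl h
    · exact Or.inr fun h' => h (interior_subset h')
  · refine (continuous_coeA.comp (continuous_const.mul (continuous_const.min ((continuous_infDist_pt γ).div_const r)))).continuousOn.congr
      fun x hx => if_pos hx.2
  · refine (continuousOn_const (c := (0:Angle))).congr fun x hx => ?_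
    by_cases h : x ∈ C
    · rw [dualMap, if_pos h]
      by_cases hx' : x ∈ γ
      · rw [infDist_zero_of_mem hx']; simp
      · have h1 := hM x ⟨⟨subset_closure h, hx.2⟩, hx'⟩
        have h2 : (1:ℝ) ≤ infDist x γ / r := by rw [le_div_iff₀ hr]; linarith
        rw [min_eq_left h2]; simp
    · exact if_neg h

theorem ht_out {q : Cov (dualMap C γ r)} (h : Cov.pr q ∉ C) : ∃ k : ℤ, Cov.ht q = 2 * π * k := by
  have h1 : (Cov.ht q : Angle) = (0 : ℝ) := by rw [Cov.coe_ht, dualMap, if_neg h]; simp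
  obtain ⟨k, hk⟩ := Angle.angle_eq_iff_two_pi_dvd_sub.1 h1
  exact ⟨k, by linarith⟩

theorem ht_in {q : Cov (dualMap C γ r)} (h : Cov.pr q ∈ C) :
    ∃ k : ℤ, Cov.ht q = 2 * π * (min 1 (infDist (Cov.pr q) γ / r) + k) := by
  have h1 : (Cov.ht q : Angle) = (2 * π * min 1 (infDist (Cov.pr q) γ / r) : ℝ) := by rw [Cov.coe_ht, dualMap, if_pos h]
  obtain ⟨k, hk⟩ := Angle.angle_eq_iff_two_pi_dvd_sub.1 h1
  exact ⟨k, by linarith⟩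

/-- The `n`-th lift of `γ` to the covering defined by the dual map. -/
def levelCurve (C γ : Set S) (r : ℝ) (n : ℤ) : Set (Cov (dualMap C γ r)) := {q | Cov.pr q ∈ γ ∧ Cov.ht q = 2 * π * n}

theorem abs_unit {a : ℝ} {c : ℝ} (h : |2 * π * a| < π * c) : |a| < c / 2 := by
  rw [abs_mul, abs_of_pos Real.two_pi_pos] at h
  have := Real.pi_pos
  by_contra h'
  push Not at h'
  nlinarith

theorem isOpen_low (hC : IsClosed C) (hr : 0 < r) (hγ : IsClosed γ) (hne : γ.Nonempty) (hγC : γ ⊆ C) (n : ℤ) :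
    IsOpen {q : Cov (dualMap C γ r) | Cov.ht q ≤ 2 * π * n ∧ q ∉ levelCurve C γ r n} := by
  rw [isOpen_iff_mem_nhds]
  rintro q ⟨h1, h2⟩
  rcases h1.lt_or_eq with h1 | h1
  · filter_upwards [(isOpen_Iio.preimage Cov.continuous_ht).mem_nhds h1] with q' hq'
    have hq'' : Cov.ht q' < 2 * π * n := hq'
    exact ⟨hq''.le, fun h => hq''.ne h.2⟩
  have hg : Cov.pr q ∉ γ := fun h => h2 ⟨h, h1⟩
  have hop : ∀ δ > 0, {q' : Cov (dualMap C γ r) | |Cov.ht q' - 2 * π * n| < δ} ∈ 𝓝 q := fun δ hδ =>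
    (isOpen_Iio.preimage (continuous_abs.comp (Cov.continuous_ht.sub continuous_const))).mem_nhds (by
      show |Cov.ht q - 2 * π * n| < δ
      rw [h1, sub_self, abs_zero]; exact hδ)
  by_cases hqC : Cov.pr q ∈ C
  · have hd : 0 < infDist (Cov.pr q) γ := (hγ.notMem_iff_infDist_pos hne).1 hg
    have hd2 : r / 2 < infDist (Cov.pr q) γ := by
      obtain ⟨k, hk⟩ := ht_in hqC
      by_contra hlt
      push Not at hlt
      have h3 : infDist (Cov.pr q) γ / r ≤ 1 / 2 := by rw [div_le_iff₀ hr]; linarith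
      have h4 : 0 < infDist (Cov.pr q) γ / r := by positivity
      rw [min_eq_right (by linarith), h1] at hk
      have h5 : (n:ℝ) = infDist (Cov.pr q) γ / r + k := by
        have := mul_left_cancel₀ (by positivity) hk; exact this
      have h6 : k < n := by exact_mod_cast (show (k:ℝ) < n by linarith)
      have h7 : n < k + 1 := by exact_mod_cast (show (n:ℝ) < k + 1 by linarith)
      omega
    filter_upwards [hop (π * (1/2)) (by positivity), (isOpen_Ioi.preimage ((continuous_infDist_pt γ).comp Cov.continuous_pr)).mem_nhds hd2]
      with q' h3 h4
    have h4' : r / 2 < infDist (Cov.pr q') γ := h4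
    have h3' : |Cov.ht q' - 2 * π * n| < π * (1/2) := h3
    have hg' : Cov.pr q' ∉ γ := fun h => by rw [infDist_zero_of_mem h] at h4'; linarith
    refine ⟨?_, fun h => hg' h.1⟩
    by_cases hq'C : Cov.pr q' ∈ C
    · obtain ⟨k, hk⟩ := ht_in hq'C
      have h5 : 1 / 2 < infDist (Cov.pr q') γ / r := by rw [lt_div_iff₀ hr]; linarith
      generalize hs : min 1 (infDist (Cov.pr q') γ / r) = s at hk
      have hs1 : s ≤ 1 := hs ▸ min_le_left _ _
      have hs2 : 1 / 2 < s := hs ▸ lt_min (by norm_num) h5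
      rw [hk, ← mul_sub] at h3'
      have h6 := abs_lt.1 (abs_unit h3')
      have h8 : k < n := by exact_mod_cast (show (k:ℝ) < n by linarith [h6.2])
      have h9 : (k:ℝ) + 1 ≤ n := by exact_mod_cast h8
      rw [hk]
      exact mul_le_mul_of_nonneg_left (by linarith) (by positivity)
    · obtain ⟨k, hk⟩ := ht_out hq'C
      rw [hk, ← mul_sub] at h3'
      have h6 := abs_lt.1 (abs_unit h3')
      have h8 : k < n + 1 := by exact_mod_cast (show (k:ℝ) < n + 1 by linarith [h6.2])
      have h9 : (k:ℝ) ≤ n := by exact_mod_cast (by omega : k ≤ n)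
      rw [hk]
      exact mul_le_mul_of_nonneg_left h9 (by positivity)
  · filter_upwards [hop (π * (1/2)) (by positivity), (hC.isOpen_compl.preimage Cov.continuous_pr).mem_nhds hqC] with q' h3 h4
    have h3' : |Cov.ht q' - 2 * π * n| < π * (1/2) := h3
    refine ⟨?_, fun h => h4 (hγC h.1)⟩
    obtain ⟨k, hk⟩ := ht_out h4
    rw [hk, ← mul_sub] at h3'
    have h6 := abs_lt.1 (abs_unit h3')
    have h8 : k < n + 1 := by exact_mod_cast (show (k:ℝ) < n + 1 by linarith [h6.2])
    have h9 : (k:ℝ) ≤ n := by exact_mod_cast (by omega : k ≤ n)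
    rw [hk]
    exact mul_le_mul_of_nonneg_left h9 (by positivity)

theorem dualMap_zero (hγC : γ ⊆ C) {x : S} (hx : x ∈ γ) : dualMap C γ r x = 0 := by
  rw [dualMap, if_pos (hγC hx), infDist_zero_of_mem hx]; simp

theorem isJordan_levelCurve (hγC : γ ⊆ C) (hγ : IsJordan γ) (n : ℤ) : IsJordan (levelCurve C γ r n) := by
  obtain ⟨j, hc, hi, rfl⟩ := hγ
  have h : ∀ θ, ((2 * π * n : ℝ) : Angle) = dualMap C (range j) r (j θ) := fun θ => by
    rw [dualMap_zero hγC (mem_range_self θ), two_pi_int_coe]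
  refine ⟨Cov.lift j (fun _ => 2 * π * n) h, Cov.continuous_lift' h hc continuous_const, fun a b hab => hi (congrArg Cov.pr hab), ?_⟩
  ext q
  constructor
  · rintro ⟨θ, rfl⟩; exact ⟨mem_range_self θ, rfl⟩
  · rintro ⟨⟨θ, hθ⟩, h2⟩; exact ⟨θ, Cov.ext' hθ h2.symm⟩

/-- Points of the covering near a level curve, on either side. -/
theorem exists_side_points (hγC : γ ⊆ C) (hr : 0 < r) (hγ : IsClosed γ) (hin : γ ⊆ closure (interior C \ γ)) (hout : γ ⊆ closure Cᶜ) {n : ℤ} {q : Cov (dualMap C γ r)}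
    (hq : q ∈ levelCurve C γ r n) {O : Set (Cov (dualMap C γ r))} (hO : O ∈ 𝓝 q) :
    (∃ y ∈ O, 2 * π * n < Cov.ht y) ∧ (∃ y ∈ O, Cov.ht y ≤ 2 * π * n ∧ y ∉ levelCurve C γ r n) := by
  have hpi := Real.pi_pos
  obtain ⟨ε, hε, hεO⟩ := Metric.mem_nhds_iff.1 hO
  constructor
  · have hc : ContinuousAt (fun x => 2 * π * (infDist x γ / r)) (Cov.pr q) :=
      (continuous_const.mul ((continuous_infDist_pt γ).div_const r)).continuousAt
    have h0 : 2 * π * (infDist (Cov.pr q) γ / r) = 0 := by rw [infDist_zero_of_mem hq.1]; simp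
    rw [ContinuousAt, h0] at hc
    have h1 : ∀ᶠ x in 𝓝 (Cov.pr q), 2 * π * (infDist x γ / r) < min ε (2 * π) :=
      hc (gt_mem_nhds (lt_min hε (by positivity)))
    obtain ⟨x, ⟨hx1, hx2⟩, hx⟩ := mem_closure_iff_nhds.1 (hin hq.1) _ (h1.and (ball_mem_nhds _ hε))
    have hd : 0 < infDist x γ := (hγ.notMem_iff_infDist_pos ⟨_, hq.1⟩).1 hx.2
    have hlt : infDist x γ / r < 1 := by
      have := hx1.trans_le (min_le_right _ _); nlinarith
    refine ⟨⟨(x, 2 * π * (infDist x γ / r) + 2 * π * n), ?_⟩, hεO ?_, ?_⟩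
    · rw [dualMap, if_pos (interior_subset hx.1), min_eq_right hlt.le, Angle.coe_add, two_pi_int_coe, add_zero]
    · rw [mem_ball, Subtype.dist_eq, Prod.dist_eq]
      refine max_lt hx2 ?_
      have : q.1.2 = 2 * π * n := hq.2
      rw [this, Real.dist_eq, add_sub_cancel_right, abs_of_pos (by positivity)]
      exact hx1.trans_le (min_le_left _ _)
    · show 2 * π * n < 2 * π * (infDist x γ / r) + 2 * π * n
      have : 0 < 2 * π * (infDist x γ / r) := by positivity
      linarith
  · obtain ⟨x, hx2, hx⟩ := mem_closure_iff_nhds.1 (hout hq.1) _ (ball_mem_nhds _ hε)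
    refine ⟨⟨(x, 2 * π * n), ?_⟩, hεO ?_, le_rfl, fun h => hx (hγC h.1)⟩
    · rw [dualMap, if_neg hx, two_pi_int_coe]
    · rw [mem_ball, Subtype.dist_eq, Prod.dist_eq]
      refine max_lt hx2 ?_
      have : q.1.2 = 2 * π * n := hq.2
      rw [this, dist_self]; exact hε

end dual

/-! ### Regions covered by a disc -/

theorem logOn_of_levels {X : Type*} [TopologicalSpace X] {f : X → Angle} {A : Set X} {lam : X → ℝ} (hl : ContinuousOn lam A)
    (hZ : ∀ x ∈ A, ∃ n : ℤ, lam x = 2 * π * n) (h : ∀ n : ℤ, LogOn f {x ∈ A | lam x = 2 * π * n}) : LogOn f A := by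
  choose φ hφ hφf using h
  have hr : ∀ {x : X} {n : ℤ}, lam x = 2 * π * n → round (lam x / (2 * π)) = n := fun {x n} h => by
    rw [h, mul_div_cancel_left₀ _ (by positivity), round_intCast]
  refine ⟨fun x => φ (round (lam x / (2 * π))) x, fun x hx => ?_, fun x hx => ?_⟩
  · obtain ⟨n, hn⟩ := hZ x hx
    have h1 : ∀ᶠ y in 𝓝[A] x, y ∈ {y ∈ A | lam y = 2 * π * n} := by
      have h2 : ∀ᶠ y in 𝓝[A] x, |lam y - lam x| < π * 2 := by
        have := hl x hx (ball_mem_nhds (lam x) (show 0 < π * 2 by positivity))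
        filter_upwards [this] with y hy
        exact hy
      filter_upwards [h2, self_mem_nhdsWithin] with y hy hyA
      obtain ⟨k, hk⟩ := hZ y hyA
      rw [hk, hn, ← mul_sub] at hy
      have h3 := abs_unit hy
      have h4 : |k - n| < 1 := by
        have : ((|k - n| : ℤ) : ℝ) < 1 := by push_cast; linarith
        exact_mod_cast this
      have h5 : k = n := by have := Int.abs_lt_one_iff.1 h4; omega
      exact ⟨hyA, by rw [hk, h5]⟩
    have h2 : ContinuousWithinAt (φ n) A x :=
      (hφ n x ⟨hx, hn⟩).mono_of_mem_nhdsWithin h1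
    refine h2.congr_of_eventuallyEq ?_ ?_
    · filter_upwards [h1] with y hy
      rw [hr hy.2]
    · rw [hr hn]
  · obtain ⟨n, hn⟩ := hZ x hx
    beta_reduce
    rw [hr hn, hφf n x ⟨hx, hn⟩]

/-- A connected planar membrane on which `g ∘ H` does not extend, mapped by `H` to the region `Ω`
with boundary values in the curve `γ`. -/
structure Memb {S : Type*} [TopologicalSpace S] (H : ℂ → S) (g : S → Angle) (γ Ω : Set S) (A T : Set ℂ) : Prop where
  closed : IsClosed A
  compact : IsCompact T
  sub : A ⊆ T
  disc : T ⊆ closedBall 0 1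
  isOpen : IsOpen (T \ A)
  conn : IsPreconnected (T \ A)
  ne : (T \ A).Nonempty
  noext : ¬ ExtTo (fun z => g (H z)) A T
  mapA : MapsTo H A γ
  mapV : MapsTo H (T \ A) Ω

/-- A membrane in `Ω` with boundary outside `Ω` covers `Ω`, if a pair of points `x ∈ Ω` and `y ∉ Ω` on
opposite sides of `γ` links its boundary. -/
theorem region_covered {Y : Type*} [MetricSpace Y] (hY : LocPlane (univ : Set Y)) {Ω γ O W P Q : Set Y} {A T : Set ℂ}
    {F : ℂ → Y} {f : ℂ → Angle} {g : Y → Angle} {x y : Y} {v : ℂ}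
    (hA : IsClosed A) (hT : IsCompact T) (hAT : A ⊆ T) (hV : IsOpen (T \ A)) (hVc : IsPreconnected (T \ A)) (hv : v ∈ T \ A)
    (hf : ContinuousOn f A) (hno : ¬ ExtTo f A T) (hF : ContinuousOn F T)
    (hΩ : IsOpen Ω) (hΩc : IsPreconnected Ω) (hFV : MapsTo F (T \ A) Ω) (hFA : ∀ z ∈ A, F z ∉ Ω)
    (hO : Window γ O W) (hγ : IsCompact γ) (hg : ContinuousOn g γ) (hgi : InjOn g γ) (hgs : g '' γ = univ)
    (hP : IsOpen P) (hQ : IsOpen Q) (hPQ : Disjoint P Q) (hPγ : Disjoint P γ) (hQγ : Disjoint Q γ)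
    (hc : W ⊆ P ∪ Q ∪ γ) (hx : x ∈ P ∩ O) (hxΩ : x ∈ Ω) (hy : y ∈ Q ∩ O) (hyΩ : y ∉ Ω) (hyA : ∀ z ∈ A, F z ≠ y)
    (hAcl : IsClosed (A \ F ⁻¹' γ)) (hAO : ∀ z ∈ A, F z ∉ γ → F z ∉ O) (hf1 : ∀ z ∈ A, F z ∈ γ → f z = g (F z))
    (hf0 : ∀ z ∈ A, F z ∉ γ → f z = 0) : Ω ⊆ F '' (T \ A) := by
  obtain ⟨u, m, hm, hu, hul⟩ := hO.linking hY hγ hg hgi hgs hP hQ hPQ hPγ hQγ hc hx hy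
  have h1 := extend_punctured hT hA hAT hf (LocPlane.of_univ locPlane_complex hV) hV hVc hno hv
  refine membrane_covers hY hΩ hΩc hA hT hAT hV hv hm h1 hno hF hFV hFA hu.cont hu.genl hxΩ hyΩ hyA ?_
  have hAγ : IsClosed (A ∩ F ⁻¹' γ) := (hF.mono hAT).preimage_isClosed_of_isClosed hA hγ.isClosed
  have l1 : LogOn (fun z => u (F z) - m • f z) (A ∩ F ⁻¹' γ) :=
    (hul.comp (hF.mono (inter_subset_left.trans hAT)) fun z hz => hz.2).congr fun z hz => by
      rw [hf1 z hz.1 hz.2]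
  have l2 : LogOn (fun z => u (F z) - m • f z) (A \ F ⁻¹' γ) :=
    (logOn_const (0 : Angle)).congr fun z hz => by
      rw [hf0 z hz.1 hz.2, hu.zero _ (hAO z hz.1 hz.2)]; simp
  refine (LogOn.union hAγ hAcl ?_ l1 l2).mono fun z hz => ?_
  · have : (A ∩ F ⁻¹' γ) ∩ (A \ F ⁻¹' γ) = ∅ := by ext z; simp only [mem_inter_iff, Set.mem_sdiff, mem_empty_iff_false]; tauto
    rw [this]; exact isPreconnected_empty
  · by_cases h : F z ∈ γ
    · exact Or.inl ⟨hz, h⟩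
    · exact Or.inr ⟨hz, h⟩

theorem Cov.injOn_pr {S : Type*} [MetricSpace S] {p : S → Angle} {Z : Set (Cov p)} {v : Cov p} {R : ℝ}
    (hb : ∀ q ∈ connectedComponentIn Z v, |Cov.ht q| ≤ R)
    (hs : ∀ k : ℤ, k ≠ 0 → (∀ q ∈ connectedComponentIn Z v, Cov.shift k q ∈ Z) ∨ (∀ q ∈ connectedComponentIn Z v, Cov.shift (-k) q ∈ Z)) :
    InjOn Cov.pr (connectedComponentIn Z v) := by
  intro q hq q' hq' h
  by_contra hne
  obtain ⟨k, hk⟩ := Cov.exists_shift h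
  have hk0 : k ≠ 0 := by rintro rfl; exact hne (Cov.ext' h (by rw [hk]; simp))
  have hk' : q = Cov.shift (-k) q' := Cov.ext' h (by rw [hk]; simp)
  rcases hs k hk0 with h1 | h1
  · exact Cov.no_shift hb hk0 (Cov.shift_mem h1 hq (hk ▸ hq')) hq
  · exact Cov.no_shift hb (neg_ne_zero.2 hk0) (Cov.shift_mem h1 hq' (hk' ▸ hq)) hq

theorem exists_closure_point {A T : Set ℂ} (hA : IsClosed A) (hT : IsCompact T) (hV : IsOpen (T \ A)) (hne : (T \ A).Nonempty) :
    ∃ z ∈ A, z ∈ closure (T \ A) := by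
  by_contra h
  push Not at h
  have hcl : IsClosed (T \ A) := isClosed_of_closure_subset fun z hz =>
    ⟨closure_minimal sdiff_subset hT.isClosed hz, fun h' => h z h' hz⟩
  have huniv : T \ A = univ := (isClopen_iff.1 ⟨hcl, hV⟩).resolve_left hne.ne_empty
  have : IsCompact (univ : Set ℂ) := by
    rw [← huniv]; exact hT.of_isClosed_subset hcl sdiff_subset
  exact noncompact_univ ℂ this

/-- If the boundary curve `γ` of `C` is essential for the preimage of `γ` in the disc, then it bounds a
compact region on one of its sides, covered by the disc. -/
theorem exists_region {S : Type*} [MetricSpace S] (hS : LocPlane (univ : Set S)) {C γ : Set S} {r : ℝ} {g : S → Angle}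
    {H : ℂ → S} (hC : IsClosed C) (hγ : IsJordan γ) (hγC : γ ⊆ C) (hr : 0 < r) (hM : ∀ x ∈ frontier C \ γ, r ≤ infDist x γ)
    (hin : γ ⊆ closure (interior C \ γ)) (hout : γ ⊆ closure Cᶜ) (hH : Continuous H) (hg : ContinuousOn g γ) (hgi : InjOn g γ)
    (hgs : g '' γ = univ) (hno : ¬ LogOn (fun z => g (H z)) (closedBall 0 1 ∩ H ⁻¹' γ)) :
    ∃ Ω A T, IsOpen Ω ∧ IsPreconnected Ω ∧ Disjoint Ω γ ∧ IsCompact (Ω ∪ γ) ∧ (closure Ω ∩ γ).Nonempty ∧ Memb H g γ Ω A T ∧ Ω ⊆ H '' (T \ A) ∧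
      ((∀ q ∈ γ, ∀ᶠ x in 𝓝 q, x ∈ Ω → x ∉ C) ∨ (∀ q ∈ γ, ∀ᶠ x in 𝓝 q, x ∈ Ω → x ∈ C)) := by
  have hpi := Real.pi_pos
  have hp := continuous_dualMap (γ := γ) hC hr hM
  have hY := Cov.locPlane hS hp
  have hlc := locallyConnectedSpace_of_locPlane hY
  obtain ⟨lam, hlam, hle⟩ := acyc_complex (fun z => dualMap C γ r (H z)) (hp.comp hH).continuousOn
  rw [continuousOn_univ] at hlam
  have hle' : ∀ z, (lam z : Angle) = dualMap C γ r (H z) := fun z => hle z trivial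
  set F : ℂ → Cov (dualMap C γ r) := Cov.lift H lam hle'
  have hF : Continuous F := Cov.continuous_lift' hle' hH hlam
  have hγcl := hγ.isClosed
  have hn : ∃ n : ℤ, ¬ LogOn (fun z => g (H z)) {z ∈ closedBall 0 1 ∩ H ⁻¹' γ | lam z = 2 * π * n} := by
    by_contra h
    push Not at h
    refine hno (logOn_of_levels hlam.continuousOn (fun z hz => ?_) h)
    have h1 : (lam z : Angle) = (0:ℝ) := by rw [hle', dualMap_zero hγC hz.2]; simp
    obtain ⟨k, hk⟩ := Angle.angle_eq_iff_two_pi_dvd_sub.1 h1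
    exact ⟨k, by linarith⟩
  obtain ⟨n, hn⟩ := hn
  set A := {z ∈ closedBall 0 1 ∩ H ⁻¹' γ | lam z = 2 * π * n}
  have hA : IsClosed A := (isClosed_closedBall.inter (hγcl.preimage hH)).inter (isClosed_eq hlam continuous_const)
  have hfA : ContinuousOn (fun z => g (H z)) A := hg.comp hH.continuousOn fun z hz => hz.1.2
  obtain ⟨T, hT, hAT, hTD, hVo, hVc, hVne, hext⟩ := exists_connected_membrane hA (fun z hz => hz.1.1) hfA hn
  obtain ⟨v, hv⟩ := hVne
  set L := levelCurve C γ r n with hL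
  have hLJ : IsJordan L := isJordan_levelCurve hγC hγ n
  have hLcl := hLJ.isClosed
  have hFL : ∀ z ∈ T, F z ∈ L ↔ z ∈ A := fun z hz => ⟨fun h => ⟨⟨hTD hz, h.1⟩, h.2⟩, fun h => ⟨h.1.2, h.2⟩⟩
  set Ω' := connectedComponentIn Lᶜ (F v) with hΩ'
  have hΩo : IsOpen Ω' := hLcl.isOpen_compl.connectedComponentIn
  have hΩc : IsPreconnected Ω' := isPreconnected_connectedComponentIn
  have hΩL : Ω' ⊆ Lᶜ := connectedComponentIn_subset _ _
  have hFV : MapsTo F (T \ A) Ω' := by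
    have h1 := (hVc.image F hF.continuousOn).subset_connectedComponentIn (F := Lᶜ) (mem_image_of_mem _ hv) (by
      rintro _ ⟨z, hz, rfl⟩ h; exact hz.2 ((hFL z hz.1).1 h))
    exact fun z hz => h1 (mem_image_of_mem _ hz)
  obtain ⟨z0, hz0, hz0c⟩ := exists_closure_point hA hT hVo ⟨v, hv⟩
  have hq0 : F z0 ∈ L := (hFL z0 (hAT hz0)).2 hz0
  have hq0c : F z0 ∈ closure Ω' := closure_mono (image_subset_iff.2 hFV) (image_closure_subset_closure_image hF (mem_image_of_mem _ hz0c))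
  obtain ⟨O, hq0O, hO⟩ := exists_window hY hLJ hq0 isOpen_univ trivial
  obtain ⟨⟨y1, hy1O, hy1⟩, y2, hy2O, hy2⟩ := exists_side_points hγC hr hγcl hin hout hq0 (hO.isOpen.mem_nhds hq0O)
  obtain ⟨x, hxO, hxΩ⟩ := mem_closure_iff_nhds.1 hq0c O (hO.isOpen.mem_nhds hq0O)
  have hUo : IsOpen {q : Cov (dualMap C γ r) | 2 * π * n < Cov.ht q} := isOpen_Ioi.preimage Cov.continuous_ht
  have hDo := isOpen_low hC hr hγcl hγ.nonempty hγC n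
  rw [← hL] at hDo hy2
  set U := {q : Cov (dualMap C γ r) | 2 * π * n < Cov.ht q}
  set D := {q : Cov (dualMap C γ r) | Cov.ht q ≤ 2 * π * n ∧ q ∉ L}
  have hUD : Disjoint U D := disjoint_left.2 fun q h h' => absurd h'.1 (not_le.2 h)
  have hUL : Disjoint U L := disjoint_left.2 fun q h h' => absurd h'.2 (ne_of_gt h)
  have hDL : Disjoint D L := disjoint_left.2 fun q h h' => h.2 h'
  have hcov : ∀ q, q ∈ U ∪ D ∪ L := fun q => by
    by_cases h : q ∈ L
    · exact Or.inr h
    · rcases lt_or_ge (2 * π * (n:ℝ)) (Cov.ht q) with h1 | h1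
      · exact Or.inl (Or.inl h1)
      · exact Or.inl (Or.inr ⟨h1, h⟩)
  have hgL : ContinuousOn (fun q => g (Cov.pr q)) L := hg.comp Cov.continuous_pr.continuousOn fun q hq => hq.1
  have hgLi : InjOn (fun q => g (Cov.pr q)) L := fun a ha b hb h => Cov.ext' (hgi ha.1 hb.1 h) (ha.2.trans hb.2.symm)
  have hgLs : (fun q => g (Cov.pr q)) '' L = univ := by
    refine eq_univ_of_forall fun θ => ?_
    obtain ⟨x, hx, rfl⟩ : θ ∈ g '' γ := hgs ▸ mem_univ θ
    exact ⟨⟨(x, 2 * π * n), by rw [dualMap_zero hγC hx, two_pi_int_coe]⟩, ⟨hx, rfl⟩, rfl⟩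
  have hsd : Ω' ⊆ U ∨ Ω' ⊆ D := hΩc.subset_or_subset hUo hDo hUD fun q hq => (hcov q).resolve_right (hΩL hq)
  have cov : ∀ {P Q : Set (Cov (dualMap C γ r))} {y : Cov (dualMap C γ r)}, IsOpen P → IsOpen Q → Disjoint P Q → Disjoint P L → Disjoint Q L →
      (∀ q, q ∈ P ∪ Q ∪ L) → Ω' ⊆ P → y ∈ Q ∩ O → Ω' ⊆ F '' (T \ A) := by
    intro P Q y hP hQ hPQ hPL hQL hc hΩP hy
    refine region_covered hY hA hT hAT hVo hVc hv hfA hext hF.continuousOn hΩo hΩc hFV (fun z hz h => hΩL h ((hFL z (hAT hz)).2 hz))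
      hO hLJ.isCompact hgL hgLi hgLs hP hQ hPQ hPL hQL (fun q _ => hc q) ⟨hΩP hxΩ, hxO⟩ hxΩ hy (fun h => disjoint_left.1 hPQ (hΩP h) hy.1)
      (fun z hz h => disjoint_left.1 hQL hy.1 (h ▸ (hFL z (hAT hz)).2 hz)) ?_ (fun z hz h => absurd ((hFL z (hAT hz)).2 hz) h) (fun z _ _ => rfl)
      (fun z hz h => absurd ((hFL z (hAT hz)).2 hz) h)
    have : A \ F ⁻¹' L = ∅ := sdiff_eq_empty.2 fun z hz => (hFL z (hAT hz)).2 hz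
    rw [this]; exact isClosed_empty
  have hcovd : Ω' ⊆ F '' (T \ A) := by
    rcases hsd with h | h
    · exact cov hUo hDo hUD hUL hDL hcov h ⟨hy2, hy2O⟩
    · exact cov hDo hUo hUD.symm hDL hUL (fun q => by rw [union_comm D U]; exact hcov q) h ⟨hy1, hy1O⟩
  have hFT : IsCompact (F '' T) := hT.image hF
  obtain ⟨R, hR⟩ : ∃ R, ∀ q ∈ Ω', |Cov.ht q| ≤ R := by
    obtain ⟨R, hR⟩ := (hT.image hlam).isBounded.exists_norm_le
    refine ⟨R, fun q hq => ?_⟩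
    obtain ⟨z, hz, rfl⟩ := hcovd hq
    exact hR _ (mem_image_of_mem _ hz.1)
  have hsh : ∀ {k : ℤ} {q}, (0 < k ∧ q ∈ U ∨ k < 0 ∧ q ∈ D) → Cov.shift k q ∈ Lᶜ := by
    rintro k q (⟨hk, h⟩ | ⟨hk, h⟩) h'
    · have h1 := h'.2
      rw [Cov.ht_shift] at h1
      have h2 : (0:ℝ) < k := by exact_mod_cast hk
      have h3 : 2 * π * n < Cov.ht q := h
      nlinarith
    · have h1 := h'.2
      rw [Cov.ht_shift] at h1
      have h2 : (k:ℝ) < 0 := by exact_mod_cast hk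
      have h3 : Cov.ht q ≤ 2 * π * n := h.1
      nlinarith
  have hinj : InjOn Cov.pr Ω' := by
    refine Cov.injOn_pr hR fun k hk => ?_
    rcases lt_or_gt_of_ne hk with h1 | h1 <;> rcases hsd with h | h
    · exact Or.inr fun q hq => hsh (Or.inl ⟨by omega, h hq⟩)
    · exact Or.inl fun q hq => hsh (Or.inr ⟨h1, h hq⟩)
    · exact Or.inl fun q hq => hsh (Or.inl ⟨h1, h hq⟩)
    · exact Or.inr fun q hq => hsh (Or.inr ⟨by omega, h hq⟩)
  have hclΩ : closure Ω' ⊆ Ω' ∪ L := fun q hq => by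
    by_cases h : q ∈ Ω'
    · exact Or.inl h
    · exact Or.inr (by_contra fun h' => frontier_component hLcl.isOpen_compl (F v) ⟨hq, fun h'' => h (interior_subset h'')⟩ h')
  -- no other lift of the curve meets the lifted region
  have hpγ : ∀ q ∈ Ω', Cov.pr q ∉ γ := by
    intro q hq hqγ
    have h1 : (Cov.ht q : Angle) = (2 * π * n : ℝ) := by rw [Cov.coe_ht, dualMap_zero hγC hqγ, two_pi_int_coe]
    obtain ⟨k, hk⟩ := Angle.angle_eq_iff_two_pi_dvd_sub.1 h1
    have hk0 : k ≠ 0 := by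
      rintro rfl
      refine hΩL hq ⟨hqγ, ?_⟩
      simp only [Int.cast_zero, mul_zero] at hk; linarith
    have h2 : Cov.shift k '' L ⊆ Ω' := by
      have h3 := (hLJ.isPreconnected.image _ (Cov.continuous_shift k).continuousOn).subset_connectedComponentIn (F := Lᶜ) (x := q)
        ⟨⟨(Cov.pr q, 2 * π * n), by rw [dualMap_zero hγC hqγ, two_pi_int_coe]⟩, ⟨hqγ, rfl⟩, Cov.ext' rfl (by
          rw [Cov.ht_shift]; show 2 * π * n + 2 * π * k = _; linarith)⟩ (by
          rintro _ ⟨q', hq', rfl⟩ h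
          have h4 := h.2
          rw [Cov.ht_shift, hq'.2] at h4
          have : 2 * π * (k:ℝ) = 0 := by linarith
          have : (k:ℝ) = 0 := by
            rcases mul_eq_zero.1 this with h5 | h5
            · linarith
            · exact h5
          exact hk0 (by exact_mod_cast this))
      rw [hΩ', connectedComponentIn_eq hq]; exact h3
    have h3 : Cov.shift k ⁻¹' Ω' ∈ 𝓝 (F z0) := (hΩo.preimage (Cov.continuous_shift k)).mem_nhds (h2 (mem_image_of_mem _ hq0))
    obtain ⟨q1, hq1, hq1'⟩ := mem_closure_iff_nhds.1 hq0c _ h3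
    have h4 := congrArg Cov.ht (hinj hq1 hq1' rfl)
    rw [Cov.ht_shift] at h4
    have : 2 * π * (k:ℝ) = 0 := by linarith
    rcases mul_eq_zero.1 this with h5 | h5
    · linarith
    · exact hk0 (by exact_mod_cast h5)
  have hclcpt : IsCompact (closure Ω') := hFT.of_isClosed_subset isClosed_closure
    (closure_minimal (hcovd.trans (image_mono sdiff_subset)) hFT.isClosed)
  have hX : Cov.pr '' Ω' ∪ γ = Cov.pr '' closure Ω' ∪ γ := by
    refine Subset.antisymm (union_subset_union_left _ (image_mono subset_closure)) (union_subset ?_ subset_union_right)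
    rintro _ ⟨q, hq, rfl⟩
    rcases hclΩ hq with h | h
    · exact Or.inl (mem_image_of_mem _ h)
    · exact Or.inr h.1
  refine ⟨Cov.pr '' Ω', A, T, Cov.isOpenMap_pr hS hp _ hΩo, hΩc.image _ Cov.continuous_pr.continuousOn, ?_, ?_, ?_,
    ⟨hA, hT, hAT, hTD, hVo, hVc, ⟨v, hv⟩, hext, fun z hz => hz.1.2, fun z hz => ⟨F z, hFV hz, rfl⟩⟩, ?_, ?_⟩
  · rw [disjoint_left]; rintro _ ⟨q, hq, rfl⟩; exact hpγ q hq
  · rw [hX]; exact (hclcpt.image Cov.continuous_pr).union hγ.isCompact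
  · exact ⟨H z0, image_closure_subset_closure_image Cov.continuous_pr (mem_image_of_mem _ hq0c), hz0.1.2⟩
  · rintro _ ⟨q, hq, rfl⟩
    obtain ⟨z, hz, rfl⟩ := hcovd hq
    exact ⟨z, hz, rfl⟩
  · -- heights in the lifted region tend to `2πn` near the curve
    have hlim : ∀ q ∈ γ, ∀ᶠ x in 𝓝 q, ∀ y ∈ Ω', Cov.pr y = x → |Cov.ht y - 2 * π * n| < π := by
      intro q hq
      have hK : IsCompact (closure Ω' ∩ {y | π ≤ |Cov.ht y - 2 * π * n|}) :=
        hclcpt.inter_right (isClosed_le continuous_const (continuous_abs.comp (Cov.continuous_ht.sub continuous_const)))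
      have h1 : q ∉ Cov.pr '' (closure Ω' ∩ {y | π ≤ |Cov.ht y - 2 * π * n|}) := by
        rintro ⟨y, ⟨hy, hy'⟩, rfl⟩
        rcases hclΩ hy with h | h
        · exact hpγ y h hq
        · have hy'' : π ≤ |Cov.ht y - 2 * π * n| := hy'
          rw [h.2, sub_self, abs_zero] at hy''; linarith
      filter_upwards [(hK.image Cov.continuous_pr).isClosed.isOpen_compl.mem_nhds h1] with x hx y hy hyx
      by_contra h
      exact hx ⟨y, ⟨subset_closure hy, not_lt.1 h⟩, hyx⟩
    rcases hsd with h | h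
    · right
      intro q hq
      filter_upwards [hlim q hq] with x hx
      rintro ⟨y, hy, rfl⟩
      by_contra hyC
      have h1 := hx y hy rfl
      obtain ⟨k, hk⟩ := ht_out hyC
      have h2 : 2 * π * n < Cov.ht y := h hy
      rw [hk, ← mul_sub] at h1
      have h3 := abs_lt.1 (abs_unit (c := 1) (by linarith))
      rw [hk] at h2
      have h4 : (n:ℝ) < k := lt_of_mul_lt_mul_left h2 (by positivity)
      have h5 : n < k := by exact_mod_cast h4
      have h6 : (n:ℝ) + 1 ≤ k := by exact_mod_cast h5
      linarith [h3.2]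
    · left
      intro q hq
      have hd : ∀ᶠ x in 𝓝 q, infDist x γ < r / 2 := (continuous_infDist_pt γ).continuousAt.eventually (gt_mem_nhds (by
        beta_reduce; rw [infDist_zero_of_mem hq]; positivity))
      filter_upwards [hlim q hq, hd] with x hx hxd
      rintro ⟨y, hy, rfl⟩ hyC
      have h1 := hx y hy rfl
      obtain ⟨k, hk⟩ := ht_in hyC
      have h2 : Cov.ht y ≤ 2 * π * n := (h hy).1
      have h7 : infDist (Cov.pr y) γ / r < 1 / 2 := by rw [div_lt_iff₀ hr]; linarith
      have h8 : 0 < infDist (Cov.pr y) γ / r := div_pos ((hγcl.notMem_iff_infDist_pos hγ.nonempty).1 (hpγ y hy)) hr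
      rw [min_eq_right (by linarith)] at hk
      rw [hk, ← mul_sub] at h1
      have h3 := abs_lt.1 (abs_unit (c := 1) (by linarith))
      rw [hk] at h2
      have h4 := le_of_mul_le_mul_left h2 (by positivity)
      have h5 : k < n := by exact_mod_cast (show (k:ℝ) < n by linarith)
      have h6 : (k:ℝ) + 1 ≤ n := by exact_mod_cast h5
      linarith [h3.1]

/-! ### Cells covered by a disc -/

/-- A complementary region of a Jordan curve which lies locally on the side `P` of the curve fills
up this whole side near the curve. -/
theorem full_side {S : Type*} [MetricSpace S] (hS : LocPlane (univ : Set S)) {Ω γ P Q : Set S} (hγ : IsJordan γ) (hΩ : IsOpen Ω)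
    (hΩγ : Disjoint Ω γ) (hX : IsClosed (Ω ∪ γ)) (hne : (closure Ω ∩ γ).Nonempty) (hP : IsOpen P) (hQ : IsOpen Q)
    (hPQ : Disjoint P Q) (hPγ : Disjoint P γ) (hQγ : Disjoint Q γ) (hc : ∀ q ∈ γ, ∀ᶠ x in 𝓝 q, x ∈ P ∪ Q ∪ γ)
    (hγP : γ ⊆ closure P) (hγQ : γ ⊆ closure Q) (hside : ∀ q ∈ γ, ∀ᶠ x in 𝓝 q, x ∈ Ω → x ∈ P) :
    ∀ q ∈ γ, ∀ᶠ x in 𝓝 q, (x ∈ Ω ↔ x ∈ P) := by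
  have key : ∀ q ∈ γ, q ∈ closure Ω → ∃ O, IsOpen O ∧ q ∈ O ∧ ∀ x ∈ O, (x ∈ Ω ↔ x ∈ P) := by
    intro q hq hqΩ
    obtain ⟨W, hW, hWo, hqW⟩ := _root_.mem_nhds_iff.1 ((hc q hq).and (hside q hq))
    obtain ⟨O, hqO, hO⟩ := exists_window hS hγ hq hWo hqW
    obtain ⟨x, hxO, hxΩ⟩ := mem_closure_iff.1 hqΩ O hO.isOpen hqO
    obtain ⟨y, hyO, hyQ⟩ := mem_closure_iff.1 (hγQ hq) O hO.isOpen hqO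
    refine ⟨O, hO.isOpen, hqO, fun x' hx' => ⟨fun h => (hW (hO.sub hx')).2 h, fun h => ?_⟩⟩
    have h1 := hO.side hS hγ hWo hP hQ hPQ hPγ hQγ (fun z hz => (hW hz).1) ⟨(hW (hO.sub hxO)).2 hxΩ, hxO⟩ ⟨h, hx'⟩ ⟨hyQ, hyO⟩
    have h2 : connectedComponentIn (P ∩ W) x ⊆ Ω := by
      refine isPreconnected_connectedComponentIn.subset_of_closure_inter_subset hΩ
        ⟨x, mem_connectedComponentIn ⟨(hW (hO.sub hxO)).2 hxΩ, hO.sub hxO⟩, hxΩ⟩ ?_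
      rintro z ⟨hz, hz'⟩
      have h3 := closure_minimal subset_union_left hX hz
      exact h3.resolve_right fun h => disjoint_left.1 hPγ (connectedComponentIn_subset _ _ hz').1 h
    exact h2 h1
  have hall : γ ⊆ closure Ω := by
    by_contra hn
    obtain ⟨q0, hq0, hq0'⟩ := not_subset.1 hn
    obtain ⟨q1, hq1, hq1'⟩ := hne
    have hin : ∀ q ∈ γ, q ∈ closure Ω → q ∈ interior (closure Ω ∪ γᶜ) := by
      intro q hq hqΩ
      obtain ⟨O, hO, hqO, hOP⟩ := key q hq hqΩ
      rw [mem_interior]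
      refine ⟨O, fun x hx => ?_, hO, hqO⟩
      by_cases hxγ : x ∈ γ
      · left
        rw [_root_.mem_closure_iff]
        intro N hN hxN
        obtain ⟨y, hy, hyP⟩ := mem_closure_iff.1 (hγP hxγ) (N ∩ O) (hN.inter hO) ⟨hxN, hx⟩
        exact ⟨y, hy.1, (hOP y hy.2).2 hyP⟩
      · exact Or.inr hxγ
    obtain ⟨x, hx, hx1, hx2⟩ := hγ.isPreconnected (interior (closure Ω ∪ γᶜ)) (closure Ω)ᶜ isOpen_interior isClosed_closure.isOpen_compl
      (fun q hq => by
        by_cases h : q ∈ closure Ω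
        · exact Or.inl (hin q hq h)
        · exact Or.inr h) ⟨q1, hq1', hin q1 hq1' hq1⟩ ⟨q0, hq0, hq0'⟩
    exact (interior_subset hx1).elim hx2 fun h => h hx
  intro q hq
  obtain ⟨O, hO, hqO, hOP⟩ := key q hq (hall hq)
  filter_upwards [hO.mem_nhds hqO] with x hx using hOP x hx

/-- The degree along `γ` of an angular function on `Ω ∪ γ` vanishes, since `γ` bounds a membrane in `Ω`. -/
theorem Memb.logOn {S : Type*} [MetricSpace S] {H : ℂ → S} {g w : S → Angle} {γ Ω : Set S} {A T : Set ℂ} (hm : Memb H g γ Ω A T)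
    (hH : Continuous H) (hγ : IsCompact γ) (hg : ContinuousOn g γ) (hgi : InjOn g γ) (hgs : g '' γ = univ)
    (hw : ContinuousOn w (Ω ∪ γ)) : LogOn w γ := by
  obtain ⟨d, hd⟩ := exists_deg hγ hg hgi hgs (hw.mono subset_union_right)
  rcases eq_or_ne d 0 with rfl | hd0
  · simpa using hd
  exfalso
  obtain ⟨v, hv⟩ := hm.ne
  have hgH : ContinuousOn (fun z => g (H z)) A := hg.comp hH.continuousOn hm.mapA
  have h1 := extend_punctured hm.compact hm.closed hm.sub hgH (LocPlane.of_univ locPlane_complex hm.isOpen) hm.isOpen hm.conn hm.noext hv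
  refine hm.noext (extTo_of_zsmul hm.closed hm.compact hm.sub hm.isOpen hv hd0 h1 ?_)
  obtain ⟨φ, hφ, hφe⟩ := hd.comp hH.continuousOn hm.mapA
  obtain ⟨Φ, hΦ, hΦe⟩ := tietze hm.closed hφ
  have hT : MapsTo H T (Ω ∪ γ) := fun z hz => by
    by_cases h : z ∈ A
    · exact Or.inr (hm.mapA h)
    · exact Or.inl (hm.mapV ⟨hz, h⟩)
  refine ⟨fun z => w (H z) - (Φ z : Angle), ?_, fun z hz => ?_⟩
  · exact (hw.comp hH.continuousOn hT).sub (continuous_coeA.comp hΦ).continuousOn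
  · have := hφe z hz
    beta_reduce at this ⊢
    rw [hΦe hz, this, sub_sub_cancel]

theorem ExtTo.sum {A T : Set ℂ} {ι : Type*} (s : Finset ι) {f : ι → ℂ → Angle} (h : ∀ i ∈ s, ExtTo (f i) A T) :
    ExtTo (fun z => ∑ i ∈ s, f i z) A T := by
  choose! F hF hFf using h
  refine ⟨fun z => ∑ i ∈ s, F i z, continuousOn_finsetSum _ fun i hi => hF i hi, fun z hz => ?_⟩
  exact Finset.sum_congr rfl fun i hi => hFf i hi hz

/-- If `f` does not extend, then its restriction to one of the level sets of an integral function
(extended by zero to the other level sets) does not extend either. -/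
theorem exists_level {A T : Set ℂ} {f : ℂ → Angle} {μ : ℂ → ℝ} (hA : IsCompact A) (hμ : ContinuousOn μ A)
    (hZ : ∀ z ∈ A, ∃ n : ℤ, μ z = 2 * π * n) (hno : ¬ ExtTo f A T) :
    ∃ m : ℤ, ¬ ExtTo (fun z => {z | μ z = 2 * π * m}.indicator f z) A T := by
  by_contra h
  push Not at h
  obtain ⟨R, hR⟩ := hA.exists_bound_of_continuousOn hμ
  obtain ⟨N, hN⟩ := exists_nat_ge (R / (2 * π))
  apply hno
  obtain ⟨F, hF, hFf⟩ := ExtTo.sum (Finset.Icc (-(N:ℤ)) N) fun i _ => h i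
  refine ⟨F, hF, fun z hz => ?_⟩
  rw [hFf hz]
  obtain ⟨n, hn⟩ := hZ z hz
  have hn' : n ∈ Finset.Icc (-(N:ℤ)) N := by
    have h1 := hR z hz
    rw [hn, Real.norm_eq_abs, abs_mul, abs_of_pos (by positivity : (0:ℝ) < 2 * π), mul_comm, ← le_div_iff₀ (by positivity)] at h1
    have h2 : ((|n| : ℤ) : ℝ) ≤ (N : ℤ) := by push_cast; linarith
    have h3 : |n| ≤ N := by exact_mod_cast h2
    rw [Finset.mem_Icc]
    exact abs_le.1 h3
  beta_reduce
  rw [Finset.sum_eq_single_of_mem n hn']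
  · exact indicator_of_mem (s := {z | μ z = 2 * π * n}) hn f
  · intro k _ hk
    refine indicator_of_notMem (s := {z | μ z = 2 * π * k}) (fun h => hk ?_) f
    have h1 : 2 * π * (k:ℝ) = 2 * π * n := h.symm.trans hn
    have h2 := mul_left_cancel₀ (by positivity) h1
    exact_mod_cast h2

/-- A logarithm on a complementary region of a Jordan curve extends to the curve. -/
theorem logOn_closure {S : Type*} [MetricSpace S] (hS : LocPlane (univ : Set S)) {Ω γ : Set S} {p : S → Angle} (hγ : IsJordan γ)
    (hΩ : IsOpen Ω) (hΩγ : Disjoint Ω γ) (hX : IsClosed (Ω ∪ γ)) (h1 : γ ⊆ closure Ω) (h2 : γ ⊆ closure (Ω ∪ γ)ᶜ) (hp : Continuous p)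
    (hl : LogOn p Ω) : LogOn p (Ω ∪ γ) := by
  obtain ⟨ψ, hψ, hψp⟩ := hl
  have key : ∀ x ∈ Ω ∪ γ, ∃ y : ℝ, Tendsto ψ (𝓝[Ω] x) (𝓝 y) ∧ (y : Angle) = p x := by
    rintro q (hq | hq)
    · exact ⟨ψ q, hψ q hq, hψp q hq⟩
    obtain ⟨e, he, h0, -⟩ := hS q trivial
    have hU := he.isOpen_range
    have hlog : LogOn p (range e) := by
      obtain ⟨φ, hφ, hφe⟩ := acyc_complex (fun z => p (e z)) (hp.comp he.continuous).continuousOn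
      refine ⟨fun x => φ (invFun e x), ?_, ?_⟩
      · exact (continuousOn_univ.1 hφ).comp_continuousOn (continuousOn_invFun he)
      · rintro _ ⟨z, rfl⟩
        beta_reduce
        rw [leftInverse_invFun he.injective z, hφe z trivial]
    obtain ⟨l, hlc, hlp⟩ := hlog
    have hqU : q ∈ range e := ⟨0, h0⟩
    obtain ⟨O, hqO, hO⟩ := exists_window hS hγ hq hU hqU
    obtain ⟨x, hxO, hxΩ⟩ := mem_closure_iff.1 (h1 hq) O hO.isOpen hqO
    obtain ⟨y, hyO, hyX⟩ := mem_closure_iff.1 (h2 hq) O hO.isOpen hqO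
    have hs : connectedComponentIn (Ω ∩ range e) x ⊆ Ω ∩ range e := connectedComponentIn_subset _ _
    obtain ⟨n, hn⟩ := log_unique isPreconnected_connectedComponentIn (hψ.mono fun z hz => (hs hz).1) (hlc.mono fun z hz => (hs hz).2)
      fun z hz => (hψp z (hs hz).1).trans (hlp z (hs hz).2).symm
    have hside : ∀ x' ∈ Ω ∩ O, ψ x' = l x' + 2 * π * n := fun x' hx' => hn x' <|
      hO.side hS hγ hU hΩ hX.isOpen_compl (disjoint_left.2 fun z hz hz' => hz' (Or.inl hz)) hΩγ
        (disjoint_left.2 fun z hz hz' => hz (Or.inr hz')) (fun z _ => by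
          by_cases h : z ∈ Ω ∪ γ
          · exact h.elim (fun h => Or.inl (Or.inl h)) Or.inr
          · exact Or.inl (Or.inr h)) ⟨hxΩ, hxO⟩ hx' ⟨hyX, hyO⟩
    refine ⟨l q + 2 * π * n, ?_, by rw [Angle.coe_add, two_pi_int_coe, add_zero, hlp q hqU]⟩
    have h3 : Tendsto (fun x => l x + 2 * π * n) (𝓝[Ω] q) (𝓝 (l q + 2 * π * n)) :=
      ((hlc.continuousAt (hU.mem_nhds hqU)).tendsto.mono_left nhdsWithin_le_nhds).add_const _
    refine h3.congr' ?_
    filter_upwards [self_mem_nhdsWithin, mem_nhdsWithin_of_mem_nhds (hO.isOpen.mem_nhds hqO)] with z hz hz' using (hside z ⟨hz, hz'⟩).symm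
  have hcl : Ω ∪ γ ⊆ closure Ω := union_subset subset_closure h1
  refine ⟨extendFrom Ω ψ, continuousOn_extendFrom hcl fun x hx => ?_, fun x hx => ?_⟩
  · obtain ⟨y, hy, -⟩ := key x hx
    exact ⟨y, hy⟩
  · obtain ⟨y, hy, hy'⟩ := key x hx
    rw [extendFrom_eq (hcl hx) hy, hy']

/-- A region bounded by a curve that bounds a membrane in it has no essential circle-valued maps. -/
theorem Memb.acyc {S : Type*} [MetricSpace S] (hS : LocPlane (univ : Set S)) {H : ℂ → S} {g : S → Angle} {γ Ω : Set S} {A T : Set ℂ}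
    (hm : Memb H g γ Ω A T) (hH : Continuous H) (hγ : IsJordan γ) (hg : ContinuousOn g γ) (hgi : InjOn g γ) (hgs : g '' γ = univ)
    (hΩ : IsOpen Ω) (hΩc : IsPreconnected Ω) (hΩγ : Disjoint Ω γ) (hX : IsClosed (Ω ∪ γ)) (h1 : γ ⊆ closure Ω)
    (h2 : γ ⊆ closure (Ω ∪ γ)ᶜ) : Acyc (Ω ∪ γ) := by
  intro w hw
  obtain ⟨φ, hφ, hφw⟩ := hm.logOn hH hγ.isCompact hg hgi hgs hw
  obtain ⟨Φ, hΦ, hΦe⟩ := tietze hγ.isClosed hφ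
  obtain ⟨p, hp, hpw, hpΦ⟩ := glue_closed hX hΩ.isClosed_compl hw (continuous_coeA.comp hΦ).continuousOn fun x hx hx' => by
    have hxγ := hx.resolve_left hx'
    rw [Function.comp_apply, hΦe hxγ, hφw x hxγ]
  have hpu : Ω ∪ γ ∪ Ωᶜ = univ := by ext x; simp only [mem_union, mem_compl_iff, mem_univ, iff_true]; tauto
  rw [hpu, continuousOn_univ] at hp
  refine LogOn.congr (logOn_closure hS hγ hΩ hΩγ hX h1 h2 hp ?_) fun x hx => hpw hx
  have hpγ : ∀ x ∈ γ, p x = (Φ x : Angle) := fun x hx => hpΦ fun h => disjoint_left.1 hΩγ h hx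
  have hY := Cov.locPlane hS hp
  have hlc := locallyConnectedSpace_of_locPlane hY
  obtain ⟨lam, hlam, hle⟩ := acyc_complex (fun z => p (H z)) (hp.comp hH).continuousOn
  rw [continuousOn_univ] at hlam
  have hle' : ∀ z, (lam z : Angle) = p (H z) := fun z => hle z trivial
  set F : ℂ → Cov p := Cov.lift H lam hle'
  have hF : Continuous F := Cov.continuous_lift' hle' hH hlam
  have hZ : ∀ z ∈ A, ∃ n : ℤ, lam z - Φ (H z) = 2 * π * n := fun z hz =>
    Angle.angle_eq_iff_two_pi_dvd_sub.1 ((hle' z).trans (hpγ _ (hm.mapA hz)))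
  obtain ⟨m, hno⟩ := exists_level (hm.compact.of_isClosed_subset hm.closed hm.sub) (hlam.sub (hΦ.comp hH)).continuousOn hZ hm.noext
  set f : ℂ → Angle := fun z => {z | lam z - Φ (H z) = 2 * π * m}.indicator (fun z => g (H z)) z
  set γ' : Set (Cov p) := {q | Cov.pr q ∈ γ ∧ Cov.ht q = Φ (Cov.pr q) + 2 * π * m}
  set W : Set (Cov p) := {q | |Cov.ht q - (Φ (Cov.pr q) + 2 * π * m)| < 2 * π}
  have hWo : IsOpen W := isOpen_lt ((Cov.continuous_ht.sub ((hΦ.comp Cov.continuous_pr).add continuous_const)).abs) continuous_const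
  have hWγ : ∀ q ∈ W, Cov.pr q ∈ γ → q ∈ γ' := fun q hq hqγ => ⟨hqγ, angle_inj (by
    rw [Cov.coe_ht, Angle.coe_add, two_pi_int_coe, add_zero, hpγ _ hqγ]) hq⟩
  have hγJ : IsJordan γ' := by
    obtain ⟨j, hc, hi, hjr⟩ := hγ
    have hj : ∀ θ, j θ ∈ γ := fun θ => hjr ▸ mem_range_self θ
    have h : ∀ θ, ((Φ (j θ) + 2 * π * m : ℝ) : Angle) = p (j θ) := fun θ => by
      rw [Angle.coe_add, two_pi_int_coe, add_zero, hpγ _ (hj θ)]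
    refine ⟨Cov.lift j _ h, Cov.continuous_lift' h hc (by fun_prop), fun a b hab => hi (congrArg Cov.pr hab), ?_⟩
    ext q
    constructor
    · rintro ⟨θ, rfl⟩; exact ⟨hj θ, rfl⟩
    · rintro ⟨h1, h2⟩
      obtain ⟨θ, hθ⟩ := hjr ▸ h1
      exact ⟨θ, Cov.ext' hθ (by rw [h2, ← hθ]; rfl)⟩
  have hFγ : ∀ z ∈ A, (F z ∈ γ' ↔ lam z - Φ (H z) = 2 * π * m) := fun z hz =>
    ⟨fun h => by have : lam z = Φ (H z) + 2 * π * m := h.2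
                 linarith, fun h => ⟨hm.mapA hz, by change lam z = Φ (H z) + 2 * π * m; linarith⟩⟩
  have hf1 : ∀ z ∈ A, F z ∈ γ' → f z = g (Cov.pr (F z)) := fun z hz h => indicator_of_mem (s := {z | lam z - Φ (H z) = 2 * π * m}) ((hFγ z hz).1 h) _
  have hf0 : ∀ z ∈ A, F z ∉ γ' → f z = 0 := fun z hz h => indicator_of_notMem (s := {z | lam z - Φ (H z) = 2 * π * m}) (fun h' => h ((hFγ z hz).2 h')) _
  have hA1 : IsClosed (A ∩ F ⁻¹' γ') := hm.closed.inter (hγJ.isClosed.preimage hF)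
  have hA2 : IsClosed (A \ F ⁻¹' γ') := by
    have : A \ F ⁻¹' γ' = A ∩ F ⁻¹' Wᶜ := by
      ext z
      refine and_congr_right fun hz => not_congr ⟨fun h => ?_, fun h => hWγ _ h (hm.mapA hz)⟩
      change |Cov.ht (F z) - (Φ (Cov.pr (F z)) + 2 * π * m)| < 2 * π
      rw [h.2, sub_self, abs_zero]; positivity
    rw [this]
    exact hm.closed.inter (hWo.isClosed_compl.preimage hF)
  have hgc : ContinuousOn (fun q : Cov p => g (Cov.pr q)) γ' := hg.comp Cov.continuous_pr.continuousOn fun q hq => hq.1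
  have hfc1 : ContinuousOn f (A ∩ F ⁻¹' γ') :=
    (hgc.comp hF.continuousOn fun z hz => hz.2).congr fun z hz => hf1 z hz.1 hz.2
  have hfc0 : ContinuousOn f (A \ F ⁻¹' γ') := (continuousOn_const (c := (0:Angle))).congr fun z hz => hf0 z hz.1 hz.2
  have hfc : ContinuousOn f A := by
    have := hfc1.union_of_isClosed hfc0 hA1 hA2
    rwa [inter_union_sdiff] at this
  obtain ⟨z0, hz0, hz0V⟩ : ∃ z ∈ A ∩ F ⁻¹' γ', z ∈ closure (T \ A) := by
    by_contra hcon
    push Not at hcon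
    apply hno
    obtain ⟨f', hf', hf'1, hf'0⟩ := glue_closed hA1 (hA2.union (isClosed_closure (s := T \ A))) hfc1
      (continuousOn_const (c := (0:Angle))) fun z hz hz' => (hz'.elim (fun h => h.2 hz.2) (hcon z hz)).elim
    refine ⟨f', hf'.mono fun z hz => ?_, fun z hz => ?_⟩
    · by_cases h1 : z ∈ A
      · by_cases h2 : F z ∈ γ'
        · exact Or.inl ⟨h1, h2⟩
        · exact Or.inr (Or.inl ⟨h1, h2⟩)
      · exact Or.inr (Or.inr (subset_closure ⟨hz, h1⟩))
    · by_cases h2 : F z ∈ γ'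
      · exact hf'1 ⟨hz, h2⟩
      · rw [hf'0 (Or.inl ⟨hz, h2⟩)]
        exact (hf0 z hz h2).symm
  obtain ⟨v, hv⟩ := hm.ne
  set P : Set (Cov p) := Cov.pr ⁻¹' Ω
  have hPo : IsOpen P := hΩ.preimage Cov.continuous_pr
  set Ω' := connectedComponentIn P (F v)
  have hΩ'o : IsOpen Ω' := hPo.connectedComponentIn
  have hΩ'P : Ω' ⊆ P := connectedComponentIn_subset _ _
  have hVΩ : F '' (T \ A) ⊆ Ω' := (hm.conn.image F hF.continuousOn).subset_connectedComponentIn ⟨v, hv, rfl⟩ (by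
    rintro _ ⟨z, hz, rfl⟩; exact hm.mapV hz)
  have hqW : F z0 ∈ W := by
    change |Cov.ht (F z0) - (Φ (Cov.pr (F z0)) + 2 * π * m)| < 2 * π
    rw [hz0.2.2, sub_self, abs_zero]; positivity
  obtain ⟨O, hqO, hO⟩ := exists_window hY hγJ hz0.2 hWo hqW
  obtain ⟨z1, hz1O, hz1⟩ := mem_closure_iff.1 hz0V (F ⁻¹' O) (hO.isOpen.preimage hF) hqO
  have hx := hVΩ ⟨z1, hz1, rfl⟩
  obtain ⟨_, ⟨y, hyO, rfl⟩, hyX⟩ := mem_closure_iff.1 (h2 hz0.2.1) _ (Cov.isOpenMap_pr hS hp O hO.isOpen) ⟨F z0, hqO, rfl⟩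
  have hAP : ∀ z ∈ A, F z ∉ P := fun z hz h => disjoint_left.1 hΩγ h (hm.mapA hz)
  have hcov : Ω' ⊆ F '' (T \ A) := by
    refine region_covered (Q := Cov.pr ⁻¹' (Ω ∪ γ)ᶜ) (g := fun q => g (Cov.pr q)) hY hm.closed hm.compact hm.sub hm.isOpen hm.conn hv hfc hno
      hF.continuousOn hΩ'o isPreconnected_connectedComponentIn (fun z hz => hVΩ ⟨z, hz, rfl⟩) (fun z hz h => hAP z hz (hΩ'P h)) hO
      hγJ.isCompact hgc (fun a ha b hb hab => ?_) ?_ hPo (hX.isOpen_compl.preimage Cov.continuous_pr)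
      (disjoint_left.2 fun z hz hz' => hz' (Or.inl hz)) (disjoint_left.2 fun z hz hz' => disjoint_left.1 hΩγ hz hz'.1)
      (disjoint_left.2 fun z hz hz' => hz (Or.inr hz'.1)) (fun q hq => ?_) ⟨hΩ'P hx, hz1O⟩ hx ⟨hyX, hyO⟩ (fun h => hyX (Or.inl (hΩ'P h)))
      (fun z hz h => hyX (Or.inr (h ▸ hm.mapA hz))) hA2 (fun z hz h h' => h (hWγ _ (hO.sub h') (hm.mapA hz))) hf1 hf0
    · have h3 := hgi ha.1 hb.1 hab
      exact Cov.ext' h3 (by rw [ha.2, hb.2, h3])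
    · rw [eq_univ_iff_forall]
      intro θ
      obtain ⟨x, hx, rfl⟩ : θ ∈ g '' γ := hgs ▸ mem_univ θ
      exact ⟨⟨(x, Φ x + 2 * π * m), by rw [Angle.coe_add, two_pi_int_coe, add_zero, hpγ x hx]⟩, ⟨hx, rfl⟩, rfl⟩
    · by_cases h : Cov.pr q ∈ Ω ∪ γ
      · exact h.elim (fun h => Or.inl (Or.inl h)) fun h => Or.inr (hWγ q hq h)
      · exact Or.inl (Or.inr h)
  obtain ⟨R, hR⟩ := hm.compact.exists_bound_of_continuousOn hlam.continuousOn
  have hinj : InjOn Cov.pr Ω' := Cov.injOn_pr (R := R) (fun q hq => by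
    obtain ⟨z, hz, rfl⟩ := hcov hq
    exact hR z hz.1) fun k _ => Or.inl fun q hq => show Cov.pr q ∈ Ω from hΩ'P hq
  have hsurj : Ω ⊆ Cov.pr '' Ω' := by
    refine hΩc.subset_of_closure_inter_subset (Cov.isOpenMap_pr hS hp _ hΩ'o) ⟨_, hΩ'P hx, _, hx, rfl⟩ ?_
    rintro x ⟨hx1, hx2⟩
    have hK : IsCompact (closure Ω') := (hm.compact.image hF).of_isClosed_subset isClosed_closure
      (closure_minimal (hcov.trans (image_mono sdiff_subset)) (hm.compact.image hF).isClosed)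
    obtain ⟨q, hq, rfl⟩ := closure_minimal (image_mono subset_closure) (hK.image Cov.continuous_pr).isClosed hx1
    by_cases h : q ∈ Ω'
    · exact ⟨q, h, rfl⟩
    · have : q ∈ frontier Ω' := by rw [hΩ'o.frontier_eq]; exact ⟨hq, h⟩
      exact (frontier_component hPo (F v) this hx2).elim
  have : Nonempty (Cov p) := ⟨F v⟩
  have hsurj' : ∀ x ∈ Ω, ∃ q ∈ Ω', Cov.pr q = x := hsurj
  choose! s hs hsx using hsurj'
  refine ⟨fun x => Cov.ht (s x), fun x hx => ContinuousAt.continuousWithinAt fun N hN => ?_, fun x hx => by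
    beta_reduce; rw [Cov.coe_ht, hsx x hx]⟩
  obtain ⟨N', hN', hN'o, hxN'⟩ := _root_.mem_nhds_iff.1 hN
  have := (Cov.isOpenMap_pr hS hp _ (hΩ'o.inter (hN'o.preimage Cov.continuous_ht))).mem_nhds ⟨s x, ⟨hs x hx, hxN'⟩, hsx x hx⟩
  rw [Filter.mem_map]
  filter_upwards [this]
  rintro _ ⟨q, hq, rfl⟩
  have hqΩ : Cov.pr q ∈ Ω := hΩ'P hq.1
  have h3 := hinj hq.1 (hs _ hqΩ) (hsx _ hqΩ).symm
  apply hN'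
  beta_reduce
  rw [← h3]
  exact hq.2

/-- If a disc in `S` winds around a boundary curve `γ` of `C` in an essential way, then `γ` bounds a
cell which is covered by the disc and lies, near `γ`, on one side of `γ`. -/
theorem exists_cell {S : Type*} [MetricSpace S] (hS : LocPlane (univ : Set S)) {C γ : Set S} {r : ℝ} {g : S → Angle}
    {H : ℂ → S} (hC : IsClosed C) (hγ : IsJordan γ) (hγC : γ ⊆ frontier C) (hr : 0 < r) (hM : ∀ x ∈ frontier C \ γ, r ≤ infDist x γ)
    (hnt : γ ⊆ closure (interior C)) (hH : Continuous H) (hg : ContinuousOn g γ) (hgi : InjOn g γ)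
    (hgs : g '' γ = univ) (hno : ¬ LogOn (fun z => g (H z)) (closedBall 0 1 ∩ H ⁻¹' γ)) :
    ∃ X, IsCell X γ ∧ X ⊆ H '' closedBall 0 1 ∧
      ((∀ q ∈ γ, ∀ᶠ x in 𝓝 q, (x ∈ X \ γ ↔ x ∉ C)) ∨ (∀ q ∈ γ, ∀ᶠ x in 𝓝 q, (x ∈ X \ γ ↔ x ∈ interior C))) := by
  have hγC' : γ ⊆ C := hγC.trans hC.frontier_subset
  have hIγ : Disjoint (interior C) γ := disjoint_left.2 fun x hx hxγ => (hγC hxγ).2 hx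
  have hout : γ ⊆ closure Cᶜ := fun x hx => by rw [closure_compl]; exact (hγC hx).2
  have e : interior C \ γ = interior C := sdiff_eq_left.2 hIγ
  obtain ⟨Ω, A, T, hΩ, hΩc, hΩγ, hX, hne, hm, hcov, hside⟩ := exists_region hS hC hγ hγC' hr hM (by rwa [e]) hout hH hg hgi hgs hno
  have hnear : ∀ q ∈ γ, ∀ᶠ x in 𝓝 q, x ∈ Cᶜ ∪ interior C ∪ γ := fun q hq => by
    have hd : ∀ᶠ x in 𝓝 q, infDist x γ < r := (continuous_infDist_pt γ).continuousAt.eventually (gt_mem_nhds (by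
      beta_reduce; rwa [infDist_zero_of_mem hq]))
    filter_upwards [hd] with x hx
    by_contra h
    simp only [mem_union, not_or, mem_compl_iff, not_not] at h
    exact (hM x ⟨⟨subset_closure h.1.1, h.1.2⟩, h.2⟩).not_gt hx
  have hCγ : Disjoint Cᶜ γ := disjoint_left.2 fun x hx hxγ => hx (hγC' hxγ)
  have hCI : Disjoint Cᶜ (interior C) := disjoint_left.2 fun x hx hxI => hx (interior_subset hxI)
  have eX : (Ω ∪ γ) \ γ = Ω := by rw [union_sdiff_right, sdiff_eq_left.2 hΩγ]
  have hfull : (∀ q ∈ γ, ∀ᶠ x in 𝓝 q, (x ∈ Ω ↔ x ∉ C)) ∨ (∀ q ∈ γ, ∀ᶠ x in 𝓝 q, (x ∈ Ω ↔ x ∈ interior C)) := by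
    refine hside.imp (fun h => ?_) fun h => ?_
    · exact full_side hS hγ hΩ hΩγ hX.isClosed hne hC.isOpen_compl isOpen_interior hCI hCγ hIγ hnear hout hnt h
    · refine full_side hS hγ hΩ hΩγ hX.isClosed hne isOpen_interior hC.isOpen_compl hCI.symm hIγ hCγ
        (fun q hq => (hnear q hq).mono fun x hx => by rwa [union_comm (interior C)]) hnt hout fun q hq => ?_
      filter_upwards [h q hq, hnear q hq] with x h1 h2 hx
      exact (h2.resolve_right fun h => disjoint_left.1 hΩγ hx h).resolve_left fun h' => h' (h1 hx)
  have h12 : γ ⊆ closure Ω ∧ γ ⊆ closure (Ω ∪ γ)ᶜ := by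
    have aux : ∀ {P Q : Set S}, Disjoint P Q → Disjoint Q γ → γ ⊆ closure P → γ ⊆ closure Q → (∀ q ∈ γ, ∀ᶠ x in 𝓝 q, (x ∈ Ω ↔ x ∈ P)) →
        γ ⊆ closure Ω ∧ γ ⊆ closure (Ω ∪ γ)ᶜ := by
      intro P Q hPQ hQγ hP hQ h
      constructor <;> intro q hq
      · refine mem_closure_iff_frequently.2 (((mem_closure_iff_frequently.1 (hP hq)).and_eventually (h q hq)).mono fun x hx => hx.2.2 hx.1)
      · refine mem_closure_iff_frequently.2 (((mem_closure_iff_frequently.1 (hQ hq)).and_eventually (h q hq)).mono fun x hx => ?_)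
        rintro (h' | h')
        · exact disjoint_left.1 hPQ (hx.2.1 h') hx.1
        · exact disjoint_left.1 hQγ hx.1 h'
    exact hfull.elim (aux hCI hIγ hout hnt) (aux hCI.symm hCγ hnt hout)
  have hcell : IsCell (Ω ∪ γ) γ := ⟨hX, hγ, subset_union_right, by rwa [eX], by rwa [eX], by
      rw [eX]
      obtain ⟨v, hv⟩ := hm.ne
      exact ⟨_, hm.mapV hv⟩, by rw [eX]; exact h12.1, h12.2,
    hm.acyc hS hH hγ hg hgi hgs hΩ hΩc hΩγ hX.isClosed h12.1 h12.2⟩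
  refine ⟨Ω ∪ γ, hcell, ?_, by rwa [eX]⟩
  have hK := ((isCompact_closedBall (0:ℂ) 1).image hH).isClosed
  have h3 : Ω ⊆ H '' closedBall 0 1 := hcov.trans (image_mono (sdiff_subset.trans hm.disc))
  exact union_subset h3 (h12.1.trans (closure_minimal h3 hK))

/-! ### One-dimensional manifolds -/

section onedim
variable {S : Type*} [MetricSpace S] {M s t : Set S} {a b c q : S}

/-- `M` is a one-dimensional manifold: each point is interior to an arc which is a neighbourhood in `M`. -/
def OneMfd (M : Set S) : Prop := ∀ q ∈ M, ∃ s a b, IsArc s a b ∧ s ⊆ M ∧ q ∈ s \ {a, b} ∧ s ∈ 𝓝[M] q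

theorem IsArc.concat (h1 : IsArc s a b) (h2 : IsArc t b c) (h : s ∩ t = {b}) : IsArc (s ∪ t) a c := by
  obtain ⟨u, hu, ui, rfl, rfl, rfl⟩ := h1
  obtain ⟨v, hv, vi, rfl, hv0, rfl⟩ := h2
  have hv' : ContinuousOn (fun x : ℝ => v (x - 1)) (Icc 1 2) := hv.comp (by fun_prop) fun x hx => ⟨by linarith [hx.1], by linarith [hx.2]⟩
  obtain ⟨F, hF, hFu, hFv⟩ := glue_closed isClosed_Icc isClosed_Icc hu hv' fun x hx hx' => by
    obtain rfl : x = 1 := le_antisymm hx.2 hx'.1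
    simp [hv0]
  have e : Icc (0:ℝ) 1 ∪ Icc 1 2 = Icc 0 2 := Icc_union_Icc_eq_Icc (by norm_num) (by norm_num)
  have e1 : F '' Icc 0 1 = u '' Icc 0 1 := hFu.image_eq
  have e2 : F '' Icc 1 2 = v '' Icc 0 1 := by
    rw [hFv.image_eq, ← image_image v (fun x : ℝ => x - 1), image_sub_const_Icc]; norm_num
  rw [e] at hF
  have cross : ∀ x ∈ Icc (0:ℝ) 1, ∀ y ∈ Icc (1:ℝ) 2, F x = F y → x = y := by
    intro x hx y hy hxy
    have hm : F x ∈ u '' Icc 0 1 ∩ v '' Icc 0 1 := ⟨e1 ▸ ⟨x, hx, rfl⟩, e2 ▸ ⟨y, hy, hxy.symm⟩⟩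
    rw [h, mem_singleton_iff] at hm
    have h1 : x = 1 := ui hx (by simp) (by rw [← hFu hx]; exact hm)
    have h2 : y - 1 = 0 := vi ⟨by linarith [hy.1], by linarith [hy.2]⟩ (by simp) (by
      have := hFv hy
      beta_reduce at this
      rw [← this, ← hxy, hm, hv0])
    linarith
  have hi : InjOn F (Icc 0 2) := by
    rw [← e]
    rintro x (hx | hx) y (hy | hy) hxy
    · exact ui hx hy (by rw [← hFu hx, ← hFu hy, hxy])
    · exact cross x hx y hy hxy
    · exact (cross y hy x hx hxy.symm).symm
    · have h3 := hFv hx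
      have h4 := hFv hy
      beta_reduce at h3 h4
      have := vi (x₁ := x - 1) (x₂ := y - 1) ⟨by linarith [hx.1], by linarith [hx.2]⟩ ⟨by linarith [hy.1], by linarith [hy.2]⟩ (by rw [← h3, ← h4, hxy])
      linarith
  have := IsArc.of_Icc (by norm_num : (0:ℝ) < 2) hF hi
  rw [← e, image_union, e1, e2] at this
  have h0 : F 0 = u 0 := hFu (by simp)
  have h2 : F 2 = v 1 := (hFv (by norm_num : (2:ℝ) ∈ Icc (1:ℝ) 2)).trans (by norm_num)
  rwa [h0, h2] at this

/-- Invariance of domain in dimension one. -/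
theorem OneMfd.arc_nhds (hM : OneMfd M) (hs : IsArc s a b) (hsM : s ⊆ M) (hq : q ∈ s \ {a, b}) : s ∈ 𝓝[M] q := by
  obtain ⟨c, x, y, ⟨γ, hγ, hγi, rfl, rfl, rfl⟩, hcM, hqc, hcq⟩ := hM q (hsM hq.1)
  have hinv := continuousOn_invFunOn isCompact_Icc hγ hγi
  set l := invFunOn γ (Icc 0 1)
  have hlγ : ∀ x ∈ γ '' Icc 0 1, γ (l x) = x := fun x hx => invFunOn_eq hx
  refine nhdsWithin_le_of_mem hcq ?_
  obtain ⟨α, hα, hαi, rfl, rfl, rfl⟩ := hs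
  rw [IsArc.diff_eq hαi] at hq
  obtain ⟨t, ht, rfl⟩ := hq
  have hαt : ContinuousAt α t := hα.continuousAt (Icc_mem_nhds ht.1 ht.2)
  have h1 : ∀ᶠ u in 𝓝 t, α u ∈ γ '' Icc 0 1 := by
    have h2 : ∀ᶠ u in 𝓝 t, u ∈ Icc (0:ℝ) 1 := Icc_mem_nhds ht.1 ht.2
    have h3 : Tendsto α (𝓝 t) (𝓝[M] (α t)) := tendsto_nhdsWithin_iff.2 ⟨hαt, h2.mono fun u hu => hsM ⟨u, hu, rfl⟩⟩
    exact h3 hcq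
  obtain ⟨δ, hδ, hδs⟩ := Metric.eventually_nhds_iff_ball.1 (h1.and (Ioo_mem_nhds ht.1 ht.2))
  have hsub : ∀ u ∈ Icc (t - δ / 2) (t + δ / 2), α u ∈ γ '' Icc 0 1 ∧ u ∈ Ioo (0:ℝ) 1 := fun u hu => hδs u (by
    rw [mem_ball, Real.dist_eq, abs_lt]; constructor <;> linarith [hu.1, hu.2])
  have hc : ContinuousOn (fun u => l (α u)) (Icc (t - δ / 2) (t + δ / 2)) :=
    hinv.comp (hα.mono fun u hu => Ioo_subset_Icc_self (hsub u hu).2) fun u hu => (hsub u hu).1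
  have hi : InjOn (fun u => l (α u)) (Icc (t - δ / 2) (t + δ / 2)) := fun u hu v hv huv =>
    hαi (Ioo_subset_Icc_self (hsub u hu).2) (Ioo_subset_Icc_self (hsub v hv).2) (by
      beta_reduce at huv
      rw [← hlγ _ (hsub u hu).1, huv, hlγ _ (hsub v hv).1])
  have htm : t ∈ Icc (t - δ / 2) (t + δ / 2) := ⟨by linarith, by linarith⟩
  have hle : t - δ / 2 ≤ t + δ / 2 := by linarith
  have hm1 : t - δ / 2 ∈ Icc (t - δ / 2) (t + δ / 2) := ⟨le_rfl, hle⟩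
  have hm2 : t + δ / 2 ∈ Icc (t - δ / 2) (t + δ / 2) := ⟨hle, le_rfl⟩
  have key : ∃ N ∈ 𝓝 (l (α t)), N ⊆ (fun u => l (α u)) '' Icc (t - δ / 2) (t + δ / 2) := by
    rcases hc.strictMonoOn_of_injOn_Icc' hle hi with h | h
    · exact ⟨_, Icc_mem_nhds (h hm1 htm (by linarith)) (h htm hm2 (by linarith)), intermediate_value_Icc hle hc⟩
    · exact ⟨_, Icc_mem_nhds (h htm hm2 (by linarith)) (h hm1 htm (by linarith)), intermediate_value_Icc' hle hc⟩
  obtain ⟨N, hN, hNs⟩ := key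
  filter_upwards [hinv (α t) (hsub t htm).1 hN, self_mem_nhdsWithin] with x hx hxc
  obtain ⟨u, hu, hux⟩ := hNs hx
  refine ⟨u, Ioo_subset_Icc_self (hsub u hu).2, ?_⟩
  beta_reduce at hux
  rw [← hlγ _ (hsub u hu).1, hux, hlγ x hxc]

theorem OneMfd.end_of_gap (hM : OneMfd M) (hs : IsArc s a b) (hsM : s ⊆ M) {β : ℝ → S} (hβ : ContinuousOn β (Icc 0 1)) (hβM : β '' Icc 0 1 ⊆ M)
    {u : ℝ} {I : Set ℝ} (hu : u ∈ Icc (0:ℝ) 1) (huI : u ∈ closure I) (hI : I ⊆ Icc 0 1) (hIs : ∀ v ∈ I, β v ∉ s) (hus : β u ∈ s) :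
    β u = a ∨ β u = b := by
  by_contra h
  have h1 := hM.arc_nhds hs hsM ⟨hus, h⟩
  have h2 : Tendsto β (𝓝[I] u) (𝓝[M] (β u)) := tendsto_nhdsWithin_iff.2 ⟨(hβ u hu).mono_left (nhdsWithin_mono u hI),
    eventually_nhdsWithin_of_forall fun v hv => hβM ⟨v, hI hv, rfl⟩⟩
  have h3 : ∀ᶠ v in 𝓝[I] u, False := by
    filter_upwards [h2 h1, self_mem_nhdsWithin] with v hv hvI using hIs v hvI hv
  rw [Filter.eventually_false_iff_eq_bot] at h3
  exact (mem_closure_iff_nhdsWithin_neBot.1 huI).ne h3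

/-- In a one-dimensional manifold without simple closed curves, an arc issuing from a point of
another arc can be merged with it. -/
theorem OneMfd.merge (hM : OneMfd M) (hJ : ∀ J ⊆ M, ¬ IsJordan J) (hs : IsArc s a b) (hsM : s ⊆ M) (ht : IsArc t c q) (htM : t ⊆ M)
    (hc : c ∈ s) : ∃ a' b', IsArc (s ∪ t) a' b' := by
  obtain ⟨β, hβ, hβi, rfl, rfl, rfl⟩ := ht
  set B := Icc (0:ℝ) 1 ∩ β ⁻¹' s
  have hBc : IsCompact B := isCompact_Icc.of_isClosed_subset (hβ.preimage_isClosed_of_isClosed isClosed_Icc hs.isClosed) inter_subset_left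
  have h0B : (0:ℝ) ∈ B := ⟨by simp, hc⟩
  obtain ⟨m, hmB, hm⟩ := hBc.exists_isGreatest ⟨0, h0B⟩
  have hsubB : Icc 0 m ⊆ B := by
    intro u hu
    by_contra huB
    obtain ⟨u1, hu1, hu1m⟩ := (hBc.inter_right (isClosed_Iic (a := u))).exists_isGreatest ⟨0, h0B, hu.1⟩
    obtain ⟨u2, hu2, hu2m⟩ := (hBc.inter_right (isClosed_Ici (a := u))).exists_isLeast ⟨m, hmB, hu.2⟩
    have h1 : u1 < u := lt_of_le_of_ne hu1.2 fun h => huB (h ▸ hu1.1)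
    have h2 : u < u2 := lt_of_le_of_ne hu2.2 fun h => huB (h ▸ hu2.1)
    have hI : Icc u1 u2 ⊆ Icc (0:ℝ) 1 := Icc_subset_Icc hu1.1.1.1 hu2.1.1.2
    have hgap : ∀ v ∈ Ioo u1 u2, β v ∉ s := fun v hv hvs => by
      have hvB : v ∈ B := ⟨hI (Ioo_subset_Icc_self hv), hvs⟩
      rcases le_total v u with h | h
      · exact (hu1m ⟨hvB, h⟩).not_gt hv.1
      · exact (hu2m ⟨hvB, h⟩).not_gt hv.2
    have hcl := closure_Ioo (h1.trans h2).ne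
    have e1 := hM.end_of_gap hs hsM hβ htM hu1.1.1 (by rw [hcl]; exact ⟨le_rfl, (h1.trans h2).le⟩) (Ioo_subset_Icc_self.trans hI) hgap hu1.1.2
    have e2 := hM.end_of_gap hs hsM hβ htM hu2.1.1 (by rw [hcl]; exact ⟨(h1.trans h2).le, le_rfl⟩) (Ioo_subset_Icc_self.trans hI) hgap hu2.1.2
    have hne : β u1 ≠ β u2 := fun h => (h1.trans h2).ne (hβi hu1.1.1 hu2.1.1 h)
    have harc := IsArc.of_Icc (h1.trans h2) (hβ.mono hI) (hβi.mono hI)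
    have hs' : IsArc s (β u1) (β u2) := by
      rcases e1 with e1 | e1 <;> rcases e2 with e2 | e2
      · exact (hne (e1.trans e2.symm)).elim
      · rw [e1, e2]; exact hs
      · rw [e1, e2]; exact hs.symm
      · exact (hne (e1.trans e2.symm)).elim
    refine hJ _ (union_subset hsM ((image_mono hI).trans htM)) (isJordan_glue hs' harc ?_)
    apply Subset.antisymm
    · rintro _ ⟨hx, v, hv, rfl⟩
      rcases hv.1.eq_or_lt with rfl | h3
      · exact Or.inl rfl
      rcases hv.2.eq_or_lt with rfl | h4
      · exact Or.inr rfl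
      exact (hgap v ⟨h3, h4⟩ hx).elim
    · rintro x (rfl | rfl)
      · exact ⟨hu1.1.2, harc.left_mem⟩
      · exact ⟨hu2.1.2, harc.right_mem⟩
  rcases hmB.1.2.eq_or_lt with rfl | hm1
  · refine ⟨a, b, ?_⟩
    rw [union_eq_left.2]
    · exact hs
    · rintro _ ⟨v, hv, rfl⟩; exact (hsubB hv).2
  have hgap : ∀ v ∈ Ioc m 1, β v ∉ s := fun v hv hvs => (hm ⟨⟨hmB.1.1.trans hv.1.le, hv.2⟩, hvs⟩).not_gt hv.1
  have hI : Icc m 1 ⊆ Icc (0:ℝ) 1 := Icc_subset_Icc_left hmB.1.1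
  have harc := IsArc.of_Icc hm1 (hβ.mono hI) (hβi.mono hI)
  have e1 := hM.end_of_gap hs hsM hβ htM hmB.1 (by rw [closure_Ioc hm1.ne]; exact ⟨le_rfl, hm1.le⟩) (Ioc_subset_Icc_self.trans hI) hgap hmB.2
  have eU : s ∪ β '' Icc 0 1 = s ∪ β '' Icc m 1 := by
    apply Subset.antisymm
    · refine union_subset subset_union_left ?_
      rintro _ ⟨v, hv, rfl⟩
      rcases le_total v m with h | h
      · exact Or.inl (hsubB ⟨hv.1, h⟩).2
      · exact Or.inr ⟨v, ⟨h, hv.2⟩, rfl⟩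
    · exact union_subset_union_right _ (image_mono hI)
  have hin : s ∩ β '' Icc m 1 = {β m} := by
    apply Subset.antisymm
    · rintro _ ⟨hx, v, hv, rfl⟩
      rcases hv.1.eq_or_lt with rfl | h3
      · rfl
      exact (hgap v ⟨h3, hv.2⟩ hx).elim
    · rintro x rfl
      exact ⟨hmB.2, harc.left_mem⟩
  rw [eU]
  rcases e1 with e1 | e1
  · exact ⟨b, β 1, IsArc.concat (e1 ▸ hs.symm) harc hin⟩
  · exact ⟨a, β 1, IsArc.concat (e1 ▸ hs) harc hin⟩

theorem subset_of_clopen {N B : Set S} (hN : IsPreconnected N) (hB : IsClosed B) (hne : (N ∩ B).Nonempty) (h : ∀ x ∈ N ∩ B, B ∈ 𝓝[N] x) : N ⊆ B := by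
  by_contra hn
  obtain ⟨y, hy, hyB⟩ := not_subset.1 hn
  obtain ⟨x, hx⟩ := hne
  have hin : ∀ x ∈ N ∩ B, x ∈ interior (B ∪ Nᶜ) := fun x hx => by
    obtain ⟨U, hU, hUB⟩ := mem_nhdsWithin_iff_exists_mem_nhds_inter.1 (h x hx)
    exact mem_interior_iff_mem_nhds.2 (mem_of_superset hU fun z hz => by
      by_cases hzN : z ∈ N
      · exact Or.inl (hUB ⟨hz, hzN⟩)
      · exact Or.inr hzN)
  obtain ⟨z, hz, hz1, hz2⟩ := hN _ _ isOpen_interior hB.isOpen_compl (fun z hz => by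
    by_cases hzB : z ∈ B
    · exact Or.inl (hin z ⟨hz, hzB⟩)
    · exact Or.inr hzB) ⟨x, hx.1, hin x hx⟩ ⟨y, hy, hyB⟩
  exact (interior_subset hz1).elim hz2 fun h => h hz

theorem IsArc.joinedIn (h : IsArc s a b) {x y : S} (hx : x ∈ s) (hy : y ∈ s) : JoinedIn s x y := by
  obtain ⟨γ, hγ, hi, rfl, -, -⟩ := h
  have : IsPathConnected (γ '' Icc 0 1) := ((convex_Icc (0:ℝ) 1).isPathConnected ⟨0, by simp⟩).image' hγ
  exact this.joinedIn x hx y hy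

theorem OneMfd.comp_nhds (hM : OneMfd M) {x : S} (hx : x ∈ pathComponentIn M q) : pathComponentIn M q ∈ 𝓝[M] x := by
  obtain ⟨s, a, b, hs, hsM, hxs, hn⟩ := hM x (pathComponentIn_subset hx)
  exact mem_of_superset hn fun y hy => JoinedIn.trans hx ((hs.joinedIn hxs.1 hy).mono hsM)

theorem OneMfd.comp (hM : OneMfd M) : OneMfd (pathComponentIn M q) := fun x hx => by
  obtain ⟨s, a, b, hs, hsM, hxs, hn⟩ := hM x (pathComponentIn_subset hx)
  exact ⟨s, a, b, hs, fun y hy => JoinedIn.trans hx ((hs.joinedIn hxs.1 hy).mono hsM), hxs, nhdsWithin_mono _ pathComponentIn_subset hn⟩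

theorem OneMfd.isClosed_comp (hM : OneMfd M) (hMc : IsClosed M) : IsClosed (pathComponentIn M q) := by
  refine isClosed_of_closure_subset fun x hx => ?_
  have hxM : x ∈ M := closure_minimal pathComponentIn_subset hMc hx
  have h1 := hM.comp_nhds (mem_pathComponentIn_self hxM)
  have h2 : ∃ᶠ y in 𝓝 x, y ∈ pathComponentIn M q := mem_closure_iff_frequently.1 hx
  obtain ⟨y, hy, hy'⟩ := (h2.and_eventually (mem_nhdsWithin_iff_eventually.1 h1)).exists
  exact JoinedIn.trans hy (hy' (pathComponentIn_subset hy)).symm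

theorem OneMfd.eq_of_isJordan (hM : OneMfd M) (hMc : IsPreconnected M) {J : Set S} (hJM : J ⊆ M) (hJ : IsJordan J) : J = M := by
  refine hJM.antisymm (subset_of_clopen hMc hJ.isClosed ?_ ?_)
  · obtain ⟨x, hx⟩ := hJ.nonempty
    exact ⟨x, hJM hx, hx⟩
  rintro x ⟨-, hx⟩
  have hJ' := hJ
  obtain ⟨j, hjc, hji, rfl⟩ := hJ'
  obtain ⟨θ, rfl⟩ := hx
  have hne : ∀ u v : ℝ, |u - v| < 6 → u ≠ v → j (θ + u) ≠ j (θ + v) := fun u v h h' he =>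
    h' (angle_inj (add_left_cancel (hji he)) (h.trans (by linarith [Real.pi_gt_three])))
  have h12 := hne 1 2 (by norm_num) (by norm_num)
  have h01 : j θ ≠ j (θ + (1:ℝ)) := by simpa using hne 0 1 (by norm_num) (by norm_num)
  have h02 : j θ ≠ j (θ + (2:ℝ)) := by simpa using hne 0 2 (by norm_num) (by norm_num)
  obtain ⟨J1, J2, hJ1, hJ2, hU, -⟩ := hJ.split (mem_range_self _) (mem_range_self _) h12
  have hq : j θ ∉ ({j (θ + (1:ℝ)), j (θ + (2:ℝ))} : Set S) := fun h => h.elim h01 h02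
  have hθ : j θ ∈ J1 ∪ J2 := hU ▸ mem_range_self θ
  rw [← hU] at hJM ⊢
  rcases hθ with h | h
  · exact mem_of_superset (hM.arc_nhds hJ1 (subset_union_left.trans hJM) ⟨h, hq⟩) subset_union_left
  · exact mem_of_superset (hM.arc_nhds hJ2 (subset_union_right.trans hJM) ⟨h, hq⟩) subset_union_right

/-- A path connected one-dimensional manifold is a simple closed curve, or all its compact subsets
lie in arcs. -/
theorem OneMfd.jordan_or_arc (hM : OneMfd M) (hMc : IsPathConnected M) :
    IsJordan M ∨ ∀ K ⊆ M, IsCompact K → ∃ s a b, IsArc s a b ∧ s ⊆ M ∧ K ⊆ s := by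
  by_cases hJ : ∃ J ⊆ M, IsJordan J
  · obtain ⟨J, hJM, hJ⟩ := hJ
    exact Or.inl (hM.eq_of_isJordan hMc.isConnected.isPreconnected hJM hJ ▸ hJ)
  right
  push Not at hJ
  intro K hKM hK
  have key : ∀ s a b, IsArc s a b → s ⊆ M → ∃ s' a' b', IsArc s' a' b' ∧ s' ⊆ M ∧ s ∪ K ⊆ s' := by
    refine hK.induction_on (p := fun K => ∀ s a b, IsArc s a b → s ⊆ M → ∃ s' a' b', IsArc s' a' b' ∧ s' ⊆ M ∧ s ∪ K ⊆ s')
      (fun s a b hs hsM => ⟨s, a, b, hs, hsM, by simp⟩) (fun K1 K2 h12 h s a b hs hsM => ?_) (fun K1 K2 h1 h2 s a b hs hsM => ?_)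
      fun x hx => ?_
    · obtain ⟨s', a', b', h1, h2, h3⟩ := h s a b hs hsM
      exact ⟨s', a', b', h1, h2, (union_subset_union_right _ h12).trans h3⟩
    · obtain ⟨s', a', b', h3, h4, h5⟩ := h1 s a b hs hsM
      obtain ⟨s'', a'', b'', h6, h7, h8⟩ := h2 s' a' b' h3 h4
      refine ⟨s'', a'', b'', h6, h7, ?_⟩
      rw [← union_assoc]
      exact (union_subset_union_left _ h5).trans h8
    · obtain ⟨t, c, d, ht, htM, hxt, hn⟩ := hM x (hKM hx)
      refine ⟨t, nhdsWithin_mono _ hKM hn, fun s a b hs hsM => ?_⟩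
      obtain ⟨s1, a1, b1, hs1, hs1M, hss1, hxs1⟩ : ∃ s1 a1 b1, IsArc s1 a1 b1 ∧ s1 ⊆ M ∧ s ⊆ s1 ∧ x ∈ s1 := by
        rcases eq_or_ne a x with rfl | hne
        · exact ⟨s, a, b, hs, hsM, Subset.rfl, hs.left_mem⟩
        obtain ⟨δ, hδM, hδ⟩ := exists_arc_of_joinedIn (hMc.joinedIn a (hsM hs.left_mem) x (hKM hx)) hne
        obtain ⟨a', b', h⟩ := hM.merge hJ hs hsM hδ hδM hs.left_mem
        exact ⟨_, a', b', h, union_subset hsM hδM, subset_union_left, Or.inr hδ.right_mem⟩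
      obtain ⟨β, hβ, hβi, rfl, rfl, rfl⟩ := ht
      rw [IsArc.diff_eq hβi] at hxt
      obtain ⟨τ, hτ, rfl⟩ := hxt
      have i1 : Icc 0 τ ⊆ Icc (0:ℝ) 1 := Icc_subset_Icc_right hτ.2.le
      have i2 : Icc τ 1 ⊆ Icc (0:ℝ) 1 := Icc_subset_Icc_left hτ.1.le
      have t1 := (IsArc.of_Icc hτ.1 (hβ.mono i1) (hβi.mono i1)).symm
      have t2 := IsArc.of_Icc hτ.2 (hβ.mono i2) (hβi.mono i2)
      have t1M := (image_mono i1).trans htM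
      have t2M := (image_mono i2).trans htM
      obtain ⟨a2, b2, h2⟩ := hM.merge hJ hs1 hs1M t1 t1M hxs1
      obtain ⟨a3, b3, h3⟩ := hM.merge hJ h2 (union_subset hs1M t1M) t2 t2M (Or.inl hxs1)
      refine ⟨_, a3, b3, h3, union_subset (union_subset hs1M t1M) t2M, union_subset (hss1.trans (subset_union_left.trans subset_union_left)) ?_⟩
      rintro _ ⟨v, hv, rfl⟩
      rcases le_total v τ with h | h
      · exact Or.inl (Or.inr ⟨v, ⟨hv.1, h⟩, rfl⟩)
      · exact Or.inr ⟨v, ⟨h, hv.2⟩, rfl⟩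
  obtain ⟨x, hx⟩ := hMc.nonempty
  obtain ⟨s, a, b, hs, hsM, -⟩ := hM x hx
  obtain ⟨s', a', b', h1, h2, h3⟩ := key s a b hs hsM
  exact ⟨s', a', b', h1, h2, subset_union_right.trans h3⟩

end onedim

/-! ### Surfaces with boundary inside surfaces -/

section half
variable {S : Type*} [MetricSpace S] {C : Set S} {U : Set C} {T : Set ℂ}

theorem chart_interior (hS : LocPlane (univ : Set S)) (h : U ≃ₜ T) {z : ℂ} (hz : z ∈ interior T) :
    ((h.symm ⟨z, interior_subset hz⟩ : U) : S) ∈ interior C := by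
  classical
  obtain ⟨r, hr, hrs⟩ := Metric.nhds_basis_closedBall.mem_iff.1 (mem_interior_iff_mem_nhds.1 hz)
  have hm : ∀ w ∈ closedBall (0 : ℂ) 1, z + r * w ∈ T := fun w hw => hrs (by
    rw [mem_closedBall_zero_iff] at hw
    simpa [abs_of_pos hr] using mul_le_of_le_one_right hr.le hw)
  set k : ℂ → S := fun w => if hw : z + r * w ∈ T then ((h.symm ⟨_, hw⟩ : U) : S) else
    ((h.symm ⟨z, interior_subset hz⟩ : U) : S) with hk
  have hkw : ∀ w (hw : w ∈ closedBall (0 : ℂ) 1), k w = ((h.symm ⟨_, hm w hw⟩ : U) : S) := fun w hw => by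
    simp only [hk, hm w hw, dif_pos]
  have h1 : ContinuousOn k (closedBall 0 1) := by
    rw [continuousOn_iff_continuous_domRestrict]
    have : Continuous fun w : closedBall (0 : ℂ) 1 => ((h.symm ⟨_, hm w w.2⟩ : U) : S) := by fun_prop
    exact this.congr fun w => (hkw w w.2).symm
  have h2 : InjOn k (closedBall 0 1) := by
    intro w hw w' hw' he
    rw [hkw w hw, hkw w' hw'] at he
    have := congrArg Subtype.val (h.symm.injective (Subtype.ext (Subtype.ext he)))
    simpa [hr.ne'] using this
  refine mem_interior.2 ⟨k '' ball 0 1, ?_, isOpen_image_ball hS h1 h2, 0, by simp, ?_⟩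
  · rintro _ ⟨w, hw, rfl⟩
    rw [hkw w (ball_subset_closedBall hw)]
    exact Subtype.coe_prop _
  · rw [hkw 0 (by simp)]
    simp

theorem interior_chart (hS : LocPlane (univ : Set S)) (hU : IsOpen U) (h : U ≃ₜ T) (y : U)
    (hy : ((y : C) : S) ∈ interior C) : (h y : ℂ) ∈ interior T := by
  obtain ⟨O, hO, rfl⟩ := isOpen_induced_iff.1 hU
  obtain ⟨e, he, h0, hr⟩ := (hS.of_univ isOpen_interior).exists_chart hy hO y.2
  have hC : ∀ w, e w ∈ C := fun w => interior_subset (hr ⟨w, rfl⟩).1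
  have hOe : ∀ w, (⟨e w, hC w⟩ : C) ∈ (Subtype.val ⁻¹' O : Set C) := fun w => (hr ⟨w, rfl⟩).2
  have hk : Continuous fun w => (h ⟨⟨e w, hC w⟩, hOe w⟩ : ℂ) := by
    have := he.continuous
    fun_prop
  have hi : Injective fun w => (h ⟨⟨e w, hC w⟩, hOe w⟩ : ℂ) := by
    intro w w' hw
    have := h.injective (Subtype.ext hw)
    exact he.injective (congrArg (fun u : (Subtype.val ⁻¹' O : Set C) => ((u : C) : S)) this)
  refine mem_interior.2 ⟨_, ?_, isOpen_image_ball locPlane_complex hk.continuousOn hi.injOn, 0, by simp, ?_⟩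
  · rintro _ ⟨w, -, rfl⟩
    exact Subtype.coe_prop _
  · exact congrArg (fun u => (h u : ℂ)) (Subtype.ext (Subtype.ext h0))

/-- By invariance of domain, the frontier of `C` consists of the boundary points of `C`. -/
theorem half_frontier (hS : LocPlane (univ : Set S)) (hC : IsClosed C)
    (hsurf : ∀ x : C, ∃ U : Set C, IsOpen U ∧ x ∈ U ∧
      (Nonempty (U ≃ₜ (univ : Set ℂ)) ∨ Nonempty (U ≃ₜ {z : ℂ | 0 ≤ z.im}))) :
    OneMfd (frontier C) ∧ frontier C ⊆ closure (interior C) := by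
  have hin : interior {z : ℂ | 0 ≤ z.im} = {z | 0 < z.im} := Complex.interior_setOfPred_le_im 0
  have key : ∀ q ∈ frontier C, ∃ (hq : q ∈ C) (U : Set C) (_ : IsOpen U) (_ : (⟨q, hq⟩ : C) ∈ U)
      (h : U ≃ₜ {z : ℂ | 0 ≤ z.im}), ∀ y : U, ((y : C) : S) ∈ frontier C ↔ (h y : ℂ).im = 0 := by
    intro q hq
    have hqC := hC.frontier_subset hq
    rw [hC.frontier_eq] at hq ⊢
    obtain ⟨U, hU, hqU, ⟨⟨h⟩⟩ | ⟨⟨h⟩⟩⟩ := hsurf ⟨q, hqC⟩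
    · have := chart_interior hS h (z := h ⟨⟨q, hqC⟩, hqU⟩) (by simp)
      simp at this
      exact absurd this hq.2
    · refine ⟨hqC, U, hU, hqU, h, fun y => ?_⟩
      have h1 : ((y : C) : S) ∈ interior C ↔ 0 < (h y : ℂ).im := by
        constructor
        · intro hy
          have := interior_chart hS hU h y hy
          rwa [hin] at this
        · intro hy
          have := chart_interior hS h (z := h y) (hin ▸ hy)
          simpa using this
      have h2 : 0 ≤ (h y : ℂ).im := (h y).2
      rw [Set.mem_sdiff, h1, not_lt]
      exact ⟨fun h => le_antisymm h.2 h2, fun h => ⟨Subtype.coe_prop _, h.le⟩⟩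
  constructor
  · intro q hq
    obtain ⟨hqC, U, hU, hqU, h, hh⟩ := key q hq
    set z0 : ℂ := (h ⟨⟨q, hqC⟩, hqU⟩).1 with hz0
    have hz : z0.im = 0 := (hh ⟨⟨q, hqC⟩, hqU⟩).1 hq
    have hm : ∀ t : ℝ, z0 + t ∈ {z : ℂ | 0 ≤ z.im} := fun t => by simp [hz]
    set γ : ℝ → S := fun t => ((h.symm ⟨_, hm t⟩ : U) : S) with hγ
    have hc : Continuous γ := by fun_prop
    have hi : Injective γ := by
      intro t t' he
      have := congrArg Subtype.val (h.symm.injective (Subtype.ext (Subtype.ext he)))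
      simpa using this
    have h0 : γ 0 = q := by
      have : (⟨_, hm 0⟩ : {z : ℂ | 0 ≤ z.im}) = h ⟨⟨q, hqC⟩, hqU⟩ := Subtype.ext (by simp [hz0])
      simp only [hγ]; rw [this]; simp
    refine ⟨_, _, _, IsArc.of_Icc (show (-1 : ℝ) < 1 by norm_num) hc.continuousOn hi.injOn, ?_, ⟨⟨0, by simp, h0⟩, ?_⟩, ?_⟩
    · rintro _ ⟨t, -, rfl⟩
      rw [hγ, hh]
      simp [hz]
    · rw [← h0]
      simp [hi.eq_iff]
    · have h3 : IsOpen {y : U | |(h y : ℂ).re - z0.re| < 1} := isOpen_lt (by fun_prop) continuous_const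
      have h4 := hU.isOpenMap_subtype_val _ h3
      obtain ⟨O, hO, hOe⟩ := isOpen_induced_iff.1 h4
      have h5 : q ∈ O := by
        have : (⟨q, hqC⟩ : C) ∈ Subtype.val ⁻¹' O := by
          rw [hOe]; exact ⟨⟨⟨q, hqC⟩, hqU⟩, by simp [hz0], rfl⟩
        exact this
      filter_upwards [self_mem_nhdsWithin, mem_nhdsWithin_of_mem_nhds (hO.mem_nhds h5)] with x hxM hxO
      have : (⟨x, hC.frontier_subset hxM⟩ : C) ∈ Subtype.val ⁻¹' O := hxO
      rw [hOe] at this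
      obtain ⟨y, hy, hyx⟩ := this
      have hx : ((y : C) : S) = x := by rw [hyx]
      have hy0 := (hh y).1 (hx ▸ hxM)
      refine ⟨(h y : ℂ).re - z0.re, abs_le.1 (le_of_lt hy), ?_⟩
      have : (⟨_, hm ((h y : ℂ).re - z0.re)⟩ : {z : ℂ | 0 ≤ z.im}) = h y :=
        Subtype.ext (Complex.ext (by simp) (by simp [hz, hy0]))
      simp only [hγ]; rw [this]; simpa using hx
  · intro q hq
    obtain ⟨hqC, U, hU, hqU, h, hh⟩ := key q hq
    set z0 : ℂ := (h ⟨⟨q, hqC⟩, hqU⟩).1 with hz0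
    have hz : z0.im = 0 := (hh ⟨⟨q, hqC⟩, hqU⟩).1 hq
    have hm : ∀ t : ℝ, z0 + |t| * Complex.I ∈ {z : ℂ | 0 ≤ z.im} := fun t => by simp [hz]
    set γ : ℝ → S := fun t => ((h.symm ⟨_, hm t⟩ : U) : S) with hγ
    have hc : Continuous γ := by fun_prop
    have h0 : γ 0 = q := by
      have : (⟨_, hm 0⟩ : {z : ℂ | 0 ≤ z.im}) = h ⟨⟨q, hqC⟩, hqU⟩ := Subtype.ext (by simp [hz0])
      simp only [hγ]; rw [this]; simp
    rw [← h0]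
    refine mem_closure_of_tendsto (b := 𝓝[>] (0 : ℝ)) (hc.continuousAt.tendsto.mono_left nhdsWithin_le_nhds) ?_
    filter_upwards [self_mem_nhdsWithin] with t ht
    refine chart_interior hS h ?_
    rw [hin]
    simpa [hz] using ne_of_gt ht

end half

/-! ### Pushing a disc into the subsurface -/

section fill
variable {S : Type*} [MetricSpace S] {C M N : Set S} {q : S} {H : ℂ → S}

/-- A partial map of a disc into a component `N` of a one-manifold extends to the disc with values in `N`,
provided that, when `N` is a circle, it has a logarithm. -/
theorem exists_push (hM : OneMfd M) (hMc : IsClosed M) (hq : q ∈ M) (hH : Continuous H)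
    (hlog : IsJordan (pathComponentIn M q) → ∃ g : S → Angle, ContinuousOn g (pathComponentIn M q) ∧
      InjOn g (pathComponentIn M q) ∧ g '' pathComponentIn M q = univ ∧
      LogOn (fun z => g (H z)) (closedBall 0 1 ∩ H ⁻¹' pathComponentIn M q)) :
    ∃ F : ℂ → S, Continuous F ∧ (∀ z, F z ∈ pathComponentIn M q) ∧
      EqOn F H (closedBall 0 1 ∩ H ⁻¹' pathComponentIn M q) := by
  have hne : Nonempty S := ⟨q⟩
  have hNc := hM.isClosed_comp (q := q) hMc
  set N := pathComponentIn M q with hN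
  have hA : IsCompact (closedBall (0 : ℂ) 1 ∩ H ⁻¹' N) := (isCompact_closedBall 0 1).inter_right (hNc.preimage hH)
  rcases hM.comp.jordan_or_arc (isPathConnected_pathComponentIn hq) with hJ | harc
  · obtain ⟨g, hg, hgi, hgs, φ, hφ, hφe⟩ := hlog hJ
    obtain ⟨Φ, hΦ, hΦe⟩ := tietze hA.isClosed hφ
    have hinv := continuousOn_invFunOn hJ.isCompact hg hgi
    rw [← hN, hgs, continuousOn_univ] at hinv
    refine ⟨fun z => invFunOn g N (Φ z), hinv.comp (continuous_coeA.comp hΦ), fun z => ?_, fun z hz => ?_⟩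
    · exact invFunOn_mem (show ((Φ z : ℝ) : Angle) ∈ g '' N by rw [hgs]; exact mem_univ _)
    · beta_reduce
      rw [hΦe hz, hφe z hz]
      exact hgi.leftInvOn_invFunOn hz.2
  · obtain ⟨_, _, _, ⟨γ, hγ, hγi, rfl, -, -⟩, hsN, hs⟩ := harc _ (by rintro _ ⟨z, hz, rfl⟩; exact hz.2) (hA.image hH)
    have hinv := continuousOn_invFunOn isCompact_Icc hγ hγi
    obtain ⟨Φ, hΦ, hΦe⟩ := tietze (Y := ℝ) hA.isClosed (hinv.comp hH.continuousOn fun z hz => hs (mem_image_of_mem H hz))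
    refine ⟨fun z => γ (projIcc (0:ℝ) 1 zero_le_one (Φ z)), ?_, fun z => hsN ⟨_, Subtype.coe_prop _, rfl⟩, fun z hz => ?_⟩
    · exact hγ.comp_continuous (by fun_prop) fun z => Subtype.coe_prop _
    · have h1 := hs (mem_image_of_mem H hz)
      have h2 : Φ z ∈ Icc (0:ℝ) 1 := by rw [hΦe hz]; exact invFunOn_mem h1
      beta_reduce
      rw [projIcc_of_mem _ h2]
      change γ (Φ z) = H z
      rw [hΦe hz]
      exact invFunOn_eq h1

/-- If the preimage of every circular boundary component has a logarithm, the disc can be pushed into `C`. -/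
theorem exists_fill (hC : IsClosed C) (hM : OneMfd (frontier C)) (hH : Continuous H)
    (hsph : ∀ z ∈ sphere (0 : ℂ) 1, H z ∈ C)
    (hlog : ∀ q ∈ frontier C, IsJordan (pathComponentIn (frontier C) q) →
      ∃ g : S → Angle, ContinuousOn g (pathComponentIn (frontier C) q) ∧
      InjOn g (pathComponentIn (frontier C) q) ∧ g '' pathComponentIn (frontier C) q = univ ∧
      LogOn (fun z => g (H z)) (closedBall 0 1 ∩ H ⁻¹' pathComponentIn (frontier C) q)) :
    ∃ G : ℂ → S, ContinuousOn G (closedBall 0 1) ∧ MapsTo G (closedBall 0 1) C ∧ EqOn G H (sphere 0 1) := by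
  classical
  have hne : Nonempty S := ⟨H 0⟩
  set M := frontier C with hMdef
  have hMc : IsClosed M := isClosed_frontier
  set D : Set ℂ := closedBall 0 1 with hD
  have hDc : IsClosed D := isClosed_closedBall
  have hDconv : Convex ℝ D := convex_closedBall 0 1
  set E := connectedComponentIn (D ∩ H ⁻¹' C) 1 with hE
  have h1D : (1 : ℂ) ∈ D ∩ H ⁻¹' C := ⟨by simp [hD], hsph 1 (by simp)⟩
  have hEs : E ⊆ D ∩ H ⁻¹' C := connectedComponentIn_subset _ _
  have hEp : IsPreconnected E := isPreconnected_connectedComponentIn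
  have h1E : (1 : ℂ) ∈ E := mem_connectedComponentIn h1D
  have hEc : IsClosed E := isClosed_of_closure_subset (hEp.closure.subset_connectedComponentIn (subset_closure h1E)
    (closure_minimal hEs (hDc.inter (hC.preimage hH))))
  have hsE : sphere (0 : ℂ) 1 ⊆ E :=
    (isPreconnected_sphere (by simp [Complex.rank_real_complex]) 0 1).subset_connectedComponentIn (by simp)
      fun z hz => ⟨sphere_subset_closedBall hz, hsph z hz⟩
  -- a connected set that meets `E` and on which `H` takes values in `C` stays in `E`
  have habs : ∀ P ⊆ D ∩ H ⁻¹' C, IsPreconnected P → (P ∩ E).Nonempty → P ⊆ E := by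
    rintro P hP hPc ⟨z, hzP, hzE⟩
    rw [hE, connectedComponentIn_eq hzE]
    exact hPc.subset_connectedComponentIn hzP hP
  have hWo : IsOpen (D \ E) := by
    have : D \ E = ball 0 1 \ E := by
      ext z
      simp only [Set.mem_sdiff, hD, and_congr_left_iff]
      intro hz
      have : z ∉ sphere (0 : ℂ) 1 := fun h => hz (hsE h)
      simp only [mem_closedBall, mem_ball, mem_sphere] at this ⊢
      exact ⟨fun h => lt_of_le_of_ne h this, le_of_lt⟩
    rw [this]; exact isOpen_ball.sdiff hEc
  set V : ℂ → Set ℂ := fun z => connectedComponentIn (D \ E) z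
  have hVo : ∀ z, IsOpen (V z) := fun z => hWo.connectedComponentIn
  have hVs : ∀ z, V z ⊆ D \ E := fun z => connectedComponentIn_subset _ _
  have hVm : ∀ z ∈ D \ E, z ∈ V z := fun z hz => mem_connectedComponentIn hz
  have hVeq : ∀ z, ∀ w ∈ V z, V z = V w := fun z w hw => connectedComponentIn_eq hw
  have hclD : ∀ z, closure (V z) ⊆ D := fun z => closure_minimal (fun w hw => (hVs z hw).1) hDc
  have hfrE : ∀ z, frontier (V z) ⊆ E := fun z w hw => by
    by_contra h
    exact frontier_component hWo z hw ⟨hclD z (frontier_subset_closure hw), h⟩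
  have hfrM : ∀ z, ∀ w ∈ frontier (V z), H w ∈ M := by
    intro z w hw
    have hwE := hfrE z hw
    by_contra h
    have hwi : H w ∈ interior C := by
      rw [hMdef, hC.frontier_eq] at h
      by_contra h'
      exact h ⟨(hEs hwE).2, h'⟩
    obtain ⟨ε, hε, hεs⟩ := Metric.isOpen_iff.1 (isOpen_interior.preimage hH) w hwi
    obtain ⟨v, hvb, hvV⟩ := mem_closure_iff_nhds.1 (frontier_subset_closure hw) _ (ball_mem_nhds w hε)
    have := habs (ball w ε ∩ D) (fun x hx => ⟨hx.2, interior_subset (s := C) (hεs hx.1)⟩)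
      (((convex_ball w ε).inter hDconv).isPreconnected) ⟨w, ⟨mem_ball_self hε, (hEs hwE).1⟩, hwE⟩ ⟨hvb, (hVs z hvV).1⟩
    exact (hVs z hvV).2 this
  -- a connected subset of the disc joining `V v` to `E` crosses the frontier of `V v`
  have hcross : ∀ v ∈ D \ E, ∀ P : Set ℂ, IsPreconnected P → v ∈ P → (P ∩ E).Nonempty →
      (P ∩ frontier (V v)).Nonempty := by
    rintro v hv P hP hvP ⟨z, hzP, hzE⟩
    by_contra hn
    have := hP.subset_of_closure_inter_subset (hVo v) ⟨v, hvP, hVm v hv⟩ (by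
      rintro x ⟨hx, hxP⟩
      by_contra hxV
      exact hn ⟨x, hxP, by rw [(hVo v).frontier_eq]; exact ⟨hx, hxV⟩⟩)
    exact (hVs v (this hzP)).2 hzE
  have hfrne : ∀ v ∈ D \ E, (frontier (V v)).Nonempty := fun v hv =>
    (hcross v hv univ isPreconnected_univ (mem_univ v) ⟨1, mem_univ _, h1E⟩).mono inter_subset_right
  have hfrc : ∀ v ∈ D \ E, IsPreconnected (frontier (V v)) := by
    intro v hv
    have h1 : IsPreconnected (D \ V v) := by
      have hED : E ⊆ D \ V v := fun x hx => ⟨(hEs hx).1, fun h => (hVs v h).2 hx⟩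
      refine isPreconnected_of_forall 1 fun y hy => ?_
      by_cases hyE : y ∈ E
      · exact ⟨E, hED, h1E, hyE, hEp⟩
      · obtain ⟨p, hp⟩ := hfrne y ⟨hy.1, hyE⟩
        refine ⟨E ∪ closure (V y), union_subset hED fun x hx => ⟨hclD y hx, fun hxv => ?_⟩, Or.inl h1E,
          Or.inr (subset_closure (hVm y ⟨hy.1, hyE⟩)),
          hEp.union p (hfrE y hp) (frontier_subset_closure hp) isPreconnected_connectedComponentIn.closure⟩
        obtain ⟨u, huv, huy⟩ := _root_.mem_closure_iff.1 hx _ (hVo v) hxv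
        have : V v = V y := (hVeq v u huv).trans (hVeq y u huy).symm
        exact hy.2 (this ▸ hVm y ⟨hy.1, hyE⟩)
    have h2 := inter_preconnected (isClosed_closure (s := V v)) (hDc.sdiff (hVo v)) isPreconnected_connectedComponentIn.closure h1
      (by
        have : closure (V v) ∪ D \ V v = D := by
          refine (union_subset (hclD v) sdiff_subset).antisymm fun x hx => ?_
          by_cases h : x ∈ V v
          · exact Or.inl (subset_closure h)
          · exact Or.inr ⟨hx, h⟩
        rw [this]; exact acyc_disc)
    convert h2 using 1
    rw [(hVo v).frontier_eq]
    ext x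
    exact ⟨fun h => ⟨h.1, hclD v h.1, h.2⟩, fun h => ⟨h.1, h.2.2⟩⟩
  have hN : ∀ W : Set ℂ, (∃ z ∈ D \ E, W = V z) → ∃ N : Set S, (∃ q ∈ M, N = pathComponentIn M q) ∧
      ∀ p ∈ frontier W, H p ∈ N := by
    rintro _ ⟨z, hz, rfl⟩
    obtain ⟨p, hp⟩ := hfrne z hz
    refine ⟨_, ⟨H p, hfrM z p hp, rfl⟩, fun x hx => ?_⟩
    refine subset_of_clopen (((hfrc z hz).image H hH.continuousOn)) (hM.isClosed_comp hMc)
      ⟨H p, mem_image_of_mem H hp, mem_pathComponentIn_self (hfrM z p hp)⟩ (fun y hy => ?_) (mem_image_of_mem H hx)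
    refine nhdsWithin_mono _ ?_ (hM.comp_nhds hy.2)
    rintro _ ⟨w, hw, rfl⟩
    exact hfrM z w hw
  choose! N hNc hNf using hN
  have hF : ∀ N : Set S, (∃ q ∈ M, N = pathComponentIn M q) → ∃ F : ℂ → S, Continuous F ∧ (∀ z, F z ∈ N) ∧
      EqOn F H (D ∩ H ⁻¹' N) := by
    rintro _ ⟨q, hq, rfl⟩
    exact exists_push hM hMc hq hH (hlog q hq)
  choose! F hFc hFm hFe using hF
  set G : ℂ → S := fun z => if z ∈ E then H z else F (N (V z)) z
  have hGE : ∀ z ∈ E, G z = H z := fun z hz => if_pos hz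
  have hGE' : ∀ z ∉ E, G z = F (N (V z)) z := fun z hz => if_neg hz
  refine ⟨G, ?_, ?_, fun z hz => hGE z (hsE hz)⟩
  · intro z hz
    by_cases hzE : z ∈ E
    · by_cases hzM : H z ∈ M
      · have hn := hM.comp_nhds (mem_pathComponentIn_self hzM)
        set N0 := pathComponentIn M (H z)
        have hN0' : ∃ q ∈ M, N0 = pathComponentIn M q := ⟨_, hzM, rfl⟩
        obtain ⟨O, hO, hOs⟩ := mem_nhdsWithin_iff_exists_mem_nhds_inter.1 hn
        obtain ⟨ε, hε, hεs⟩ := Metric.mem_nhds_iff.1 (hH.continuousAt hO)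
        have hev : ∀ᶠ w in 𝓝[D] z, G w = H w ∨ G w = F N0 w := by
          filter_upwards [self_mem_nhdsWithin, mem_nhdsWithin_of_mem_nhds (ball_mem_nhds z hε)] with w hwD hwb
          by_cases hwE : w ∈ E
          · exact Or.inl (hGE w hwE)
          · right
            obtain ⟨p, hp, hpf⟩ := hcross w ⟨hwD, hwE⟩ _ (convex_ball z ε).isPreconnected hwb ⟨z, mem_ball_self hε, hzE⟩
            have h1 : H p ∈ N0 := hOs ⟨hεs hp, hfrM w p hpf⟩
            have h2 := hNf (V w) ⟨w, ⟨hwD, hwE⟩, rfl⟩ p hpf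
            obtain ⟨q, hq, hqe⟩ := hNc (V w) ⟨w, ⟨hwD, hwE⟩, rfl⟩
            rw [hqe] at h2
            have : N (V w) = N0 := by rw [hqe, ← pathComponentIn_congr h2, pathComponentIn_congr h1]
            rw [hGE' w hwE, this]
        have hz0 : F N0 z = H z := hFe N0 hN0' ⟨hz, mem_pathComponentIn_self hzM⟩
        rw [ContinuousWithinAt, hGE z hzE]
        intro T hT
        have t2 := (hFc N0 hN0').continuousAt (x := z)
        rw [ContinuousAt, hz0] at t2
        rw [Filter.mem_map]
        filter_upwards [hev, mem_nhdsWithin_of_mem_nhds (hH.continuousAt hT), mem_nhdsWithin_of_mem_nhds (t2 hT)] with w hw h1 h2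
        rw [mem_preimage]
        rcases hw with hw | hw
        · rw [hw]; exact h1
        · rw [hw]; exact h2
      · have hwi : H z ∈ interior C := by
          rw [hMdef, hC.frontier_eq] at hzM
          by_contra h'
          exact hzM ⟨(hEs hzE).2, h'⟩
        obtain ⟨ε, hε, hεs⟩ := Metric.isOpen_iff.1 (isOpen_interior.preimage hH) z hwi
        have := habs (ball z ε ∩ D) (fun x hx => ⟨hx.2, interior_subset (s := C) (hεs hx.1)⟩)
          (((convex_ball z ε).inter hDconv).isPreconnected) ⟨z, ⟨mem_ball_self hε, hz⟩, hzE⟩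
        refine hH.continuousWithinAt.congr_of_eventuallyEq ?_ (hGE z hzE)
        filter_upwards [self_mem_nhdsWithin, mem_nhdsWithin_of_mem_nhds (ball_mem_nhds z hε)] with w hwD hwb
        exact hGE w (this ⟨hwb, hwD⟩)
    · refine (hFc (N (V z)) (hNc _ ⟨z, ⟨hz, hzE⟩, rfl⟩)).continuousWithinAt.congr_of_eventuallyEq ?_ (hGE' z hzE)
      filter_upwards [mem_nhdsWithin_of_mem_nhds ((hVo z).mem_nhds (hVm z ⟨hz, hzE⟩))] with w hw
      rw [hGE' w (hVs z hw).2, hVeq z w hw]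
  · intro z hz
    by_cases hzE : z ∈ E
    · rw [hGE z hzE]; exact (hEs hzE).2
    · rw [hGE' z hzE]
      have h1 := hNc (V z) ⟨z, ⟨hz, hzE⟩, rfl⟩
      have h2 := hFm _ h1 z
      obtain ⟨q, hq, hqe⟩ := h1
      rw [hqe] at h2
      have : F (N (V z)) z ∈ pathComponentIn M q := by rw [hqe]; exact h2
      exact hC.frontier_subset (pathComponentIn_subset this)

end fill

/-! ### Boundary curves that bound cells -/

section core
variable {S : Type*} [MetricSpace S] {C M s : Set S} {q a b : S} {H : ℂ → S}

/-- An arc has end points, so it is not a one-manifold. -/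
theorem IsArc.not_oneMfd (hs : IsArc s a b) : ¬ OneMfd s := by
  intro hM
  obtain ⟨s', a', b', ⟨β, hβ, hβi, rfl, rfl, rfl⟩, hsub, ⟨⟨u, hu, hua⟩, hne⟩, -⟩ := hM a hs.left_mem
  obtain ⟨γ, hγ, hγi, rfl, rfl, rfl⟩ := hs
  have hinv := continuousOn_invFunOn isCompact_Icc hγ hγi
  have hm : MapsTo β (Icc 0 1) (γ '' Icc 0 1) := fun t ht => hsub ⟨t, ht, rfl⟩
  set f : ℝ → ℝ := fun t => invFunOn γ (Icc 0 1) (β t) with hf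
  have hfm : ∀ t ∈ Icc (0:ℝ) 1, 0 ≤ f t := fun t ht => (invFunOn_mem (hm ht)).1
  have hfi : InjOn f (Icc 0 1) := by
    intro t ht t' ht' he
    refine hβi ht ht' ?_
    rw [← invFunOn_eq (hm ht), ← invFunOn_eq (hm ht')]
    exact congrArg γ he
  have hf0 : f u = 0 := by
    simp only [hf, hua]
    exact hγi.leftInvOn_invFunOn ⟨le_rfl, zero_le_one⟩
  have hu0 : 0 < u := lt_of_le_of_ne hu.1 fun h => hne (by subst h; exact Or.inl hua.symm)
  have hu1 : u < 1 := lt_of_le_of_ne hu.2 fun h => hne (by subst h; exact Or.inr hua.symm)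
  rcases (hinv.comp hβ hm).strictMonoOn_of_injOn_Icc' zero_le_one hfi with h | h
  · have := h ⟨le_rfl, zero_le_one⟩ hu hu0
    have h2 := hfm 0 ⟨le_rfl, zero_le_one⟩
    change f 0 < f u at this
    linarith
  · have := h hu ⟨zero_le_one, le_rfl⟩ hu1
    have h2 := hfm 1 ⟨zero_le_one, le_rfl⟩
    change f 1 < f u at this
    linarith

/-- A circular boundary component around which a disc winds bounds a cell which either is a component of
the complement of the interior of `C` or contains `C`. -/
theorem comp_cell (hS : LocPlane (univ : Set S)) (hC : IsClosed C) (hCc : IsPreconnected C) (hM : OneMfd (frontier C))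
    (hin : frontier C ⊆ closure (interior C)) (hq : q ∈ frontier C) (hJ : IsJordan (pathComponentIn (frontier C) q))
    (hH : Continuous H) {g : S → Angle} (hg : ContinuousOn g (pathComponentIn (frontier C) q))
    (hgi : InjOn g (pathComponentIn (frontier C) q)) (hgs : g '' pathComponentIn (frontier C) q = univ)
    (hno : ¬ LogOn (fun z => g (H z)) (closedBall 0 1 ∩ H ⁻¹' pathComponentIn (frontier C) q)) :
    ∃ X, IsCell X (pathComponentIn (frontier C) q) ∧ X ⊆ H '' closedBall 0 1 ∧
      (X = connectedComponentIn (interior C)ᶜ q ∨ C ⊆ X) := by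
  have hqγ := mem_pathComponentIn_self hq
  have hγM : pathComponentIn (frontier C) q ⊆ frontier C := pathComponentIn_subset
  have hnear : ∀ x ∈ pathComponentIn (frontier C) q, pathComponentIn (frontier C) q ∈ 𝓝[frontier C] x := fun x hx => hM.comp_nhds hx
  set γ := pathComponentIn (frontier C) q
  have hcl : IsClosed (frontier C \ γ) := by
    refine isClosed_of_closure_subset fun x hx => ?_
    have hxM : x ∈ frontier C := closure_minimal sdiff_subset isClosed_frontier hx
    refine ⟨hxM, fun hxγ => ?_⟩
    obtain ⟨O, hO, hOs⟩ := mem_nhdsWithin_iff_exists_mem_nhds_inter.1 (hnear x hxγ)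
    obtain ⟨y, hyO, hyM, hyγ⟩ := mem_closure_iff_nhds.1 hx O hO
    exact hyγ (hOs ⟨hyO, hyM⟩)
  obtain ⟨r, hr, hdis⟩ := disjoint_sdiff_right.exists_thickenings hJ.isCompact hcl
  obtain ⟨X, hX, hXH, hside⟩ := exists_cell hS hC hJ hγM hr (fun x hx => by
    by_contra hlt
    exact disjoint_left.1 hdis ((mem_thickening_iff_infDist_lt hJ.nonempty).2 (not_le.1 hlt)) (self_subset_thickening hr _ hx))
    (hγM.trans hin) hH hg hgi hgs hno
  refine ⟨X, hX, hXH, ?_⟩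
  have hXcl : IsClosed X := hX.compact.isClosed
  have hXo : ∀ x ∈ X, x ∉ γ → X ∈ 𝓝 x := fun x hx hxγ =>
    mem_of_superset (hX.isOpen.mem_nhds ⟨hx, hxγ⟩) sdiff_subset
  have hMγ : ∀ x ∈ γ, ∀ᶠ y in 𝓝 x, y ∈ frontier C → y ∈ γ := fun x hx =>
    mem_nhdsWithin_iff_eventually.1 (hnear x hx)
  rcases hside with hK | hK
  · left
    -- the part of `C` inside the open cell is open and closed in `C` and misses `γ`
    have hsub : C ⊆ (X \ γ)ᶜ := by
      refine subset_of_clopen hCc hX.isOpen.isClosed_compl ⟨q, hC.frontier_subset hq, fun h => h.2 hqγ⟩ ?_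
      rintro x ⟨hxC, hx⟩
      by_cases hxγ : x ∈ γ
      · filter_upwards [self_mem_nhdsWithin, mem_nhdsWithin_of_mem_nhds (hK x hxγ)] with y hyC hy h
        exact hy.1 h hyC
      · have hxX : x ∉ X := fun h => hx ⟨h, hxγ⟩
        exact mem_nhdsWithin_of_mem_nhds (mem_of_superset (hXcl.isOpen_compl.mem_nhds hxX) fun y hy h => hy h.1)
    have hXC : X ⊆ (interior C)ᶜ := fun x hx hxi =>
      hsub (interior_subset hxi) ⟨hx, fun h => (hγM h).2 hxi⟩
    have hXc : IsPreconnected X := hX.closure_eq ▸ hX.conn.closure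
    refine (hXc.subset_connectedComponentIn (hX.sub hqγ) hXC).antisymm ?_
    refine subset_of_clopen isPreconnected_connectedComponentIn hXcl
      ⟨q, mem_connectedComponentIn (hXC (hX.sub hqγ)), hX.sub hqγ⟩ ?_
    rintro x ⟨-, hx⟩
    by_cases hxγ : x ∈ γ
    · refine nhdsWithin_mono _ (connectedComponentIn_subset _ _) ?_
      filter_upwards [self_mem_nhdsWithin, mem_nhdsWithin_of_mem_nhds (hK x hxγ), mem_nhdsWithin_of_mem_nhds (hMγ x hxγ)] with y hyC hy hyM
      by_cases hyC' : y ∈ C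
      · exact hX.sub (hyM (hC.frontier_eq ▸ ⟨hyC', hyC⟩))
      · exact (hy.2 hyC').1
    · exact mem_nhdsWithin_of_mem_nhds (hXo x hx hxγ)
  · right
    refine subset_of_clopen hCc hXcl ⟨q, hC.frontier_subset hq, hX.sub hqγ⟩ ?_
    rintro x ⟨-, hx⟩
    by_cases hxγ : x ∈ γ
    · filter_upwards [self_mem_nhdsWithin, mem_nhdsWithin_of_mem_nhds (hK x hxγ), mem_nhdsWithin_of_mem_nhds (hMγ x hxγ)] with y hyC hy hyM
      by_cases hyC' : y ∈ interior C
      · exact (hy.2 hyC').1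
      · exact hX.sub (hyM (hC.frontier_eq ▸ ⟨hyC, hyC'⟩))
    · exact mem_nhdsWithin_of_mem_nhds (hXo x hx hxγ)

/-- A loop of `C` bounding a disc in `S` bounds one in `C`, unless a component of the complement of the
interior of `C` is a disc. -/
theorem exists_disc [ConnectedSpace S] (hS : LocPlane (univ : Set S)) (hC : IsClosed C) (hCc : IsPreconnected C)
    (hM : OneMfd (frontier C)) (hin : frontier C ⊆ closure (interior C))
    (hnd : ∀ x ∈ (interior C)ᶜ, ¬ Nonempty (connectedComponentIn (interior C)ᶜ x ≃ₜ closedBall (0 : ℂ) 1))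
    (hH : Continuous H) (hsph : ∀ z ∈ sphere (0 : ℂ) 1, H z ∈ C) :
    ∃ G : ℂ → S, ContinuousOn G (closedBall 0 1) ∧ MapsTo G (closedBall 0 1) C ∧ EqOn G H (sphere 0 1) := by
  classical
  by_cases hlog : ∀ q ∈ frontier C, IsJordan (pathComponentIn (frontier C) q) →
      ∃ g : S → Angle, ContinuousOn g (pathComponentIn (frontier C) q) ∧
      InjOn g (pathComponentIn (frontier C) q) ∧ g '' pathComponentIn (frontier C) q = univ ∧
      LogOn (fun z => g (H z)) (closedBall 0 1 ∩ H ⁻¹' pathComponentIn (frontier C) q)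
  · exact exists_fill hC hM hH hsph hlog
  push Not at hlog
  obtain ⟨q, hq, hJ, hg⟩ := hlog
  obtain ⟨g, g1, g2, g3⟩ := hJ.exists_map
  -- a cell cut off by a boundary curve cannot be a complementary component, so it contains `C`
  have key : ∀ (q : S) (H : ℂ → S) (g : S → Angle), q ∈ frontier C → IsJordan (pathComponentIn (frontier C) q) →
      Continuous H → ContinuousOn g (pathComponentIn (frontier C) q) →
      InjOn g (pathComponentIn (frontier C) q) → g '' pathComponentIn (frontier C) q = univ →
      ¬ LogOn (fun z => g (H z)) (closedBall 0 1 ∩ H ⁻¹' pathComponentIn (frontier C) q) →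
      ∃ X, IsCell X (pathComponentIn (frontier C) q) ∧ X ⊆ H '' closedBall 0 1 ∧ C ⊆ X := by
    intro q H g hq hJ hH g1 g2 g3 hno
    obtain ⟨X, hX, hXH, rfl | h⟩ := comp_cell hS hC hCc hM hin hq hJ hH g1 g2 g3 hno
    · exact absurd (IsCell.homeo locPlane_complex hS hX isCell_disc) (hnd q hq.2)
    · exact ⟨X, hX, hXH, h⟩
  obtain ⟨X, hX, -, hCX⟩ := key q H g hq hJ hH g1 g2 g3 (hg g g1 g2 g3)
  obtain ⟨h⟩ := IsCell.homeo locPlane_complex hS hX isCell_disc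
  have hk : Continuous fun z => ((h.symm ⟨discRetr z, discRetr_mem z⟩ : X) : S) := by
    have := continuous_discRetr
    fun_prop
  by_cases hCe : C = X
  · have h1 : ContinuousOn (fun z => if hz : H z ∈ X then (h ⟨H z, hz⟩ : ℂ) else 0) (sphere 0 1) := by
      rw [continuousOn_iff_continuous_domRestrict]
      have : Continuous fun z : sphere (0 : ℂ) 1 => (h ⟨H z, hCX (hsph z z.2)⟩ : ℂ) := by fun_prop
      refine this.congr fun z => ?_
      simp only [domRestrict_apply, hCX (hsph z z.2), dif_pos]
    obtain ⟨Φ, hΦ, hΦe⟩ := tietze isClosed_sphere h1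
    refine ⟨_, (hk.comp hΦ).continuousOn, fun z _ => ?_, fun z hz => ?_⟩
    · rw [hCe]; exact Subtype.coe_prop _
    · have h2 : Φ z = (h ⟨H z, hCX (hsph z hz)⟩ : ℂ) := by
        rw [hΦe hz]; exact dif_pos _
      have h3 : (⟨discRetr (Φ z), discRetr_mem (Φ z)⟩ : closedBall (0 : ℂ) 1) = h ⟨H z, hCX (hsph z hz)⟩ := by
        ext1
        change discRetr (Φ z) = _
        rw [h2]
        exact discRetr_eq (Subtype.coe_prop _)
      simp only [Function.comp_def]
      rw [h3]; simp
  exfalso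
  have hγM : pathComponentIn (frontier C) q ⊆ frontier C := pathComponentIn_subset
  obtain ⟨y, hyX, hyC⟩ : ∃ y ∈ X, y ∉ C := by
    by_contra! h'
    exact hCe (hCX.antisymm h')
  obtain ⟨p, hp, hpM⟩ : ∃ p ∈ X \ pathComponentIn (frontier C) q, p ∈ frontier C := by
    by_contra! hn
    have hyγ : y ∈ X \ pathComponentIn (frontier C) q := ⟨hyX, fun h => hyC (hC.frontier_subset (hγM h))⟩
    obtain ⟨i, hi⟩ : (interior C).Nonempty := closure_nonempty_iff.1 ⟨q, hin hq⟩
    have hiX : i ∈ X \ pathComponentIn (frontier C) q := ⟨hCX (interior_subset hi), fun h => (hγM h).2 hi⟩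
    rcases hX.conn.subset_or_subset isOpen_interior hC.isOpen_compl
      (disjoint_left.2 fun x hx hx' => hx' (interior_subset hx)) (fun x hx => by
        by_cases hxC : x ∈ C
        · by_contra hx'
          exact hn x hx (hC.frontier_eq ▸ ⟨hxC, fun h => hx' (Or.inl h)⟩)
        · exact Or.inr hxC) with h' | h'
    · exact hyC (interior_subset (h' hyγ))
    · exact h' hiX (interior_subset hi)
  have hdis : ∀ x ∈ pathComponentIn (frontier C) q, x ∉ pathComponentIn (frontier C) p := by
    intro x hx hx'
    refine hp.2 ?_
    rw [← pathComponentIn_congr hx, pathComponentIn_congr hx']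
    exact mem_pathComponentIn_self hpM
  have hγ1C : pathComponentIn (frontier C) p ⊆ C := pathComponentIn_subset.trans hC.frontier_subset
  have hγ1c : IsCompact (pathComponentIn (frontier C) p) :=
    hX.compact.of_isClosed_subset (hM.isClosed_comp isClosed_frontier) (hγ1C.trans hCX)
  have hJ1 : IsJordan (pathComponentIn (frontier C) p) := by
    refine (hM.comp.jordan_or_arc (isPathConnected_pathComponentIn hpM)).resolve_right fun harc => ?_
    obtain ⟨s, a, b, hs, hs1, hs2⟩ := harc _ subset_rfl hγ1c
    exact hs.not_oneMfd (hs1.antisymm hs2 ▸ hM.comp)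
  obtain ⟨g', e1, e2, e3⟩ := hJ1.exists_map
  obtain ⟨X1, hX1, hXX, hCX1⟩ := key p _ g' hpM hJ1 hk e1 e2 e3 (by
    intro hl
    have hinv := continuousOn_invFunOn hγ1c e1 e2
    rw [e3] at hinv
    have hinvm : ∀ θ, invFunOn g' (pathComponentIn (frontier C) p) θ ∈ pathComponentIn (frontier C) p := fun θ =>
      invFunOn_mem (show θ ∈ g' '' pathComponentIn (frontier C) p from e3 ▸ mem_univ θ)
    have hc : ContinuousOn (fun θ => (h ⟨_, hCX (hγ1C (hinvm θ))⟩ : ℂ)) univ := by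
      rw [continuousOn_univ] at hinv ⊢
      fun_prop
    have hs : ∀ θ, ((h.symm ⟨discRetr (h ⟨_, hCX (hγ1C (hinvm θ))⟩), discRetr_mem _⟩ : X) : S) =
        invFunOn g' (pathComponentIn (frontier C) p) θ := by
      intro θ
      have : (⟨discRetr (h ⟨_, hCX (hγ1C (hinvm θ))⟩), discRetr_mem _⟩ : closedBall (0 : ℂ) 1) =
          h ⟨_, hCX (hγ1C (hinvm θ))⟩ := Subtype.ext (discRetr_eq (Subtype.coe_prop _))
      rw [this]; simp
    have h4 := hl.comp hc fun θ _ => ⟨Subtype.coe_prop _, by rw [mem_preimage, hs]; exact hinvm θ⟩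
    have h5 : (1 : ℤ) = 0 := degree_unique (h4.congr fun θ _ => by
      rw [hs, invFunOn_eq (show θ ∈ g' '' pathComponentIn (frontier C) p from e3 ▸ mem_univ θ), one_zsmul])
    exact one_ne_zero h5)
  have hq1 : q ∈ X1 \ pathComponentIn (frontier C) p :=
    ⟨hCX1 (hC.frontier_subset hq), hdis q (mem_pathComponentIn_self hq)⟩
  obtain ⟨x, hx, hxX⟩ := _root_.mem_closure_iff.1 (hX.out (mem_pathComponentIn_self hq)) _ hX1.isOpen hq1
  obtain ⟨z, -, rfl⟩ := hXX hx.1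
  exact hxX (Subtype.coe_prop _)

end core

/-! ### Loops, homotopies and discs -/

section final

/-- The Euclidean plane of the statement. -/
local notation "𝔼" => EuclideanSpace ℝ (Fin 2)

/-- The standard isometry from the complex numbers to the Euclidean plane. -/
noncomputable def toE : ℂ ≃ₗᵢ[ℝ] 𝔼 := Complex.orthonormalBasisOneI.repr

theorem toE_one (z : ℂ) : toE z 1 = z.im := by
  simp [toE, Complex.orthonormalBasisOneI_repr_apply]

theorem locPlane_of_surf {S : Type*} [TopologicalSpace S]
    (hsurf : ∀ x : S, ∃ U : Set S, IsOpen U ∧ x ∈ U ∧ Nonempty (U ≃ₜ 𝔼)) : LocPlane (univ : Set S) := by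
  intro x _
  obtain ⟨U, hU, hxU, ⟨h⟩⟩ := hsurf x
  refine ⟨_, hU.isOpenEmbedding_subtypeVal.comp
    (toE.toHomeomorph.trans ((Homeomorph.addRight (h ⟨x, hxU⟩)).trans h.symm)).isOpenEmbedding, ?_, subset_univ _⟩
  simp

theorem locallyCompact_of_locPlane {S : Type*} [TopologicalSpace S] [T2Space S] (hS : LocPlane (univ : Set S)) :
    LocallyCompactSpace S := by
  have : WeaklyLocallyCompactSpace S := ⟨fun x => by
    obtain ⟨e, he, h0, -⟩ := hS x (mem_univ x)
    exact ⟨e '' closedBall 0 1, (isCompact_closedBall 0 1).image he.continuous, by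
      rw [← h0]; exact he.isOpenMap.image_mem_nhds (closedBall_mem_nhds 0 one_pos)⟩⟩
  infer_instance

theorem cone_mem (x : unitInterval × sphere (0 : 𝔼) 1) :
    (1 - (x.1 : ℝ)) • toE.symm (x.2 : 𝔼) ∈ closedBall (0 : ℂ) 1 := by
  rw [mem_closedBall_zero_iff, norm_smul, Real.norm_eq_abs, abs_of_nonneg (by linarith [x.1.2.2]),
    show ‖toE.symm (x.2 : 𝔼)‖ = 1 by simp]
  linarith [x.1.2.1]

/-- A null-homotopic loop extends over the disc: the homotopy factors through the cone. -/
theorem disc_of_homotopy {X : Type*} [TopologicalSpace X] {c : C(sphere (0 : 𝔼) 1, X)} {p : X}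
    (h : ContinuousMap.Homotopic c (ContinuousMap.const _ p)) :
    ∃ H : ℂ → X, Continuous H ∧ ∀ v : sphere (0 : 𝔼) 1, H (toE.symm v) = c v := by
  obtain ⟨F⟩ := h
  have hn : ∀ v : sphere (0 : 𝔼) 1, ‖toE.symm v‖ = 1 := fun v => by simp
  have hm := cone_mem
  let Q : C(unitInterval × sphere (0 : 𝔼) 1, closedBall (0 : ℂ) 1) :=
    ⟨fun x => ⟨(1 - (x.1 : ℝ)) • toE.symm (x.2 : 𝔼), hm x⟩, by
      have := toE.symm.continuous
      fun_prop⟩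
  have hq : IsQuotientMap Q := by
    refine IsQuotientMap.of_surjective_continuous ?_ Q.continuous
    · rintro ⟨z, hz⟩
      rw [mem_closedBall_zero_iff] at hz
      by_cases h0 : z = 0
      · exact ⟨(1, ⟨toE 1, by simp⟩), by simp [Q, h0]⟩
      · refine ⟨(⟨1 - ‖z‖, by linarith, by linarith [norm_nonneg z]⟩, ⟨toE (‖z‖⁻¹ • z), by simp [h0]⟩), ?_⟩
        ext1
        simp [Q, h0]
  have hfac : FactorsThrough F.toContinuousMap Q := by
    rintro ⟨t, v⟩ ⟨s, w⟩ he
    have he' : (1 - (t : ℝ)) • toE.symm (v : 𝔼) = (1 - (s : ℝ)) • toE.symm (w : 𝔼) := congrArg Subtype.val he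
    have hts : t = s := by
      have := congrArg norm he'
      rw [norm_smul, norm_smul, hn, hn, Real.norm_eq_abs, Real.norm_eq_abs, abs_of_nonneg (by linarith [t.2.2]),
        abs_of_nonneg (by linarith [s.2.2])] at this
      exact Subtype.ext (by linarith)
    subst hts
    by_cases h1 : (t : ℝ) = 1
    · have : t = 1 := Subtype.ext h1
      subst this
      simp
    · have := smul_right_injective ℂ (sub_ne_zero.2 (Ne.symm h1)) he'
      have hvw : v = w := Subtype.ext (toE.symm.injective this)
      rw [hvw]
  let L := hq.lift F.toContinuousMap hfac
  refine ⟨fun z => L ⟨discRetr z, discRetr_mem z⟩, ?_, fun v => ?_⟩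
  · have := continuous_discRetr
    fun_prop
  · have h1 : (⟨discRetr (toE.symm v), discRetr_mem _⟩ : closedBall (0 : ℂ) 1) =
        ⟨(1 - ((0 : unitInterval) : ℝ)) • toE.symm (v : 𝔼), hm (0, v)⟩ := by
      ext1
      change discRetr (toE.symm v) = (1 - (0 : ℝ)) • toE.symm (v : 𝔼)
      rw [discRetr_eq (by rw [mem_closedBall_zero_iff, hn]), sub_zero, one_smul]
    have h2 : L ⟨(1 - ((0 : unitInterval) : ℝ)) • toE.symm (v : 𝔼), hm (0, v)⟩ = F (0, v) :=
      congrArg (fun f : C(unitInterval × sphere (0 : 𝔼) 1, X) => f (0, v)) (hq.lift_comp F.toContinuousMap hfac)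
    beta_reduce
    rw [h1, h2, F.apply_zero]

theorem homotopy_of_disc {X : Type*} [TopologicalSpace X] {C : Set X} (c : C(sphere (0 : 𝔼) 1, C)) {G : ℂ → X}
    (hG : ContinuousOn G (closedBall 0 1)) (hGC : MapsTo G (closedBall 0 1) C)
    (hc : ∀ v : sphere (0 : 𝔼) 1, G (toE.symm v) = c v) :
    ∃ q : C, ContinuousMap.Homotopic c (ContinuousMap.const _ q) := by
  have hm := cone_mem
  refine ⟨⟨G 0, hGC (by simp)⟩, ⟨⟨⟨fun x => ⟨_, hGC (hm x)⟩, ?_⟩, fun v => ?_, fun v => ?_⟩⟩⟩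
  · refine Continuous.subtype_mk (hG.comp_continuous ?_ hm) _
    have := toE.symm.continuous
    fun_prop
  · ext1
    simpa using hc v
  · ext1
    simp

end final

end SD

open SD in
/-- Corollary A.4: if no connected component of the complement of the interior of a
closed connected subsurface `C` of a surface `S` is homeomorphic to a closed disc,
then `C` is incompressible in `S`: every loop in `C` which is null-homotopic in `S`
is already null-homotopic in `C`. -/
theorem stmt_12 {S : Type*} [TopologicalSpace S] [T2Space S] [SecondCountableTopology S]
    [ConnectedSpace S]
    (hsurf : ∀ x : S, ∃ U : Set S, IsOpen U ∧ x ∈ U ∧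
      Nonempty (U ≃ₜ EuclideanSpace ℝ (Fin 2)))
    (C : Set S) (hCclosed : IsClosed C) (hCconn : IsConnected C)
    (hCsurf : ∀ x : C, ∃ U : Set C, IsOpen U ∧ x ∈ U ∧
      (Nonempty (U ≃ₜ EuclideanSpace ℝ (Fin 2)) ∨
        Nonempty (U ≃ₜ {p : EuclideanSpace ℝ (Fin 2) | 0 ≤ p 1})))
    (hnodisc : ¬ ∃ x ∈ (interior C)ᶜ,
      Nonempty ((connectedComponentIn (interior C)ᶜ x) ≃ₜ
        (Metric.closedBall (0 : EuclideanSpace ℝ (Fin 2)) 1))) :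
    ∀ (c : Metric.sphere (0 : EuclideanSpace ℝ (Fin 2)) 1 → C) (hccont : Continuous c),
      (∃ p : S, ContinuousMap.Homotopic
        ⟨fun v => ((c v : C) : S), by continuity⟩ (ContinuousMap.const _ p)) →
      ∃ q : C, ContinuousMap.Homotopic ⟨c, hccont⟩ (ContinuousMap.const _ q) := by
  rintro c hccont ⟨p, hp⟩
  have hS := locPlane_of_surf hsurf
  have := locallyCompact_of_locPlane hS
  obtain ⟨H, hH, hHc⟩ := disc_of_homotopy hp
  obtain ⟨m, hm⟩ : ∃ m : MetricSpace S, m.toPseudoMetricSpace.toUniformSpace.toTopologicalSpace = ‹TopologicalSpace S› :=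
    ⟨TopologicalSpace.metrizableSpaceMetric S, rfl⟩
  subst hm
  obtain ⟨hM, hin⟩ := half_frontier hS hCclosed (fun x => by
    obtain ⟨U, hU, hxU, ⟨⟨h⟩⟩ | ⟨⟨h⟩⟩⟩ := hCsurf x
    · exact ⟨U, hU, hxU, Or.inl ⟨h.trans (toE.toHomeomorph.symm.trans (Homeomorph.Set.univ ℂ).symm)⟩⟩
    · refine ⟨U, hU, hxU, Or.inr ⟨h.trans (toE.toHomeomorph.subtype fun z => ?_).symm⟩⟩
      change 0 ≤ z.im ↔ 0 ≤ toE z 1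
      rw [toE_one])
  obtain ⟨G, hG, hGC, hGe⟩ := exists_disc hS hCclosed hCconn.isPreconnected hM hin (fun x hx ⟨h⟩ => hnodisc ⟨x, hx, ⟨h.trans
    (toE.toHomeomorph.subtype fun z => by
      change z ∈ closedBall 0 1 ↔ toE z ∈ closedBall 0 1
      simp)⟩⟩) hH (fun z hz => by
    have := hHc ⟨toE z, by simpa using hz⟩
    simp only [LinearIsometryEquiv.symm_apply_apply] at this
    rw [this]
    exact Subtype.coe_prop _)
  refine homotopy_of_disc ⟨c, hccont⟩ hG hGC fun v => ?_
  rw [hGe (by simp), hHc]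
  rfl
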